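/- Let Q be a privacy protocol all of whose entries are positive and whose rank is a, and let μ be a Borel probability measure on the simplex 𝒫 having a continuous density f, with p ↦ log det D_p and p ↦ log det G_p − Σ_{y=1}^b log((Qp)_y) μ-integrable. Then lim_{n→∞} ( H_n(F|Y⃗) − ((a−1)/2)·log n ) = δ_μ(Q). -/

import Mathlib

/-!
Write `a = m + 1`, `b = k + 1` and `p = em q` with `q` in the corner simplex `Δ ⊆ ℝ^m`. Given `p`,
the output counts are approximately normal around a linear image of the input counts, with conditional
covariance `n G_p`; so, given the output, the first `m` input counts behave like a Gaussian vector
of precision `n⁻¹ K_p`, where `K_p = Bᵀ G_p⁻¹ B` and `B` is the Jacobian of `q ↦ Qp` with its last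
row dropped. The entropy of this Gaussian is
`(m/2) log n + (m/2) log (2πe) - ½ log det K_p`, and the Schur-complement identity
`det G_p · det K_p = ∏ y, (Qp)_y · det D_p` (`det_GK`) turns its `μ`-average into `deltaMu`
(`integral_u0`). No local limit theorem is used: both inequalities come from coding arguments,
that is, from Gibbs' inequality, and need only moments of normalised sums.

**Upper bound** (`upper_limit`). By `HF_upper`, the conditional entropy is at most the expected
length of any code `κ_y` for the counts. The code integrates over unit lattice cubes
(`gaussCube`) the Gaussian density of precision `n⁻¹ K_p̂` centred at the regression estimate, with
`p̂` an estimate of `p` computed from the output through a left inverse of `Q` (`code_exists`).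
Its expected length has the right limit by a second-moment computation (`UB_main`).

**Lower bound** (`lower_limit`). Since `F` is a function of the input word `X`,
`H(F|Y) = H(X,Y) - H(Y) - H(X|F,Y)`, and the last two entropies are bounded above by codes
(`HF_lower`).
* `H(X,Y)` is `H(X)` plus a sum of one-letter entropies, and `H(X)` is bounded below by comparing
  the prior with Lebesgue measure on `Δ`, for which the mass of a word is the Dirichlet integral
  `∏ α, T_α! / (n + m)!`; the comparison costs `∫ f log f` (`Mf_entropy`).
* `X` given `(F,Y)` is coded by the joint letter counts followed by the index of `X` among the
  words with these joint counts (`Vc`, `count_le`). The joint counts are again coded by a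
  discretised Gaussian, conditioned on both marginals (`code_joint`, `JC_main`).
* `Y` is coded with the weights `P1 y * (f (q̂ y) + t)`, where `P1 y` is the likelihood of `y`
  integrated over `Δ` and `t > 0` is small. `P1` is bounded below by Laplace's method
  (`laplace_lim`). The weights have total mass tending to `1 + t / m!` (`density_mean`), and their
  factor `f` compensates `∫ f log f`.

The remaining terms are expected log-factorials of binomial counts, evaluated by Stirling's
formula (`Bn_tendsto`). All these limits are pointwise on the interior of `Δ` with one-sided
integrable bounds, so `fatou_lower` passes to the average over `μ`.
-/


open MeasureTheory Matrix Finset Filter Real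

noncomputable section

/-- The probability simplex in `ℝ^a`. -/
def simplex (a : ℕ) : Set (Fin a → ℝ) :=
  {p | (∀ x, 0 ≤ p x) ∧ ∑ x, p x = 1}

/-- Likelihood `L_y(p) = ∏ i, (Qp)_{y i}`. -/
def lik {a b n : ℕ} (Q : Matrix (Fin b) (Fin a) ℝ) (y : Fin n → Fin b)
    (p : Fin a → ℝ) : ℝ :=
  ∏ i, Q.mulVec p (y i)

/-- Mean squared error for distribution estimation. -/
def MSEdistr {a b n : ℕ} (Q : Matrix (Fin b) (Fin a) ℝ) (μ : Measure (Fin a → ℝ))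
    (Est : (Fin n → Fin b) → (Fin a → ℝ)) : ℝ :=
  ∑ y : (Fin n → Fin b), ∫ p, (∑ x, (p x - Est y x) ^ 2) * lik Q y p ∂μ

/-- The posterior-mean estimator for distribution estimation. -/
def PiOpt {a b n : ℕ} (Q : Matrix (Fin b) (Fin a) ℝ) (μ : Measure (Fin a → ℝ))
    (y : Fin n → Fin b) : Fin a → ℝ :=
  fun x => (∫ p, p x * lik Q y p ∂μ) / (∫ p, lik Q y p ∂μ)

/-- Empirical frequency vector of a data vector. -/
def freqVec {a n : ℕ} (xv : Fin n → Fin a) : Fin a → ℝ :=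
  fun α => ((Finset.univ.filter fun i => xv i = α).card : ℝ) / n

/-- Joint weight `w(x⃗,y⃗) = ∫ ∏ i, p_{x_i} Q_{y_i|x_i} dμ(p)`. -/
def wgt {a b n : ℕ} (Q : Matrix (Fin b) (Fin a) ℝ) (μ : Measure (Fin a → ℝ))
    (xv : Fin n → Fin a) (y : Fin n → Fin b) : ℝ :=
  ∫ p, (∏ i, p (xv i) * Q (y i) (xv i)) ∂μ

/-- Mean squared error for frequency estimation. -/
def MSEfreq {a b n : ℕ} (Q : Matrix (Fin b) (Fin a) ℝ) (μ : Measure (Fin a → ℝ))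
    (Est : (Fin n → Fin b) → (Fin a → ℝ)) : ℝ :=
  ∑ xv : (Fin n → Fin a), ∑ y : (Fin n → Fin b),
    wgt Q μ xv y * ∑ α, (freqVec xv α - Est y α) ^ 2

/-- The posterior-mean estimator for frequency estimation. -/
def PhiOpt {a b n : ℕ} (Q : Matrix (Fin b) (Fin a) ℝ) (μ : Measure (Fin a → ℝ))
    (y : Fin n → Fin b) : Fin a → ℝ :=
  fun α => (∑ xv : (Fin n → Fin a), wgt Q μ xv y * freqVec xv α) /
    (∑ xv : (Fin n → Fin a), wgt Q μ xv y)

/-- `P(φ, y⃗) = ∑_{x⃗ : F(x⃗) = φ} w(x⃗, y⃗)`. -/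
def Pphi {a b n : ℕ} (Q : Matrix (Fin b) (Fin a) ℝ) (μ : Measure (Fin a → ℝ))
    (φ : Fin a → ℝ) (y : Fin n → Fin b) : ℝ := by
  classical
  exact ∑ xv ∈ Finset.univ.filter (fun xv : Fin n → Fin a => freqVec xv = φ), wgt Q μ xv y

/-- Conditional Shannon entropy `H_n(F | Y⃗)` (terms with zero probability vanish since
`Real.log 0 = 0`). -/
def HFcond {a b : ℕ} (Q : Matrix (Fin b) (Fin a) ℝ) (μ : Measure (Fin a → ℝ))
    (n : ℕ) : ℝ := by
  classical
  exact -(∑ y : (Fin n → Fin b), ∑ φ ∈ Finset.image (freqVec (a := a) (n := n)) Finset.univ,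
      Pphi Q μ φ y * Real.log (Pphi Q μ φ y /
        ∑ φ' ∈ Finset.image (freqVec (a := a) (n := n)) Finset.univ, Pphi Q μ φ' y))

/-- The set `Δ = {q ∈ ℝ^m : q ≥ 0, ∑ q ≤ 1}`. -/
def stdCorner (m : ℕ) : Set (Fin m → ℝ) :=
  {q | (∀ i, 0 ≤ q i) ∧ ∑ i, q i ≤ 1}

/-- The identification `Δ ⊂ ℝ^{a-1} → 𝒫 ⊂ ℝ^a`,
`q ↦ (q_1, …, q_{a-1}, 1 - ∑ q_i)`. -/
def emb (a : ℕ) (q : Fin (a - 1) → ℝ) : Fin a → ℝ :=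
  fun x => if h : (x : ℕ) < a - 1 then q ⟨x.1, h⟩ else 1 - ∑ i, q i

/-- `μ` has density `f` (w.r.t. Lebesgue measure on `Δ`). -/
def IsDensity {a : ℕ} (μ : Measure (Fin a → ℝ)) (f : (Fin (a - 1) → ℝ) → ℝ) : Prop :=
  Measurable f ∧ (∀ q, 0 ≤ f q) ∧ (∫ q in stdCorner (a - 1), f q) = 1 ∧
  ∀ g : (Fin a → ℝ) → ℝ, Measurable g → (∃ C, ∀ p, |g p| ≤ C) →
    (∫ p, g p ∂μ) = ∫ q in stdCorner (a - 1), g (emb a q) * f q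

/-- `μ` has continuous density `f`. -/
def IsContDensity {a : ℕ} (μ : Measure (Fin a → ℝ)) (f : (Fin (a - 1) → ℝ) → ℝ) : Prop :=
  ContinuousOn f (stdCorner (a - 1)) ∧ (∀ q, 0 ≤ f q) ∧
  (∫ q in stdCorner (a - 1), f q) = 1 ∧
  ∀ g : (Fin a → ℝ) → ℝ, Measurable g → (∃ C, ∀ p, |g p| ≤ C) →
    (∫ p, g p ∂μ) = ∫ q in stdCorner (a - 1), g (emb a q) * f q

/-- Normalisation constant `C_{y⃗} = ∫_Δ f(q) L_{y⃗}(p(q)) dλ(q)`. -/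
def Cw {a b n : ℕ} (Q : Matrix (Fin b) (Fin a) ℝ) (f : (Fin (a - 1) → ℝ) → ℝ)
    (y : Fin n → Fin b) : ℝ :=
  ∫ q in stdCorner (a - 1), f q * lik Q y (emb a q)

/-- Posterior density `g_{y⃗}(q) = f(q) L_{y⃗}(p(q)) / C_{y⃗}`. -/
def gpost {a b n : ℕ} (Q : Matrix (Fin b) (Fin a) ℝ) (f : (Fin (a - 1) → ℝ) → ℝ)
    (y : Fin n → Fin b) (q : Fin (a - 1) → ℝ) : ℝ :=
  f q * lik Q y (emb a q) / Cw Q f y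

/-- Conditional differential entropy `h_n(P | Y⃗)`. -/
def hCond {a b : ℕ} (Q : Matrix (Fin b) (Fin a) ℝ) (f : (Fin (a - 1) → ℝ) → ℝ)
    (n : ℕ) : ℝ :=
  ∑ y : (Fin n → Fin b),
    Cw Q f y * (-(∫ q in stdCorner (a - 1), gpost Q f y q * Real.log (gpost Q f y q)))

/-- The matrix `D_p = Qᵀ · diag(Qp)⁻¹ · Q`. -/
def Dmat {a b : ℕ} (Q : Matrix (Fin b) (Fin a) ℝ) (p : Fin a → ℝ) :
    Matrix (Fin a) (Fin a) ℝ :=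
  Qᵀ * Matrix.diagonal (fun y => (Q.mulVec p y)⁻¹) * Q

/-- The constant `γ_μ(Q)`. -/
def gammaMu {a b : ℕ} (Q : Matrix (Fin b) (Fin a) ℝ) (μ : Measure (Fin a → ℝ)) : ℝ :=
  (((a : ℝ) - 1) / 2) * Real.log (2 * π * Real.exp 1) -
    (1 / 2) * ∫ p, Real.log (Dmat Q p).det ∂μ

/-- The truncated column `w_x = (Q_{1|x}, …, Q_{b-1|x})`. -/
def wcol {a b : ℕ} (Q : Matrix (Fin b) (Fin a) ℝ) (x : Fin a) : Fin (b - 1) → ℝ :=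
  fun y => Q ⟨y.1, lt_of_lt_of_le y.2 (Nat.sub_le b 1)⟩ x

/-- The matrix `E_x = diag(w_x) - w_x w_xᵀ`. -/
def Emat {a b : ℕ} (Q : Matrix (Fin b) (Fin a) ℝ) (x : Fin a) :
    Matrix (Fin (b - 1)) (Fin (b - 1)) ℝ :=
  Matrix.diagonal (wcol Q x) - Matrix.vecMulVec (wcol Q x) (wcol Q x)

/-- The matrix `G_p = ∑ x, p_x E_x`. -/
def Gmat {a b : ℕ} (Q : Matrix (Fin b) (Fin a) ℝ) (p : Fin a → ℝ) :
    Matrix (Fin (b - 1)) (Fin (b - 1)) ℝ :=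
  ∑ x, p x • Emat Q x

/-- The constant `δ_μ(Q)`. -/
def deltaMu {a b : ℕ} (Q : Matrix (Fin b) (Fin a) ℝ) (μ : Measure (Fin a → ℝ)) : ℝ :=
  gammaMu Q μ +
    (1 / 2) * ∫ p, (Real.log (Gmat Q p).det - ∑ y, Real.log (Q.mulVec p y)) ∂μ

/-- `Q` satisfies `ε`-local differential privacy. -/
def SatisfiesLDP {a b : ℕ} (Q : Matrix (Fin b) (Fin a) ℝ) (ε : ℝ) : Prop :=
  ∀ x x' : Fin a, ∀ y : Fin b, Q y x' ≤ Real.exp ε * Q y x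

set_option linter.unusedVariables false

namespace FreqEnt

/-! ### Expectations over words with independent letters -/

/-- Expectation of `g` over words `z` of length `n` whose `i`-th letter has weight `ρ i`,
independently over the sites, written as a finite sum. -/
def Ew {α : Type*} [Fintype α] {n : ℕ} (ρ : Fin n → α → ℝ) (g : (Fin n → α) → ℝ) : ℝ :=
  ∑ z : Fin n → α, (∏ i, ρ i (z i)) * g z

section
variable {α : Type*} [Fintype α] {n : ℕ}

lemma Ew_succ (ρ : Fin (n + 1) → α → ℝ) (g : (Fin (n + 1) → α) → ℝ) :
    Ew ρ g = ∑ c, ρ 0 c * Ew (fun i => ρ i.succ) (fun z => g (Fin.cons c z)) := by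
  unfold Ew
  rw [← (Fin.consEquiv (fun _ : Fin (n + 1) => α)).sum_comp, Fintype.sum_prod_type]
  refine Finset.sum_congr rfl fun c _ => ?_
  rw [Finset.mul_sum]
  refine Finset.sum_congr rfl fun z _ => ?_
  simp [Fin.consEquiv, Fin.prod_univ_succ, mul_assoc]

lemma Ew_add (ρ : Fin n → α → ℝ) (g h : (Fin n → α) → ℝ) :
    Ew ρ (fun z => g z + h z) = Ew ρ g + Ew ρ h := by
  simp [Ew, mul_add, Finset.sum_add_distrib]

lemma Ew_sub (ρ : Fin n → α → ℝ) (g h : (Fin n → α) → ℝ) :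
    Ew ρ (fun z => g z - h z) = Ew ρ g - Ew ρ h := by
  simp [Ew, mul_sub, Finset.sum_sub_distrib]

lemma Ew_neg (ρ : Fin n → α → ℝ) (g : (Fin n → α) → ℝ) :
    Ew ρ (fun z => - g z) = - Ew ρ g := by
  simp [Ew]

lemma Ew_const_mul (ρ : Fin n → α → ℝ) (r : ℝ) (g : (Fin n → α) → ℝ) :
    Ew ρ (fun z => r * g z) = r * Ew ρ g := by
  simp only [Ew, Finset.mul_sum]
  exact Finset.sum_congr rfl fun z _ => by ring

lemma Ew_mul_const (ρ : Fin n → α → ℝ) (r : ℝ) (g : (Fin n → α) → ℝ) :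
    Ew ρ (fun z => g z * r) = Ew ρ g * r := by
  simp only [mul_comm _ r, Ew_const_mul]

lemma Ew_div_const (ρ : Fin n → α → ℝ) (r : ℝ) (g : (Fin n → α) → ℝ) :
    Ew ρ (fun z => g z / r) = Ew ρ g / r := by
  simp only [div_eq_mul_inv, Ew_mul_const]

lemma Ew_sum {ι : Type*} (ρ : Fin n → α → ℝ) (s : Finset ι) (g : ι → (Fin n → α) → ℝ) :
    Ew ρ (fun z => ∑ i ∈ s, g i z) = ∑ i ∈ s, Ew ρ (g i) := by
  simp only [Ew, Finset.mul_sum]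
  exact Finset.sum_comm

lemma Ew_mono {ρ : Fin n → α → ℝ} (hρ : ∀ i c, 0 ≤ ρ i c) {g h : (Fin n → α) → ℝ}
    (hgh : ∀ z, g z ≤ h z) : Ew ρ g ≤ Ew ρ h :=
  Finset.sum_le_sum fun z _ =>
    mul_le_mul_of_nonneg_left (hgh z) (Finset.prod_nonneg fun i _ => hρ i _)

lemma Ew_nonneg {ρ : Fin n → α → ℝ} (hρ : ∀ i c, 0 ≤ ρ i c) {g : (Fin n → α) → ℝ}
    (hg : ∀ z, 0 ≤ g z) : 0 ≤ Ew ρ g :=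
  Finset.sum_nonneg fun z _ => mul_nonneg (Finset.prod_nonneg fun i _ => hρ i _) (hg z)

lemma abs_Ew_le {ρ : Fin n → α → ℝ} (hρ : ∀ i c, 0 ≤ ρ i c) (g : (Fin n → α) → ℝ) :
    |Ew ρ g| ≤ Ew ρ (fun z => |g z|) := by
  refine (Finset.abs_sum_le_sum_abs _ _).trans (le_of_eq ?_)
  refine Finset.sum_congr rfl fun z _ => ?_
  rw [abs_mul, abs_of_nonneg (Finset.prod_nonneg fun i _ => hρ i _)]

lemma Ew_const {ρ : Fin n → α → ℝ} (hs : ∀ i, ∑ c, ρ i c = 1) (r : ℝ) :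
    Ew ρ (fun _ => r) = r := by
  unfold Ew
  rw [← Finset.sum_mul, ← Fintype.prod_sum]
  simp [hs]

/-- Cauchy–Schwarz-free bound `E|g| ≤ (1 + E g²) / 2`. -/
lemma Ew_abs_le {ρ : Fin n → α → ℝ} (hρ : ∀ i c, 0 ≤ ρ i c) (hs : ∀ i, ∑ c, ρ i c = 1)
    (g : (Fin n → α) → ℝ) : Ew ρ (fun z => |g z|) ≤ (1 + Ew ρ (fun z => g z ^ 2)) / 2 := by
  have : Ew ρ (fun z => |g z|) ≤ Ew ρ (fun z => (1 + g z ^ 2) / 2) := by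
    refine Ew_mono hρ fun z => ?_
    nlinarith [sq_nonneg (|g z| - 1), sq_abs (g z)]
  rwa [Ew_div_const, Ew_add, Ew_const hs] at this

lemma Ew_linear {ρ : Fin n → α → ℝ} (hs : ∀ i, ∑ c, ρ i c = 1) (h : Fin n → α → ℝ) :
    Ew ρ (fun z => ∑ i, h i (z i)) = ∑ i, ∑ c, ρ i c * h i c := by
  induction n with
  | zero => simp [Ew]
  | succ n ih =>
    rw [Ew_succ, Fin.sum_univ_succ]
    simp only [Fin.sum_univ_succ, Fin.cons_zero, Fin.cons_succ, Ew_add]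
    simp only [Ew_const fun i => hs (Fin.succ i), ih (fun i => hs i.succ), mul_add,
      Finset.sum_add_distrib, ← Finset.sum_mul, hs 0, one_mul]

/-- Second moments of sums of independent centred variables. -/
lemma Ew_cov {ρ : Fin n → α → ℝ} (hs : ∀ i, ∑ c, ρ i c = 1) (h g : Fin n → α → ℝ)
    (hh : ∀ i, ∑ c, ρ i c * h i c = 0) (hg : ∀ i, ∑ c, ρ i c * g i c = 0) :
    Ew ρ (fun z => (∑ i, h i (z i)) * (∑ i, g i (z i))) = ∑ i, ∑ c, ρ i c * (h i c * g i c) := by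
  induction n with
  | zero => simp [Ew]
  | succ n ih =>
    rw [Ew_succ, Fin.sum_univ_succ]
    have e1 : ∀ c, Ew (fun i => ρ i.succ) (fun z : Fin n → α =>
        (∑ i, h i ((Fin.cons c z : Fin (n + 1) → α) i)) *
          (∑ i, g i ((Fin.cons c z : Fin (n + 1) → α) i)))
        = h 0 c * g 0 c + ∑ i : Fin n, ∑ c, ρ i.succ c * (h i.succ c * g i.succ c) := by
      intro c
      rw [← ih (fun i => hs i.succ) (fun i => h i.succ) (fun i => g i.succ)
        (fun i => hh i.succ) (fun i => hg i.succ)]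
      have l1 := Ew_linear (fun i => hs i.succ) (fun i : Fin n => h i.succ)
      have l2 := Ew_linear (fun i => hs i.succ) (fun i : Fin n => g i.succ)
      simp only [hh, hg, Finset.sum_const_zero] at l1 l2
      simp only [Fin.sum_univ_succ, Fin.cons_zero, Fin.cons_succ]
      have : (fun z : Fin n → α => (h 0 c + ∑ i : Fin n, h i.succ (z i)) *
          (g 0 c + ∑ i : Fin n, g i.succ (z i))) = fun z =>
          (h 0 c * g 0 c + h 0 c * ∑ i : Fin n, g i.succ (z i)) +
          (g 0 c * (∑ i : Fin n, h i.succ (z i)) +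
            (∑ i : Fin n, h i.succ (z i)) * ∑ i : Fin n, g i.succ (z i)) := by
        funext z; ring
      rw [this, Ew_add, Ew_add, Ew_add, Ew_const fun i => hs (Fin.succ i), Ew_const_mul,
        Ew_const_mul, l1, l2]
      ring
    simp only [e1, mul_add, Finset.sum_add_distrib, ← Finset.sum_mul, hs 0, one_mul]

/-- Fourth moments of sums of independent centred variables. -/
lemma Ew_fourth {ρ : Fin n → α → ℝ} (hρ : ∀ i c, 0 ≤ ρ i c) (hs : ∀ i, ∑ c, ρ i c = 1)
    (h : Fin n → α → ℝ) (hh : ∀ i, ∑ c, ρ i c * h i c = 0) :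
    Ew ρ (fun z => (∑ i, h i (z i)) ^ 4) ≤
      (∑ i, ∑ c, ρ i c * h i c ^ 4) + 3 * (∑ i, ∑ c, ρ i c * h i c ^ 2) ^ 2 := by
  induction n with
  | zero => simp [Ew]
  | succ n ih =>
    have ih' := ih (fun i => hρ i.succ) (fun i => hs i.succ) (fun i => h i.succ)
      (fun i => hh i.succ)
    rw [Ew_succ]
    set M2 := ∑ i : Fin n, ∑ c, ρ i.succ c * h i.succ c ^ 2 with hM2
    set M4 := ∑ i : Fin n, ∑ c, ρ i.succ c * h i.succ c ^ 4 with hM4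
    have l1 := Ew_linear (fun i => hs i.succ) (fun i : Fin n => h i.succ)
    have l2 := Ew_cov (fun i => hs i.succ) (fun i : Fin n => h i.succ) (fun i => h i.succ)
      (fun i => hh i.succ) (fun i => hh i.succ)
    simp only [hh, Finset.sum_const_zero] at l1
    simp only [← pow_two] at l2
    rw [← hM2] at l2
    set X3 := Ew (fun i : Fin n => ρ i.succ) (fun z => (∑ i, h i.succ (z i)) ^ 3)
    set X4 := Ew (fun i : Fin n => ρ i.succ) (fun z => (∑ i, h i.succ (z i)) ^ 4)
    have e1 : ∀ c, Ew (fun i => ρ i.succ) (fun z : Fin n → α =>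
        (∑ i, h i ((Fin.cons c z : Fin (n + 1) → α) i)) ^ 4)
        = h 0 c ^ 4 + 6 * M2 * h 0 c ^ 2 + 4 * X3 * h 0 c + X4 := by
      intro c
      simp only [Fin.sum_univ_succ, Fin.cons_zero, Fin.cons_succ]
      have : (fun z : Fin n → α => (h 0 c + ∑ i : Fin n, h i.succ (z i)) ^ 4) = fun z =>
          ((h 0 c ^ 4 + (4 * h 0 c ^ 3) * ∑ i : Fin n, h i.succ (z i)) +
          (6 * h 0 c ^ 2) * (∑ i : Fin n, h i.succ (z i)) ^ 2) +
          ((4 * h 0 c) * (∑ i : Fin n, h i.succ (z i)) ^ 3 +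
            (∑ i : Fin n, h i.succ (z i)) ^ 4) := by
        funext z; ring
      rw [this, Ew_add, Ew_add, Ew_add, Ew_add, Ew_const_mul, Ew_const_mul, Ew_const_mul, l1, l2,
        Ew_const fun i => hs (Fin.succ i)]
      ring
    simp only [e1]
    have e2 : ∑ c, ρ 0 c * (h 0 c ^ 4 + 6 * M2 * h 0 c ^ 2 + 4 * X3 * h 0 c + X4)
        = (∑ c, ρ 0 c * h 0 c ^ 4) + 6 * M2 * (∑ c, ρ 0 c * h 0 c ^ 2)
          + 4 * X3 * (∑ c, ρ 0 c * h 0 c) + X4 * ∑ c, ρ 0 c := by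
      simp only [Finset.mul_sum, ← Finset.sum_add_distrib]
      exact Finset.sum_congr rfl fun c _ => by ring
    rw [e2, hh 0, hs 0, Fin.sum_univ_succ, Fin.sum_univ_succ]
    rw [← hM2, ← hM4]
    nlinarith [sq_nonneg (∑ c, ρ 0 c * h 0 c ^ 2)]

end

/-- Gibbs' inequality for finite sums, without normalisation. -/
lemma gibbs {ι : Type*} (s : Finset ι) (u v : ι → ℝ) (hu : ∀ i ∈ s, 0 ≤ u i)
    (hv : ∀ i ∈ s, 0 < v i) :
    ∑ i ∈ s, u i - ∑ i ∈ s, v i ≤ ∑ i ∈ s, u i * Real.log (u i / v i) := by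
  rw [← Finset.sum_sub_distrib]
  refine Finset.sum_le_sum fun i hi => ?_
  rcases (hu i hi).eq_or_lt with h0 | h0
  · rw [← h0]; simp [(hv i hi).le]
  · have h1 := Real.one_sub_inv_le_log_of_pos (div_pos h0 (hv i hi))
    have h2 : u i * (1 - (u i / v i)⁻¹) = u i - v i := by
      have := (hv i hi).ne'
      field_simp
    nlinarith

/-! ### Expected log-factorials of binomial counts -/

/-- Stirling's formula with a remainder that is small up to a multiple of `1/k`. -/
lemma stirling_err {ε : ℝ} (hε : 0 < ε) : ∃ C : ℝ, 0 ≤ C ∧ ∀ k : ℕ, 1 ≤ k →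
    |Real.log k.factorial - k * Real.log k + k - Real.log (2 * π * k) / 2| ≤ ε + C / k := by
  have h1 : Tendsto (fun k : ℕ => Real.log (Stirling.stirlingSeq k) - Real.log (√π)) atTop
      (nhds 0) := by
    have := (Stirling.tendsto_stirlingSeq_sqrt_pi.log (by positivity)).sub_const
      (Real.log (√π))
    simpa using this
  have h2 : ∀ k : ℕ, 1 ≤ k → Real.log (Stirling.stirlingSeq k) - Real.log (√π) =
      Real.log k.factorial - k * Real.log k + k - Real.log (2 * π * k) / 2 := by
    intro k hk
    have hk' : (0 : ℝ) < k := by exact_mod_cast hk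
    rw [Stirling.log_stirlingSeq_formula, Real.log_sqrt pi_pos.le,
      Real.log_div hk'.ne' (exp_pos 1).ne', Real.log_exp,
      show 2 * π * (k : ℝ) = π * (2 * k) by ring, Real.log_mul pi_ne_zero (by positivity)]
    ring
  obtain ⟨N, hN⟩ := (Metric.tendsto_atTop.1 h1) ε hε
  obtain ⟨B, hB⟩ := h1.bddAbove_range
  obtain ⟨A, hA⟩ := h1.bddBelow_range
  refine ⟨(|B| + |A|) * N, by positivity, fun k hk => ?_⟩
  have hk' : (0 : ℝ) < k := by exact_mod_cast hk
  rw [← h2 k hk]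
  rcases le_or_gt N k with h | h
  · have := hN k h
    rw [Real.dist_eq, sub_zero] at this
    have : 0 ≤ (|B| + |A|) * N / k := by positivity
    linarith
  · have hb := hB ⟨k, rfl⟩
    have ha := hA ⟨k, rfl⟩
    simp only at ha hb
    have h3 : |Real.log (Stirling.stirlingSeq k) - Real.log (√π)| ≤ |B| + |A| := by
      rw [abs_le]
      constructor
      · linarith [neg_abs_le A, abs_nonneg B]
      · linarith [le_abs_self B, abs_nonneg A]
    have h4 : |B| + |A| ≤ (|B| + |A|) * N / k := by
      rw [le_div_iff₀ hk']
      have : (k : ℝ) ≤ N := by exact_mod_cast h.le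
      have := abs_nonneg B
      have := abs_nonneg A
      gcongr
    linarith

lemma entropy_taylor {u : ℝ} (hu : -1 ≤ u) :
    |(1 + u) * Real.log (1 + u) - u - u ^ 2 / 2| ≤ 4 * |u| ^ 3 := by
  rcases le_or_gt |u| (1 / 2) with h | h
  · have h1 := Real.abs_log_sub_add_sum_range_le (x := -u) (by rw [abs_neg]; linarith) 2
    simp only [Finset.sum_range_succ, Finset.sum_range_zero, abs_neg, sub_neg_eq_add] at h1
    norm_num at h1
    have h2 : |u| ^ 3 / (1 - |u|) ≤ 2 * |u| ^ 3 := by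
      rw [div_le_iff₀ (by linarith)]
      nlinarith [pow_nonneg (abs_nonneg u) 3]
    have h3 : (1 + u) * Real.log (1 + u) - u - u ^ 2 / 2
        = (1 + u) * (-u + u ^ 2 / 2 + Real.log (1 + u)) - u ^ 3 / 2 := by ring
    rw [h3]
    refine (abs_sub _ _).trans ?_
    rw [abs_mul, abs_div, abs_pow]
    have h4 : |1 + u| ≤ 3 / 2 := by
      rw [abs_le] at h ⊢; constructor <;> linarith
    have h5 := h1.trans h2
    have h6 : |1 + u| * |-u + u ^ 2 / 2 + Real.log (1 + u)| ≤ 3 / 2 * (2 * |u| ^ 3) := by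
      gcongr
    have := pow_nonneg (abs_nonneg u) 3
    norm_num
    linarith
  · have h0 : 0 ≤ 1 + u := by linarith
    have hl : u ≤ (1 + u) * Real.log (1 + u) := by
      rcases h0.eq_or_lt with h' | h'
      · rw [← h']; simp; linarith
      · have := Real.one_sub_inv_le_log_of_pos h'
        have h2 : (1 + u) * (1 - (1 + u)⁻¹) = u := by field_simp; ring
        nlinarith
    have hr : (1 + u) * Real.log (1 + u) ≤ (1 + u) * u := by
      rcases h0.eq_or_lt with h' | h'
      · rw [← h']; simp
      · have := Real.log_le_sub_one_of_pos h'
        nlinarith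
    have h7 : u ^ 2 / 2 ≤ 4 * |u| ^ 3 := by
      rw [← sq_abs]
      nlinarith [sq_nonneg |u|]
    rw [abs_le]
    constructor <;> nlinarith

set_option maxHeartbeats 1000000 in
/-- Pointwise second order expansion of `log k!` around the real number `l`. -/
lemma log_factorial_expand {ε : ℝ} (hε : 0 < ε) : ∃ C : ℝ, 0 ≤ C ∧ ∀ (l : ℝ) (k : ℕ), 1 ≤ l →
    |Real.log k.factorial - (l * Real.log l - l + (k - l) * Real.log l + (k - l) ^ 2 / (2 * l)
      + Real.log (2 * π * l) / 2)| ≤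
    ε + ε * (((k - l) ^ 2) / l) + C * (1 / l + (1 + Real.log l) * ((k - l) ^ 2 / l ^ 2)
      + ((k - l) ^ 4 / l ^ 3)) := by
  obtain ⟨C, hC, hS⟩ := stirling_err (half_pos hε)
  have hp : 0 ≤ Real.log (2 * π) := Real.log_nonneg (by nlinarith [pi_gt_three])
  refine ⟨16 / ε + 2 * C + 2 / ε + (4 * (ε / 2 + C + Real.log (2 * π) + 1)),
    by positivity, fun l k hl => ?_⟩
  have hl0 : 0 < l := by linarith
  have hll : 0 ≤ Real.log l := Real.log_nonneg hl
  obtain ⟨u, hu⟩ : ∃ u : ℝ, u = (k - l) / l := ⟨_, rfl⟩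
  have hk : (k : ℝ) = l * (1 + u) := by rw [hu]; field_simp; ring
  have hu1 : -1 ≤ u := by
    have : 0 ≤ l * (1 + u) := hk ▸ Nat.cast_nonneg k
    nlinarith [nonneg_of_mul_nonneg_right this hl0]
  -- the remainder of Stirling's formula at `k`, compared with its value at `l`
  set sg := Real.log k.factorial - k * Real.log k + k with hsg
  have key : Real.log k.factorial - (l * Real.log l - l + (k - l) * Real.log l
      + (k - l) ^ 2 / (2 * l) + Real.log (2 * π * l) / 2)
      = l * ((1 + u) * Real.log (1 + u) - u - u ^ 2 / 2) + (sg - Real.log (2 * π * l) / 2) := by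
    have h1 : (k : ℝ) * Real.log k = l * (1 + u) * Real.log l
        + l * ((1 + u) * Real.log (1 + u)) := by
      rcases (by linarith : 0 ≤ 1 + u).eq_or_lt with h | h
      · rw [hk, ← h]; simp
      · rw [hk, Real.log_mul hl0.ne' h.ne']; ring
    have h2 : ((k : ℝ) - l) ^ 2 / (2 * l) = l * (u ^ 2 / 2) := by
      rw [hk]; field_simp; ring
    rw [h2, hsg, h1, hk]; ring
  have e2 : ((k : ℝ) - l) ^ 2 / l = l * u ^ 2 := by rw [hk]; field_simp; ring
  have e3 : ((k : ℝ) - l) ^ 2 / l ^ 2 = u ^ 2 := by rw [hk]; field_simp; ring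
  have e4 : ((k : ℝ) - l) ^ 4 / l ^ 3 = l * u ^ 4 := by rw [hk]; field_simp; ring
  rw [key, e2, e3, e4]
  have t1 : |l * ((1 + u) * Real.log (1 + u) - u - u ^ 2 / 2)| ≤
      ε * (l * u ^ 2) + 16 / ε * (l * u ^ 4) := by
    rw [abs_mul, abs_of_pos hl0]
    have h1 := entropy_taylor hu1
    have h2 : 4 * |u| ^ 3 ≤ ε * u ^ 2 + 16 / ε * u ^ 4 := by
      have : ε * u ^ 2 + 16 / ε * u ^ 4 - 4 * |u| ^ 3 =
          (ε * |u| - 2 * |u| ^ 2) ^ 2 / ε + 12 / ε * |u| ^ 4 := by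
        rw [← sq_abs u, show u ^ 4 = |u| ^ 4 by rw [← abs_pow, abs_of_nonneg (by positivity)]]
        field_simp; ring
      have : 0 ≤ (ε * |u| - 2 * |u| ^ 2) ^ 2 / ε + 12 / ε * |u| ^ 4 := by positivity
      linarith
    calc l * _ ≤ l * (ε * u ^ 2 + 16 / ε * u ^ 4) := by
          gcongr; exact h1.trans h2
      _ = _ := by ring
  have t2 : |sg - Real.log (2 * π * l) / 2| ≤ ε + 2 * C / l + 2 / ε * u ^ 2 +
      4 * (ε / 2 + C + Real.log (2 * π) + 1) * ((1 + Real.log l) * u ^ 2) := by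
    have hlog2 : Real.log (2 * π * l) = Real.log (2 * π) + Real.log l :=
      Real.log_mul (by positivity) hl0.ne'
    rcases le_or_gt (-(1 / 2)) u with h | h
    · have hkl : l / 2 ≤ k := by rw [hk]; nlinarith
      have hk1 : 1 ≤ k := by
        have : (0 : ℝ) < k := by linarith
        exact_mod_cast this
      have hk0 : (0 : ℝ) < k := by exact_mod_cast hk1
      have h1 := hS k hk1
      have hlogk : Real.log (2 * π * k) = Real.log (2 * π) + Real.log l + Real.log (1 + u) := by
        rw [hk, Real.log_mul (by positivity) (by rw [← hk]; exact hk0.ne'),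
          Real.log_mul hl0.ne' (by linarith)]
        ring
      have h2 : C / k ≤ 2 * C / l := by
        rw [div_le_div_iff₀ hk0 hl0]; nlinarith
      have h3 : |Real.log (1 + u)| ≤ 2 * |u| := by
        have a1 := Real.log_le_sub_one_of_pos (by linarith : 0 < 1 + u)
        have a2 := Real.one_sub_inv_le_log_of_pos (by linarith : 0 < 1 + u)
        have a3 : -(2 * |u|) ≤ 1 - (1 + u)⁻¹ := by
          have : 1 - (1 + u)⁻¹ = u / (1 + u) := by
            have : 1 + u ≠ 0 := by linarith
            field_simp; ring
          rw [this, le_div_iff₀ (by linarith)]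
          nlinarith [neg_abs_le u, abs_nonneg u]
        rw [abs_le]
        constructor
        · linarith
        · linarith [le_abs_self u, abs_nonneg u]
      have h4 : |u| ≤ ε / 2 + 2 / ε * u ^ 2 := by
        have : ε / 2 + 2 / ε * u ^ 2 - |u| = (ε / 2 - |u|) ^ 2 / ε + |u| ^ 2 / ε + ε / 4 := by
          rw [← sq_abs u]; field_simp; ring
        have : 0 ≤ (ε / 2 - |u|) ^ 2 / ε + |u| ^ 2 / ε + ε / 4 := by positivity
        linarith
      have h5 : sg - Real.log (2 * π * l) / 2 =
          (sg - Real.log (2 * π * k) / 2) + Real.log (1 + u) / 2 := by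
        rw [hlogk, hlog2]; ring
      have h6 : 0 ≤ 4 * (ε / 2 + C + Real.log (2 * π) + 1) * ((1 + Real.log l) * u ^ 2) := by
        positivity
      rw [h5]
      refine (abs_add_le _ _).trans ?_
      rw [abs_div, abs_two]
      linarith
    · have hu2 : 1 ≤ 4 * u ^ 2 := by nlinarith
      have hsgb : |sg| ≤ ε / 2 + C + Real.log (2 * π) / 2 + Real.log l / 2 := by
        rcases Nat.eq_zero_or_pos k with h0 | h0
        · have : sg = 0 := by rw [hsg, h0]; simp
          rw [this, abs_zero]; positivity
        · have h1 := hS k h0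
          have hk0 : (0 : ℝ) < k := by exact_mod_cast h0
          have hk1 : (1 : ℝ) ≤ k := by exact_mod_cast h0
          have h2 : Real.log (2 * π * k) = Real.log (2 * π) + Real.log k :=
            Real.log_mul (by positivity) hk0.ne'
          have h3 : Real.log k ≤ Real.log l := Real.log_le_log hk0 (by rw [hk]; nlinarith)
          have h4 : 0 ≤ Real.log k := Real.log_nonneg hk1
          have h5 : C / k ≤ C := div_le_self hC hk1
          have h6 : |sg| ≤ |sg - Real.log (2 * π * k) / 2| + Real.log (2 * π * k) / 2 := by
            have := abs_add_le (sg - Real.log (2 * π * k) / 2) (Real.log (2 * π * k) / 2)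
            rw [sub_add_cancel, abs_of_nonneg (a := Real.log (2 * π * k) / 2)
              (by rw [h2]; positivity)] at this
            exact this
          rw [h2] at h6 h1
          linarith
      have h7 : |sg - Real.log (2 * π * l) / 2| ≤
          (ε / 2 + C + Real.log (2 * π) + 1) * (1 + Real.log l) := by
        refine (abs_sub _ _).trans ?_
        rw [hlog2, abs_of_nonneg (a := (Real.log (2 * π) + Real.log l) / 2) (by positivity)]
        have := mul_nonneg (by positivity : 0 ≤ ε / 2 + C + Real.log (2 * π)) hll
        linarith
      have h8 : (ε / 2 + C + Real.log (2 * π) + 1) * (1 + Real.log l) * 1 ≤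
          (ε / 2 + C + Real.log (2 * π) + 1) * (1 + Real.log l) * (4 * u ^ 2) := by
        gcongr
      have h9 : 0 ≤ 2 * C / l := by positivity
      have h10 : 0 ≤ 2 / ε * u ^ 2 := by positivity
      linarith
  refine (abs_add_le _ _).trans ?_
  set M := ε / 2 + C + Real.log (2 * π) + 1
  have hM : 0 ≤ M := by positivity
  have p1 : 0 ≤ l * u ^ 4 := by positivity
  have p2 : u ^ 2 ≤ (1 + Real.log l) * u ^ 2 := by nlinarith [sq_nonneg u]
  have p3 : 0 ≤ 1 / l := by positivity
  have p4 : 2 / ε * u ^ 2 ≤ 2 / ε * ((1 + Real.log l) * u ^ 2) := by gcongr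
  have p5 : 0 ≤ (1 + Real.log l) * u ^ 2 := by positivity
  have p6 : 2 * C / l = 2 * C * (1 / l) := by ring
  rw [p6] at t2
  have q1 : 0 ≤ 16 / ε * (1 / l) := by positivity
  have q2 : 0 ≤ 16 / ε * ((1 + Real.log l) * u ^ 2) := by positivity
  have q3 : 0 ≤ 2 * C * ((1 + Real.log l) * u ^ 2) := by positivity
  have q4 : 0 ≤ 2 * C * (l * u ^ 4) := by positivity
  have q5 : 0 ≤ 2 / ε * (1 / l) := by positivity
  have q6 : 0 ≤ 2 / ε * (l * u ^ 4) := by positivity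
  have q7 : 0 ≤ 4 * M * (1 / l) := by positivity
  have q8 : 0 ≤ 4 * M * (l * u ^ 4) := by positivity
  linarith

/-- The asymptotic value of `E log K!` for a binomial count `K` with parameters `n`, `r`. -/
def sbin (n : ℕ) (r : ℝ) : ℝ :=
  n * r * Real.log (n * r) - n * r + Real.log (2 * π * (n * r)) / 2 + (1 - r) / 2

/-- Number of sites of a word at which the letter satisfies `P`. -/
def cnt {α : Type*} {n : ℕ} (P : α → Prop) [DecidablePred P] (z : Fin n → α) : ℕ :=
  (Finset.univ.filter fun i => P (z i)).card

section
lemma cnt_eq_sum {α : Type*} {n : ℕ} (P : α → Prop) [DecidablePred P] (z : Fin n → α) :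
    (cnt P z : ℝ) = ∑ i, if P (z i) then (1 : ℝ) else 0 := by
  simp [cnt]

lemma cnt_sub {α : Type*} {n : ℕ} (P : α → Prop) [DecidablePred P] (z : Fin n → α) (r : ℝ) :
    (cnt P z : ℝ) - n * r = ∑ i, ((if P (z i) then (1 : ℝ) else 0) - r) := by
  rw [cnt_eq_sum, Finset.sum_sub_distrib]; simp

lemma cnt_centred {α : Type*} [Fintype α] {ρ : α → ℝ} (hs : ∑ c, ρ c = 1)
    (P : α → Prop) [DecidablePred P] {r : ℝ}
    (hr : ∑ c, ρ c * (if P c then (1 : ℝ) else 0) = r) :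
    ∑ c, ρ c * ((if P c then (1 : ℝ) else 0) - r) = 0 := by
  simp only [mul_sub, Finset.sum_sub_distrib, hr, ← Finset.sum_mul, hs]; ring

lemma cnt_mean {α : Type*} [Fintype α] {ρ : α → ℝ} (hs : ∑ c, ρ c = 1)
    (P : α → Prop) [DecidablePred P] {r : ℝ}
    (hr : ∑ c, ρ c * (if P c then (1 : ℝ) else 0) = r) {n : ℕ} :
    Ew (n := n) (fun _ => ρ) (fun z => (cnt P z : ℝ) - n * r) = 0 := by
  simp only [cnt_sub]
  rw [Ew_linear (fun _ => hs) (fun _ c => (if P c then (1 : ℝ) else 0) - r)]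
  simp only [cnt_centred hs P hr]; simp

lemma cnt_var {α : Type*} [Fintype α] {ρ : α → ℝ} (hs : ∑ c, ρ c = 1)
    (P : α → Prop) [DecidablePred P] {r : ℝ}
    (hr : ∑ c, ρ c * (if P c then (1 : ℝ) else 0) = r) {n : ℕ} :
    Ew (n := n) (fun _ => ρ) (fun z => ((cnt P z : ℝ) - n * r) ^ 2)
    = n * (r * (1 - r)) := by
  simp only [cnt_sub, pow_two]
  rw [Ew_cov (fun _ => hs) (fun _ c => (if P c then (1 : ℝ) else 0) - r)
    (fun _ c => (if P c then (1 : ℝ) else 0) - r) (fun _ => cnt_centred hs P hr) (fun _ => cnt_centred hs P hr)]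
  have : ∑ c, ρ c * (((if P c then (1 : ℝ) else 0) - r) * ((if P c then (1 : ℝ) else 0) - r))
      = r * (1 - r) := by
    have h1 : ∀ c, ρ c * (((if P c then (1 : ℝ) else 0) - r) * ((if P c then (1 : ℝ) else 0) - r))
        = (1 - 2 * r) * (ρ c * (if P c then (1 : ℝ) else 0)) + r ^ 2 * ρ c := by
      intro c; split_ifs <;> ring
    simp only [h1, Finset.sum_add_distrib, ← Finset.mul_sum, hr, hs]; ring
  simp [this]

lemma cnt_fourth {α : Type*} [Fintype α] {ρ : α → ℝ} (hρ : ∀ c, 0 ≤ ρ c) (hs : ∑ c, ρ c = 1)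
    (P : α → Prop) [DecidablePred P] {r : ℝ}
    (hr : ∑ c, ρ c * (if P c then (1 : ℝ) else 0) = r) {n : ℕ} (hr0 : 0 ≤ r) (hr1 : r ≤ 1) :
    Ew (n := n) (fun _ => ρ) (fun z => ((cnt P z : ℝ) - n * r) ^ 4)
    ≤ n * r + 3 * (n * r) ^ 2 := by
  simp only [cnt_sub]
  refine (Ew_fourth (fun _ => hρ) (fun _ => hs)
    (fun _ c => (if P c then (1 : ℝ) else 0) - r) (fun _ => cnt_centred hs P hr)).trans ?_
  have h2 : ∑ c, ρ c * ((if P c then (1 : ℝ) else 0) - r) ^ 2 ≤ r := by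
    have h1 : ∀ c, ρ c * ((if P c then (1 : ℝ) else 0) - r) ^ 2
        = (1 - 2 * r) * (ρ c * (if P c then (1 : ℝ) else 0)) + r ^ 2 * ρ c := by
      intro c; split_ifs <;> ring
    simp only [h1, Finset.sum_add_distrib, ← Finset.mul_sum, hr, hs]; nlinarith
  have h20 : 0 ≤ ∑ c, ρ c * ((if P c then (1 : ℝ) else 0) - r) ^ 2 :=
    Finset.sum_nonneg fun c _ => mul_nonneg (hρ c) (by positivity)
  have h4 : ∑ c, ρ c * ((if P c then (1 : ℝ) else 0) - r) ^ 4 ≤ r := by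
    refine le_trans (Finset.sum_le_sum fun c _ => ?_) h2
    refine mul_le_mul_of_nonneg_left ?_ (hρ c)
    have : ((if P c then (1 : ℝ) else 0) - r) ^ 2 ≤ 1 := by
      split_ifs <;> nlinarith
    nlinarith [sq_nonneg ((if P c then (1 : ℝ) else 0) - r)]
  simp only [Finset.sum_const, Finset.card_univ, Fintype.card_fin, nsmul_eq_mul]
  have hn : (0 : ℝ) ≤ n := Nat.cast_nonneg n
  gcongr

/-- Mean log-factorial of a binomial count when the mean count is at least one. -/
lemma cnt_logfact_large {ε : ℝ} (hε : 0 < ε) : ∃ C : ℝ, 0 ≤ C ∧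
    ∀ {α : Type}  [Fintype α] {n : ℕ} {ρ : α → ℝ} (_ : ∀ c, 0 ≤ ρ c) (_ : ∑ c, ρ c = 1)
    (P : α → Prop) [DecidablePred P] {r : ℝ}
    (_ : ∑ c, ρ c * (if P c then (1 : ℝ) else 0) = r) (_ : 0 ≤ r) (_ : r ≤ 1),
    1 ≤ n * r → |Ew (n := n) (fun _ => ρ) (fun z => Real.log (cnt P z).factorial) - sbin n r|
      ≤ ε + C * ((1 + Real.log (n * r)) / (n * r)) := by
  obtain ⟨C, hC, hE⟩ := log_factorial_expand (half_pos hε)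
  refine ⟨6 * C, by positivity, ?_⟩
  intro α _ n ρ hρ hs P _ r hr hr0 hr1 hl
  set l : ℝ := n * r with hldef
  have hl0 : 0 < l := by linarith
  have hll : 0 ≤ Real.log l := Real.log_nonneg hl
  have hv := cnt_var (n := n) hs P hr
  have hm := cnt_mean (n := n) hs P hr
  have hf := cnt_fourth (n := n) hρ hs P hr hr0 hr1
  rw [← hldef] at hv hm hf
  have e1 : Ew (n := n) (fun _ => ρ) (fun z => l * Real.log l - l + ((cnt P z : ℝ) - l) * Real.log l
      + ((cnt P z : ℝ) - l) ^ 2 / (2 * l) + Real.log (2 * π * l) / 2) = sbin n r := by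
    rw [Ew_add, Ew_add, Ew_add, Ew_const fun _ => hs, Ew_const fun _ => hs, Ew_mul_const,
      Ew_div_const, hm, hv, sbin, ← hldef]
    have : (n : ℝ) * (r * (1 - r)) / (2 * l) = (1 - r) / 2 := by
      rw [show (n : ℝ) * (r * (1 - r)) = l * (1 - r) by rw [hldef]; ring]
      field_simp
    rw [this]; ring
  rw [← e1, ← Ew_sub]
  refine (abs_Ew_le (fun _ => hρ) _).trans ?_
  refine (Ew_mono (fun _ => hρ) fun z => hE l (cnt P z) hl).trans ?_
  rw [Ew_add, Ew_add, Ew_const fun _ => hs, Ew_const_mul, Ew_const_mul, Ew_add, Ew_add,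
    Ew_const fun _ => hs, Ew_const_mul, Ew_div_const, Ew_div_const, Ew_div_const, hv]
  have hv' : (n : ℝ) * (r * (1 - r)) ≤ l := by
    rw [show (n : ℝ) * (r * (1 - r)) = l * (1 - r) by rw [hldef]; ring]
    nlinarith
  have a1 : (n : ℝ) * (r * (1 - r)) / l ≤ 1 := by rw [div_le_one hl0]; exact hv'
  have a2 : (n : ℝ) * (r * (1 - r)) / l ^ 2 ≤ 1 / l := by
    rw [div_le_div_iff₀ (by positivity) hl0]; nlinarith
  have a3 : Ew (n := n) (fun _ => ρ) (fun z => ((cnt P z : ℝ) - l) ^ 4) / l ^ 3 ≤ 4 / l := by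
    rw [div_le_div_iff₀ (by positivity) hl0]
    nlinarith [pow_pos hl0 2, pow_pos hl0 3]
  have a4 : 1 / l ≤ (1 + Real.log l) / l := by gcongr; linarith
  have a5 : (1 + Real.log l) * ((n : ℝ) * (r * (1 - r)) / l ^ 2) ≤ (1 + Real.log l) / l := by
    calc _ ≤ (1 + Real.log l) * (1 / l) := by gcongr
      _ = _ := by ring
  have a6 : 4 / l ≤ 4 * ((1 + Real.log l) / l) := by
    calc 4 / l = 4 * (1 / l) := by ring
      _ ≤ _ := by gcongr
  have a7 : C * (1 / l + (1 + Real.log l) * ((n : ℝ) * (r * (1 - r)) / l ^ 2) +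
      Ew (n := n) (fun _ => ρ) (fun z => ((cnt P z : ℝ) - l) ^ 4) / l ^ 3) ≤
      C * (6 * ((1 + Real.log l) / l)) := by
    gcongr; linarith
  nlinarith

/-- Uniform control of the mean log-factorial of a binomial count. -/
lemma cnt_logfact_unif : ∃ C : ℝ, 0 ≤ C ∧
    ∀ {α : Type}  [Fintype α] {n : ℕ} {ρ : α → ℝ} (_ : ∀ c, 0 ≤ ρ c) (_ : ∑ c, ρ c = 1)
    (P : α → Prop) [DecidablePred P] {r : ℝ}
    (_ : ∑ c, ρ c * (if P c then (1 : ℝ) else 0) = r) (_ : 0 < r) (_ : r ≤ 1),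
    1 ≤ n → |Ew (n := n) (fun _ => ρ) (fun z => Real.log (cnt P z).factorial) - sbin n r|
      ≤ C + |Real.log r| := by
  obtain ⟨C, hC, hE⟩ := cnt_logfact_large one_pos
  have hp : 0 ≤ Real.log (2 * π) := Real.log_nonneg (by nlinarith [pi_gt_three])
  refine ⟨1 + C + 5 + Real.log (2 * π), by positivity, ?_⟩
  intro α _ n ρ hρ hs P _ r hr hr0 hr1 hn
  have hn1 : (1 : ℝ) ≤ n := by exact_mod_cast hn
  have habs := abs_nonneg (Real.log r)
  rcases le_or_gt 1 (n * r) with hl | hl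
  · refine (hE hρ hs P hr hr0.le hr1 hl).trans ?_
    have : (1 + Real.log (n * r)) / (n * r) ≤ 1 := by
      rw [div_le_one (by linarith)]
      linarith [Real.log_le_sub_one_of_pos (by linarith : 0 < n * r)]
    nlinarith
  · have hl0 : 0 < n * r := by positivity
    have h1 : 0 ≤ Ew (n := n) (fun _ => ρ) (fun z => Real.log (cnt P z).factorial) :=
      Ew_nonneg (fun _ => hρ) fun z => Real.log_nonneg (by exact_mod_cast Nat.factorial_pos _)
    have h2 : Ew (n := n) (fun _ => ρ) (fun z => Real.log (cnt P z).factorial) ≤ 3 := by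
      have : Ew (n := n) (fun _ => ρ) (fun z => Real.log (cnt P z).factorial) ≤
          Ew (n := n) (fun _ => ρ) (fun z => ((cnt P z : ℝ) - n * r) ^ 2
            + (2 * (n * r) * ((cnt P z : ℝ) - n * r) + (n * r) ^ 2)) := by
        refine Ew_mono (fun _ => hρ) fun z => ?_
        have : Real.log (cnt P z).factorial ≤ (cnt P z : ℝ) * cnt P z := by
          have h1 : ((cnt P z).factorial : ℝ) ≤ (cnt P z : ℝ) ^ (cnt P z) := by
            exact_mod_cast Nat.factorial_le_pow _
          have h2 := Real.log_le_log (by exact_mod_cast Nat.factorial_pos _) h1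
          rw [Real.log_pow] at h2
          refine h2.trans ?_
          gcongr
          exact Real.log_le_self (Nat.cast_nonneg _)
        nlinarith
      rw [Ew_add, Ew_add, Ew_const fun _ => hs, Ew_const_mul, cnt_mean hs P hr,
        cnt_var hs P hr] at this
      nlinarith
    have h3 : Real.log (n * r) = Real.log n + Real.log r := Real.log_mul (by positivity) hr0.ne'
    have h4 : Real.log (n * r) ≤ 0 := Real.log_nonpos hl0.le hl.le
    have h5 : Real.log r ≤ Real.log (n * r) := by
      rw [h3]; linarith [Real.log_nonneg hn1]
    have h6 : |Real.log r| = - Real.log r := abs_of_nonpos (by linarith)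
    have h7 : Real.log (2 * π * (n * r)) = Real.log (2 * π) + Real.log (n * r) :=
      Real.log_mul (by positivity) hl0.ne'
    have h8 := Real.one_sub_inv_le_log_of_pos hl0
    have h9 : n * r - 1 ≤ n * r * Real.log (n * r) := by
      have : (n * r) * (1 - (n * r)⁻¹) = n * r - 1 := by field_simp
      nlinarith
    have h10 : n * r * Real.log (n * r) ≤ 0 := by nlinarith
    rw [sbin, h7, h6, abs_le]
    constructor <;> linarith

/-- Pointwise limit of the mean log-factorial of a binomial count. -/
lemma cnt_logfact_tendsto {α : Type} [Fintype α] {ρ : α → ℝ} (hρ : ∀ c, 0 ≤ ρ c)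
    (hs : ∑ c, ρ c = 1) (P : α → Prop) [DecidablePred P] {r : ℝ}
    (hr : ∑ c, ρ c * (if P c then (1 : ℝ) else 0) = r) (hr0 : 0 < r) (hr1 : r ≤ 1) :
    Tendsto (fun n : ℕ => Ew (n := n) (fun _ => ρ) (fun z => Real.log (cnt P z).factorial)
      - sbin n r) atTop (nhds 0) := by
  rw [Metric.tendsto_atTop]
  intro ε hε
  obtain ⟨C, hC, hE⟩ := cnt_logfact_large (half_pos hε)
  have hlin : Tendsto (fun n : ℕ => (n : ℝ) * r) atTop atTop :=
    tendsto_natCast_atTop_atTop.atTop_mul_const hr0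
  have h1 : Tendsto (fun x : ℝ => C * ((1 + Real.log x) / x)) atTop (nhds 0) := by
    have a1 : Tendsto (fun x : ℝ => Real.log x / x) atTop (nhds 0) := by
      simpa using Real.isLittleO_log_id_atTop.tendsto_div_nhds_zero
    have a2 := (tendsto_inv_atTop_zero (𝕜 := ℝ)).add a1
    have a3 := a2.const_mul C
    simp only [add_zero, mul_zero] at a3
    refine a3.congr fun x => ?_
    ring
  have h2 := (h1.comp hlin).eventually (gt_mem_nhds (half_pos hε))
  obtain ⟨N, hN⟩ := (h2.and (hlin.eventually_ge_atTop 1)).exists_forall_of_atTop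
  refine ⟨N, fun n hn => ?_⟩
  obtain ⟨h3, h4⟩ := hN n hn
  rw [Real.dist_eq, sub_zero]
  refine (hE hρ hs P hr hr0.le hr1 h4).trans_lt ?_
  simp only [Function.comp_apply] at h3
  linarith

end

/-! ### Discretised Gaussian densities -/

open scoped MatrixOrder in
lemma exists_sqrt {ι : Type*} [Fintype ι] [DecidableEq ι] {K : Matrix ι ι ℝ} (hK : K.PosDef) :
    ∃ A : Matrix ι ι ℝ, K = Aᵀ * A ∧ A.det ≠ 0 ∧ K.det = |A.det| ^ 2 := by
  obtain ⟨A, hA⟩ := CStarAlgebra.nonneg_iff_eq_star_mul_self.1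
    (Matrix.nonneg_iff_posSemidef.2 hK.posSemidef)
  rw [Matrix.star_eq_conjTranspose, Matrix.conjTranspose_eq_transpose_of_trivial] at hA
  have hd : K.det = A.det ^ 2 := by rw [hA, Matrix.det_mul, Matrix.det_transpose]; ring
  refine ⟨A, hA, fun h => ?_, by rw [sq_abs, hd]⟩
  have := hK.det_pos
  rw [hd, h] at this; simp at this

lemma quad_expand {ι : Type*} [Fintype ι] (K : Matrix ι ι ℝ) (x : ι → ℝ) :
    x ⬝ᵥ K *ᵥ x = ∑ i, ∑ j, K i j * (x i * x j) := by
  simp only [dotProduct, mulVec, Finset.mul_sum]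
  exact Finset.sum_congr rfl fun i _ => Finset.sum_congr rfl fun j _ => by ring

lemma gauss_integral {ι : Type*} [Fintype ι] [DecidableEq ι] {K : Matrix ι ι ℝ} (hK : K.PosDef) :
    ∫ x : ι → ℝ, Real.exp (-(x ⬝ᵥ K *ᵥ x) / 2) =
      Real.sqrt (2 * π) ^ Fintype.card ι / Real.sqrt K.det := by
  obtain ⟨A, hA, hdet, hKd⟩ := exists_sqrt hK
  set g : (ι → ℝ) → ℝ := fun y => ∏ i, Real.exp (-(1 / 2) * y i ^ 2) with hg
  have h1 : ∀ x : ι → ℝ, Real.exp (-(x ⬝ᵥ K *ᵥ x) / 2) = g (Matrix.toLin' A x) := by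
    intro x
    simp only [hg]
    rw [← Real.exp_sum, ← Finset.mul_sum]
    congr 1
    have : x ⬝ᵥ K *ᵥ x = ∑ i, (Matrix.toLin' A x i) ^ 2 := by
      rw [hA, ← Matrix.mulVec_mulVec, Matrix.dotProduct_mulVec, Matrix.vecMul_transpose]
      simp [dotProduct, pow_two]
    rw [this]; ring
  have hgc : Continuous g := by fun_prop
  have hAc : Continuous (Matrix.toLin' A) := LinearMap.continuous_of_finiteDimensional _
  simp only [h1]
  rw [← integral_map hAc.aemeasurable hgc.aestronglyMeasurable,
    Real.map_matrix_volume_pi_eq_smul_volume_pi hdet, integral_smul_measure, hg,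
    integral_fintype_prod_volume_eq_pow (fun t : ℝ => Real.exp (-(1 / 2) * t ^ 2)),
    integral_gaussian, hKd, Real.sqrt_sq (abs_nonneg _), ENNReal.toReal_ofReal (abs_nonneg _),
    abs_inv, smul_eq_mul, show π / (1 / 2) = 2 * π by ring]
  ring

/-- The open unit cube centred at the origin. -/
def ucube (ι : Type*) : Set (ι → ℝ) := Set.pi Set.univ fun _ => Set.Ioo (-(1 / 2)) (1 / 2)

lemma ucube_volume (ι : Type*) [Fintype ι] : volume (ucube ι) = 1 := by
  rw [ucube, Real.volume_pi_Ioo]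
  norm_num

lemma ucube_meas (ι : Type*) [Fintype ι] : MeasurableSet (ucube ι) :=
  MeasurableSet.univ_pi fun _ => measurableSet_Ioo

lemma ucube_neg {ι : Type*} (u : ι → ℝ) : -u ∈ ucube ι ↔ u ∈ ucube ι := by
  simp only [ucube, Set.mem_univ_pi, Set.mem_Ioo, Pi.neg_apply]
  constructor <;> intro h i <;> have := h i <;> constructor <;> linarith [this.1, this.2]

lemma ucube_odd {ι : Type*} [Fintype ι] (l : (ι → ℝ) → ℝ) (hl : ∀ u, l (-u) = - l u) :
    ∫ u in ucube ι, l u = 0 := by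
  have h := integral_neg_eq_self (fun u => (ucube ι).indicator l u) (volume : Measure (ι → ℝ))
  have h2 : ∀ u, (ucube ι).indicator l (-u) = - (ucube ι).indicator l u := by
    intro u
    by_cases hu : u ∈ ucube ι
    · rw [Set.indicator_of_mem hu, Set.indicator_of_mem ((ucube_neg u).2 hu), hl]
    · rw [Set.indicator_of_notMem hu, Set.indicator_of_notMem (mt (ucube_neg u).1 hu), neg_zero]
  simp only [h2] at h
  rw [integral_neg, integral_indicator (ucube_meas ι)] at h
  linarith

/-- Integrals of a Gaussian density over unit cubes centred at lattice points: a
sub-probability on the lattice whose negative logarithm is at most that of the density, up to an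
error which is small when the precision matrix `K` is small. -/
lemma gaussCube {ι : Type*} [Fintype ι] [DecidableEq ι] {K : Matrix ι ι ℝ} (hK : K.PosDef)
    (c : ι → ℝ) : ∃ q : (ι → ℤ) → ℝ, (∀ v, 0 < q v) ∧ (∀ s : Finset (ι → ℤ), ∑ v ∈ s, q v ≤ 1) ∧
    ∀ v : ι → ℤ, -Real.log (q v) ≤ (Fintype.card ι : ℝ) / 2 * Real.log (2 * π)
      - Real.log K.det / 2
      + ((fun i => (v i : ℝ) - c i) ⬝ᵥ K *ᵥ (fun i => (v i : ℝ) - c i)) / 2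
      + (∑ i, ∑ j, |K i j|) / 8 := by
  have hdet := hK.det_pos
  set Z : ℝ := Real.sqrt (2 * π) ^ Fintype.card ι / Real.sqrt K.det with hZ
  have hZ0 : 0 < Z := by positivity
  set g0 : (ι → ℝ) → ℝ := fun x => Real.exp (-(x ⬝ᵥ K *ᵥ x) / 2) with hg0
  have hg0c : Continuous g0 := by
    simp only [hg0, quad_expand]; fun_prop
  have hI0 : ∫ x, g0 x = Z := gauss_integral hK
  have hint0 : Integrable g0 := Integrable.of_integral_ne_zero (by rw [hI0]; exact hZ0.ne')
  set g : (ι → ℝ) → ℝ := fun x => g0 (x - c) with hg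
  have hI : ∫ x, g x = Z := by rw [← hI0]; exact integral_sub_right_eq_self g0 c
  have hint : Integrable g := hint0.comp_sub_right c
  have hgc : Continuous g := by simp only [hg]; fun_prop
  have hgpos : ∀ x, 0 < g x := fun x => Real.exp_pos _
  let cst : (ι → ℤ) → (ι → ℝ) := fun v i => (v i : ℝ)
  -- `exp x ≥ 1 + x` inside the cube; the linear term integrates to zero by symmetry
  have hlow : ∀ v, Real.exp (-((cst v - c) ⬝ᵥ K *ᵥ (cst v - c)) / 2 -
      (∑ i, ∑ j, |K i j|) / 8) ≤ ∫ u in ucube ι, g (cst v + u) := by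
    intro v
    set w := cst v - c with hw
    set M := (∑ i, ∑ j, |K i j|) / 8 with hM
    have hl : ∫ u in ucube ι, (w ⬝ᵥ K *ᵥ u) = 0 :=
      ucube_odd _ fun u => by rw [Matrix.mulVec_neg, dotProduct_neg]
    have hbdd : Bornology.IsBounded (ucube ι) :=
      Bornology.IsBounded.pi fun _ => Metric.isBounded_Ioo _ _
    have hcont_int : ∀ F : (ι → ℝ) → ℝ, Continuous F → IntegrableOn F (ucube ι) := by
      intro F hF
      exact (hF.continuousOn.integrableOn_compact hbdd.isCompact_closure).mono_set subset_closure
    have hlc : Continuous fun u : ι → ℝ => w ⬝ᵥ K *ᵥ u := by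
      simp only [dotProduct, mulVec]; fun_prop
    have h1 : ∫ u in ucube ι, Real.exp (-(w ⬝ᵥ K *ᵥ w) / 2 - M) * (1 - w ⬝ᵥ K *ᵥ u)
        = Real.exp (-(w ⬝ᵥ K *ᵥ w) / 2 - M) := by
      rw [integral_const_mul, integral_sub (hcont_int (fun _ => 1) continuous_const) (hcont_int _ hlc),
        hl]
      simp [Measure.real, ucube_volume]
    rw [← h1]
    refine setIntegral_mono_on (hcont_int _ (by fun_prop)) (hcont_int _ (by fun_prop))
      (ucube_meas ι) fun u hu => ?_
    have hq : (w + u) ⬝ᵥ K *ᵥ (w + u) = w ⬝ᵥ K *ᵥ w + 2 * (w ⬝ᵥ K *ᵥ u) + u ⬝ᵥ K *ᵥ u := by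
      have hsym : u ⬝ᵥ K *ᵥ w = w ⬝ᵥ K *ᵥ u := by
        rw [Matrix.dotProduct_mulVec, ← Matrix.mulVec_transpose, dotProduct_comm,
          show Kᵀ = K by
            have := hK.isHermitian; rw [Matrix.IsHermitian,
              Matrix.conjTranspose_eq_transpose_of_trivial] at this; exact this]
      rw [Matrix.mulVec_add, add_dotProduct, dotProduct_add, dotProduct_add, hsym]; ring
    have hu2 : u ⬝ᵥ K *ᵥ u ≤ 2 * M := by
      rw [quad_expand, hM]
      have : ∑ i, ∑ j, K i j * (u i * u j) ≤ ∑ i, ∑ j, |K i j| * (1 / 4) := by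
        refine Finset.sum_le_sum fun i _ => Finset.sum_le_sum fun j _ => ?_
        refine (le_abs_self _).trans ?_
        rw [abs_mul, abs_mul]
        have hi : |u i| ≤ 1 / 2 := by
          have := Set.mem_univ_pi.1 hu i; rw [abs_le]; exact ⟨this.1.le, this.2.le⟩
        have hj : |u j| ≤ 1 / 2 := by
          have := Set.mem_univ_pi.1 hu j; rw [abs_le]; exact ⟨this.1.le, this.2.le⟩
        gcongr
        nlinarith [abs_nonneg (u i), abs_nonneg (u j)]
      simp only [← Finset.sum_mul] at this
      linarith
    have hgu : g (cst v + u) = Real.exp (-(w ⬝ᵥ K *ᵥ w) / 2 - M) *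
        Real.exp (-(w ⬝ᵥ K *ᵥ u) + (M - u ⬝ᵥ K *ᵥ u / 2)) := by
      rw [← Real.exp_add]
      simp only [hg, hg0]
      rw [show cst v + u - c = w + u by rw [hw]; abel, hq]
      congr 1; ring
    rw [hgu]
    refine mul_le_mul_of_nonneg_left ?_ (Real.exp_pos _).le
    have := Real.add_one_le_exp (-(w ⬝ᵥ K *ᵥ u) + (M - u ⬝ᵥ K *ᵥ u / 2))
    linarith
  refine ⟨fun v => (∫ u in ucube ι, g (cst v + u)) / Z, fun v => ?_, fun s => ?_, fun v => ?_⟩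
  · exact div_pos ((Real.exp_pos _).trans_le (hlow v)) hZ0
  · rw [← Finset.sum_div, div_le_one hZ0, ← hI]
    have hset : ∀ v, ∫ u in ucube ι, g (cst v + u) = ∫ x in (fun x => x - cst v) ⁻¹' ucube ι, g x := by
      intro v
      rw [← integral_indicator (ucube_meas ι),
        ← integral_indicator ((ucube_meas ι).preimage (by fun_prop)),
        ← integral_sub_right_eq_self (fun u => (ucube ι).indicator (fun u => g (cst v + u)) u)
          (cst v)]
      congr 1; funext x
      simp only [Set.indicator, Set.mem_preimage]
      rw [add_sub_cancel]; rfl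
    simp only [hset]
    rw [← integral_biUnion_finset s (fun v _ => (ucube_meas ι).preimage (by fun_prop)) _
      (fun v _ => hint.integrableOn)]
    · exact setIntegral_le_integral hint (Filter.Eventually.of_forall fun x => (hgpos x).le)
    · intro v _ v' _ hvv
      rw [Function.onFun, Set.disjoint_left]
      intro x hx hx'
      apply hvv
      funext i
      have h1 := Set.mem_univ_pi.1 hx i
      have h2 := Set.mem_univ_pi.1 hx' i
      simp only [Set.mem_Ioo, Pi.sub_apply, cst] at h1 h2
      have h3 : ((v i : ℝ)) < v' i + 1 := by linarith [h1.1, h1.2, h2.1, h2.2]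
      have h4 : ((v' i : ℝ)) < v i + 1 := by linarith [h1.1, h1.2, h2.1, h2.2]
      have h5 : v i < v' i + 1 := by exact_mod_cast h3
      have h6 : v' i < v i + 1 := by exact_mod_cast h4
      omega
  · have h1 := Real.log_le_log (Real.exp_pos _) (hlow v)
    rw [Real.log_exp] at h1
    rw [Real.log_div ((Real.exp_pos _).trans_le (hlow v)).ne' hZ0.ne', hZ,
      Real.log_div (by positivity) (by positivity), Real.log_pow, Real.log_sqrt (by positivity),
      Real.log_sqrt hdet.le]
    have h2 : (fun i => (v i : ℝ) - c i) = cst v - c := rfl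
    rw [h2]
    linarith

/-! ### Covariance matrices and determinant identities -/

section cov
variable {k : ℕ}

/-- Covariance matrix of one multinomial draw with probabilities `r`, last coordinate dropped. -/
def covm (r : Fin (k + 1) → ℝ) : Matrix (Fin k) (Fin k) ℝ :=
  diagonal (fun j => r j.castSucc) - vecMulVec (fun j => r j.castSucc) (fun j => r j.castSucc)

/-- The inverse of `covm r`. -/
def covi (r : Fin (k + 1) → ℝ) : Matrix (Fin k) (Fin k) ℝ :=
  diagonal (fun j => (r j.castSucc)⁻¹) + Matrix.of fun _ _ => (r (Fin.last k))⁻¹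

lemma covm_mul_covi {r : Fin (k + 1) → ℝ} (hr : ∀ y, 0 < r y) (hs : ∑ y, r y = 1) :
    covm r * covi r = 1 := by
  ext i j
  have hl := (hr (Fin.last k)).ne'
  have hj := (hr j.castSucc).ne'
  have hs' : ∑ x : Fin k, r x.castSucc = 1 - r (Fin.last k) := by
    rw [Fin.sum_univ_castSucc] at hs; linarith
  simp only [covm, covi, Matrix.sub_mul, Matrix.mul_add, Matrix.sub_apply, Matrix.add_apply,
    Matrix.diagonal_mul_diagonal, Matrix.diagonal_mul, Matrix.mul_diagonal, Matrix.of_apply,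
    vecMulVec_apply, Matrix.diagonal_apply, Matrix.one_apply]
  have h1 : (vecMulVec (fun j : Fin k => r j.castSucc) (fun j : Fin k => r j.castSucc) *
      (Matrix.of fun _ _ => (r (Fin.last k))⁻¹ : Matrix (Fin k) (Fin k) ℝ)) i j
      = r i.castSucc * (1 - r (Fin.last k)) * (r (Fin.last k))⁻¹ := by
    simp only [Matrix.mul_apply, vecMulVec_apply, Matrix.of_apply]
    rw [← Finset.sum_mul, ← Finset.mul_sum, hs']
  rw [h1]
  split_ifs with h
  · subst h; field_simp; ring
  · field_simp; ring

lemma covm_inv {r : Fin (k + 1) → ℝ} (hr : ∀ y, 0 < r y) (hs : ∑ y, r y = 1) :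
    (covm r)⁻¹ = covi r := Matrix.inv_eq_right_inv (covm_mul_covi hr hs)

lemma covm_det {r : Fin (k + 1) → ℝ} (hr : ∀ y, 0 < r y) (hs : ∑ y, r y = 1) :
    (covm r).det = ∏ y, r y := by
  have hs' : ∑ x : Fin k, r x.castSucc = 1 - r (Fin.last k) := by
    rw [Fin.sum_univ_castSucc] at hs; linarith
  have h1 : covm r = diagonal (fun j : Fin k => r j.castSucc) *
      (1 - vecMulVec (fun _ => 1) (fun j : Fin k => r j.castSucc)) := by
    rw [Matrix.mul_sub, Matrix.mul_one, covm]
    congr 1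
    ext i j
    simp [Matrix.diagonal_mul, vecMulVec_apply]
  rw [h1, Matrix.det_mul, Matrix.det_diagonal, Fin.prod_univ_castSucc]
  congr 1
  rw [Matrix.vecMulVec_eq (Fin 1), sub_eq_add_neg, ← Matrix.neg_mul,
    Matrix.det_one_add_mul_comm, Matrix.det_unique]
  simp [Matrix.mul_apply, hs']

lemma covm_isHermitian (r : Fin (k + 1) → ℝ) : (covm r).IsHermitian := by
  rw [Matrix.IsHermitian, Matrix.conjTranspose_eq_transpose_of_trivial]
  ext i j
  simp only [covm, Matrix.transpose_apply, Matrix.sub_apply, vecMulVec_apply,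
    Matrix.diagonal_apply]
  by_cases h : i = j
  · subst h; rfl
  · simp [h, Ne.symm h]; ring

lemma covm_quad (r : Fin (k + 1) → ℝ) (u : Fin k → ℝ) :
    u ⬝ᵥ covm r *ᵥ u = ∑ j : Fin k, r j.castSucc * u j ^ 2 - (∑ j : Fin k, r j.castSucc * u j) ^ 2 := by
  rw [quad_expand]
  simp only [covm, Matrix.sub_apply, vecMulVec_apply, sub_mul, Finset.sum_sub_distrib]
  congr 1
  · refine Finset.sum_congr rfl fun i _ => ?_
    simp only [Matrix.diagonal_apply, ite_mul, zero_mul, Finset.sum_ite_eq, Finset.mem_univ,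
      if_true]
    ring
  · rw [pow_two, Finset.sum_mul_sum]
    exact Finset.sum_congr rfl fun i _ => Finset.sum_congr rfl fun j _ => by ring

lemma covm_quad_ge {r : Fin (k + 1) → ℝ} (hr : ∀ y, 0 ≤ r y) (hs : ∑ y, r y = 1) (u : Fin k → ℝ) :
    r (Fin.last k) * ∑ j : Fin k, r j.castSucc * u j ^ 2 ≤ u ⬝ᵥ covm r *ᵥ u := by
  have hs' : ∑ x : Fin k, r x.castSucc = 1 - r (Fin.last k) := by
    rw [Fin.sum_univ_castSucc] at hs; linarith
  rw [covm_quad]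
  have h := Finset.sum_mul_sq_le_sq_mul_sq Finset.univ (fun j : Fin k => √(r j.castSucc))
    (fun j => √(r j.castSucc) * u j)
  have e1 : ∀ j : Fin k, √(r j.castSucc) * (√(r j.castSucc) * u j) = r j.castSucc * u j := by
    intro j; rw [← mul_assoc, Real.mul_self_sqrt (hr _)]
  simp only [e1, mul_pow, Real.sq_sqrt (hr _), hs'] at h
  nlinarith

lemma covm_posDef {r : Fin (k + 1) → ℝ} (hr : ∀ y, 0 < r y) (hs : ∑ y, r y = 1) :
    (covm r).PosDef := by
  refine Matrix.PosDef.of_dotProduct_mulVec_pos (covm_isHermitian r) fun {u} hu => ?_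
  rw [star_trivial]
  refine lt_of_lt_of_le ?_ (covm_quad_ge (fun y => (hr y).le) hs u)
  refine mul_pos (hr _) ?_
  obtain ⟨j, hj⟩ := Function.ne_iff.1 hu
  refine Finset.sum_pos' (fun i _ => mul_nonneg (hr _).le (sq_nonneg _)) ⟨j, Finset.mem_univ _, ?_⟩
  exact mul_pos (hr _) (by have : u j ≠ 0 := hj; positivity)

/-- The inverse covariance as a chi-square form in vectors with vanishing coordinate sum. -/
lemma covi_bilin {r : Fin (k + 1) → ℝ} (u v : Fin (k + 1) → ℝ) (hu : ∑ y, u y = 0)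
    (hv : ∑ y, v y = 0) :
    (fun j : Fin k => u j.castSucc) ⬝ᵥ covi r *ᵥ (fun j : Fin k => v j.castSucc)
      = ∑ y, u y * v y / r y := by
  rw [Fin.sum_univ_castSucc] at hu hv ⊢
  simp only [covi, Matrix.add_mulVec, dotProduct_add]
  congr 1
  · simp only [dotProduct, mulVec_diagonal]
    exact Finset.sum_congr rfl fun i _ => by rw [div_eq_mul_inv]; ring
  · simp only [dotProduct, mulVec, Matrix.of_apply]
    rw [← Finset.sum_mul, ← Finset.mul_sum]
    have h1 : ∑ i : Fin k, u i.castSucc = - u (Fin.last k) := by linarith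
    have h2 : ∑ i : Fin k, v i.castSucc = - v (Fin.last k) := by linarith
    rw [h1, h2, div_eq_mul_inv]; ring

end cov

section mats
variable {m k : ℕ} (Q : Matrix (Fin (k + 1)) (Fin (m + 1)) ℝ)

/-- Jacobian of `q ↦ (Qp)` in the free coordinates, all rows. -/
def Bt : Matrix (Fin (k + 1)) (Fin m) ℝ :=
  Matrix.of fun y i => Q y i.castSucc - Q y (Fin.last m)

/-- Jacobian of `q ↦ (Qp)` in the free coordinates, last row dropped. -/
def Bm : Matrix (Fin k) (Fin m) ℝ :=
  Matrix.of fun j i => Q j.castSucc i.castSucc - Q j.castSucc (Fin.last m)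

/-- `G_p` with its index type in the form `Fin k`. -/
def Gk (p : Fin (m + 1) → ℝ) : Matrix (Fin k) (Fin k) ℝ := ∑ x, p x • covm (fun y => Q y x)

/-- `K_p = Bᵀ G_p⁻¹ B`, the limiting precision of the frequencies given the output. -/
def Kp (p : Fin (m + 1) → ℝ) : Matrix (Fin m) (Fin m) ℝ := (Bm Q)ᵀ * (Gk Q p)⁻¹ * Bm Q

/-- Fisher information of the output distribution in the free coordinates. -/
def Jp (p : Fin (m + 1) → ℝ) : Matrix (Fin m) (Fin m) ℝ :=
  Matrix.of fun i j => ∑ y, Bt Q y i * Bt Q y j / (Q *ᵥ p) y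

lemma Gk_eq (p : Fin (m + 1) → ℝ) : Gmat Q p = Gk Q p := rfl

variable {Q}

lemma Qp_pos (hQpos : ∀ y x, 0 < Q y x) (hQcol : ∀ x, ∑ y, Q y x = 1)
    {p : Fin (m + 1) → ℝ} (hp : p ∈ simplex (m + 1)) (y) : 0 < (Q *ᵥ p) y := by
  have : ∃ x, p x ≠ 0 := by
    by_contra h; push Not at h
    have := hp.2; simp [h] at this
  obtain ⟨x, hx⟩ := this
  exact Finset.sum_pos' (fun x _ => mul_nonneg (hQpos y x).le (hp.1 x))
    ⟨x, Finset.mem_univ _, mul_pos (hQpos y x) (lt_of_le_of_ne (hp.1 x) hx.symm)⟩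

lemma Qp_sum (hQpos : ∀ y x, 0 < Q y x) (hQcol : ∀ x, ∑ y, Q y x = 1)
    (p : Fin (m + 1) → ℝ) : ∑ y, (Q *ᵥ p) y = ∑ x, p x := by
  simp only [mulVec, dotProduct]
  rw [Finset.sum_comm]
  simp only [← Finset.sum_mul, hQcol, one_mul]

lemma Gk_posDef (hQpos : ∀ y x, 0 < Q y x) (hQcol : ∀ x, ∑ y, Q y x = 1)
    {p : Fin (m + 1) → ℝ} (hp : ∀ x, 0 ≤ p x) (hp' : ∃ x, 0 < p x) :
    (Gk Q p).PosDef := by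
  obtain ⟨x, hx⟩ := hp'
  rw [Gk, ← Finset.add_sum_erase _ _ (Finset.mem_univ x)]
  refine Matrix.PosDef.add_posSemidef ((covm_posDef (fun y => hQpos y x) (hQcol x)).smul hx) ?_
  exact Matrix.posSemidef_sum _ fun x' _ =>
    (covm_posDef (fun y => hQpos y x') (hQcol x')).posSemidef.smul (hp x')

lemma exists_pos_of_simplex (hQpos : ∀ y x, 0 < Q y x) (hQcol : ∀ x, ∑ y, Q y x = 1)
    {p : Fin (m + 1) → ℝ} (hp : p ∈ simplex (m + 1)) : ∃ x, 0 < p x := by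
  by_contra h; push Not at h
  have := Finset.sum_nonpos (s := Finset.univ) fun x _ => h x
  rw [hp.2] at this; linarith

lemma Bt_sum (hQpos : ∀ y x, 0 < Q y x) (hQcol : ∀ x, ∑ y, Q y x = 1)
    (i : Fin m) : ∑ y, Bt Q y i = 0 := by
  simp [Bt, Finset.sum_sub_distrib, hQcol]

lemma Bm_injective (hQpos : ∀ y x, 0 < Q y x) (hQcol : ∀ x, ∑ y, Q y x = 1)
    (hrank : Q.rank = m + 1) : Function.Injective (Bm Q).mulVec := by
  have hQi : Function.Injective Q.mulVec := by
    have hli : LinearIndependent ℝ Q.col := by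
      rw [linearIndependent_iff_card_eq_finrank_span, Set.finrank]
      rw [← Matrix.rank_eq_finrank_span_cols, hrank]; simp
    exact Matrix.mulVec_injective_iff.2 hli
  intro u v huv
  rw [← sub_eq_zero]
  have h0 : Bm Q *ᵥ (u - v) = 0 := by rw [Matrix.mulVec_sub, sub_eq_zero]; exact huv
  set t := u - v
  -- extend the direction `t` to a vector with zero coordinate sum
  set tt : Fin (m + 1) → ℝ := Fin.snoc (α := fun _ => ℝ) t (-∑ i, t i) with htt
  have h1 : ∀ y, (Q *ᵥ tt) y = ∑ i, Bt Q y i * t i := by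
    intro y
    simp only [mulVec, dotProduct]
    rw [Fin.sum_univ_castSucc]
    simp only [htt, Fin.snoc_castSucc, Fin.snoc_last, Bt, Matrix.of_apply, sub_mul,
      Finset.sum_sub_distrib, ← Finset.mul_sum]
    ring
  have h2 : ∀ j : Fin k, (Q *ᵥ tt) j.castSucc = 0 := by
    intro j; rw [h1]; exact congrFun h0 j
  have h3 : ∑ y, (Q *ᵥ tt) y = 0 := by
    simp only [h1]
    rw [Finset.sum_comm]
    simp only [← Finset.sum_mul, Bt_sum hQpos hQcol, zero_mul, Finset.sum_const_zero]
  have h4 : Q *ᵥ tt = 0 := by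
    funext y
    refine Fin.lastCases ?_ h2 y
    rw [Fin.sum_univ_castSucc] at h3
    simpa [h2] using h3
  have h5 : tt = 0 := hQi (by simpa using h4)
  funext i
  have := congrFun h5 i.castSucc
  simpa [htt] using this

lemma Kp_posDef (hQpos : ∀ y x, 0 < Q y x) (hQcol : ∀ x, ∑ y, Q y x = 1)
    (hrank : Q.rank = m + 1) {p : Fin (m + 1) → ℝ} (hp : p ∈ simplex (m + 1)) :
    (Kp Q p).PosDef := by
  have h := (Gk_posDef hQpos hQcol hp.1 (exists_pos_of_simplex hQpos hQcol hp)).inv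
  have := h.conjTranspose_mul_mul_same (B := Bm Q) (Bm_injective hQpos hQcol hrank)
  rwa [Matrix.conjTranspose_eq_transpose_of_trivial] at this

lemma Jp_eq (hQpos : ∀ y x, 0 < Q y x) (hQcol : ∀ x, ∑ y, Q y x = 1)
    {p : Fin (m + 1) → ℝ} (hp : p ∈ simplex (m + 1)) :
    Jp Q p = (Bm Q)ᵀ * (covm (Q *ᵥ p))⁻¹ * Bm Q := by
  rw [covm_inv (Qp_pos hQpos hQcol hp) (by rw [Qp_sum hQpos hQcol, hp.2])]
  ext i j
  rw [Jp, Matrix.of_apply, ← covi_bilin (fun y => Bt Q y i) (fun y => Bt Q y j)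
    (Bt_sum hQpos hQcol i) (Bt_sum hQpos hQcol j), Matrix.mul_assoc, Matrix.mul_apply_eq_vecMul,
    Matrix.vecMul, dotProduct]
  simp only [dotProduct, Matrix.transpose_apply, Matrix.mul_apply, mulVec]
  rfl

lemma Jp_posDef (hQpos : ∀ y x, 0 < Q y x) (hQcol : ∀ x, ∑ y, Q y x = 1)
    (hrank : Q.rank = m + 1) {p : Fin (m + 1) → ℝ} (hp : p ∈ simplex (m + 1)) :
    (Jp Q p).PosDef := by
  rw [Jp_eq hQpos hQcol hp]
  have h := (covm_posDef (Qp_pos hQpos hQcol hp) (by rw [Qp_sum hQpos hQcol, hp.2])).inv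
  have := h.conjTranspose_mul_mul_same (B := Bm Q) (Bm_injective hQpos hQcol hrank)
  rwa [Matrix.conjTranspose_eq_transpose_of_trivial] at this

/-- Total covariance: conditional covariance given the input plus covariance of the
conditional mean. -/
lemma covm_Qp (hQpos : ∀ y x, 0 < Q y x) (hQcol : ∀ x, ∑ y, Q y x = 1)
    {p : Fin (m + 1) → ℝ} (hp : p ∈ simplex (m + 1)) :
    covm (Q *ᵥ p) = Gk Q p + Bm Q * covm p * (Bm Q)ᵀ := by
  have hs : p (Fin.last m) = 1 - ∑ i : Fin m, p i.castSucc := by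
    have := hp.2; rw [Fin.sum_univ_castSucc] at this; linarith
  ext j l
  have e1 : (Bm Q * covm p * (Bm Q)ᵀ) j l = ∑ i : Fin m, p i.castSucc * (Bm Q j i * Bm Q l i)
      - (∑ i : Fin m, p i.castSucc * Bm Q j i) * (∑ i : Fin m, p i.castSucc * Bm Q l i) := by
    rw [covm, Matrix.mul_sub, Matrix.sub_mul, Matrix.sub_apply]
    congr 1
    · rw [Matrix.mul_apply]
      simp only [Matrix.mul_diagonal, Matrix.transpose_apply]
      exact Finset.sum_congr rfl fun i _ => by ring
    · simp only [Matrix.mul_apply, vecMulVec_apply, Matrix.transpose_apply, Finset.sum_mul_sum]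
      simp only [Finset.sum_mul]
      rw [Finset.sum_comm]
      exact Finset.sum_congr rfl fun i _ => Finset.sum_congr rfl fun i' _ => by ring
  have e2 : Gk Q p j l = ∑ x, p x * ((if j = l then Q j.castSucc x else 0)
      - Q j.castSucc x * Q l.castSucc x) := by
    simp [Gk, Matrix.sum_apply, covm, vecMulVec_apply, Matrix.diagonal_apply]
  have e3 : ∀ y, (Q *ᵥ p) y = Q y (Fin.last m) + ∑ i : Fin m, p i.castSucc *
      (Q y i.castSucc - Q y (Fin.last m)) := by
    intro y
    simp only [mulVec, dotProduct, Fin.sum_univ_castSucc, hs, mul_sub, Finset.sum_sub_distrib,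
      ← Finset.sum_mul]
    simp only [mul_comm (p _)]; ring
  rw [Matrix.add_apply, e1, e2]
  have e4 : ∑ x, p x * ((if j = l then Q j.castSucc x else 0) - Q j.castSucc x * Q l.castSucc x)
      = (if j = l then (Q *ᵥ p) j.castSucc else 0)
        - ∑ x, p x * (Q j.castSucc x * Q l.castSucc x) := by
    simp only [mul_sub, Finset.sum_sub_distrib]
    congr 1
    split_ifs
    · simp only [mulVec, dotProduct]; exact Finset.sum_congr rfl fun i _ => by ring
    · simp
  have e5 : ∑ x, p x * (Q j.castSucc x * Q l.castSucc x) =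
      Q j.castSucc (Fin.last m) * Q l.castSucc (Fin.last m)
      + Q j.castSucc (Fin.last m) * (∑ i : Fin m, p i.castSucc * Bm Q l i)
      + Q l.castSucc (Fin.last m) * (∑ i : Fin m, p i.castSucc * Bm Q j i)
      + ∑ i : Fin m, p i.castSucc * (Bm Q j i * Bm Q l i) := by
    rw [Fin.sum_univ_castSucc, hs, sub_mul, one_mul, Finset.sum_mul, Finset.mul_sum, Finset.mul_sum]
    simp only [Bm, Matrix.of_apply]
    rw [← sub_eq_zero]
    have : ∀ A B C D E F : ℝ, A + (B - C) - (B + D + E + F) = (A - C - D - E - F) := by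
      intros; ring
    rw [this, ← Finset.sum_sub_distrib, ← Finset.sum_sub_distrib, ← Finset.sum_sub_distrib,
      ← Finset.sum_sub_distrib]
    exact Finset.sum_eq_zero fun i _ => by ring
  rw [e4, e5]
  simp only [covm, Matrix.sub_apply, Matrix.diagonal_apply, vecMulVec_apply]
  have e6 : ∀ y : Fin k, (Q *ᵥ p) y.castSucc = Q y.castSucc (Fin.last m) +
      ∑ i : Fin m, p i.castSucc * Bm Q y i := fun y => e3 y.castSucc
  rw [e6, e6]; ring

/-- Passing from the full simplex to the free coordinates does not change the Fisher determinant,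
because the direction `p` itself has `D_p`-norm one and is `D_p`-orthogonal to the tangent space. -/
lemma det_J_eq_D (hQpos : ∀ y x, 0 < Q y x) (hQcol : ∀ x, ∑ y, Q y x = 1)
    {p : Fin (m + 1) → ℝ} (hp : p ∈ simplex (m + 1)) :
    (Jp Q p).det = (Dmat Q p).det := by
  have hpos := Qp_pos hQpos hQcol hp
  let e : Fin m ⊕ Fin 1 ≃ Fin (m + 1) := finSumFinEquiv
  have el : ∀ i : Fin m, e (Sum.inl i) = i.castSucc := fun i => rfl
  have er : e (Sum.inr 0) = Fin.last m := rfl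
  -- change of basis to the coordinate directions and `p` itself
  let P : Matrix (Fin m ⊕ Fin 1) (Fin m ⊕ Fin 1) ℝ :=
    fromBlocks 1 (Matrix.of fun i _ => p i.castSucc) (Matrix.of fun _ _ => -1)
      (Matrix.of fun _ _ => p (Fin.last m))
  have hP : P.det = 1 := by
    rw [Matrix.det_fromBlocks_one₁₁, Matrix.det_fin_one]
    have := hp.2
    rw [Fin.sum_univ_castSucc] at this
    simp [Matrix.mul_apply]; linarith
  let W : Matrix (Fin (k + 1)) (Fin m ⊕ Fin 1) ℝ := fromCols (Bt Q) (Matrix.of fun y _ => (Q *ᵥ p) y)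
  have hW : Q.submatrix id e * P = W := by
    ext y c
    rcases c with i | c
    · simp [Matrix.mul_apply, P, W, el, Bt, Matrix.one_apply]
      have : ∀ c : Fin 1, e (Sum.inr c) = Fin.last m := fun c => by
        rw [Subsingleton.elim c 0]; exact er
      simp [this]; ring
    · simp [Matrix.mul_apply, P, W, el, mulVec, dotProduct, Fin.sum_univ_castSucc]
      exact Or.inl rfl
  have hD : (Dmat Q p).submatrix e e = (Q.submatrix id e)ᵀ *
      Matrix.diagonal (fun y => ((Q *ᵥ p) y)⁻¹) * Q.submatrix id e := by
    ext i j; simp [Dmat, Matrix.mul_apply]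
  have h1 : Pᵀ * (Dmat Q p).submatrix e e * P = fromBlocks (Jp Q p) 0 0 1 := by
    rw [hD]
    have : Pᵀ * ((Q.submatrix id e)ᵀ * Matrix.diagonal (fun y => ((Q *ᵥ p) y)⁻¹) *
        Q.submatrix id e) * P = (Q.submatrix id e * P)ᵀ *
        Matrix.diagonal (fun y => ((Q *ᵥ p) y)⁻¹) * (Q.submatrix id e * P) := by
      rw [Matrix.transpose_mul]; simp only [Matrix.mul_assoc]
    rw [this, hW]
    have hc : ∀ i, ∑ y, Bt Q y i * ((Q *ᵥ p) y)⁻¹ * (Q *ᵥ p) y = 0 := by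
      intro i
      rw [← Bt_sum hQpos hQcol i]
      exact Finset.sum_congr rfl fun y _ => by have := (hpos y).ne'; field_simp
    ext i j
    rcases i with i | i <;> rcases j with j | j
    · rw [Matrix.mul_apply]
      simp only [Matrix.mul_diagonal, Matrix.transpose_apply, W,
        fromBlocks_apply₁₁, fromCols_apply_inl, Jp, Matrix.of_apply]
      exact Finset.sum_congr rfl fun y _ => by rw [div_eq_mul_inv]; ring
    · rw [Matrix.mul_apply]
      simp only [Matrix.mul_diagonal, Matrix.transpose_apply, W,
        fromBlocks_apply₁₂, fromCols_apply_inl, fromCols_apply_inr, Matrix.of_apply, hc,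
        Matrix.zero_apply]
    · rw [Matrix.mul_apply]
      simp only [Matrix.mul_diagonal, Matrix.transpose_apply, W,
        fromBlocks_apply₂₁, fromCols_apply_inl, fromCols_apply_inr, Matrix.of_apply,
        Matrix.zero_apply]
      rw [← hc j]
      exact Finset.sum_congr rfl fun y _ => by ring
    · rw [Matrix.mul_apply]
      simp only [Matrix.mul_diagonal, Matrix.transpose_apply, W,
        fromBlocks_apply₂₂, fromCols_apply_inr, Matrix.of_apply,
        Matrix.one_apply, Subsingleton.elim i j, if_true]
      rw [← hp.2, ← Qp_sum hQpos hQcol]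
      exact Finset.sum_congr rfl fun y _ => by have := (hpos y).ne'; field_simp
  have h2 := congrArg Matrix.det h1
  rw [Matrix.det_mul, Matrix.det_mul, Matrix.det_transpose, hP, Matrix.det_submatrix_equiv_self,
    Matrix.det_fromBlocks_zero₂₁] at h2
  simpa using h2.symm

/-- The determinant identity relating the conditional precision to the Fisher information. -/
lemma det_GK (hQpos : ∀ y x, 0 < Q y x) (hQcol : ∀ x, ∑ y, Q y x = 1)
    (hrank : Q.rank = m + 1) {p : Fin (m + 1) → ℝ} (hp : p ∈ simplex (m + 1)) :
    (Gk Q p).det * (Kp Q p).det = (∏ y, (Q *ᵥ p) y) * (Dmat Q p).det := by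
  have hG := Gk_posDef hQpos hQcol hp.1 (exists_pos_of_simplex hQpos hQcol hp)
  have hM := covm_posDef (Qp_pos hQpos hQcol hp) (by rw [Qp_sum hQpos hQcol, hp.2])
  have hMd := covm_det (Qp_pos hQpos hQcol hp) (by rw [Qp_sum hQpos hQcol, hp.2])
  have hMG := covm_Qp hQpos hQcol hp
  set M := covm (Q *ᵥ p) with hMdef
  have key : fromBlocks M (Bm Q) (Bm Q)ᵀ 0 =
      fromBlocks 1 (Bm Q * covm p) 0 1 * fromBlocks (Gk Q p) (Bm Q) (Bm Q)ᵀ 0 := by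
    rw [fromBlocks_multiply]
    simp [hMG]
  have h := congrArg Matrix.det key
  letI := hG.isUnit.invertible
  letI := hM.isUnit.invertible
  rw [Matrix.det_mul, Matrix.det_fromBlocks_zero₂₁, Matrix.det_fromBlocks₁₁,
    Matrix.det_fromBlocks₁₁, Matrix.invOf_eq_nonsing_inv, Matrix.invOf_eq_nonsing_inv, zero_sub,
    zero_sub, Matrix.det_neg, Matrix.det_neg, hMdef, ← Jp_eq hQpos hQcol hp,
    det_J_eq_D hQpos hQcol hp, ← hMdef, hMd] at h
  simp only [Matrix.det_one, mul_one, one_mul] at h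
  have h2 : ((-1 : ℝ) ^ Fintype.card (Fin m)) ≠ 0 := by positivity
  have h3 : (-1 : ℝ) ^ Fintype.card (Fin m) * ((Gk Q p).det * (Kp Q p).det)
      = (-1 : ℝ) ^ Fintype.card (Fin m) * ((∏ y, (Q *ᵥ p) y) * (Dmat Q p).det) := by
    rw [Kp]; linarith
  exact mul_left_cancel₀ h2 h3

end mats

/-! ### The Dirichlet integral -/

/-- The chart `Δ → 𝒫` with its index types written as `Fin m` and `Fin (m + 1)`. -/
def em {m : ℕ} (q : Fin m → ℝ) : Fin (m + 1) → ℝ := emb (m + 1) q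

lemma em_castSucc {m : ℕ} (q : Fin m → ℝ) (i : Fin m) : em q i.castSucc = q i := by
  simp [em, emb]

lemma em_last {m : ℕ} (q : Fin m → ℝ) : em q (Fin.last m) = 1 - ∑ i, q i := by
  simp [em, emb]

lemma em_sum {m : ℕ} (q : Fin m → ℝ) : ∑ x, em q x = 1 := by
  rw [Fin.sum_univ_castSucc, em_last]; simp [em_castSucc]

lemma em_mem {m : ℕ} {q : Fin m → ℝ} (hq : q ∈ stdCorner m) : em q ∈ simplex (m + 1) := by
  refine ⟨fun x => ?_, em_sum q⟩
  refine Fin.lastCases ?_ (fun i => ?_) x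
  · rw [em_last]; linarith [hq.2]
  · rw [em_castSucc]; exact hq.1 i

lemma em_mem_iff {m : ℕ} {q : Fin m → ℝ} : em q ∈ simplex (m + 1) ↔ q ∈ stdCorner m := by
  refine ⟨fun h => ⟨fun i => ?_, ?_⟩, em_mem⟩
  · have := h.1 i.castSucc; rwa [em_castSucc] at this
  · have := h.1 (Fin.last m); rw [em_last] at this; linarith

lemma continuous_em {m : ℕ} : Continuous (em : (Fin m → ℝ) → Fin (m + 1) → ℝ) := by
  refine continuous_pi fun x => ?_
  refine Fin.lastCases ?_ (fun i => ?_) x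
  · simp only [em_last]; fun_prop
  · simp only [em_castSucc]; fun_prop

lemma isClosed_stdCorner (m : ℕ) : IsClosed (stdCorner m) := by
  have : stdCorner m = (⋂ i, {q | 0 ≤ q i}) ∩ {q | ∑ i, q i ≤ 1} := by
    ext q; simp [stdCorner]
  rw [this]
  refine IsClosed.inter (isClosed_iInter fun i => isClosed_le (by fun_prop) (by fun_prop)) ?_
  exact isClosed_le (by fun_prop) (by fun_prop)

lemma stdCorner_le_one {m : ℕ} {q : Fin m → ℝ} (hq : q ∈ stdCorner m) (i : Fin m) : q i ≤ 1 :=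
  (Finset.single_le_sum (fun j _ => hq.1 j) (Finset.mem_univ i)).trans hq.2

lemma isCompact_stdCorner (m : ℕ) : IsCompact (stdCorner m) := by
  refine (isCompact_Icc (a := (0 : Fin m → ℝ)) (b := 1)).of_isClosed_subset
    (isClosed_stdCorner m) fun q hq => ⟨fun i => hq.1 i, fun i => stdCorner_le_one hq i⟩

/-- The unnormalised Dirichlet density on `s Δ`, extended by zero. -/
def dirI (m : ℕ) (α : Fin m → ℝ) (β s : ℝ) (q : Fin m → ℝ) : ENNReal := by
  classical
  exact if (∀ i, 0 ≤ q i) ∧ ∑ i, q i ≤ s then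
    ENNReal.ofReal ((∏ i, q i ^ α i) * (s - ∑ i, q i) ^ β) else 0

lemma measurable_dirI (m : ℕ) (α : Fin m → ℝ) (β : ℝ) :
    Measurable (fun z : ℝ × (Fin m → ℝ) => dirI m α β z.1 z.2) := by
  unfold dirI
  refine Measurable.ite ?_ ?_ measurable_const
  · have : {a : ℝ × (Fin m → ℝ) | (∀ i, 0 ≤ a.2 i) ∧ ∑ i, a.2 i ≤ a.1}
      = (⋂ i, {a | 0 ≤ a.2 i}) ∩ {a | ∑ i, a.2 i ≤ a.1} := by
      ext q; simp
    rw [this]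
    refine MeasurableSet.inter (MeasurableSet.iInter fun i =>
      measurableSet_le (by fun_prop) (by fun_prop)) (measurableSet_le (by fun_prop) (by fun_prop))
  · refine ENNReal.measurable_ofReal.comp ?_
    refine Measurable.mul (Finset.measurable_prod _ fun i _ => ?_) ?_
    · fun_prop
    · fun_prop

/-- The one-dimensional Beta integral on `[0, s]`. -/
lemma beta_scaled {α γ s : ℝ} (hα : -1 < α) (hγ : -1 < γ) (hs : 0 < s) :
    ∫⁻ u : ℝ, (if 0 ≤ u ∧ u ≤ s then ENNReal.ofReal (u ^ α * (s - u) ^ γ) else 0) =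
      ENNReal.ofReal (ProbabilityTheory.beta (α + 1) (γ + 1) * s ^ (α + γ + 1)) := by
  have hb := ProbabilityTheory.beta_pos (α := α + 1) (β := γ + 1) (by linarith) (by linarith)
  have hmeas : Measurable (fun u : ℝ =>
      (if 0 ≤ u ∧ u ≤ s then ENNReal.ofReal (u ^ α * (s - u) ^ γ) else 0)) :=
    Measurable.ite (measurableSet_Icc (a := (0 : ℝ)) (b := s)) (by fun_prop) (by fun_prop)
  rw [← Real.smul_map_volume_mul_left hs.ne', lintegral_smul_measure,
    lintegral_map hmeas (by fun_prop)]
  have h1 : ∀ᵐ u : ℝ, (if 0 ≤ s * u ∧ s * u ≤ s then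
      ENNReal.ofReal ((s * u) ^ α * (s - s * u) ^ γ) else 0)
      = ENNReal.ofReal (ProbabilityTheory.beta (α + 1) (γ + 1) * s ^ (α + γ)) *
        ProbabilityTheory.betaPDF (α + 1) (γ + 1) u := by
    filter_upwards [compl_mem_ae_iff.2 (measure_singleton (μ := volume) (0 : ℝ)),
      compl_mem_ae_iff.2 (measure_singleton (μ := volume) (1 : ℝ))] with u h0 h1
    rw [ProbabilityTheory.betaPDF_eq]
    have h0 : u ≠ 0 := h0
    have h1 : u ≠ 1 := h1
    by_cases hu : 0 < u ∧ u < 1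
    · rw [if_pos hu, if_pos ⟨by nlinarith [hu.1], by nlinarith [hu.2]⟩,
        ← ENNReal.ofReal_mul (by positivity)]
      congr 1
      rw [show s - s * u = s * (1 - u) by ring, Real.mul_rpow hs.le hu.1.le,
        Real.mul_rpow hs.le (by linarith [hu.2]), Real.rpow_add hs]
      simp only [add_sub_cancel_right]
      field_simp
    · rw [if_neg hu, if_neg, ENNReal.ofReal_zero, mul_zero]
      rintro ⟨h2, h3⟩
      apply hu
      have h4 : 0 ≤ u := nonneg_of_mul_nonneg_right h2 hs
      have h5 : u ≤ 1 := by nlinarith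
      exact ⟨lt_of_le_of_ne h4 h0.symm, lt_of_le_of_ne h5 h1⟩
  rw [lintegral_congr_ae h1, lintegral_const_mul _ (by
    unfold ProbabilityTheory.betaPDF
    exact ENNReal.measurable_ofReal.comp (ProbabilityTheory.measurable_betaPDFReal _ _)),
    ProbabilityTheory.lintegral_betaPDF_eq_one (by linarith) (by linarith), mul_one, smul_eq_mul,
    ← ENNReal.ofReal_mul (abs_nonneg _), abs_of_pos hs, Real.rpow_add hs (α + γ), Real.rpow_one]
  congr 1; ring

/-- The Dirichlet integral over `s Δ`, by induction on the dimension: integrating out all but the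
first coordinate leaves a Beta integral. -/
lemma dirichlet_aux (m : ℕ) : ∀ (α : Fin m → ℝ) (β s : ℝ), (∀ i, -1 < α i) → -1 < β → 0 < s →
    ∫⁻ q, dirI m α β s q = ENNReal.ofReal ((∏ i, Real.Gamma (α i + 1)) * Real.Gamma (β + 1) /
      Real.Gamma (∑ i, α i + β + m + 1) * s ^ (∑ i, α i + β + m)) := by
  induction m with
  | zero =>
    intro α β s hα hβ hs
    have : Real.Gamma (β + 1) ≠ 0 := (Real.Gamma_pos_of_pos (by linarith)).ne'
    rw [MeasureTheory.lintegral_unique]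
    have hv : (volume : Measure (Fin 0 → ℝ)) Set.univ = 1 := by
      rw [volume_pi, Measure.pi_of_empty _ 0]; simp
    simp [dirI, hs.le, this, hv]
  | succ m ih =>
    intro α β s hα hβ hs
    have hmp := (volume_preserving_piFinSuccAbove (fun _ : Fin (m + 1) => ℝ) 0).symm
    have hm1 : Measurable (dirI (m + 1) α β s) :=
      (measurable_dirI (m + 1) α β).comp (measurable_const.prodMk measurable_id)
    rw [← hmp.lintegral_comp hm1, Measure.volume_eq_prod, lintegral_prod
      (fun a => dirI (m + 1) α β s
        ((MeasurableEquiv.piFinSuccAbove (fun _ : Fin (m + 1) => ℝ) 0).symm a))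
      (hm1.comp (MeasurableEquiv.measurable _)).aemeasurable]
    set γ := ∑ i : Fin m, α i.succ + β + m with hγ
    have hγ1 : -1 < γ := by
      have : -(m : ℝ) ≤ ∑ i : Fin m, α i.succ := by
        have := Finset.sum_le_sum (s := Finset.univ) fun (i : Fin m) _ => (hα i.succ).le
        simpa using this
      linarith
    set C := (∏ i : Fin m, Real.Gamma (α i.succ + 1)) * Real.Gamma (β + 1) /
      Real.Gamma (γ + 1) with hC
    have hC0 : 0 ≤ C := by
      refine div_nonneg (mul_nonneg (Finset.prod_nonneg fun i _ => ?_) ?_) ?_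
      · exact (Real.Gamma_pos_of_pos (by linarith [hα i.succ])).le
      · exact (Real.Gamma_pos_of_pos (by linarith)).le
      · exact (Real.Gamma_pos_of_pos (by linarith)).le
    have hfac : ∀ (u : ℝ) (q : Fin m → ℝ), dirI (m + 1) α β s
        ((MeasurableEquiv.piFinSuccAbove (fun _ : Fin (m + 1) => ℝ) 0).symm (u, q))
        = (if 0 ≤ u then ENNReal.ofReal (u ^ α 0) else 0) *
          dirI m (fun i => α i.succ) β (s - u) q := by
      intro u q
      have e0 : (MeasurableEquiv.piFinSuccAbove (fun _ : Fin (m + 1) => ℝ) 0).symm (u, q)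
          = Fin.cons u q := by
        simp [MeasurableEquiv.piFinSuccAbove, Fin.insertNthEquiv]
      rw [e0]
      unfold dirI
      simp only [Fin.forall_fin_succ, Fin.cons_zero, Fin.cons_succ, Fin.sum_univ_succ,
        Fin.prod_univ_succ]
      by_cases hu : 0 ≤ u
      · have e1 : (u + ∑ i, q i ≤ s) ↔ (∑ i, q i ≤ s - u) := by
          constructor <;> intro h <;> linarith
        simp only [hu, true_and, if_true, e1]
        split_ifs
        · rw [← ENNReal.ofReal_mul (by positivity)]
          congr 1
          rw [mul_assoc, show s - (u + ∑ i, q i) = s - u - ∑ i, q i by ring]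
        · simp
      · simp [hu]
    simp only [hfac]
    have h2 : ∀ᵐ u : ℝ, (∫⁻ q : Fin m → ℝ, (if 0 ≤ u then ENNReal.ofReal (u ^ α 0) else 0) *
          dirI m (fun i => α i.succ) β (s - u) q)
        = ENNReal.ofReal C *
          (if 0 ≤ u ∧ u ≤ s then ENNReal.ofReal (u ^ α 0 * (s - u) ^ γ) else 0) := by
      filter_upwards [compl_mem_ae_iff.2 (measure_singleton (μ := volume) s)] with u hus
      have hus : u ≠ s := hus
      have hm2 : Measurable (fun q : Fin m → ℝ => dirI m (fun i => α i.succ) β (s - u) q) :=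
        (measurable_dirI m _ β).comp (measurable_const.prodMk measurable_id)
      rw [lintegral_const_mul _ hm2]
      by_cases hu : 0 ≤ u
      · rcases lt_or_gt_of_ne hus with h | h
        · rw [ih _ _ _ (fun i => hα i.succ) hβ (by linarith : 0 < s - u), if_pos hu,
            if_pos ⟨hu, h.le⟩, ← ENNReal.ofReal_mul (by positivity), ← ENNReal.ofReal_mul hC0]
          congr 1
          rw [hC, ← hγ]; ring
        · rw [if_neg (c := 0 ≤ u ∧ u ≤ s) (by rintro ⟨_, h'⟩; linarith), mul_zero]
          have : ∀ q : Fin m → ℝ, dirI m (fun i => α i.succ) β (s - u) q = 0 := by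
            intro q
            unfold dirI
            rw [if_neg]
            rintro ⟨h3, h4⟩
            have := Finset.sum_nonneg (s := Finset.univ) fun i _ => h3 i
            linarith
          simp [this]
      · simp [hu]
    rw [lintegral_congr_ae h2, lintegral_const_mul _ (Measurable.ite
      (measurableSet_Icc (a := (0 : ℝ)) (b := s)) (by fun_prop) (by fun_prop)),
      beta_scaled (hα 0) hγ1 hs, ← ENNReal.ofReal_mul hC0]
    congr 1
    have e2 : ∑ i, α i + β + ((m + 1 : ℕ) : ℝ) = α 0 + γ + 1 := by
      rw [Fin.sum_univ_succ, hγ]; push_cast; ring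
    rw [e2, Fin.prod_univ_succ, hC, ProbabilityTheory.beta,
      show α 0 + 1 + (γ + 1) = α 0 + γ + 1 + 1 by ring]
    have : Real.Gamma (γ + 1) ≠ 0 := (Real.Gamma_pos_of_pos (by linarith)).ne'
    field_simp

/-- The Dirichlet integral over `Δ` with real exponents. -/
lemma dirichlet {m : ℕ} (t : Fin (m + 1) → ℝ) (ht : ∀ x, -1 < t x) :
    ∫⁻ q in stdCorner m, ENNReal.ofReal (∏ x, em q x ^ t x) =
      ENNReal.ofReal ((∏ x, Real.Gamma (t x + 1)) / Real.Gamma (∑ x, t x + m + 1)) := by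
  have h := dirichlet_aux m (fun i => t i.castSucc) (t (Fin.last m)) 1 (fun i => ht _) (ht _) one_pos
  rw [Fin.prod_univ_castSucc, Fin.sum_univ_castSucc, ← lintegral_indicator
    (isClosed_stdCorner m).measurableSet]
  rw [Real.one_rpow, mul_one] at h
  rw [← h]
  refine lintegral_congr fun q => ?_
  classical
  rw [Set.indicator_apply, dirI]
  have : q ∈ stdCorner m ↔ (∀ i, 0 ≤ q i) ∧ ∑ i, q i ≤ 1 := Iff.rfl
  simp only [this, Fin.prod_univ_castSucc, em_castSucc, em_last]

/-- The Dirichlet integral with integer exponents, as a Bochner integral. -/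
lemma dirichlet_nat {m : ℕ} (t : Fin (m + 1) → ℕ) :
    ∫ q in stdCorner m, (∏ x, em q x ^ t x) =
      (∏ x, ((t x).factorial : ℝ)) / ((∑ x, t x + m).factorial : ℝ) := by
  have h := dirichlet (fun x => (t x : ℝ)) (fun x => by
    have : (0 : ℝ) ≤ t x := Nat.cast_nonneg _
    linarith)
  simp only [Real.rpow_natCast] at h
  have hnn : ∀ q ∈ stdCorner m, 0 ≤ ∏ x, em q x ^ t x := fun q hq =>
    Finset.prod_nonneg fun x _ => pow_nonneg ((em_mem hq).1 x) _
  rw [integral_eq_lintegral_of_nonneg_ae, h]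
  · have e1 : (∑ x, (t x : ℝ) + m + 1) = ((∑ x, t x + m : ℕ) : ℝ) + 1 := by push_cast; ring
    rw [e1, Real.Gamma_nat_eq_factorial]
    simp only [Real.Gamma_nat_eq_factorial]
    exact ENNReal.toReal_ofReal (by positivity)
  · exact (ae_restrict_iff' (isClosed_stdCorner m).measurableSet).2 (Eventually.of_forall hnn)
  · refine Continuous.aestronglyMeasurable ?_
    have := continuous_em (m := m)
    fun_prop

lemma volume_stdCorner (m : ℕ) : (volume (stdCorner m)).toReal = 1 / (m.factorial : ℝ) := by
  have := dirichlet_nat (m := m) (fun _ => 0)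
  simpa [Measure.real] using this

lemma hyperplane_null {m : ℕ} (L : (Fin m → ℝ) →ₗ[ℝ] ℝ) (hL : L ≠ 0) (r : ℝ) :
    volume {q : Fin m → ℝ | L q = r} = 0 := by
  by_cases h : ∃ q₀, L q₀ = r
  · obtain ⟨q₀, h₀⟩ := h
    have h1 : {q : Fin m → ℝ | L q = r} = (AffineSubspace.mk' q₀ (LinearMap.ker L) : Set _) := by
      ext q
      simp [AffineSubspace.mem_mk', LinearMap.mem_ker, sub_eq_zero, h₀]
    rw [h1]
    refine Measure.addHaar_affineSubspace _ _ fun htop => hL ?_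
    have := congrArg AffineSubspace.direction htop
    rw [AffineSubspace.direction_mk', AffineSubspace.direction_top] at this
    exact LinearMap.ker_eq_top.1 this
  · push Not at h
    have : {q : Fin m → ℝ | L q = r} = ∅ := by ext q; simpa using h q
    rw [this, measure_empty]

lemma em_pos_ae (m : ℕ) : ∀ᵐ q ∂(volume.restrict (stdCorner m)), ∀ x, 0 < em q x := by
  rw [eventually_countable_forall]
  intro x
  rw [ae_restrict_iff' (isClosed_stdCorner m).measurableSet]
  have key : volume {q : Fin m → ℝ | em q x = 0} = 0 := by
    refine Fin.lastCases ?_ (fun i => ?_) x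
    · rcases m with _ | m
      · simp only [em_last]; simp
      · have := hyperplane_null (m := m + 1) (∑ i, LinearMap.proj i) (fun h => by
          have := congrArg (fun L => L (Pi.single 0 1)) h
          simp [Pi.single_apply] at this) 1
        convert this using 2
        ext q
        simp only [em_last, Set.mem_ofPred_eq, LinearMap.sum_apply, LinearMap.proj_apply]
        constructor <;> intro h <;> linarith
    · have := hyperplane_null (m := m) (LinearMap.proj i) (fun h => by
          have := congrArg (fun L => L (Pi.single i 1)) h
          simp at this) 0
      convert this using 2
      ext q
      simp [em_castSucc]
  filter_upwards [compl_mem_ae_iff.2 key] with q hq hq'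
  exact lt_of_le_of_ne ((em_mem hq').1 x) (Ne.symm hq)

lemma simplex_le_one {a : ℕ} {p : Fin a → ℝ} (hp : p ∈ simplex a) (x : Fin a) : p x ≤ 1 := by
  rw [← hp.2]; exact Finset.single_le_sum (fun j _ => hp.1 j) (Finset.mem_univ x)

lemma log_integrable {m : ℕ} (x : Fin (m + 1)) :
    IntegrableOn (fun q => Real.log (em q x)) (stdCorner m) := by
  have h := dirichlet (m := m) (fun x' => if x' = x then -(1 / 2) else 0) (fun x' => by
    split_ifs <;> norm_num)
  have hcont := continuous_em (m := m)
  have hprod : ∀ q : Fin m → ℝ, (∏ x', em q x' ^ (if x' = x then (-(1 / 2) : ℝ) else 0))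
      = em q x ^ (-(1 / 2) : ℝ) := by
    intro q
    rw [Finset.prod_eq_single x]
    · simp
    · intro x' _ hx'; simp [hx']
    · simp
  have hi : IntegrableOn (fun q : Fin m → ℝ => 2 * em q x ^ (-(1 / 2) : ℝ)) (stdCorner m) := by
    refine Integrable.const_mul ?_ 2
    refine ⟨Measurable.aestronglyMeasurable (by fun_prop), ?_⟩
    rw [hasFiniteIntegral_iff_ofReal]
    · simp only [hprod] at h
      rw [h]; exact ENNReal.ofReal_lt_top
    · refine (ae_restrict_iff' (isClosed_stdCorner m).measurableSet).2 (Eventually.of_forall ?_)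
      exact fun q hq => Real.rpow_nonneg ((em_mem hq).1 x) _
  refine hi.mono' (Measurable.aestronglyMeasurable (by fun_prop)) ?_
  refine (ae_restrict_iff' (isClosed_stdCorner m).measurableSet).2 (Eventually.of_forall ?_)
  intro q hq
  rw [Real.norm_eq_abs]
  rcases ((em_mem hq).1 x).eq_or_lt with h0 | h0
  · rw [← h0]; simp
  · have h1 := Real.abs_log_mul_self_rpow_lt (em q x) (1 / 2) h0
      (simplex_le_one (em_mem hq) x) (by norm_num)
    have h2 : 0 < em q x ^ (1 / 2 : ℝ) := Real.rpow_pos_of_pos h0 _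
    rw [abs_mul, abs_of_pos h2] at h1
    rw [Real.rpow_neg h0.le, ← div_eq_mul_inv, le_div_iff₀ h2]
    norm_num at h1 ⊢
    exact h1.le

/-! ### Normalised sums of letters -/

/-- The normalised sum `n^{-1/2} ∑ h(z_i)`. -/
def nm {α : Type*} {n : ℕ} (h : α → ℝ) (z : Fin n → α) : ℝ := (∑ i, h (z i)) / √n

section nm
variable {α : Type*} [Fintype α] {n : ℕ}

lemma nm_cov {r : α → ℝ} (hs : ∑ c, r c = 1) (h g : α → ℝ)
    (hh : ∑ c, r c * h c = 0) (hg : ∑ c, r c * g c = 0) (hn : 1 ≤ n) :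
    Ew (fun _ : Fin n => r) (fun z => nm h z * nm g z) = ∑ c, r c * (h c * g c) := by
  have hn' : (0 : ℝ) < n := by exact_mod_cast hn
  have e : ∀ z : Fin n → α, nm h z * nm g z = (∑ i, h (z i)) * (∑ i, g (z i)) / n := by
    intro z
    rw [nm, nm, div_mul_div_comm, Real.mul_self_sqrt hn'.le]
  simp only [e]
  rw [Ew_div_const, Ew_cov (fun _ => hs) (fun _ => h) (fun _ => g) (fun _ => hh) (fun _ => hg)]
  simp only [Finset.sum_const, Finset.card_univ, Fintype.card_fin, nsmul_eq_mul]
  field_simp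

lemma sum_mul_le_of_bound {r : α → ℝ} (h0 : ∀ c, 0 ≤ r c) (hs : ∑ c, r c = 1) {h : α → ℝ} {H : ℝ}
    (hH : ∀ c, h c ≤ H) : ∑ c, r c * h c ≤ H := by
  calc ∑ c, r c * h c ≤ ∑ c, r c * H :=
        Finset.sum_le_sum fun c _ => mul_le_mul_of_nonneg_left (hH c) (h0 c)
    _ = H := by rw [← Finset.sum_mul, hs, one_mul]

lemma nm_sq_le {r : α → ℝ} (h0 : ∀ c, 0 ≤ r c) (hs : ∑ c, r c = 1) (h : α → ℝ)
    (hh : ∑ c, r c * h c = 0) (hn : 1 ≤ n) {H : ℝ} (hH : ∀ c, |h c| ≤ H) :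
    Ew (fun _ : Fin n => r) (fun z => nm h z ^ 2) ≤ H ^ 2 := by
  simp only [pow_two (nm h _)]
  rw [nm_cov hs h h hh hh hn]
  refine sum_mul_le_of_bound h0 hs fun c => ?_
  rw [← pow_two, ← sq_abs]
  exact pow_le_pow_left₀ (abs_nonneg _) (hH c) 2

lemma nm_four_le {r : α → ℝ} (h0 : ∀ c, 0 ≤ r c) (hs : ∑ c, r c = 1) (h : α → ℝ)
    (hh : ∑ c, r c * h c = 0) (hn : 1 ≤ n) {H : ℝ} (hH : ∀ c, |h c| ≤ H) :
    Ew (fun _ : Fin n => r) (fun z => nm h z ^ 4) ≤ 4 * H ^ 4 := by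
  have hn' : (1 : ℝ) ≤ n := by exact_mod_cast hn
  have hn0 : (0 : ℝ) < n := by linarith
  have e : ∀ z : Fin n → α, nm h z ^ 4 = (∑ i, h (z i)) ^ 4 / (n : ℝ) ^ 2 := by
    intro z
    rw [nm, div_pow, show √(n : ℝ) ^ 4 = (√n ^ 2) ^ 2 by ring, Real.sq_sqrt hn0.le]
  simp only [e]
  rw [Ew_div_const, div_le_iff₀ (by positivity)]
  refine (Ew_fourth (fun _ => h0) (fun _ => hs) (fun _ => h) (fun _ => hh)).trans ?_
  simp only [Finset.sum_const, Finset.card_univ, Fintype.card_fin, nsmul_eq_mul]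
  have h4 : ∑ c, r c * h c ^ 4 ≤ H ^ 4 := by
    refine sum_mul_le_of_bound h0 hs fun c => ?_
    calc h c ^ 4 = |h c| ^ 4 := by rw [show |h c| ^ 4 = (|h c| ^ 2) ^ 2 by ring, sq_abs]; ring
      _ ≤ H ^ 4 := pow_le_pow_left₀ (abs_nonneg _) (hH c) 4
  have h2 : ∑ c, r c * h c ^ 2 ≤ H ^ 2 := by
    refine sum_mul_le_of_bound h0 hs fun c => ?_
    rw [← sq_abs]; exact pow_le_pow_left₀ (abs_nonneg _) (hH c) 2
  have h2' : 0 ≤ ∑ c, r c * h c ^ 2 :=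
    Finset.sum_nonneg fun c _ => mul_nonneg (h0 c) (sq_nonneg _)
  have h3 : (∑ c, r c * h c ^ 2) ^ 2 ≤ H ^ 4 := by
    calc _ ≤ (H ^ 2) ^ 2 := pow_le_pow_left₀ h2' h2 2
      _ = _ := by ring
  have h5 : (n : ℝ) * ∑ c, r c * h c ^ 4 ≤ n ^ 2 * H ^ 4 := by
    calc (n : ℝ) * ∑ c, r c * h c ^ 4 ≤ n * H ^ 4 := mul_le_mul_of_nonneg_left h4 hn0.le
      _ ≤ n ^ 2 * H ^ 4 := by gcongr; nlinarith
  nlinarith [mul_le_mul_of_nonneg_left h3 (by positivity : (0 : ℝ) ≤ (n : ℝ) ^ 2)]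

lemma nm_abs_le {r : α → ℝ} (h0 : ∀ c, 0 ≤ r c) (hs : ∑ c, r c = 1) (h : α → ℝ)
    (hh : ∑ c, r c * h c = 0) (hn : 1 ≤ n) {H : ℝ} (hH : ∀ c, |h c| ≤ H) :
    Ew (fun _ : Fin n => r) (fun z => |nm h z|) ≤ (1 + H ^ 2) / 2 := by
  have h1 := Ew_abs_le (ρ := fun _ : Fin n => r) (fun _ => h0) (fun _ => hs) (nm h)
  have h2 := nm_sq_le h0 hs h hh hn hH
  linarith

end nm

/-! ### Laplace lower bound for the likelihood integral -/

lemma log_one_add_ge1 {t : ℝ} (ht : |t| ≤ 1 / 2) : t - 2 * t ^ 2 ≤ Real.log (1 + t) := by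
  have h := Real.abs_log_sub_add_sum_range_le (x := -t) (by rw [abs_neg]; linarith) 1
  simp only [Finset.sum_range_one, sub_neg_eq_add, abs_neg] at h
  norm_num at h
  have h2 : t ^ 2 / (1 - |t|) ≤ 2 * t ^ 2 := by
    rw [div_le_iff₀ (by linarith)]; nlinarith [sq_nonneg t]
  have := (abs_le.1 h).1
  linarith

lemma log_one_add_ge2 {t : ℝ} (ht : |t| ≤ 1 / 2) :
    t - t ^ 2 / 2 - 2 * |t| ^ 3 ≤ Real.log (1 + t) := by
  have h := Real.abs_log_sub_add_sum_range_le (x := -t) (by rw [abs_neg]; linarith) 2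
  simp only [Finset.sum_range_succ, Finset.sum_range_zero, sub_neg_eq_add, abs_neg] at h
  norm_num at h
  have h2 : |t| ^ 3 / (1 - |t|) ≤ 2 * |t| ^ 3 := by
    rw [div_le_iff₀ (by linarith)]; nlinarith [pow_nonneg (abs_nonneg t) 3]
  have := (abs_le.1 h).1
  linarith

section laplace
variable {m k : ℕ} {Q : Matrix (Fin (k + 1)) (Fin (m + 1)) ℝ}

lemma Q_em_add (q v : Fin m → ℝ) (c : Fin (k + 1)) :
    (Q *ᵥ em (q + v)) c = (Q *ᵥ em q) c + (Bt Q *ᵥ v) c := by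
  simp only [mulVec, dotProduct, Fin.sum_univ_castSucc, em_castSucc, em_last, Pi.add_apply, Bt,
    Matrix.of_apply, mul_add, sub_mul, Finset.sum_add_distrib, Finset.sum_sub_distrib,
    ← Finset.mul_sum]
  ring

lemma continuous_lik {n : ℕ} (y : Fin n → Fin (k + 1)) :
    Continuous (fun q : Fin m → ℝ => lik Q y (em q)) := by
  unfold lik
  refine continuous_finsetProd _ fun i _ => ?_
  simp only [mulVec, dotProduct]
  have := continuous_em (m := m)
  fun_prop

lemma lik_pos (hQpos : ∀ y x, 0 < Q y x) (hQcol : ∀ x, ∑ y, Q y x = 1) {n : ℕ}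
    (y : Fin n → Fin (k + 1)) {q : Fin m → ℝ} (hq : q ∈ stdCorner m) : 0 < lik Q y (em q) :=
  Finset.prod_pos fun i _ => Qp_pos hQpos hQcol (em_mem hq) _

/-- An affine change of variables bounds the likelihood integral from below. -/
lemma integral_affine_le (V : Matrix (Fin m) (Fin m) ℝ) (hV : V.det ≠ 0) (q₀ : Fin m → ℝ)
    {S : Set (Fin m → ℝ)} (hS : MeasurableSet S) (hSΔ : ∀ θ ∈ S, q₀ + V *ᵥ θ ∈ stdCorner m)
    {g : (Fin m → ℝ) → ℝ} (hg : Continuous g) (hg0 : ∀ q ∈ stdCorner m, 0 ≤ g q) :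
    |V.det| * ∫ θ in S, g (q₀ + V *ᵥ θ) ≤ ∫ q in stdCorner m, g q := by
  have h := integral_image_eq_integral_abs_det_fderiv_smul volume hS
    (f := fun θ => q₀ + V *ᵥ θ) (f' := fun _ => (Matrix.toLin' V).toContinuousLinearMap)
    (fun θ _ => by
      have : HasFDerivAt (fun θ => (Matrix.toLin' V).toContinuousLinearMap θ)
        ((Matrix.toLin' V).toContinuousLinearMap) θ := ContinuousLinearMap.hasFDerivAt _
      exact (this.const_add q₀).hasFDerivWithinAt)
    (fun θ _ θ' _ hθ => by
      have h1 : V *ᵥ θ = V *ᵥ θ' := add_left_cancel hθ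
      exact Matrix.mulVec_injective_of_isUnit ((Matrix.isUnit_iff_isUnit_det _).2
        (isUnit_iff_ne_zero.2 hV)) h1) g
  have hdet : (LinearMap.toContinuousLinearMap (Matrix.toLin' V)).det = V.det := by
    rw [ContinuousLinearMap.det, LinearMap.coe_toContinuousLinearMap, LinearMap.det_toLin']
  simp only [hdet, smul_eq_mul, integral_const_mul] at h
  rw [← h]
  refine setIntegral_mono_set
    (hg.continuousOn.integrableOn_compact (isCompact_stdCorner m)) ?_ ?_
  · exact (ae_restrict_iff' (isClosed_stdCorner m).measurableSet).2 (Eventually.of_forall hg0)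
  · refine Eventually.of_forall ?_
    rintro _ ⟨θ, hθ, rfl⟩
    exact hSΔ θ hθ

/-- The centred, normalised count of the letter `c`. -/
def zc {n : ℕ} (r : Fin (k + 1) → ℝ) (c : Fin (k + 1)) (y : Fin n → Fin (k + 1)) : ℝ :=
  nm (fun c' => (if c' = c then 1 else 0) - r c) y

lemma sum_zc {n : ℕ} (r v : Fin (k + 1) → ℝ) (hv : ∑ c, r c * v c = 0)
    (y : Fin n → Fin (k + 1)) : ∑ c, v c * zc r c y = nm v y := by
  simp only [zc, nm, mul_div_assoc', ← Finset.sum_div, Finset.mul_sum]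
  congr 1
  rw [Finset.sum_comm]
  refine Finset.sum_congr rfl fun i _ => ?_
  simp only [mul_sub, Finset.sum_sub_distrib, mul_ite, mul_one, mul_zero, Finset.sum_ite_eq,
    Finset.mem_univ, if_true]
  have : ∑ c, v c * r c = 0 := by rw [← hv]; exact Finset.sum_congr rfl fun c _ => mul_comm _ _
  rw [this, sub_zero]

lemma exists_Qmin (hQpos : ∀ y x, 0 < Q y x) (hQcol : ∀ x, ∑ y, Q y x = 1) :
    ∃ δ : ℝ, 0 < δ ∧ δ ≤ 1 ∧ ∀ p ∈ simplex (m + 1), ∀ c, δ ≤ (Q *ᵥ p) c := by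
  obtain ⟨⟨c₀, x₀⟩, -, h0⟩ := Finset.exists_min_image Finset.univ
    (fun z : Fin (k + 1) × Fin (m + 1) => Q z.1 z.2) Finset.univ_nonempty
  refine ⟨Q c₀ x₀, hQpos _ _, ?_, fun p hp c => ?_⟩
  · rw [← hQcol x₀]
    exact Finset.single_le_sum (f := fun y => Q y x₀) (fun y _ => (hQpos y x₀).le)
      (Finset.mem_univ c₀)
  · calc Q c₀ x₀ = ∑ x, Q c₀ x₀ * p x := by rw [← Finset.mul_sum, hp.2, mul_one]
      _ ≤ _ := Finset.sum_le_sum fun x _ =>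
        mul_le_mul_of_nonneg_right (h0 (c, x) (Finset.mem_univ _)) (hp.1 x)

lemma Qp_le_one (hQpos : ∀ y x, 0 < Q y x) (hQcol : ∀ x, ∑ y, Q y x = 1) {p : Fin (m + 1) → ℝ}
    (hp : p ∈ simplex (m + 1)) (c) : (Q *ᵥ p) c ≤ 1 := by
  rw [← hp.2, ← Qp_sum hQpos hQcol]
  exact Finset.single_le_sum (fun c _ => (Qp_pos hQpos hQcol hp c).le) (Finset.mem_univ c)

/-- Crude lower bound, valid for all outputs and uniformly in the parameter: integrate over the
copy of `Δ` of size `n^{-1/2}` around the parameter. -/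
lemma laplace_crude (hQpos : ∀ y x, 0 < Q y x) (hQcol : ∀ x, ∑ y, Q y x = 1) :
    ∃ C : ℝ, 0 ≤ C ∧ ∀ n : ℕ, 1 ≤ n → ∀ q ∈ stdCorner m, ∀ y : Fin n → Fin (k + 1),
      - C - ∑ c, |zc (Q *ᵥ em q) c y| ≤
        Real.log (∫ q' in stdCorner m, lik Q y (em q')) - Real.log (lik Q y (em q))
          + m / 2 * Real.log n := by
  obtain ⟨δ, hδ, hδ1, hδQ⟩ := exists_Qmin hQpos hQcol
  refine ⟨1 / 2 + |m * Real.log (2 / δ)| + |Real.log (m.factorial)|, by positivity, ?_⟩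
  intro n hn q hq y
  have hn' : (1 : ℝ) ≤ n := by exact_mod_cast hn
  have hn0 : (0 : ℝ) < n := by linarith
  have hsn : 1 ≤ √(n : ℝ) := Real.one_le_sqrt.2 hn'
  have hsn2 : √(n : ℝ) ^ 2 = n := Real.sq_sqrt hn0.le
  set e : ℝ := δ / 2 / √n with he
  have he0 : 0 < e := by positivity
  have he1 : e ≤ δ / 2 := div_le_self (by positivity) hsn
  set r := Q *ᵥ em q with hr
  have hrp : ∀ c, 0 < r c := Qp_pos hQpos hQcol (em_mem hq)
  have hL := lik_pos hQpos hQcol y hq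
  set X := ∑ c, |zc r c y| with hX
  -- bound on the integrand
  have key : ∀ u ∈ stdCorner m, lik Q y (em q) * Real.exp (-(1 / 2) - X) ≤
      lik Q y (em ((1 - e) • q + (e • (1 : Matrix (Fin m) (Fin m) ℝ)) *ᵥ u)) := by
    intro u hu
    set v : Fin (k + 1) → ℝ := fun c => (Q *ᵥ em u) c / r c - 1 with hv
    have hvb : ∀ c, |v c| ≤ 1 / δ := by
      intro c
      have h1 := hδQ _ (em_mem hq) c
      have h2 := Qp_le_one hQpos hQcol (em_mem hu) c
      have h3 := (Qp_pos hQpos hQcol (em_mem hu) c).le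
      have h4 : (Q *ᵥ em u) c / r c ≤ 1 / δ := by
        gcongr
      have h5 : 0 ≤ (Q *ᵥ em u) c / r c := div_nonneg h3 (hrp c).le
      have h6 : 1 ≤ 1 / δ := by rw [le_div_iff₀ hδ]; linarith
      rw [abs_le]; constructor <;> simp only [hv] <;> linarith
    have hv0 : ∑ c, r c * v c = 0 := by
      have : ∀ c, r c * v c = (Q *ᵥ em u) c - r c := fun c => by
        have := (hrp c).ne'
        simp only [hv]; field_simp
      simp only [this, Finset.sum_sub_distrib]
      rw [Qp_sum hQpos hQcol, hr, Qp_sum hQpos hQcol, em_sum, em_sum, sub_self]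
    have hfac : ∀ c, (Q *ᵥ em ((1 - e) • q + (e • (1 : Matrix (Fin m) (Fin m) ℝ)) *ᵥ u)) c
        = r c * (1 + e * v c) := by
      intro c
      have e1 : (1 - e) • q + (e • (1 : Matrix (Fin m) (Fin m) ℝ)) *ᵥ u = q + e • (u - q) := by
        rw [Matrix.smul_mulVec, Matrix.one_mulVec]; module
      have e2 := Q_em_add (Q := Q) q (u - q) c
      rw [add_sub_cancel] at e2
      rw [e1, Q_em_add, Matrix.mulVec_smul, Pi.smul_apply, smul_eq_mul]
      have := (hrp c).ne'
      simp only [hv]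
      rw [e2]
      field_simp; ring
    have hev : ∀ c, |e * v c| ≤ 1 / 2 := by
      intro c
      rw [abs_mul, abs_of_pos he0]
      calc e * |v c| ≤ δ / 2 * (1 / δ) := mul_le_mul he1 (hvb c) (abs_nonneg _) (by positivity)
        _ = 1 / 2 := by field_simp
    have hpos1 : ∀ c, 0 < 1 + e * v c := fun c => by
      have := (abs_le.1 (hev c)).1; linarith
    have hlik : lik Q y (em ((1 - e) • q + (e • (1 : Matrix (Fin m) (Fin m) ℝ)) *ᵥ u))
        = lik Q y (em q) * ∏ i, (1 + e * v (y i)) := by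
      unfold lik
      rw [← Finset.prod_mul_distrib]
      exact Finset.prod_congr rfl fun i _ => hfac (y i)
    rw [hlik]
    refine mul_le_mul_of_nonneg_left ?_ hL.le
    have hprod : ∏ i, (1 + e * v (y i)) = Real.exp (∑ i, Real.log (1 + e * v (y i))) := by
      rw [Real.exp_sum]
      exact Finset.prod_congr rfl fun i _ => (Real.exp_log (hpos1 _)).symm
    rw [hprod]
    refine Real.exp_le_exp.2 ?_
    have h1 : ∑ i, (e * v (y i) - 2 * (e * v (y i)) ^ 2) ≤ ∑ i, Real.log (1 + e * v (y i)) :=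
      Finset.sum_le_sum fun i _ => log_one_add_ge1 (hev _)
    have h2 : ∀ c, (e * v c) ^ 2 ≤ 1 / (4 * n) := by
      intro c
      have h3 : |e * v c| ≤ 1 / (2 * √n) := by
        rw [abs_mul, abs_of_pos he0]
        calc e * |v c| ≤ e * (1 / δ) := mul_le_mul_of_nonneg_left (hvb c) he0.le
          _ = 1 / (2 * √n) := by rw [he]; field_simp
      calc (e * v c) ^ 2 = |e * v c| ^ 2 := (sq_abs _).symm
        _ ≤ (1 / (2 * √n)) ^ 2 := pow_le_pow_left₀ (abs_nonneg _) h3 2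
        _ = 1 / (4 * n) := by rw [div_pow, mul_pow, hsn2]; norm_num
    have h3 : ∑ i : Fin n, (2 * (e * v (y i)) ^ 2) ≤ 1 / 2 := by
      calc ∑ i : Fin n, (2 * (e * v (y i)) ^ 2) ≤ ∑ i : Fin n, 2 * (1 / (4 * (n : ℝ))) :=
            Finset.sum_le_sum fun i _ => mul_le_mul_of_nonneg_left (h2 _) (by norm_num)
        _ = 1 / 2 := by
            simp only [Finset.sum_const, Finset.card_univ, Fintype.card_fin, nsmul_eq_mul]
            field_simp; norm_num
    have h4 : ∑ i, e * v (y i) = δ / 2 * nm v y := by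
      rw [← Finset.mul_sum, nm, he]; field_simp
    have h5 : |nm v y| ≤ 1 / δ * X := by
      rw [← sum_zc r v hv0 y, hX, Finset.mul_sum]
      refine (Finset.abs_sum_le_sum_abs _ _).trans (Finset.sum_le_sum fun c _ => ?_)
      rw [abs_mul]
      exact mul_le_mul_of_nonneg_right (hvb c) (abs_nonneg _)
    have h6 : - X / 2 ≤ δ / 2 * nm v y := by
      have := (abs_le.1 h5).1
      calc - X / 2 = δ / 2 * -(1 / δ * X) := by field_simp
        _ ≤ _ := mul_le_mul_of_nonneg_left this (by positivity)
    have hX0 : 0 ≤ X := Finset.sum_nonneg fun c _ => abs_nonneg _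
    rw [Finset.sum_sub_distrib] at h1
    linarith
  have hdet : (e • (1 : Matrix (Fin m) (Fin m) ℝ)).det = e ^ m := by simp [Matrix.det_smul]
  have hint := integral_affine_le (e • (1 : Matrix (Fin m) (Fin m) ℝ)) (by rw [hdet]; positivity)
    ((1 - e) • q) (isClosed_stdCorner m).measurableSet (g := fun q => lik Q y (em q))
    (fun u hu => by
      rw [Matrix.smul_mulVec, Matrix.one_mulVec]
      refine ⟨fun i => ?_, ?_⟩
      · simp only [Pi.add_apply, Pi.smul_apply, smul_eq_mul]
        have : 0 ≤ 1 - e := by linarith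
        exact add_nonneg (mul_nonneg this (hq.1 i)) (mul_nonneg he0.le (hu.1 i))
      · simp only [Pi.add_apply, Pi.smul_apply, smul_eq_mul, Finset.sum_add_distrib,
          ← Finset.mul_sum]
        nlinarith [hq.2, hu.2]) (continuous_lik y) (fun q hq => (lik_pos hQpos hQcol y hq).le)
  rw [hdet, abs_of_pos (by positivity)] at hint
  have hint2 : lik Q y (em q) * Real.exp (-(1 / 2) - X) * (1 / (m.factorial : ℝ)) ≤
      ∫ u in stdCorner m, lik Q y (em ((1 - e) • q + (e • (1 : Matrix (Fin m) (Fin m) ℝ)) *ᵥ u)) := by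
    have h1 : ∫ u in stdCorner m, lik Q y (em q) * Real.exp (-(1 / 2) - X)
        = lik Q y (em q) * Real.exp (-(1 / 2) - X) * (1 / (m.factorial : ℝ)) := by
      rw [setIntegral_const, Measure.real, volume_stdCorner, smul_eq_mul, mul_comm]
    rw [← h1]
    refine setIntegral_mono_on ?_ ?_ (isClosed_stdCorner m).measurableSet key
    · exact continuousOn_const.integrableOn_compact (isCompact_stdCorner m)
    · refine Continuous.continuousOn ?_ |>.integrableOn_compact (isCompact_stdCorner m)
      refine (continuous_lik y).comp (continuous_const.add ?_)
      exact Continuous.matrix_mulVec continuous_const continuous_id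
  have hfin : e ^ m * (lik Q y (em q) * Real.exp (-(1 / 2) - X) * (1 / (m.factorial : ℝ))) ≤
      ∫ q' in stdCorner m, lik Q y (em q') :=
    (mul_le_mul_of_nonneg_left hint2 (by positivity)).trans hint
  have hlog := Real.log_le_log (by positivity) hfin
  have hfact : (0 : ℝ) < m.factorial := by positivity
  rw [Real.log_mul (by positivity) (by positivity), Real.log_mul (by positivity) (by positivity),
    Real.log_mul hL.ne' (by positivity), Real.log_exp, Real.log_pow,
    one_div (m.factorial : ℝ), Real.log_inv, he, div_div, Real.log_div hδ.ne' (by positivity),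
    Real.log_mul (by norm_num) (by positivity), Real.log_sqrt hn0.le] at hlog
  have h7 := le_abs_self ((m : ℝ) * Real.log (2 / δ))
  have h8 := le_abs_self (Real.log (m.factorial : ℝ))
  rw [Real.log_div (by norm_num) hδ.ne'] at h7 ⊢
  linarith
end laplace

/-- The truncated Gaussian integral. -/
def gR (R : ℝ) : ℝ := ∫ x in Set.Icc (-R) R, Real.exp (-(1 / 2) * x ^ 2)

lemma gR_tendsto : Tendsto gR atTop (nhds √(2 * π)) := by
  have h := intervalIntegral_tendsto_integral
    (integrable_exp_neg_mul_sq (b := 1 / 2) (by norm_num)) tendsto_neg_atTop_atBot tendsto_id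
  rw [integral_gaussian, show π / (1 / 2) = 2 * π by ring] at h
  refine h.congr' ?_
  filter_upwards [eventually_ge_atTop 0] with R hR
  rw [gR, intervalIntegral.integral_of_le (by simpa using hR), integral_Icc_eq_integral_Ioc]
  rfl

lemma gR_le (R : ℝ) : gR R ≤ √(2 * π) := by
  have h := integral_gaussian (1 / 2)
  rw [show π / (1 / 2) = 2 * π by ring] at h
  rw [← h, gR]
  exact setIntegral_le_integral (integrable_exp_neg_mul_sq (b := 1 / 2) (by norm_num))
    (Eventually.of_forall fun x => (Real.exp_pos _).le)

lemma gR_cube (m : ℕ) (R : ℝ) :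
    ∫ θ in Set.pi Set.univ (fun _ : Fin m => Set.Icc (-R) R), Real.exp (-(1 / 2) * ∑ j, θ j ^ 2)
      = gR R ^ m := by
  have hm : MeasurableSet (Set.pi Set.univ (fun _ : Fin m => Set.Icc (-R) R)) :=
    MeasurableSet.univ_pi fun _ => measurableSet_Icc
  rw [← integral_indicator hm]
  have h1 : ∀ θ : Fin m → ℝ, (Set.pi Set.univ (fun _ : Fin m => Set.Icc (-R) R)).indicator
      (fun θ => Real.exp (-(1 / 2) * ∑ j, θ j ^ 2)) θ
      = ∏ j, (Set.Icc (-R) R).indicator (fun x => Real.exp (-(1 / 2) * x ^ 2)) (θ j) := by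
    intro θ
    by_cases h : ∀ j, θ j ∈ Set.Icc (-R) R
    · rw [Set.indicator_of_mem (Set.mem_univ_pi.2 h), Finset.mul_sum, Real.exp_sum]
      exact Finset.prod_congr rfl fun j _ => by rw [Set.indicator_of_mem (h j)]
    · rw [Set.indicator_of_notMem (fun h' => h (Set.mem_univ_pi.1 h'))]
      push Not at h
      obtain ⟨j, hj⟩ := h
      exact (Finset.prod_eq_zero (Finset.mem_univ j) (Set.indicator_of_notMem hj _)).symm
  simp only [h1]
  rw [integral_fintype_prod_volume_eq_pow]
  rw [integral_indicator measurableSet_Icc, Fintype.card_fin, gR]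

section laplace
variable {m k : ℕ} {Q : Matrix (Fin (k + 1)) (Fin (m + 1)) ℝ}

/-- The logarithm of the normalised likelihood integral. -/
def LI (Q : Matrix (Fin (k + 1)) (Fin (m + 1)) ℝ) {n : ℕ} (q : Fin m → ℝ)
    (y : Fin n → Fin (k + 1)) : ℝ :=
  Real.log (∫ q' in stdCorner m, lik Q y (em q')) - Real.log (lik Q y (em q))
    + m / 2 * Real.log n

/-- Score functions in the coordinates `V`. -/
def hsc (Q : Matrix (Fin (k + 1)) (Fin (m + 1)) ℝ) (V : Matrix (Fin m) (Fin m) ℝ)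
    (q : Fin m → ℝ) (j : Fin m) (c : Fin (k + 1)) : ℝ :=
  (Bt Q * V) c j / (Q *ᵥ em q) c

lemma hsc_mean (hQpos : ∀ y x, 0 < Q y x) (hQcol : ∀ x, ∑ y, Q y x = 1)
    (V : Matrix (Fin m) (Fin m) ℝ) {q : Fin m → ℝ} (hq : q ∈ stdCorner m) (j : Fin m) :
    ∑ c, (Q *ᵥ em q) c * hsc Q V q j c = 0 := by
  have : ∀ c, (Q *ᵥ em q) c * hsc Q V q j c = (Bt Q * V) c j := fun c => by
    have := (Qp_pos hQpos hQcol (em_mem hq) c).ne'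
    rw [hsc]; field_simp
  simp only [this, Matrix.mul_apply]
  rw [Finset.sum_comm]
  simp only [← Finset.sum_mul, Bt_sum hQpos hQcol, zero_mul, Finset.sum_const_zero]

lemma hsc_cov (hQpos : ∀ y x, 0 < Q y x) (hQcol : ∀ x, ∑ y, Q y x = 1)
    {V : Matrix (Fin m) (Fin m) ℝ} {q : Fin m → ℝ} (hq : q ∈ stdCorner m)
    (hV : Vᵀ * Jp Q (em q) * V = 1) (j l : Fin m) :
    ∑ c, (Q *ᵥ em q) c * (hsc Q V q j c * hsc Q V q l c) = if j = l then 1 else 0 := by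
  have h1 : ∀ c, (Q *ᵥ em q) c * (hsc Q V q j c * hsc Q V q l c)
      = ∑ i, ∑ i', V i j * (Bt Q c i * Bt Q c i' / (Q *ᵥ em q) c) * V i' l := fun c => by
    have := (Qp_pos hQpos hQcol (em_mem hq) c).ne'
    have e : (Q *ᵥ em q) c * (hsc Q V q j c * hsc Q V q l c)
      = (Bt Q * V) c j * (Bt Q * V) c l / (Q *ᵥ em q) c := by
      rw [hsc, hsc]; field_simp
    rw [e, Matrix.mul_apply, Matrix.mul_apply, Finset.sum_mul_sum, Finset.sum_div]
    refine Finset.sum_congr rfl fun i _ => ?_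
    rw [Finset.sum_div]
    exact Finset.sum_congr rfl fun i' _ => by ring
  have h2 := congrFun (congrFun hV j) l
  rw [Matrix.one_apply] at h2
  rw [← h2, Matrix.mul_assoc, Matrix.mul_apply]
  simp only [h1, Matrix.mul_apply, Matrix.transpose_apply, Jp, Matrix.of_apply]
  rw [Finset.sum_comm]
  refine Finset.sum_congr rfl fun i _ => ?_
  rw [Finset.sum_comm, Finset.mul_sum]
  refine Finset.sum_congr rfl fun i' _ => ?_
  rw [Finset.sum_mul, Finset.mul_sum]
  exact Finset.sum_congr rfl fun c _ => by ring

/-- Second-order lower bound on the event that the normalised score is bounded by `R`. -/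
lemma laplace_good (hQpos : ∀ y x, 0 < Q y x) (hQcol : ∀ x, ∑ y, Q y x = 1)
    {V : Matrix (Fin m) (Fin m) ℝ} (hVdet : V.det ≠ 0) {q : Fin m → ℝ} (hq : q ∈ stdCorner m)
    (hqpos : ∀ x, 0 < em q x) {R : ℝ} (hR : 0 < R) (hgR : 0 < gR R) :
    ∃ C : ℝ, ∀ᶠ n : ℕ in atTop, ∀ y : Fin n → Fin (k + 1),
      (∀ j, |nm (hsc Q V q j) y| ≤ R) →
      Real.log |V.det| + m * Real.log (gR R) + (∑ j, nm (hsc Q V q j) y ^ 2) / 2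
        - 2 * R ^ 2 * (∑ j, ∑ l, |nm (fun c => hsc Q V q j c * hsc Q V q l c
            - if j = l then 1 else 0) y|) / √n - C / √n ≤ LI Q q y := by
  set h := hsc Q V q with hh
  set H : ℝ := ∑ j, ∑ c, |h j c| with hH
  have hH0 : 0 ≤ H := by positivity
  set VV : ℝ := ∑ i, ∑ j, |V i j| with hVV
  obtain ⟨x₀, hx₀⟩ := Finite.exists_min (em q)
  set η := em q x₀ with hη
  have hη0 : 0 < η := hqpos x₀
  have hsq : Tendsto (fun n : ℕ => √(n : ℝ)) atTop atTop :=
    Real.tendsto_sqrt_atTop.comp tendsto_natCast_atTop_atTop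
  have hev1 : ∀ᶠ n : ℕ in atTop, 2 * R * H / √n ≤ 1 / 2 := by
    have : Tendsto (fun n : ℕ => 2 * R * H / √(n : ℝ)) atTop (nhds 0) :=
      tendsto_const_nhds.div_atTop hsq
    exact this.eventually_le_const (by norm_num)
  have hev2 : ∀ᶠ n : ℕ in atTop, (m + 1) * (2 * R * VV) / √n ≤ η := by
    have : Tendsto (fun n : ℕ => (m + 1) * (2 * R * VV) / √(n : ℝ)) atTop (nhds 0) :=
      tendsto_const_nhds.div_atTop hsq
    exact this.eventually_le_const hη0
  refine ⟨2 * (2 * R * H) ^ 3, ?_⟩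
  filter_upwards [hev1, hev2, eventually_ge_atTop 1] with n hn1 hn2 hn y hy
  have hn' : (1 : ℝ) ≤ n := by exact_mod_cast hn
  have hn0 : (0 : ℝ) < n := by linarith
  have hs0 : 0 < √(n : ℝ) := Real.sqrt_pos.2 hn0
  have hs2 : √(n : ℝ) ^ 2 = n := Real.sq_sqrt hn0.le
  set s := √(n : ℝ) with hs
  set r := Q *ᵥ em q with hr
  have hrp : ∀ c, 0 < r c := Qp_pos hQpos hQcol (em_mem hq)
  have hL := lik_pos hQpos hQcol y hq
  set ω : Fin m → ℝ := fun j => nm (h j) y with hω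
  set D : Fin m → Fin m → ℝ := fun j l => nm (fun c => h j c * h l c - if j = l then 1 else 0) y
    with hD
  set err : ℝ := 2 * R ^ 2 * (∑ j, ∑ l, |D j l|) / s + 2 * (2 * R * H) ^ 3 / s with herr
  set cube := Set.pi Set.univ (fun _ : Fin m => Set.Icc (-R) R) with hcube
  have hcm : MeasurableSet cube := MeasurableSet.univ_pi fun _ => measurableSet_Icc
  -- substitution `θ ↦ q + n^{-1/2} V (ω + θ)`, which centres the quadratic form at its maximum
  set q₀ := q + s⁻¹ • (V *ᵥ ω) with hq₀
  have hqv : ∀ θ, q₀ + (s⁻¹ • V) *ᵥ θ = q + s⁻¹ • (V *ᵥ (ω + θ)) := by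
    intro θ
    rw [hq₀, Matrix.smul_mulVec, Matrix.mulVec_add, smul_add, add_assoc]
  have hτ : ∀ θ ∈ cube, ∀ j, |(ω + θ) j| ≤ 2 * R := by
    intro θ hθ j
    have h1 := hθ j (Set.mem_univ j)
    have h2 : |θ j| ≤ R := abs_le.2 h1
    calc |(ω + θ) j| ≤ |ω j| + |θ j| := abs_add_le _ _
      _ ≤ 2 * R := by linarith [hy j]
  have hsub : ∀ θ ∈ cube, q₀ + (s⁻¹ • V) *ᵥ θ ∈ stdCorner m := by
    intro θ hθ
    rw [hqv]
    have hb : ∀ i, |(s⁻¹ • (V *ᵥ (ω + θ))) i| ≤ η / (m + 1) := by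
      intro i
      rw [Pi.smul_apply, smul_eq_mul, abs_mul, abs_of_pos (inv_pos.2 hs0)]
      have h1 : |(V *ᵥ (ω + θ)) i| ≤ 2 * R * VV := by
        calc |(V *ᵥ (ω + θ)) i| ≤ ∑ j, |V i j * (ω + θ) j| := by
              simp only [mulVec, dotProduct]; exact Finset.abs_sum_le_sum_abs _ _
          _ ≤ ∑ j, |V i j| * (2 * R) := Finset.sum_le_sum fun j _ => by
              rw [abs_mul]; exact mul_le_mul_of_nonneg_left (hτ θ hθ j) (abs_nonneg _)
          _ = 2 * R * ∑ j, |V i j| := by rw [← Finset.sum_mul, mul_comm]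
          _ ≤ 2 * R * VV := by
              refine mul_le_mul_of_nonneg_left ?_ (by positivity)
              exact Finset.single_le_sum (f := fun i => ∑ j, |V i j|)
                (fun i _ => Finset.sum_nonneg fun j _ => abs_nonneg _) (Finset.mem_univ i)
      rw [le_div_iff₀ (by positivity)]
      calc s⁻¹ * |(V *ᵥ (ω + θ)) i| * (m + 1) ≤ s⁻¹ * (2 * R * VV) * (m + 1) := by gcongr
        _ = (m + 1) * (2 * R * VV) / s := by rw [div_eq_mul_inv]; ring
        _ ≤ η := hn2
    have hηm : η / (m + 1) ≤ η := div_le_self hη0.le (by linarith [(Nat.cast_nonneg m : (0:ℝ) ≤ m)])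
    refine ⟨fun i => ?_, ?_⟩
    · have h1 := hx₀ i.castSucc
      rw [em_castSucc] at h1
      have h2 := (abs_le.1 (hb i)).1
      rw [Pi.add_apply]; linarith
    · have h1 := hx₀ (Fin.last m)
      rw [em_last] at h1
      simp only [Pi.add_apply, Finset.sum_add_distrib]
      have h2 : ∑ i, (s⁻¹ • (V *ᵥ (ω + θ))) i ≤ ∑ i : Fin m, η / ((m : ℝ) + 1) :=
        Finset.sum_le_sum fun i _ => (abs_le.1 (hb i)).2
      have h3 : ∑ i : Fin m, η / ((m : ℝ) + 1) ≤ η := by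
        simp only [Finset.sum_const, Finset.card_univ, Fintype.card_fin, nsmul_eq_mul]
        rw [mul_div_assoc', div_le_iff₀ (by positivity)]
        nlinarith
      linarith
  have key : ∀ θ ∈ cube, lik Q y (em q) * Real.exp ((∑ j, ω j ^ 2) / 2 - err) *
      Real.exp (-(1 / 2) * ∑ j, θ j ^ 2) ≤ lik Q y (em (q₀ + (s⁻¹ • V) *ᵥ θ)) := by
    intro θ hθ
    set τ := ω + θ with hτdef
    set t : Fin (k + 1) → ℝ := fun c => s⁻¹ * ∑ j, τ j * h j c with ht
    have hfac : ∀ c, (Q *ᵥ em (q₀ + (s⁻¹ • V) *ᵥ θ)) c = r c * (1 + t c) := by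
      intro c
      rw [hqv, Q_em_add, Matrix.mulVec_smul, Pi.smul_apply, smul_eq_mul, Matrix.mulVec_mulVec]
      have h1 : (Bt Q * V) *ᵥ τ = fun c => r c * ∑ j, τ j * h j c := by
        funext c
        simp only [mulVec, dotProduct, Finset.mul_sum]
        refine Finset.sum_congr rfl fun j _ => ?_
        have := (hrp c).ne'
        simp only [hh, hsc]
        rw [← hr]
        field_simp
      rw [h1, ht]; ring
    have htb : ∀ c, |t c| ≤ 2 * R * H / s := by
      intro c
      simp only [ht]
      rw [abs_mul, abs_of_pos (inv_pos.2 hs0), mul_comm, ← div_eq_mul_inv]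
      gcongr
      calc |∑ j, τ j * h j c| ≤ ∑ j, |τ j * h j c| := Finset.abs_sum_le_sum_abs _ _
        _ ≤ ∑ j, 2 * R * |h j c| := Finset.sum_le_sum fun j _ => by
            rw [abs_mul]; exact mul_le_mul_of_nonneg_right (hτ θ hθ j) (abs_nonneg _)
        _ = 2 * R * ∑ j, |h j c| := by rw [Finset.mul_sum]
        _ ≤ 2 * R * H := by
            refine mul_le_mul_of_nonneg_left (Finset.sum_le_sum fun j _ => ?_) (by positivity)
            exact Finset.single_le_sum (f := fun c => |h j c|) (fun c _ => abs_nonneg _)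
              (Finset.mem_univ c)
    have hpos1 : ∀ c, 0 < 1 + t c := fun c => by
      have := (abs_le.1 ((htb c).trans hn1)).1; linarith
    have hlik : lik Q y (em (q₀ + (s⁻¹ • V) *ᵥ θ)) = lik Q y (em q) * ∏ i, (1 + t (y i)) := by
      unfold lik
      rw [← Finset.prod_mul_distrib]
      exact Finset.prod_congr rfl fun i _ => hfac (y i)
    have hprod : ∏ i, (1 + t (y i)) = Real.exp (∑ i, Real.log (1 + t (y i))) := by
      rw [Real.exp_sum]
      exact Finset.prod_congr rfl fun i _ => (Real.exp_log (hpos1 _)).symm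
    rw [hlik, hprod, mul_assoc, ← Real.exp_add]
    refine mul_le_mul_of_nonneg_left (Real.exp_le_exp.2 ?_) hL.le
    have h1 : ∑ i, (t (y i) - t (y i) ^ 2 / 2 - 2 * |t (y i)| ^ 3) ≤
        ∑ i, Real.log (1 + t (y i)) :=
      Finset.sum_le_sum fun i _ => log_one_add_ge2 ((htb _).trans hn1)
    refine le_trans ?_ h1
    rw [Finset.sum_sub_distrib, Finset.sum_sub_distrib, ← Finset.sum_div]
    have h2 : ∑ i, t (y i) = ∑ j, τ j * ω j := by
      simp only [ht, hω, nm]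
      rw [← Finset.mul_sum, Finset.sum_comm, Finset.mul_sum]
      refine Finset.sum_congr rfl fun j _ => ?_
      rw [← Finset.mul_sum, div_eq_mul_inv]; ring
    have h3 : ∑ i, t (y i) ^ 2 = ∑ j, τ j ^ 2 + ∑ j, ∑ l, τ j * τ l * (D j l / s) := by
      have e1 : ∀ i, t (y i) ^ 2 = ∑ j, ∑ l, τ j * τ l * (h j (y i) * h l (y i)) / n := by
        intro i
        simp only [ht]
        rw [mul_pow, pow_two (∑ j, τ j * h j (y i)), Finset.sum_mul_sum, inv_pow, hs2,
          Finset.mul_sum]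
        refine Finset.sum_congr rfl fun j _ => ?_
        rw [Finset.mul_sum]
        exact Finset.sum_congr rfl fun l _ => by rw [div_eq_mul_inv]; ring
      have e2 : ∀ j l, D j l / s = (∑ i, h j (y i) * h l (y i)) / n - if j = l then 1 else 0 := by
        intro j l
        simp only [hD, nm]
        rw [div_div, ← hs, ← pow_two, hs2, Finset.sum_sub_distrib]
        simp only [Finset.sum_const, Finset.card_univ, Fintype.card_fin, nsmul_eq_mul]
        rw [sub_div, mul_div_cancel_left₀ _ hn0.ne']
      simp only [e1, e2, mul_sub, Finset.sum_sub_distrib]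
      have e3 : ∑ j, ∑ l, τ j * τ l * (if j = l then (1 : ℝ) else 0) = ∑ j, τ j ^ 2 := by
        refine Finset.sum_congr rfl fun j _ => ?_
        simp [pow_two]
      rw [e3, add_sub_cancel, Finset.sum_comm]
      refine Finset.sum_congr rfl fun j _ => ?_
      rw [Finset.sum_comm]
      refine Finset.sum_congr rfl fun l _ => ?_
      rw [← Finset.sum_div, ← Finset.mul_sum, mul_div_assoc]
    have h4 : ∑ j, ∑ l, τ j * τ l * (D j l / s) ≤ 4 * R ^ 2 * (∑ j, ∑ l, |D j l|) / s := by
      rw [mul_div_assoc, Finset.sum_div, Finset.mul_sum]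
      refine Finset.sum_le_sum fun j _ => ?_
      rw [Finset.sum_div, Finset.mul_sum]
      refine Finset.sum_le_sum fun l _ => ?_
      refine (le_abs_self _).trans ?_
      rw [abs_mul, abs_mul, abs_div, abs_of_pos hs0]
      refine mul_le_mul_of_nonneg_right ?_ (by positivity)
      calc |τ j| * |τ l| ≤ (2 * R) * (2 * R) :=
            mul_le_mul (hτ θ hθ j) (hτ θ hθ l) (abs_nonneg _) (by positivity)
        _ = 4 * R ^ 2 := by ring
    have h5 : ∑ i, 2 * |t (y i)| ^ 3 ≤ 2 * (2 * R * H) ^ 3 / s := by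
      calc ∑ i, 2 * |t (y i)| ^ 3 ≤ ∑ i : Fin n, 2 * (2 * R * H / s) ^ 3 :=
            Finset.sum_le_sum fun i _ => by
              have := pow_le_pow_left₀ (abs_nonneg _) (htb (y i)) 3
              linarith
        _ = 2 * (2 * R * H) ^ 3 / s := by
            simp only [Finset.sum_const, Finset.card_univ, Fintype.card_fin, nsmul_eq_mul]
            rw [← hs2]; field_simp
    have h6 : ∑ j, τ j * ω j - (∑ j, τ j ^ 2) / 2 = (∑ j, ω j ^ 2) / 2 - (∑ j, θ j ^ 2) / 2 := by
      rw [Finset.sum_div, Finset.sum_div, Finset.sum_div, ← Finset.sum_sub_distrib,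
        ← Finset.sum_sub_distrib]
      exact Finset.sum_congr rfl fun j _ => by rw [hτdef, Pi.add_apply]; ring
    rw [h2, h3, herr]
    have h7 : 4 * R ^ 2 * (∑ j, ∑ l, |D j l|) / s = 2 * (2 * R ^ 2 * (∑ j, ∑ l, |D j l|) / s) := by
      ring
    linarith
  have hdet : (s⁻¹ • V).det = (s⁻¹) ^ m * V.det := by simp
  have hint := integral_affine_le (s⁻¹ • V) (by rw [hdet]; positivity) q₀ hcm
    (g := fun q => lik Q y (em q)) hsub (continuous_lik y)
    (fun q hq => (lik_pos hQpos hQcol y hq).le)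
  have hint2 : lik Q y (em q) * Real.exp ((∑ j, ω j ^ 2) / 2 - err) * gR R ^ m ≤
      ∫ θ in cube, lik Q y (em (q₀ + (s⁻¹ • V) *ᵥ θ)) := by
    rw [← gR_cube, ← integral_const_mul]
    have hcc : IsCompact cube := isCompact_univ_pi fun _ => isCompact_Icc
    refine setIntegral_mono_on ?_ ?_ hcm key
    · exact (Continuous.continuousOn (by fun_prop)).integrableOn_compact hcc
    · refine (Continuous.continuousOn ?_).integrableOn_compact hcc
      refine (continuous_lik y).comp (continuous_const.add ?_)
      exact Continuous.matrix_mulVec continuous_const continuous_id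
  have hfin := (mul_le_mul_of_nonneg_left hint2 (abs_nonneg (s⁻¹ • V).det)).trans hint
  rw [hdet, abs_mul, abs_of_pos (by positivity : (0 : ℝ) < s⁻¹ ^ m)] at hfin
  have hVa : 0 < |V.det| := abs_pos.2 hVdet
  have hlog := Real.log_le_log (by positivity) hfin
  rw [Real.log_mul (by positivity) (by positivity), Real.log_mul (by positivity) (by positivity),
    Real.log_mul (by positivity) (by positivity), Real.log_mul hL.ne' (by positivity),
    Real.log_exp, Real.log_pow, Real.log_pow, Real.log_inv, hs, Real.log_sqrt hn0.le] at hlog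
  rw [LI]
  rw [herr] at hlog
  linarith

end laplace

section laplace2
variable {m k : ℕ} {Q : Matrix (Fin (k + 1)) (Fin (m + 1)) ℝ}

lemma zc_mean {r : Fin (k + 1) → ℝ} (hs : ∑ c, r c = 1) (c : Fin (k + 1)) :
    ∑ c', r c' * ((if c' = c then 1 else 0) - r c) = 0 := by
  simp only [mul_sub, Finset.sum_sub_distrib, ← Finset.sum_mul, hs]
  simp

lemma zc_abs {r : Fin (k + 1) → ℝ} (h0 : ∀ c, 0 ≤ r c) (h1 : ∀ c, r c ≤ 1) (c c' : Fin (k + 1)) :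
    |(if c' = c then (1 : ℝ) else 0) - r c| ≤ 1 := by
  have := h0 c; have := h1 c
  split_ifs <;> rw [abs_le] <;> constructor <;> linarith

/-- Bound below for the expected normalised log-likelihood integral, uniform over the whole
parameter domain, boundary included. -/
lemma laplace_unif (hQpos : ∀ y x, 0 < Q y x) (hQcol : ∀ x, ∑ y, Q y x = 1) :
    ∃ C : ℝ, ∀ n : ℕ, 1 ≤ n → ∀ q ∈ stdCorner m,
      - C ≤ Ew (fun _ : Fin n => Q *ᵥ em q) (LI Q q) := by
  obtain ⟨C, hC, h⟩ := laplace_crude (m := m) hQpos hQcol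
  refine ⟨C + (k + 1), fun n hn q hq => ?_⟩
  have h0 : ∀ c, 0 ≤ (Q *ᵥ em q) c := fun c => (Qp_pos hQpos hQcol (em_mem hq) c).le
  have hs : ∑ c, (Q *ᵥ em q) c = 1 := by
    rw [Qp_sum hQpos hQcol]; exact (em_mem hq).2
  have h1 : ∀ c, (Q *ᵥ em q) c ≤ 1 := fun c => by
    rw [← hs]; exact Finset.single_le_sum (fun c _ => h0 c) (Finset.mem_univ c)
  have hm := Ew_mono (ρ := fun _ : Fin n => Q *ᵥ em q) (fun _ => h0)
    (g := fun y => - C - ∑ c, |zc (Q *ᵥ em q) c y|) (h := LI Q q) (fun y => h n hn q hq y)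
  rw [Ew_sub, Ew_const (fun _ => hs), Ew_sum] at hm
  have h2 : ∑ c, Ew (fun _ : Fin n => Q *ᵥ em q) (fun y => |zc (Q *ᵥ em q) c y|) ≤
      ∑ c : Fin (k + 1), (1 : ℝ) := Finset.sum_le_sum fun c _ => by
    have := nm_abs_le (n := n) h0 hs _ (zc_mean hs c) hn (H := 1) (zc_abs h0 h1 c)
    simp only [zc]
    linarith
  simp only [Finset.sum_const, Finset.card_univ, Fintype.card_fin, nsmul_eq_mul, mul_one] at h2
  push_cast at h2
  linarith

set_option maxHeartbeats 1000000 in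
/-- Laplace lower bound in expectation at an interior parameter. On the event that the normalised
score is bounded by a large `R`, `laplace_good` applies; off this event `laplace_crude`
costs only `O(R⁻²)` in expectation, by a moment bound. -/
lemma laplace_lim (hQpos : ∀ y x, 0 < Q y x) (hQcol : ∀ x, ∑ y, Q y x = 1)
    (hrank : Q.rank = m + 1) {q : Fin m → ℝ} (hq : q ∈ stdCorner m)
    (hqpos : ∀ x, 0 < em q x) {ε : ℝ} (hε : 0 < ε) :
    ∀ᶠ n : ℕ in atTop, m / 2 * Real.log (2 * π) + m / 2 - Real.log (Jp Q (em q)).det / 2 - ε ≤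
      Ew (fun _ : Fin n => Q *ᵥ em q) (LI Q q) := by
  have h0 : ∀ c, 0 ≤ (Q *ᵥ em q) c := fun c => (Qp_pos hQpos hQcol (em_mem hq) c).le
  have hs : ∑ c, (Q *ᵥ em q) c = 1 := by
    rw [Qp_sum hQpos hQcol]; exact (em_mem hq).2
  have h1 : ∀ c, (Q *ᵥ em q) c ≤ 1 := fun c => by
    rw [← hs]; exact Finset.single_le_sum (fun c _ => h0 c) (Finset.mem_univ c)
  obtain ⟨A, hA, hAdet, hdetJ⟩ := exists_sqrt (Jp_posDef hQpos hQcol hrank (em_mem hq))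
  set V := A⁻¹ with hVdef
  have hAu : IsUnit A.det := isUnit_iff_ne_zero.2 hAdet
  have hV : Vᵀ * Jp Q (em q) * V = 1 := by
    rw [hA, hVdef, Matrix.transpose_nonsing_inv, ← Matrix.mul_assoc,
      Matrix.nonsing_inv_mul _ (by rwa [Matrix.det_transpose]), Matrix.one_mul,
      Matrix.mul_nonsing_inv _ hAu]
  have hVdet : V.det ≠ 0 := by
    rw [hVdef, Matrix.det_nonsing_inv, Ring.inverse_eq_inv']; exact inv_ne_zero hAdet
  have hlogV : Real.log |V.det| = - Real.log (Jp Q (em q)).det / 2 := by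
    rw [hdetJ, Real.log_pow, hVdef, Matrix.det_nonsing_inv, Ring.inverse_eq_inv', abs_inv,
      Real.log_inv]
    push_cast; ring
  obtain ⟨C0, hC0, hcr⟩ := laplace_crude (m := m) hQpos hQcol
  set h := hsc Q V q with hh
  have hmean : ∀ j, ∑ c, (Q *ᵥ em q) c * h j c = 0 := hsc_mean hQpos hQcol V hq
  have hcov := hsc_cov hQpos hQcol hq hV
  set H : ℝ := ∑ j, ∑ c, |h j c| with hH
  have hH0 : 0 ≤ H := by positivity
  have hhH : ∀ j c, |h j c| ≤ H := fun j c =>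
    (Finset.single_le_sum (f := fun c => |h j c|) (fun c _ => abs_nonneg _)
      (Finset.mem_univ c)).trans (Finset.single_le_sum (f := fun j => ∑ c, |h j c|)
      (fun j _ => Finset.sum_nonneg fun c _ => abs_nonneg _) (Finset.mem_univ j))
  set d : Fin m → Fin m → Fin (k + 1) → ℝ := fun j l c => h j c * h l c - if j = l then 1 else 0
    with hd
  have hdmean : ∀ j l, ∑ c, (Q *ᵥ em q) c * d j l c = 0 := by
    intro j l
    simp only [hd, mul_sub, Finset.sum_sub_distrib, ← Finset.sum_mul, hs]
    rw [hcov j l, one_mul, sub_self]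
  have hdH : ∀ j l c, |d j l c| ≤ H * H + 1 := by
    intro j l c
    simp only [hd]
    refine (abs_sub _ _).trans (add_le_add ?_ ?_)
    · rw [abs_mul]; exact mul_le_mul (hhH j c) (hhH l c) (abs_nonneg _) hH0
    · split_ifs <;> simp
  set Md : ℝ := (1 + (H * H + 1) ^ 2) / 2 with hMd
  set B : ℝ := C0 + (k + 1) + |Real.log (|V.det|)| + m * |Real.log √(2 * π)| + 1 with hB
  set K : ℝ := 3 * (1 + m * (m * (4 * H ^ 4)) + (k + 1) * ((k + 1) * 4)) with hK
  have hB0 : 0 ≤ B := by positivity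
  have hK0 : 0 ≤ K := by positivity
  have hs2p : 0 < √(2 * π) := by positivity
  -- choose the truncation radius first
  have hR : ∃ R : ℝ, 0 < R ∧ 0 < gR R ∧ m / 2 * Real.log (2 * π) - ε / 3 ≤ m * Real.log (gR R) ∧
      B * K / R ^ 2 ≤ ε / 3 := by
    have t1 : Tendsto (fun R => (m : ℝ) * Real.log (gR R)) atTop
        (nhds (m * Real.log √(2 * π))) :=
      (gR_tendsto.log hs2p.ne').const_mul _
    have t2 : Tendsto (fun R : ℝ => B * K / R ^ 2) atTop (nhds 0) :=
      tendsto_const_nhds.div_atTop (tendsto_pow_atTop (by norm_num))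
    rw [Real.log_sqrt (by positivity)] at t1
    have e1 := t1.eventually_const_le (show (m : ℝ) / 2 * Real.log (2 * π) - ε / 3
      < m * (Real.log (2 * π) / 2) by linarith)
    have e2 := t2.eventually_le_const (show (0 : ℝ) < ε / 3 by linarith)
    have e3 := gR_tendsto.eventually_const_lt hs2p
    obtain ⟨R, hR⟩ := (e1.and (e2.and (e3.and (eventually_gt_atTop 0)))).exists
    exact ⟨R, hR.2.2.2, hR.2.2.1, hR.1, hR.2.1⟩
  obtain ⟨R, hR0, hgR, hRlog, hRB⟩ := hR
  obtain ⟨C, hC⟩ := laplace_good hQpos hQcol hVdet hq hqpos hR0 hgR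
  have hsq : Tendsto (fun n : ℕ => √(n : ℝ)) atTop atTop :=
    Real.tendsto_sqrt_atTop.comp tendsto_natCast_atTop_atTop
  have hev : ∀ᶠ n : ℕ in atTop, (2 * R ^ 2 * (m * (m * Md)) + |C|) / √n ≤ ε / 3 := by
    have : Tendsto (fun n : ℕ => (2 * R ^ 2 * (m * (m * Md)) + |C|) / √(n : ℝ)) atTop (nhds 0) :=
      tendsto_const_nhds.div_atTop hsq
    exact this.eventually_le_const (by linarith)
  filter_upwards [hC, hev, eventually_ge_atTop 1] with n hCn hevn hn
  have hn0 : (0 : ℝ) < n := by exact_mod_cast hn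
  have hs0 : 0 < √(n : ℝ) := Real.sqrt_pos.2 hn0
  set E := Ew (fun _ : Fin n => Q *ᵥ em q) with hE
  set W : (Fin n → Fin (k + 1)) → ℝ :=
    fun y => 1 + ∑ j, nm (h j) y ^ 2 + ∑ c, zc (Q *ᵥ em q) c y ^ 2 with hW
  have hpt : ∀ y : Fin n → Fin (k + 1),
      Real.log |V.det| + m * Real.log (gR R) - |C| / √n + (∑ j, nm (h j) y ^ 2) / 2
        - 2 * R ^ 2 / √n * (∑ j, ∑ l, |nm (d j l) y|) - B / R ^ 2 * W y ^ 2 ≤ LI Q q y := by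
    intro y
    have hDn : 0 ≤ 2 * R ^ 2 / √n * (∑ j, ∑ l, |nm (d j l) y|) := by positivity
    have hWn : 0 ≤ B / R ^ 2 * W y ^ 2 := by positivity
    by_cases hy : ∀ j, |nm (h j) y| ≤ R
    · have h3 := hCn y hy
      have h4 : C / √n ≤ |C| / √n := by gcongr; exact le_abs_self C
      have h5 : 2 * R ^ 2 / √n * (∑ j, ∑ l, |nm (d j l) y|)
        = 2 * R ^ 2 * (∑ j, ∑ l, |nm (d j l) y|) / √n := by ring
      rw [h5]
      rw [h5] at hDn
      linarith
    · push Not at hy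
      obtain ⟨j, hj⟩ := hy
      have h3 := hcr n hn q hq y
      have hω : R ^ 2 ≤ ∑ j, nm (h j) y ^ 2 := by
        refine le_trans ?_ (Finset.single_le_sum (f := fun j => nm (h j) y ^ 2)
          (fun j _ => sq_nonneg _) (Finset.mem_univ j))
        rw [← sq_abs (nm (h j) y)]
        exact pow_le_pow_left₀ hR0.le hj.le 2
      have hz : ∑ c, |zc (Q *ᵥ em q) c y| ≤ (k + 1) + ∑ c, zc (Q *ᵥ em q) c y ^ 2 := by
        calc ∑ c, |zc (Q *ᵥ em q) c y| ≤ ∑ c, (1 + zc (Q *ᵥ em q) c y ^ 2) :=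
              Finset.sum_le_sum fun c _ => by
                nlinarith [sq_nonneg (|zc (Q *ᵥ em q) c y| - 1), sq_abs (zc (Q *ᵥ em q) c y)]
          _ = _ := by rw [Finset.sum_add_distrib]; simp
      have hz0 : 0 ≤ ∑ c, zc (Q *ᵥ em q) c y ^ 2 := by positivity
      have hWR : R ^ 2 ≤ W y := by simp only [hW]; linarith
      have hW1 : 1 ≤ W y := by have := sq_nonneg R; simp only [hW]; linarith
      have hWW : B * W y ≤ B / R ^ 2 * W y ^ 2 := by
        rw [div_mul_eq_mul_div, le_div_iff₀ (by positivity)]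
        rw [pow_two (W y), ← mul_assoc]
        exact mul_le_mul_of_nonneg_left hWR (by positivity)
      have hgl : (m : ℝ) * Real.log (gR R) ≤ m * |Real.log √(2 * π)| := by
        refine mul_le_mul_of_nonneg_left ?_ (Nat.cast_nonneg m)
        exact (Real.log_le_log hgR (gR_le R)).trans (le_abs_self _)
      have hlv := le_abs_self (Real.log |V.det|)
      have hCn' : 0 ≤ |C| / √n := by positivity
      have hBW : C0 + (k + 1) + |Real.log (|V.det|)| + m * |Real.log √(2 * π)| + W y ≤ B * W y := by
        have hB1 : 0 ≤ B - 1 := by rw [hB, add_sub_cancel_right]; positivity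
        have : 0 ≤ (B - 1) * (W y - 1) := mul_nonneg hB1 (by linarith)
        have e : (B - 1) * (W y - 1) = B * W y - W y - (C0 + (k + 1) + |Real.log (|V.det|)|
          + m * |Real.log √(2 * π)|) := by rw [hB]; ring
        linarith
      have hWe : W y = 1 + ∑ j, nm (h j) y ^ 2 + ∑ c, zc (Q *ᵥ em q) c y ^ 2 := rfl
      have hω0 : 0 ≤ ∑ j, nm (h j) y ^ 2 := by positivity
      rw [LI]
      linarith
  have hmono := Ew_mono (ρ := fun _ : Fin n => Q *ᵥ em q) (fun _ => h0) hpt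
  rw [Ew_sub, Ew_sub, Ew_add, Ew_const (fun _ => hs), Ew_div_const, Ew_const_mul, Ew_const_mul,
    Ew_sum, Ew_sum] at hmono
  have e1 : ∑ j, Ew (fun _ : Fin n => Q *ᵥ em q) (fun y => nm (h j) y ^ 2) = m := by
    have : ∀ j, Ew (fun _ : Fin n => Q *ᵥ em q) (fun y => nm (h j) y ^ 2) = 1 := fun j => by
      simp only [pow_two]
      rw [nm_cov hs _ _ (hmean j) (hmean j) hn, hcov j j, if_pos rfl]
    simp [this]
  have e2 : ∑ j, Ew (fun _ : Fin n => Q *ᵥ em q) (fun y => ∑ l, |nm (d j l) y|) ≤ m * (m * Md) := by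
    have : ∀ j, Ew (fun _ : Fin n => Q *ᵥ em q) (fun y => ∑ l, |nm (d j l) y|) ≤ m * Md := by
      intro j
      rw [Ew_sum]
      refine (Finset.sum_le_sum fun l _ => nm_abs_le h0 hs _ (hdmean j l) hn (hdH j l)).trans ?_
      simp [hMd]
    refine (Finset.sum_le_sum fun j _ => this j).trans ?_
    simp
  have e3 : Ew (fun _ : Fin n => Q *ᵥ em q) (fun y => W y ^ 2) ≤ K := by
    have hb : ∀ y, W y ^ 2 ≤ 3 * (1 + m * (∑ j, nm (h j) y ^ 4)
        + (k + 1) * ∑ c, zc (Q *ᵥ em q) c y ^ 4) := by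
      intro y
      have a1 := sq_sum_le_card_mul_sum_sq (s := Finset.univ) (f := fun j => nm (h j) y ^ 2)
      have a2 := sq_sum_le_card_mul_sum_sq (s := Finset.univ)
        (f := fun c => zc (Q *ᵥ em q) c y ^ 2)
      simp only [Finset.card_univ, Fintype.card_fin, ← pow_mul] at a1 a2
      push_cast at a2
      simp only [hW]
      nlinarith [sq_nonneg (1 - ∑ j, nm (h j) y ^ 2),
        sq_nonneg (1 - ∑ c, zc (Q *ᵥ em q) c y ^ 2),
        sq_nonneg (∑ j, nm (h j) y ^ 2 - ∑ c, zc (Q *ᵥ em q) c y ^ 2)]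
    refine (Ew_mono (fun _ => h0) hb).trans ?_
    rw [Ew_const_mul, Ew_add, Ew_add, Ew_const (fun _ => hs), Ew_const_mul, Ew_const_mul, Ew_sum,
      Ew_sum, hK]
    have b1 : ∑ j, Ew (fun _ : Fin n => Q *ᵥ em q) (fun y => nm (h j) y ^ 4) ≤ m * (4 * H ^ 4) := by
      refine (Finset.sum_le_sum fun j _ => nm_four_le h0 hs _ (hmean j) hn (hhH j)).trans ?_
      simp
    have b2 : ∑ c, Ew (fun _ : Fin n => Q *ᵥ em q) (fun y => zc (Q *ᵥ em q) c y ^ 4)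
        ≤ (k + 1) * 4 := by
      refine (Finset.sum_le_sum fun c _ =>
        nm_four_le h0 hs _ (zc_mean hs c) hn (zc_abs h0 h1 c)).trans ?_
      simp
    gcongr
  rw [e1] at hmono
  have e4 : 2 * R ^ 2 / √n * (∑ j, Ew (fun _ : Fin n => Q *ᵥ em q)
      (fun y => ∑ l, |nm (d j l) y|)) + |C| / √n ≤ ε / 3 := by
    refine le_trans ?_ hevn
    rw [add_div, mul_div_right_comm (2 * R ^ 2) _ √(n : ℝ)]
    gcongr
  have e5 : B / R ^ 2 * Ew (fun _ : Fin n => Q *ᵥ em q) (fun y => W y ^ 2) ≤ ε / 3 := by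
    refine le_trans ?_ hRB
    rw [mul_div_right_comm]
    gcongr
  rw [hlogV] at hmono
  have : E (LI Q q) = Ew (fun _ : Fin n => Q *ᵥ em q) (LI Q q) := rfl
  linarith

end laplace2

/-! ### Joint expectations over data and outputs -/

section E2
variable {m k n : ℕ}

/-- Expectation over pairs `(x, y)` of words: the letters of `x` are independent with law `p`, and
given `x` the letter `y i` has law `Q (·) (x i)`. -/
def E2 (Q : Matrix (Fin (k + 1)) (Fin (m + 1)) ℝ) (p : Fin (m + 1) → ℝ)
    (g : (Fin n → Fin (m + 1)) → (Fin n → Fin (k + 1)) → ℝ) : ℝ :=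
  Ew (fun _ => p) (fun x => Ew (fun i c => Q c (x i)) (g x))

/-- Joint law of one input letter and one output letter. -/
def pw (Q : Matrix (Fin (k + 1)) (Fin (m + 1)) ℝ) (p : Fin (m + 1) → ℝ)
    (c : Fin (m + 1) × Fin (k + 1)) : ℝ := p c.1 * Q c.2 c.1

variable {Q : Matrix (Fin (k + 1)) (Fin (m + 1)) ℝ} {p : Fin (m + 1) → ℝ}

lemma E2_sum_eq (Q : Matrix (Fin (k + 1)) (Fin (m + 1)) ℝ) (p : Fin (m + 1) → ℝ)
    (g : (Fin n → Fin (m + 1)) → (Fin n → Fin (k + 1)) → ℝ) :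
    E2 Q p g = ∑ x : Fin n → Fin (m + 1), ∑ y : Fin n → Fin (k + 1),
      (∏ i, p (x i) * Q (y i) (x i)) * g x y := by
  unfold E2 Ew
  refine Finset.sum_congr rfl fun x _ => ?_
  rw [Finset.mul_sum]
  refine Finset.sum_congr rfl fun y _ => ?_
  rw [Finset.prod_mul_distrib]; ring

lemma E2_pair (Q : Matrix (Fin (k + 1)) (Fin (m + 1)) ℝ) (p : Fin (m + 1) → ℝ)
    (g : (Fin n → Fin (m + 1)) → (Fin n → Fin (k + 1)) → ℝ) :
    E2 Q p g = Ew (fun _ : Fin n => pw Q p)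
      (fun z => g (fun i => (z i).1) (fun i => (z i).2)) := by
  rw [E2_sum_eq, ← Fintype.sum_prod_type', Ew]
  rw [← (Equiv.arrowProdEquivProdArrow (Fin n) (fun _ => Fin (m + 1))
    (fun _ => Fin (k + 1))).sum_comp]
  rfl

lemma E2_x (hQcol : ∀ x, ∑ y, Q y x = 1) (p : Fin (m + 1) → ℝ)
    (g : (Fin n → Fin (m + 1)) → ℝ) : E2 Q p (fun x _ => g x) = Ew (fun _ => p) g := by
  unfold E2
  congr 1; funext x
  exact Ew_const (fun i => hQcol (x i)) _

lemma E2_y (Q : Matrix (Fin (k + 1)) (Fin (m + 1)) ℝ) (p : Fin (m + 1) → ℝ)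
    (g : (Fin n → Fin (k + 1)) → ℝ) : E2 Q p (fun _ y => g y) = Ew (fun _ => Q *ᵥ p) g := by
  rw [E2_sum_eq, Finset.sum_comm, Ew]
  refine Finset.sum_congr rfl fun y _ => ?_
  rw [← Finset.sum_mul]
  congr 1
  simp only [mulVec, dotProduct]
  rw [Fintype.prod_sum]
  exact Finset.sum_congr rfl fun x _ => Finset.prod_congr rfl fun i _ => mul_comm _ _

lemma E2_add (g h : (Fin n → Fin (m + 1)) → (Fin n → Fin (k + 1)) → ℝ) :
    E2 Q p (fun x y => g x y + h x y) = E2 Q p g + E2 Q p h := by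
  simp only [E2_pair]; exact Ew_add _ _ _

lemma E2_sub (g h : (Fin n → Fin (m + 1)) → (Fin n → Fin (k + 1)) → ℝ) :
    E2 Q p (fun x y => g x y - h x y) = E2 Q p g - E2 Q p h := by
  simp only [E2_pair]; exact Ew_sub _ _ _

lemma E2_const_mul (r : ℝ) (g : (Fin n → Fin (m + 1)) → (Fin n → Fin (k + 1)) → ℝ) :
    E2 Q p (fun x y => r * g x y) = r * E2 Q p g := by
  simp only [E2_pair]; exact Ew_const_mul _ _ _

lemma E2_div_const (r : ℝ) (g : (Fin n → Fin (m + 1)) → (Fin n → Fin (k + 1)) → ℝ) :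
    E2 Q p (fun x y => g x y / r) = E2 Q p g / r := by
  simp only [E2_pair]; exact Ew_div_const _ _ _

lemma E2_sum {ι : Type*} (s : Finset ι)
    (g : ι → (Fin n → Fin (m + 1)) → (Fin n → Fin (k + 1)) → ℝ) :
    E2 Q p (fun x y => ∑ i ∈ s, g i x y) = ∑ i ∈ s, E2 Q p (g i) := by
  simp only [E2_pair]; exact Ew_sum _ _ _

lemma pw_nonneg (hQpos : ∀ y x, 0 < Q y x) (hp : p ∈ simplex (m + 1)) (c) : 0 ≤ pw Q p c :=
  mul_nonneg (hp.1 _) (hQpos _ _).le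

lemma pw_sum (hQcol : ∀ x, ∑ y, Q y x = 1) (hp : p ∈ simplex (m + 1)) : ∑ c, pw Q p c = 1 := by
  rw [Fintype.sum_prod_type]
  simp only [pw, ← Finset.mul_sum, hQcol, mul_one, hp.2]

lemma E2_const (hQcol : ∀ x, ∑ y, Q y x = 1) (hp : p ∈ simplex (m + 1)) (r : ℝ) :
    E2 (n := n) Q p (fun _ _ => r) = r := by
  rw [E2_x hQcol]; exact Ew_const (fun _ => hp.2) r

lemma E2_mono (hQpos : ∀ y x, 0 < Q y x) (hp : p ∈ simplex (m + 1))
    {g h : (Fin n → Fin (m + 1)) → (Fin n → Fin (k + 1)) → ℝ} (hgh : ∀ x y, g x y ≤ h x y) :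
    E2 Q p g ≤ E2 Q p h := by
  simp only [E2_pair]
  exact Ew_mono (fun _ => pw_nonneg hQpos hp) fun z => hgh _ _

lemma continuous_E2 (Q : Matrix (Fin (k + 1)) (Fin (m + 1)) ℝ)
    (g : (Fin n → Fin (m + 1)) → (Fin n → Fin (k + 1)) → ℝ) :
    Continuous fun p => E2 Q p g := by
  simp only [E2_sum_eq]
  fun_prop

end E2

/-! ### Approximation of continuous functions by quadratic bounds, and an estimator -/

lemma cont_quad {ι : Type*} [Fintype ι] {K : Set (ι → ℝ)} (hK : IsCompact K) {φ : (ι → ℝ) → ℝ}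
    (hφ : ContinuousOn φ K) {p : ι → ℝ} (hp : p ∈ K) {ε : ℝ} (hε : 0 < ε) :
    ∃ C : ℝ, 0 ≤ C ∧ ∀ p' ∈ K, |φ p' - φ p| ≤ ε + C * ∑ i, (p' i - p i) ^ 2 := by
  obtain ⟨M, hM⟩ := hK.exists_bound_of_continuousOn hφ
  obtain ⟨δ, hδ, h⟩ := Metric.continuousOn_iff.1 hφ p hp ε hε
  have hM0 : 0 ≤ M := (norm_nonneg _).trans (hM p hp)
  refine ⟨2 * M / δ ^ 2, by positivity, fun p' hp' => ?_⟩
  have hs : 0 ≤ ∑ i, (p' i - p i) ^ 2 := by positivity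
  by_cases hd : dist p' p < δ
  · have := (h p' hp' hd).le
    rw [Real.dist_eq] at this
    have : 0 ≤ 2 * M / δ ^ 2 * ∑ i, (p' i - p i) ^ 2 := by positivity
    linarith
  · have h1 : ∃ i, δ ≤ |p' i - p i| := by
      by_contra hc
      push Not at hc
      exact hd ((dist_pi_lt_iff hδ).2 fun i => by rw [Real.dist_eq]; exact hc i)
    obtain ⟨i, hi⟩ := h1
    have h2 : δ ^ 2 ≤ ∑ i, (p' i - p i) ^ 2 := by
      refine le_trans ?_ (Finset.single_le_sum (f := fun i => (p' i - p i) ^ 2)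
        (fun i _ => sq_nonneg _) (Finset.mem_univ i))
      rw [← sq_abs (p' i - p i)]
      exact pow_le_pow_left₀ hδ.le hi 2
    have h3 : 2 * M ≤ 2 * M / δ ^ 2 * ∑ i, (p' i - p i) ^ 2 := by
      rw [div_mul_eq_mul_div, le_div_iff₀ (by positivity)]
      exact mul_le_mul_of_nonneg_left h2 (by positivity)
    have h4 : |φ p' - φ p| ≤ 2 * M := by
      have a1 := hM p' hp'; have a2 := hM p hp
      rw [Real.norm_eq_abs] at a1 a2
      exact (abs_sub _ _).trans (by linarith)
    linarith

section est
variable {m k : ℕ} {Q : Matrix (Fin (k + 1)) (Fin (m + 1)) ℝ}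

lemma exists_leftInv (hrank : Q.rank = m + 1) :
    ∃ L : Matrix (Fin (m + 1)) (Fin (k + 1)) ℝ, L * Q = 1 := by
  have hli : LinearIndependent ℝ Q.col := by
    rw [linearIndependent_iff_card_eq_finrank_span, Set.finrank]
    rw [← Matrix.rank_eq_finrank_span_cols, hrank]; simp
  have hQi : Function.Injective Q.mulVec := Matrix.mulVec_injective_iff.2 hli
  have hpd : (Qᴴ * Q).PosDef := Matrix.PosDef.conjTranspose_mul_self Q hQi
  refine ⟨(Qᴴ * Q)⁻¹ * Qᴴ, ?_⟩
  rw [Matrix.mul_assoc, Matrix.nonsing_inv_mul _ (isUnit_iff_ne_zero.2 hpd.det_pos.ne')]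

/-- Linear estimate of the free coordinates of `p`, from a left inverse `L` of `Q`. -/
def qraw (L : Matrix (Fin (m + 1)) (Fin (k + 1)) ℝ) {n : ℕ} (y : Fin n → Fin (k + 1)) :
    Fin m → ℝ := fun i => (∑ j, L i.castSucc (y j)) / n

open Classical in
/-- The estimate `qraw`, replaced by a fixed point when it leaves the parameter domain. -/
def qhat (L : Matrix (Fin (m + 1)) (Fin (k + 1)) ℝ) {n : ℕ} (y : Fin n → Fin (k + 1)) :
    Fin m → ℝ := if qraw L y ∈ stdCorner m then qraw L y else 0

lemma qhat_mem (L : Matrix (Fin (m + 1)) (Fin (k + 1)) ℝ) {n : ℕ} (y : Fin n → Fin (k + 1)) :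
    qhat L y ∈ stdCorner m := by
  unfold qhat
  split_ifs with h
  · exact h
  · exact ⟨fun i => le_rfl, by simp⟩

/-- The centred one-letter contributions to `qraw`. -/
def lh (L : Matrix (Fin (m + 1)) (Fin (k + 1)) ℝ) (q : Fin m → ℝ) (i : Fin m)
    (c : Fin (k + 1)) : ℝ := L i.castSucc c - q i

lemma lh_mean {L : Matrix (Fin (m + 1)) (Fin (k + 1)) ℝ} (hL : L * Q = 1)
    (hQcol : ∀ x, ∑ y, Q y x = 1) (q : Fin m → ℝ) (i : Fin m) :
    ∑ c, (Q *ᵥ em q) c * lh L q i c = 0 := by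
  have h1 : ∑ c, (Q *ᵥ em q) c * L i.castSucc c = q i := by
    have : (L *ᵥ (Q *ᵥ em q)) i.castSucc = q i := by
      rw [Matrix.mulVec_mulVec, hL, Matrix.one_mulVec, em_castSucc]
    rw [← this]
    show _ = ∑ c, L i.castSucc c * (Q *ᵥ em q) c
    exact Finset.sum_congr rfl fun c _ => mul_comm _ _
  have h2 : ∑ c, (Q *ᵥ em q) c = 1 := by
    simp only [mulVec, dotProduct]
    rw [Finset.sum_comm]
    simp only [← Finset.sum_mul, hQcol, one_mul, em_sum]
  simp only [lh, mul_sub, Finset.sum_sub_distrib, h1, ← Finset.sum_mul, h2]; ring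

lemma lh_abs (L : Matrix (Fin (m + 1)) (Fin (k + 1)) ℝ) {q : Fin m → ℝ} (hq : q ∈ stdCorner m)
    (i : Fin m) (c : Fin (k + 1)) : |lh L q i c| ≤ (∑ i, ∑ c, |L i c|) + 1 := by
  refine (abs_sub _ _).trans (add_le_add ?_ ?_)
  · exact (Finset.single_le_sum (f := fun c => |L i.castSucc c|) (fun c _ => abs_nonneg _)
      (Finset.mem_univ c)).trans (Finset.single_le_sum (f := fun j => ∑ c, |L j c|)
      (fun j _ => Finset.sum_nonneg fun c _ => abs_nonneg _) (Finset.mem_univ i.castSucc))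
  · rw [abs_of_nonneg (hq.1 i)]
    exact (Finset.single_le_sum (f := fun i => q i) (fun i _ => hq.1 i)
      (Finset.mem_univ i)).trans hq.2

lemma qraw_sub (L : Matrix (Fin (m + 1)) (Fin (k + 1)) ℝ) {n : ℕ} (hn : 1 ≤ n)
    (y : Fin n → Fin (k + 1)) (q : Fin m → ℝ) (i : Fin m) :
    (qraw L y i - q i) ^ 2 = nm (lh L q i) y ^ 2 / n := by
  have hn0 : (0 : ℝ) < n := by exact_mod_cast hn
  have h1 : qraw L y i - q i = (∑ j, lh L q i (y j)) / n := by
    simp only [qraw, lh, Finset.sum_sub_distrib, Finset.sum_const, Finset.card_univ,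
      Fintype.card_fin, nsmul_eq_mul]
    field_simp
  rw [h1, nm, div_pow, div_pow, Real.sq_sqrt hn0.le, div_div, pow_two (n : ℝ)]

/-- A continuous function of the estimator is close to its value at the true interior parameter,
up to a quadratic form in the normalised sums, whose expectation is `O(1)`. -/
lemma est_approx (L : Matrix (Fin (m + 1)) (Fin (k + 1)) ℝ) {φ : (Fin m → ℝ) → ℝ}
    (hφ : ContinuousOn φ (stdCorner m)) {q : Fin m → ℝ} (hq : q ∈ stdCorner m)
    (hqpos : ∀ x, 0 < em q x) {ε : ℝ} (hε : 0 < ε) :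
    ∃ C : ℝ, 0 ≤ C ∧ ∀ n : ℕ, 1 ≤ n → ∀ y : Fin n → Fin (k + 1),
      |φ (qhat L y) - φ q| ≤ ε + C / n * ∑ i, nm (lh L q i) y ^ 2 := by
  -- first compare with the raw estimate, through the function that is `φ` on the domain and
  -- `φ 0` outside it; it is continuous at the interior point `q`
  obtain ⟨M, hM⟩ := (isCompact_stdCorner m).exists_bound_of_continuousOn hφ
  have hM0 : 0 ≤ M := (norm_nonneg _).trans (hM q hq)
  obtain ⟨C₁, hC₁, h₁⟩ := cont_quad (isCompact_stdCorner m) hφ hq hε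
  obtain ⟨x₀, hx₀⟩ := Finite.exists_min (em q)
  set δ := em q x₀ / (m + 1) with hδ
  have hδ0 : 0 < δ := div_pos (hqpos x₀) (by positivity)
  refine ⟨C₁ + 2 * M / δ ^ 2, by positivity, fun n hn y => ?_⟩
  have hn0 : (0 : ℝ) < n := by exact_mod_cast hn
  have hsum : (C₁ + 2 * M / δ ^ 2) / n * ∑ i, nm (lh L q i) y ^ 2
      = (C₁ + 2 * M / δ ^ 2) * ∑ i, (qraw L y i - q i) ^ 2 := by
    simp only [qraw_sub L hn]
    rw [← Finset.sum_div]; ring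
  rw [hsum, add_mul]
  have hS : 0 ≤ ∑ i, (qraw L y i - q i) ^ 2 := by positivity
  have hb1 : 0 ≤ C₁ * ∑ i, (qraw L y i - q i) ^ 2 := by positivity
  have hb2 : 0 ≤ 2 * M / δ ^ 2 * ∑ i, (qraw L y i - q i) ^ 2 := by positivity
  by_cases hr : qraw L y ∈ stdCorner m
  · have : qhat L y = qraw L y := by rw [qhat, if_pos hr]
    rw [this]
    have := h₁ _ hr
    linarith
  · have hex : ∃ i, δ < |qraw L y i - q i| := by
      by_contra hc
      push Not at hc
      refine hr ⟨fun i => ?_, ?_⟩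
      · have h1 := hx₀ i.castSucc
        rw [em_castSucc] at h1
        have h2 := (abs_le.1 (hc i)).1
        have h3 : δ ≤ em q x₀ := div_le_self (hqpos x₀).le
          (by linarith [(Nat.cast_nonneg m : (0:ℝ) ≤ m)])
        linarith
      · have h1 := hx₀ (Fin.last m)
        rw [em_last] at h1
        have h2 : ∑ i, (qraw L y i - q i) ≤ ∑ i : Fin m, δ :=
          Finset.sum_le_sum fun i _ => (abs_le.1 (hc i)).2
        have h3 : ∑ i : Fin m, δ ≤ em q x₀ := by
          simp only [Finset.sum_const, Finset.card_univ, Fintype.card_fin, nsmul_eq_mul]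
          rw [hδ, mul_div_assoc', div_le_iff₀ (by positivity)]
          nlinarith [hqpos x₀]
        rw [Finset.sum_sub_distrib] at h2
        linarith
    obtain ⟨i, hi⟩ := hex
    have h2 : δ ^ 2 ≤ ∑ i, (qraw L y i - q i) ^ 2 := by
      refine le_trans ?_ (Finset.single_le_sum (f := fun i => (qraw L y i - q i) ^ 2)
        (fun i _ => sq_nonneg _) (Finset.mem_univ i))
      rw [← sq_abs (qraw L y i - q i)]
      exact pow_le_pow_left₀ hδ0.le hi.le 2
    have h3 : 2 * M ≤ 2 * M / δ ^ 2 * ∑ i, (qraw L y i - q i) ^ 2 := by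
      rw [div_mul_eq_mul_div, le_div_iff₀ (by positivity)]
      exact mul_le_mul_of_nonneg_left h2 (by positivity)
    have h4 : |φ (qhat L y) - φ q| ≤ 2 * M := by
      have a1 := hM _ (qhat_mem L y); have a2 := hM q hq
      rw [Real.norm_eq_abs] at a1 a2
      exact (abs_sub _ _).trans (by linarith)
    linarith

/-- Expectations of continuous functions of the estimate converge. -/
lemma est_tendsto (hQpos : ∀ y x, 0 < Q y x) (hQcol : ∀ x, ∑ y, Q y x = 1)
    {L : Matrix (Fin (m + 1)) (Fin (k + 1)) ℝ} (hL : L * Q = 1) {φ : (Fin m → ℝ) → ℝ}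
    (hφ : ContinuousOn φ (stdCorner m)) {q : Fin m → ℝ} (hq : q ∈ stdCorner m)
    (hqpos : ∀ x, 0 < em q x) :
    Tendsto (fun n : ℕ => Ew (fun _ : Fin n => Q *ᵥ em q) (fun y => φ (qhat L y))) atTop
      (nhds (φ q)) := by
  have h0 : ∀ c, 0 ≤ (Q *ᵥ em q) c := fun c => (Qp_pos hQpos hQcol (em_mem hq) c).le
  have hs : ∑ c, (Q *ᵥ em q) c = 1 := by
    rw [Qp_sum hQpos hQcol]; exact (em_mem hq).2
  rw [Metric.tendsto_atTop]
  intro ε hε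
  obtain ⟨C, hC, h⟩ := est_approx L hφ hq hqpos (half_pos hε)
  set H := (∑ i, ∑ c, |L i c|) + 1 with hH
  have ht : Tendsto (fun n : ℕ => C * (m * H ^ 2) / (n : ℝ)) atTop (nhds 0) :=
    tendsto_const_nhds.div_atTop tendsto_natCast_atTop_atTop
  obtain ⟨N, hN⟩ := eventually_atTop.1 (ht.eventually_lt_const (half_pos hε))
  refine ⟨max N 1, fun n hn => ?_⟩
  have hn1 : 1 ≤ n := le_trans (le_max_right _ _) hn
  have hNn := hN n (le_trans (le_max_left _ _) hn)
  rw [Real.dist_eq]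
  have e : Ew (fun _ : Fin n => Q *ᵥ em q) (fun y => φ (qhat L y)) - φ q
      = Ew (fun _ : Fin n => Q *ᵥ em q) (fun y => φ (qhat L y) - φ q) := by
    rw [Ew_sub, Ew_const (fun _ => hs)]
  rw [e]
  refine (abs_Ew_le (fun _ => h0) _).trans_lt ?_
  refine (Ew_mono (fun _ => h0) (h n hn1)).trans_lt ?_
  rw [Ew_add, Ew_const (fun _ => hs), Ew_const_mul, Ew_sum]
  have h2 : ∑ i, Ew (fun _ : Fin n => Q *ᵥ em q) (fun y => nm (lh L q i) y ^ 2) ≤ m * H ^ 2 := by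
    refine (Finset.sum_le_sum fun i _ => nm_sq_le h0 hs _ (lh_mean hL hQcol q i) hn1
      (lh_abs L hq i)).trans ?_
    simp [hH]
  have h3 : C / n * ∑ i, Ew (fun _ : Fin n => Q *ᵥ em q) (fun y => nm (lh L q i) y ^ 2) ≤
      C * (m * H ^ 2) / n := by
    rw [div_mul_eq_mul_div]; gcongr
  linarith

lemma continuousOn_comp_em {φ : (Fin (m + 1) → ℝ) → ℝ} (hφ : ContinuousOn φ (simplex (m + 1))) :
    ContinuousOn (fun q => φ (em q)) (stdCorner m) :=
  hφ.comp continuous_em.continuousOn fun _ hq => em_mem hq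

end est

/-! ### Gaussian code for the frequencies given the output -/

section cont
variable {m k : ℕ} {Q : Matrix (Fin (k + 1)) (Fin (m + 1)) ℝ}

lemma continuous_matInv {X ι : Type*} [TopologicalSpace X] [Fintype ι] [DecidableEq ι]
    {A : X → Matrix ι ι ℝ} (hA : Continuous A) (hd : ∀ x, (A x).det ≠ 0) :
    Continuous fun x => (A x)⁻¹ := by
  simp only [Matrix.inv_def, Ring.inverse_eq_inv']
  exact (hA.matrix_det.inv₀ hd).smul hA.matrix_adjugate

lemma continuous_Gk : Continuous fun p => Gk Q p := by
  unfold Gk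
  exact continuous_finsetSum _ fun x _ => (continuous_apply x).smul continuous_const

lemma isCompact_simplex (a : ℕ) : IsCompact (simplex a) := by
  have : simplex a = stdSimplex ℝ (Fin a) := rfl
  rw [this]; exact isCompact_stdSimplex ℝ (Fin a)

/-- The regression matrix `K_p⁻¹ Bᵀ G_p⁻¹`. -/
def Rm (Q : Matrix (Fin (k + 1)) (Fin (m + 1)) ℝ) (p : Fin (m + 1) → ℝ) :
    Matrix (Fin m) (Fin k) ℝ := (Kp Q p)⁻¹ * (Bm Q)ᵀ * (Gk Q p)⁻¹

/-- The quadratic form of the normalised residual. -/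
def Ph (Q : Matrix (Fin (k + 1)) (Fin (m + 1)) ℝ) (p : Fin (m + 1) → ℝ) :
    Matrix (Fin k) (Fin k) ℝ := (Rm Q p)ᵀ * Kp Q p * Rm Q p

lemma cont_GkInv (hQpos : ∀ y x, 0 < Q y x) (hQcol : ∀ x, ∑ y, Q y x = 1) :
    Continuous fun p : simplex (m + 1) => (Gk Q p.1)⁻¹ :=
  continuous_matInv (continuous_Gk.comp continuous_subtype_val) fun p =>
    (Gk_posDef hQpos hQcol p.2.1 (exists_pos_of_simplex hQpos hQcol p.2)).det_pos.ne'

lemma cont_Kp (hQpos : ∀ y x, 0 < Q y x) (hQcol : ∀ x, ∑ y, Q y x = 1) :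
    Continuous fun p : simplex (m + 1) => Kp Q p.1 :=
  (continuous_const.matrix_mul (cont_GkInv hQpos hQcol)).matrix_mul continuous_const

lemma cont_Rm (hQpos : ∀ y x, 0 < Q y x) (hQcol : ∀ x, ∑ y, Q y x = 1)
    (hrank : Q.rank = m + 1) : Continuous fun p : simplex (m + 1) => Rm Q p.1 :=
  ((continuous_matInv (cont_Kp hQpos hQcol) fun p =>
    (Kp_posDef hQpos hQcol hrank p.2).det_pos.ne').matrix_mul continuous_const).matrix_mul
    (cont_GkInv hQpos hQcol)

lemma continuousOn_Ph (hQpos : ∀ y x, 0 < Q y x) (hQcol : ∀ x, ∑ y, Q y x = 1)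
    (hrank : Q.rank = m + 1) (j l : Fin k) :
    ContinuousOn (fun p => Ph Q p j l) (simplex (m + 1)) := by
  rw [continuousOn_iff_continuous_domRestrict]
  have := ((cont_Rm hQpos hQcol hrank).matrix_transpose.matrix_mul
    (cont_Kp hQpos hQcol)).matrix_mul (cont_Rm hQpos hQcol hrank)
  exact this.matrix_elem j l

lemma continuousOn_KpEntry (hQpos : ∀ y x, 0 < Q y x) (hQcol : ∀ x, ∑ y, Q y x = 1)
    (i j : Fin m) : ContinuousOn (fun p => Kp Q p i j) (simplex (m + 1)) := by
  rw [continuousOn_iff_continuous_domRestrict]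
  exact (cont_Kp hQpos hQcol).matrix_elem i j

lemma continuousOn_GkInvEntry (hQpos : ∀ y x, 0 < Q y x) (hQcol : ∀ x, ∑ y, Q y x = 1)
    (i j : Fin k) : ContinuousOn (fun p => (Gk Q p)⁻¹ i j) (simplex (m + 1)) := by
  rw [continuousOn_iff_continuous_domRestrict]
  exact (cont_GkInv hQpos hQcol).matrix_elem i j

lemma continuousOn_logdetKp (hQpos : ∀ y x, 0 < Q y x) (hQcol : ∀ x, ∑ y, Q y x = 1)
    (hrank : Q.rank = m + 1) :
    ContinuousOn (fun p => Real.log (Kp Q p).det) (simplex (m + 1)) := by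
  rw [continuousOn_iff_continuous_domRestrict]
  exact (cont_Kp hQpos hQcol).matrix_det.log fun p =>
    (Kp_posDef hQpos hQcol hrank p.2).det_pos.ne'

lemma continuousOn_logdetGk (hQpos : ∀ y x, 0 < Q y x) (hQcol : ∀ x, ∑ y, Q y x = 1) :
    ContinuousOn (fun p => Real.log (Gk Q p).det) (simplex (m + 1)) := by
  rw [continuousOn_iff_continuous_domRestrict]
  exact (continuous_Gk.comp continuous_subtype_val).matrix_det.log fun p =>
    (Gk_posDef hQpos hQcol p.2.1 (exists_pos_of_simplex hQpos hQcol p.2)).det_pos.ne'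

lemma Rm_mul_Bm (hQpos : ∀ y x, 0 < Q y x) (hQcol : ∀ x, ∑ y, Q y x = 1)
    (hrank : Q.rank = m + 1) {p : Fin (m + 1) → ℝ} (hp : p ∈ simplex (m + 1)) :
    Rm Q p * Bm Q = 1 := by
  have hK := (Kp_posDef hQpos hQcol hrank hp).det_pos.ne'
  rw [Rm, Matrix.mul_assoc, Matrix.mul_assoc, ← Matrix.mul_assoc (Bm Q)ᵀ]
  exact Matrix.nonsing_inv_mul _ (isUnit_iff_ne_zero.2 hK)

lemma Ph_trace (hQpos : ∀ y x, 0 < Q y x) (hQcol : ∀ x, ∑ y, Q y x = 1)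
    (hrank : Q.rank = m + 1) {p : Fin (m + 1) → ℝ} (hp : p ∈ simplex (m + 1)) :
    ∑ j, ∑ l, Ph Q p j l * Gk Q p j l = m := by
  have hKd := isUnit_iff_ne_zero.2 (Kp_posDef hQpos hQcol hrank hp).det_pos.ne'
  have hGp := Gk_posDef hQpos hQcol hp.1 (exists_pos_of_simplex hQpos hQcol hp)
  have hGd := isUnit_iff_ne_zero.2 hGp.det_pos.ne'
  have hGs : ∀ j l, Gk Q p j l = Gk Q p l j := fun j l => by
    have := hGp.1.apply j l
    simpa using this.symm
  have h1 : ∑ j, ∑ l, Ph Q p j l * Gk Q p j l = (Ph Q p * Gk Q p).trace := by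
    simp only [Matrix.trace, Matrix.diag_apply, Matrix.mul_apply]
    exact Finset.sum_congr rfl fun j _ => Finset.sum_congr rfl fun l _ => by rw [hGs]
  have h2 : Rm Q p * Gk Q p = (Kp Q p)⁻¹ * (Bm Q)ᵀ := by
    rw [Rm, Matrix.mul_assoc, Matrix.nonsing_inv_mul _ hGd, Matrix.mul_one]
  rw [h1, Ph, Matrix.mul_assoc, h2, Matrix.mul_assoc, ← Matrix.mul_assoc (Kp Q p),
    Matrix.mul_nonsing_inv _ hKd, Matrix.one_mul, ← Matrix.transpose_mul, Matrix.trace_transpose,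
    Matrix.trace_mul_comm, Rm_mul_Bm hQpos hQcol hrank hp]
  simp

end cont

section resid
variable {m k : ℕ} {Q : Matrix (Fin (k + 1)) (Fin (m + 1)) ℝ}

/-- One-letter residual `1_{y = j} - Q_{j|x}`. -/
def hx (Q : Matrix (Fin (k + 1)) (Fin (m + 1)) ℝ) (j : Fin k)
    (w : Fin (m + 1) × Fin (k + 1)) : ℝ :=
  (if w.2 = j.castSucc then 1 else 0) - Q j.castSucc w.1

lemma Q_le_one (hQpos : ∀ y x, 0 < Q y x) (hQcol : ∀ x, ∑ y, Q y x = 1) (y x) : Q y x ≤ 1 := by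
  rw [← hQcol x]
  exact Finset.single_le_sum (f := fun y => Q y x) (fun y _ => (hQpos y x).le) (Finset.mem_univ y)

lemma hx_abs (hQpos : ∀ y x, 0 < Q y x) (hQcol : ∀ x, ∑ y, Q y x = 1) (j : Fin k) (w) :
    |hx Q j w| ≤ 1 := by
  have := hQpos j.castSucc w.1; have := Q_le_one hQpos hQcol j.castSucc w.1
  unfold hx
  split_ifs <;> rw [abs_le] <;> constructor <;> linarith

lemma hx_cond_mean (hQcol : ∀ x, ∑ y, Q y x = 1) (j : Fin k) (α : Fin (m + 1)) :
    ∑ c, Q c α * hx Q j (α, c) = 0 := by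
  simp [hx, mul_sub, Finset.sum_sub_distrib, ← Finset.sum_mul, hQcol]

lemma hx_cond_cov (hQcol : ∀ x, ∑ y, Q y x = 1) (j l : Fin k) (α : Fin (m + 1)) :
    ∑ c, Q c α * (hx Q j (α, c) * hx Q l (α, c)) = covm (fun y => Q y α) j l := by
  have e : ∀ c, Q c α * (hx Q j (α, c) * hx Q l (α, c)) =
      Q c α * (if c = j.castSucc then (if c = l.castSucc then 1 else 0) else 0)
      - Q c α * (if c = j.castSucc then 1 else 0) * Q l.castSucc α
      - Q j.castSucc α * (Q c α * hx Q l (α, c)) := by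
    intro c
    simp only [hx]
    split_ifs <;> ring
  simp only [e, Finset.sum_sub_distrib, ← Finset.mul_sum, hx_cond_mean hQcol, ← Finset.sum_mul]
  simp only [mul_ite, mul_one, mul_zero, Finset.sum_ite_eq', Finset.mem_univ, if_true,
    covm, Matrix.sub_apply, vecMulVec_apply, Matrix.diagonal_apply, sub_zero]
  congr 1
  by_cases h : j = l
  · simp [h]
  · have : j.castSucc ≠ l.castSucc := fun h' => h (Fin.castSucc_injective _ h')
    simp [h, this]

lemma hx_mean (hQcol : ∀ x, ∑ y, Q y x = 1) (p : Fin (m + 1) → ℝ) (j : Fin k) :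
    ∑ w, pw Q p w * hx Q j w = 0 := by
  rw [Fintype.sum_prod_type]
  simp only [pw, mul_assoc, ← Finset.mul_sum, hx_cond_mean hQcol, mul_zero, Finset.sum_const_zero]

lemma hx_cov (hQcol : ∀ x, ∑ y, Q y x = 1) (p : Fin (m + 1) → ℝ) (j l : Fin k) :
    ∑ w, pw Q p w * (hx Q j w * hx Q l w) = Gk Q p j l := by
  rw [Fintype.sum_prod_type]
  simp only [pw, mul_assoc, ← Finset.mul_sum, hx_cond_cov hQcol]
  rw [Gk, Matrix.sum_apply]
  rfl

/-- The normalised residual of the output counts given the data. -/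
def xi (Q : Matrix (Fin (k + 1)) (Fin (m + 1)) ℝ) {n : ℕ} (x : Fin n → Fin (m + 1))
    (y : Fin n → Fin (k + 1)) (j : Fin k) : ℝ := nm (hx Q j) (fun i => (x i, y i))

/-- The counts of the first `m` input letters, as integers. -/
def Tv {m n : ℕ} (x : Fin n → Fin (m + 1)) (i : Fin m) : ℤ := cnt (fun α => α = i.castSucc) x

lemma sum_letters {α : Type*} [Fintype α] [DecidableEq α] {n : ℕ} (x : Fin n → α) (g : α → ℝ) :
    ∑ i, g (x i) = ∑ a, (cnt (fun a' => a' = a) x : ℝ) * g a := by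
  simp only [cnt_eq_sum, Finset.sum_mul]
  rw [Finset.sum_comm]
  refine Finset.sum_congr rfl fun i _ => ?_
  simp

lemma resid_eq {n : ℕ} (hn : 1 ≤ n) (x : Fin n → Fin (m + 1)) (y : Fin n → Fin (k + 1))
    (j : Fin k) :
    ((cnt (fun c => c = j.castSucc) y : ℝ) - n * Q j.castSucc (Fin.last m))
      = √n * xi Q x y j + (Bm Q *ᵥ fun i => (Tv x i : ℝ)) j := by
  have hn0 : (0 : ℝ) < n := by exact_mod_cast hn
  have h1 : √n * xi Q x y j = ∑ i, hx Q j (x i, y i) := by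
    rw [xi, nm, mul_div_cancel₀ _ (Real.sqrt_pos.2 hn0).ne']
  have h2 := sum_letters x (fun α => Q j.castSucc α)
  have h3 := sum_letters x (fun _ => (1 : ℝ))
  simp only [Finset.sum_const, Finset.card_univ, Fintype.card_fin, nsmul_eq_mul, mul_one] at h3
  rw [Fin.sum_univ_castSucc] at h2 h3
  rw [h1]
  simp only [hx, Finset.sum_sub_distrib, h2]
  have h4 : (Bm Q *ᵥ fun i => (Tv x i : ℝ)) j
      = ∑ i : Fin m, (cnt (fun a' => a' = i.castSucc) x : ℝ) * Q j.castSucc i.castSucc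
        - (∑ i : Fin m, (cnt (fun a' => a' = i.castSucc) x : ℝ)) * Q j.castSucc (Fin.last m) := by
    rw [Finset.sum_mul, ← Finset.sum_sub_distrib]
    simp only [mulVec, dotProduct, Bm, Matrix.of_apply, Tv]
    exact Finset.sum_congr rfl fun i _ => by push_cast; ring
  have h5 : (∑ i : Fin m, (cnt (fun a' => a' = i.castSucc) x : ℝ))
      = n - cnt (fun a' => a' = Fin.last m) x := by linarith
  rw [h4, h5, cnt_eq_sum (fun c => c = j.castSucc) y]
  ring

lemma exists_bound_simplex {m : ℕ} {φ : (Fin (m + 1) → ℝ) → ℝ}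
    (hφ : ContinuousOn φ (simplex (m + 1))) : ∃ C, 0 ≤ C ∧ ∀ p ∈ simplex (m + 1), |φ p| ≤ C := by
  obtain ⟨C, hC⟩ := (isCompact_simplex (m + 1)).exists_bound_of_continuousOn hφ
  exact ⟨|C|, abs_nonneg _, fun p hp => (hC p hp).trans (le_abs_self C)⟩

/-- For each output word, a sub-probability on the integer count vectors whose code lengths are a
Gaussian quadratic form in the normalised residual. -/
lemma code_exists (hQpos : ∀ y x, 0 < Q y x) (hQcol : ∀ x, ∑ y, Q y x = 1)
    (hrank : Q.rank = m + 1) (L : Matrix (Fin (m + 1)) (Fin (k + 1)) ℝ) :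
    ∃ C : ℝ, 0 ≤ C ∧ ∀ (n : ℕ) (y : Fin n → Fin (k + 1)), ∃ κ : (Fin m → ℤ) → ℝ,
      (∀ v, 0 < κ v) ∧ (1 ≤ n → (∀ s : Finset (Fin m → ℤ), ∑ v ∈ s, κ v ≤ 1) ∧
        ∀ x : Fin n → Fin (m + 1), - Real.log (κ (Tv x)) ≤ m / 2 * Real.log (2 * π)
          + m / 2 * Real.log n - Real.log (Kp Q (em (qhat L y))).det / 2
          + (∑ j, ∑ l, Ph Q (em (qhat L y)) j l * (xi Q x y j * xi Q x y l)) / 2 + C / n) := by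
  choose C hC0 hC using fun ij : Fin m × Fin m =>
    exists_bound_simplex (continuousOn_KpEntry (m := m) hQpos hQcol ij.1 ij.2)
  refine ⟨(∑ i, ∑ j, C (i, j)) / 8, div_nonneg (Finset.sum_nonneg fun i _ =>
    Finset.sum_nonneg fun j _ => hC0 _) (by norm_num), fun n y => ?_⟩
  rcases Nat.eq_zero_or_pos n with h0 | hn
  · exact ⟨fun _ => 1, fun _ => one_pos, fun h => by omega⟩
  have hn0 : (0 : ℝ) < n := by exact_mod_cast hn
  set p := em (qhat L y) with hp
  have hps : p ∈ simplex (m + 1) := em_mem (qhat_mem L y)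
  have hK := Kp_posDef hQpos hQcol hrank hps
  -- the centre is the weighted least-squares estimate of the counts from the output counts
  obtain ⟨κ, hκ0, hκ1, hκ⟩ := gaussCube (hK.smul (inv_pos.2 hn0))
    (Rm Q p *ᵥ fun j : Fin k =>
      (cnt (fun c => c = j.castSucc) y : ℝ) - n * Q j.castSucc (Fin.last m))
  refine ⟨κ, hκ0, fun _ => ⟨hκ1, fun x => (hκ (Tv x)).trans ?_⟩⟩
  have e1 : (fun j : Fin k => (cnt (fun c => c = j.castSucc) y : ℝ)
      - n * Q j.castSucc (Fin.last m)) = √n • xi Q x y + Bm Q *ᵥ fun i => (Tv x i : ℝ) := by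
    funext j
    rw [resid_eq hn x y j]; rfl
  have e2 : (fun i => (Tv x i : ℝ) - (Rm Q p *ᵥ fun j : Fin k =>
      (cnt (fun c => c = j.castSucc) y : ℝ) - n * Q j.castSucc (Fin.last m)) i)
      = - (√n • (Rm Q p *ᵥ xi Q x y)) := by
    rw [e1, Matrix.mulVec_add, Matrix.mulVec_smul, Matrix.mulVec_mulVec,
      Rm_mul_Bm hQpos hQcol hrank hps, Matrix.one_mulVec]
    funext i; simp
  have e3 : (- (√n • (Rm Q p *ᵥ xi Q x y))) ⬝ᵥ ((n : ℝ)⁻¹ • Kp Q p) *ᵥ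
      (- (√n • (Rm Q p *ᵥ xi Q x y)))
      = ∑ j, ∑ l, Ph Q p j l * (xi Q x y j * xi Q x y l) := by
    have h1 : xi Q x y ⬝ᵥ Ph Q p *ᵥ xi Q x y
        = ∑ j, ∑ l, Ph Q p j l * (xi Q x y j * xi Q x y l) := by
      simp only [dotProduct, mulVec, Finset.mul_sum]
      exact Finset.sum_congr rfl fun j _ => Finset.sum_congr rfl fun l _ => by ring
    rw [← h1, Matrix.mulVec_neg, neg_dotProduct_neg, Matrix.mulVec_smul, Matrix.smul_mulVec,
      dotProduct_smul, smul_dotProduct, dotProduct_smul, Ph, ← Matrix.mulVec_mulVec,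
      ← Matrix.mulVec_mulVec, Matrix.dotProduct_mulVec (xi Q x y), Matrix.vecMul_transpose]
    simp only [smul_eq_mul]
    have : √(n : ℝ) * √n = n := Real.mul_self_sqrt hn0.le
    generalize (Rm Q p *ᵥ xi Q x y) ⬝ᵥ Kp Q p *ᵥ Rm Q p *ᵥ xi Q x y = X
    trans (√(n : ℝ) * √n) * (n : ℝ)⁻¹ * X
    · ring
    · rw [this, mul_inv_cancel₀ hn0.ne', one_mul]
  have e4 : Real.log ((n : ℝ)⁻¹ • Kp Q p).det = - (m * Real.log n) + Real.log (Kp Q p).det := by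
    rw [Matrix.det_smul, Fintype.card_fin, Real.log_mul (by positivity) hK.det_pos.ne',
      Real.log_pow, Real.log_inv]; ring
  have e5 : ∑ i, ∑ j, |((n : ℝ)⁻¹ • Kp Q p) i j| ≤ (∑ i, ∑ j, C (i, j)) / n := by
    rw [Finset.sum_div]
    refine Finset.sum_le_sum fun i _ => ?_
    rw [Finset.sum_div]
    refine Finset.sum_le_sum fun j _ => ?_
    rw [Matrix.smul_apply, smul_eq_mul, abs_mul, abs_of_pos (inv_pos.2 hn0), mul_comm,
      ← div_eq_mul_inv]
    exact div_le_div_of_nonneg_right (hC (i, j) p hps) hn0.le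
  rw [e2, e3, e4, Fintype.card_fin]
  have e6 : (∑ i, ∑ j, C (i, j)) / 8 / n = (∑ i, ∑ j, C (i, j)) / n / 8 := by ring
  rw [e6]
  linarith

end resid

/-! ### Expected code length of the counts given the output -/

section codelen
variable {m k : ℕ} {Q : Matrix (Fin (k + 1)) (Fin (m + 1)) ℝ}

lemma xi_cov (hQcol : ∀ x, ∑ y, Q y x = 1) {p : Fin (m + 1) → ℝ} (hp : p ∈ simplex (m + 1))
    {n : ℕ} (hn : 1 ≤ n) (j l : Fin k) :
    E2 (n := n) Q p (fun x y => xi Q x y j * xi Q x y l) = Gk Q p j l := by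
  rw [E2_pair]
  exact (nm_cov (pw_sum hQcol hp) (hx Q j) (hx Q l) (hx_mean hQcol p j) (hx_mean hQcol p l) hn).trans
    (hx_cov hQcol p j l)

lemma xi_sq_le (hQpos : ∀ y x, 0 < Q y x) (hQcol : ∀ x, ∑ y, Q y x = 1) {p : Fin (m + 1) → ℝ}
    (hp : p ∈ simplex (m + 1)) {n : ℕ} (hn : 1 ≤ n) (j : Fin k) :
    E2 (n := n) Q p (fun x y => xi Q x y j ^ 2) ≤ 1 := by
  rw [E2_pair]
  have := nm_sq_le (n := n) (pw_nonneg hQpos hp) (pw_sum hQcol hp) (hx Q j) (hx_mean hQcol p j) hn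
    (H := 1) (fun c => hx_abs hQpos hQcol j c)
  refine le_of_eq_of_le ?_ (this.trans (by norm_num))
  rfl

lemma xi_four_le (hQpos : ∀ y x, 0 < Q y x) (hQcol : ∀ x, ∑ y, Q y x = 1) {p : Fin (m + 1) → ℝ}
    (hp : p ∈ simplex (m + 1)) {n : ℕ} (hn : 1 ≤ n) (j : Fin k) :
    E2 (n := n) Q p (fun x y => xi Q x y j ^ 4) ≤ 4 := by
  rw [E2_pair]
  have := nm_four_le (n := n) (pw_nonneg hQpos hp) (pw_sum hQcol hp) (hx Q j)
    (hx_mean hQcol p j) hn (H := 1) (fun c => hx_abs hQpos hQcol j c)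
  refine le_of_eq_of_le ?_ (this.trans (by norm_num))
  rfl

lemma xi_abs_le (hQpos : ∀ y x, 0 < Q y x) (hQcol : ∀ x, ∑ y, Q y x = 1) {p : Fin (m + 1) → ℝ}
    (hp : p ∈ simplex (m + 1)) {n : ℕ} (hn : 1 ≤ n) (j l : Fin k) :
    E2 (n := n) Q p (fun x y => |xi Q x y j * xi Q x y l|) ≤ 1 := by
  have h : E2 (n := n) Q p (fun x y => |xi Q x y j * xi Q x y l|)
      ≤ E2 (n := n) Q p (fun x y => (xi Q x y j ^ 2 + xi Q x y l ^ 2) / 2) := by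
    refine E2_mono hQpos hp fun x y => ?_
    rw [abs_mul]
    nlinarith [sq_nonneg (|xi Q x y j| - |xi Q x y l|), sq_abs (xi Q x y j), sq_abs (xi Q x y l)]
  rw [E2_div_const, E2_add] at h
  linarith [xi_sq_le hQpos hQcol hp hn j, xi_sq_le hQpos hQcol hp hn l]

lemma xi_weighted_le (hQpos : ∀ y x, 0 < Q y x) (hQcol : ∀ x, ∑ y, Q y x = 1)
    {L : Matrix (Fin (m + 1)) (Fin (k + 1)) ℝ} (hL : L * Q = 1) :
    ∃ C : ℝ, 0 ≤ C ∧ ∀ q ∈ stdCorner m, ∀ n : ℕ, 1 ≤ n → ∀ (j l : Fin k) (i : Fin m),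
      E2 (n := n) Q (em q) (fun x y => nm (lh L q i) y ^ 2 * |xi Q x y j * xi Q x y l|) ≤ C := by
  set H := (∑ i, ∑ c, |L i c|) + 1 with hH
  refine ⟨2 * H ^ 4 + 2, by positivity, fun q hq n hn j l i => ?_⟩
  have hp := em_mem hq
  have h : E2 (n := n) Q (em q) (fun x y => nm (lh L q i) y ^ 2 * |xi Q x y j * xi Q x y l|)
      ≤ E2 (n := n) Q (em q) (fun x y => nm (lh L q i) y ^ 4 / 2
          + (xi Q x y j ^ 4 / 4 + xi Q x y l ^ 4 / 4)) := by
    refine E2_mono hQpos hp fun x y => ?_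
    have h1 : (|xi Q x y j * xi Q x y l|) ^ 2 ≤ (xi Q x y j ^ 4 + xi Q x y l ^ 4) / 2 := by
      rw [sq_abs]
      nlinarith [sq_nonneg (xi Q x y j ^ 2 - xi Q x y l ^ 2)]
    nlinarith [sq_nonneg (nm (lh L q i) y ^ 2 - |xi Q x y j * xi Q x y l|)]
  rw [E2_add, E2_add, E2_div_const, E2_div_const, E2_div_const,
    E2_y Q (em q) (fun y => nm (lh L q i) y ^ 4)] at h
  have h2 := nm_four_le (n := n) (fun c => (Qp_pos hQpos hQcol hp c).le)
    ((Qp_sum hQpos hQcol (em q)).trans hp.2) (lh L q i) (lh_mean hL hQcol q i) hn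
    (fun c => lh_abs L hq i c)
  linarith [xi_four_le hQpos hQcol hp hn j, xi_four_le hQpos hQcol hp hn l]

/-- The quadratic form with plugged-in coefficients has the expectation of the true one, up to a
vanishing error. -/
lemma quad_lim (hQpos : ∀ y x, 0 < Q y x) (hQcol : ∀ x, ∑ y, Q y x = 1)
    (hrank : Q.rank = m + 1) {L : Matrix (Fin (m + 1)) (Fin (k + 1)) ℝ} (hL : L * Q = 1)
    {q : Fin m → ℝ} (hq : q ∈ stdCorner m) (hqpos : ∀ x, 0 < em q x) {ε : ℝ} (hε : 0 < ε) :
    ∃ C : ℝ, ∀ n : ℕ, 1 ≤ n → E2 (n := n) Q (em q) (fun x y =>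
      ∑ j, ∑ l, Ph Q (em (qhat L y)) j l * (xi Q x y j * xi Q x y l)) ≤ m + ε + C / n := by
  have hp := em_mem hq
  obtain ⟨W, hW0, hW⟩ := xi_weighted_le hQpos hQcol hL
  set ε' := ε / (k * k + 1 : ℝ) with hε'
  have hε'0 : 0 < ε' := by positivity
  choose C hC0 hC using fun jl : Fin k × Fin k => est_approx L
    (continuousOn_comp_em (continuousOn_Ph hQpos hQcol hrank jl.1 jl.2)) hq hqpos hε'0
  refine ⟨∑ j, ∑ l, C (j, l) * (m * W), fun n hn => ?_⟩
  have hn0 : (0 : ℝ) < n := by exact_mod_cast hn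
  have key : ∀ j l, E2 (n := n) Q (em q) (fun x y =>
      Ph Q (em (qhat L y)) j l * (xi Q x y j * xi Q x y l))
      ≤ Ph Q (em q) j l * Gk Q (em q) j l + ε' + C (j, l) * (m * W) / n := by
    intro j l
    have h1 : E2 (n := n) Q (em q) (fun x y =>
        Ph Q (em (qhat L y)) j l * (xi Q x y j * xi Q x y l))
        ≤ E2 (n := n) Q (em q) (fun x y => Ph Q (em q) j l * (xi Q x y j * xi Q x y l)
          + (ε' * |xi Q x y j * xi Q x y l|
            + C (j, l) / n * ∑ i, nm (lh L q i) y ^ 2 * |xi Q x y j * xi Q x y l|)) := by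
      refine E2_mono hQpos hp fun x y => ?_
      have h2 := hC (j, l) n hn y
      have h3 : (Ph Q (em (qhat L y)) j l - Ph Q (em q) j l) * (xi Q x y j * xi Q x y l)
          ≤ |Ph Q (em (qhat L y)) j l - Ph Q (em q) j l| * |xi Q x y j * xi Q x y l| := by
        rw [← abs_mul]; exact le_abs_self _
      have h4 := mul_le_mul_of_nonneg_right h2 (abs_nonneg (xi Q x y j * xi Q x y l))
      have h5 : (ε' + C (j, l) / n * ∑ i, nm (lh L q i) y ^ 2) * |xi Q x y j * xi Q x y l|
          = ε' * |xi Q x y j * xi Q x y l|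
            + C (j, l) / n * ∑ i, nm (lh L q i) y ^ 2 * |xi Q x y j * xi Q x y l| := by
        rw [← Finset.sum_mul]; ring
      simp only at h4
      linarith
    rw [E2_add, E2_add, E2_const_mul, E2_const_mul, E2_const_mul, E2_sum, xi_cov hQcol hp hn] at h1
    have h5 : ∑ i : Fin m, E2 (n := n) Q (em q)
        (fun x y => nm (lh L q i) y ^ 2 * |xi Q x y j * xi Q x y l|) ≤ m * W := by
      refine (Finset.sum_le_sum fun i _ => hW q hq n hn j l i).trans ?_
      simp
    have h6 := mul_le_mul_of_nonneg_left h5 (div_nonneg (hC0 (j, l)) hn0.le)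
    have h7 := mul_le_mul_of_nonneg_left (xi_abs_le hQpos hQcol hp hn j l) hε'0.le
    have h8 : C (j, l) / n * (m * W) = C (j, l) * (m * W) / n := by ring
    linarith
  have hsum : E2 (n := n) Q (em q) (fun x y =>
      ∑ j, ∑ l, Ph Q (em (qhat L y)) j l * (xi Q x y j * xi Q x y l))
      ≤ ∑ j, ∑ l, (Ph Q (em q) j l * Gk Q (em q) j l + ε' + C (j, l) * (m * W) / n) := by
    rw [E2_sum]
    refine Finset.sum_le_sum fun j _ => ?_
    rw [E2_sum]
    exact Finset.sum_le_sum fun l _ => key j l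
  refine hsum.trans ?_
  simp only [Finset.sum_add_distrib, Ph_trace hQpos hQcol hrank hp, Finset.sum_const,
    Finset.card_univ, Fintype.card_fin, nsmul_eq_mul, ← Finset.sum_div]
  have : (k : ℝ) * (k * ε') ≤ ε := by
    rw [hε', ← mul_assoc, ← mul_div_assoc, div_le_iff₀ (by positivity)]
    nlinarith
  linarith

lemma quad_unif (hQpos : ∀ y x, 0 < Q y x) (hQcol : ∀ x, ∑ y, Q y x = 1)
    (hrank : Q.rank = m + 1) (L : Matrix (Fin (m + 1)) (Fin (k + 1)) ℝ) :
    ∃ C : ℝ, ∀ n : ℕ, 1 ≤ n → ∀ q ∈ stdCorner m, E2 (n := n) Q (em q) (fun x y =>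
      ∑ j, ∑ l, Ph Q (em (qhat L y)) j l * (xi Q x y j * xi Q x y l)) ≤ C := by
  choose C hC0 hC using fun jl : Fin k × Fin k =>
    exists_bound_simplex (continuousOn_Ph hQpos hQcol hrank jl.1 jl.2)
  refine ⟨∑ j, ∑ l, C (j, l), fun n hn q hq => ?_⟩
  have hp := em_mem hq
  rw [E2_sum]
  refine Finset.sum_le_sum fun j _ => ?_
  rw [E2_sum]
  refine Finset.sum_le_sum fun l _ => ?_
  have h1 : E2 (n := n) Q (em q) (fun x y =>
      Ph Q (em (qhat L y)) j l * (xi Q x y j * xi Q x y l))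
      ≤ E2 (n := n) Q (em q) (fun x y => C (j, l) * |xi Q x y j * xi Q x y l|) := by
    refine E2_mono hQpos hp fun x y => ?_
    refine (le_abs_self _).trans ?_
    rw [abs_mul]
    exact mul_le_mul_of_nonneg_right (hC (j, l) _ (em_mem (qhat_mem L y))) (abs_nonneg _)
  rw [E2_const_mul] at h1
  have := mul_le_mul_of_nonneg_left (xi_abs_le hQpos hQcol hp hn j l) (hC0 (j, l))
  linarith

/-- Codes for the counts given the output whose expected length is asymptotically that of the
Gaussian with precision matrix `n⁻¹ K_p`. -/
lemma UB_main (hQpos : ∀ y x, 0 < Q y x) (hQcol : ∀ x, ∑ y, Q y x = 1)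
    (hrank : Q.rank = m + 1) :
    ∃ κ : (n : ℕ) → (Fin n → Fin (k + 1)) → (Fin m → ℤ) → ℝ,
      (∀ n y v, 0 < κ n y v) ∧
      (∀ n, 1 ≤ n → ∀ y, ∀ s : Finset (Fin m → ℤ), ∑ v ∈ s, κ n y v ≤ 1) ∧
      (∃ C, ∀ n : ℕ, 1 ≤ n → ∀ q ∈ stdCorner m,
        E2 (n := n) Q (em q) (fun x y => - Real.log (κ n y (Tv x))) - m / 2 * Real.log n ≤ C) ∧
      (∀ q ∈ stdCorner m, (∀ x, 0 < em q x) → ∀ ε > 0, ∀ᶠ n : ℕ in atTop,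
        E2 (n := n) Q (em q) (fun x y => - Real.log (κ n y (Tv x))) - m / 2 * Real.log n
          ≤ m / 2 * Real.log (2 * π) + m / 2 - Real.log (Kp Q (em q)).det / 2 + ε) := by
  obtain ⟨L, hL⟩ := exists_leftInv hrank
  obtain ⟨C₀, hC₀, hκ⟩ := code_exists hQpos hQcol hrank L
  choose κ hκ0 hκ1 using hκ
  have main : ∀ n : ℕ, 1 ≤ n → ∀ q ∈ stdCorner m,
      E2 (n := n) Q (em q) (fun x y => - Real.log (κ n y (Tv x))) - m / 2 * Real.log n
      ≤ m / 2 * Real.log (2 * π)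
        - Ew (fun _ : Fin n => Q *ᵥ em q) (fun y => Real.log (Kp Q (em (qhat L y))).det) / 2
        + E2 (n := n) Q (em q) (fun x y =>
          ∑ j, ∑ l, Ph Q (em (qhat L y)) j l * (xi Q x y j * xi Q x y l)) / 2 + C₀ / n := by
    intro n hn q hq
    have hp := em_mem hq
    have h1 := E2_mono (n := n) hQpos hp (fun x y => (hκ1 n y hn).2 x)
    rw [E2_add, E2_add, E2_sub, E2_div_const, E2_div_const, E2_const hQcol hp, E2_const hQcol hp,
      E2_y Q (em q) (fun y => Real.log (Kp Q (em (qhat L y))).det)] at h1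
    linarith
  refine ⟨κ, hκ0, fun n hn y => (hκ1 n y hn).1, ?_, ?_⟩
  · obtain ⟨C₁, hC₁⟩ := quad_unif hQpos hQcol hrank L
    obtain ⟨C₂, hC₂0, hC₂⟩ := exists_bound_simplex (continuousOn_logdetKp hQpos hQcol hrank)
    refine ⟨m / 2 * Real.log (2 * π) + C₂ / 2 + C₁ / 2 + C₀, fun n hn q hq => ?_⟩
    refine (main n hn q hq).trans ?_
    have hp := em_mem hq
    have h1 : -C₂ ≤ Ew (fun _ : Fin n => Q *ᵥ em q)
        (fun y => Real.log (Kp Q (em (qhat L y))).det) := by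
      rw [← Ew_const (ρ := fun _ : Fin n => Q *ᵥ em q)
        (fun _ => (Qp_sum hQpos hQcol (em q)).trans hp.2) (-C₂)]
      exact Ew_mono (fun _ c => (Qp_pos hQpos hQcol hp c).le)
        fun y => (abs_le.1 (hC₂ _ (em_mem (qhat_mem L y)))).1
    have h2 : C₀ / n ≤ C₀ := div_le_self hC₀ (by exact_mod_cast hn)
    linarith [hC₁ n hn q hq]
  · intro q hq hqpos ε hε
    obtain ⟨C₁, hC₁⟩ := quad_lim hQpos hQcol hrank hL hq hqpos (half_pos hε)
    have ht := est_tendsto hQpos hQcol hL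
      (continuousOn_comp_em (continuousOn_logdetKp hQpos hQcol hrank)) hq hqpos
    have ht1 : ∀ᶠ n : ℕ in atTop, Real.log (Kp Q (em q)).det - ε / 2 <
        Ew (fun _ : Fin n => Q *ᵥ em q) (fun y => Real.log (Kp Q (em (qhat L y))).det) :=
      ht.eventually (lt_mem_nhds (by linarith))
    have ht2 : ∀ᶠ n : ℕ in atTop, (C₁ / 2 + C₀) / (n : ℝ) < ε / 4 :=
      (tendsto_const_div_atTop_nhds_zero_nat (C₁ / 2 + C₀)).eventually
        (gt_mem_nhds (by linarith))
    filter_upwards [ht1, ht2, eventually_ge_atTop 1] with n h1 h2 hn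
    refine (main n hn q hq).trans ?_
    have h3 := hC₁ n hn
    have h4 : (C₁ / 2 + C₀) / (n : ℝ) = C₁ / n / 2 + C₀ / n := by ring
    linarith

end codelen

/-! ### A block precision matrix -/

section block
variable {m k : ℕ}

/-- The vertical concatenation of `m` identity matrices. -/
def Uk (m k : ℕ) : Matrix (Fin k × Fin m) (Fin k) ℝ :=
  Matrix.of fun c j => if c.1 = j then 1 else 0

/-- The matrix of the form `∑ x, ζ_xᵀ B_x ζ_x` on families of vectors with `∑ x, ζ_x = 0`, in the
coordinates of the first `m` vectors. -/
def Kq (B : Fin (m + 1) → Matrix (Fin k) (Fin k) ℝ) : Matrix (Fin k × Fin m) (Fin k × Fin m) ℝ :=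
  blockDiagonal (fun i : Fin m => B i.castSucc) + Uk m k * (B (Fin.last m) * (Uk m k)ᵀ)

lemma Kq_apply (B : Fin (m + 1) → Matrix (Fin k) (Fin k) ℝ) (c d : Fin k × Fin m) :
    Kq B c d = (if c.2 = d.2 then B c.2.castSucc c.1 d.1 else 0) + B (Fin.last m) c.1 d.1 := by
  obtain ⟨j, i⟩ := c
  obtain ⟨l, i'⟩ := d
  rw [Kq, Matrix.add_apply, blockDiagonal_apply]
  congr 1
  simp [Uk, Matrix.mul_apply]

lemma Kq_quad (B : Fin (m + 1) → Matrix (Fin k) (Fin k) ℝ) (z : Fin k × Fin m → ℝ) :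
    z ⬝ᵥ Kq B *ᵥ z = ∑ i : Fin m, (fun j => z (j, i)) ⬝ᵥ B i.castSucc *ᵥ (fun j => z (j, i))
      + (fun j => ∑ i, z (j, i)) ⬝ᵥ B (Fin.last m) *ᵥ (fun j => ∑ i, z (j, i)) := by
  simp only [quad_expand, Kq_apply, add_mul, Finset.sum_add_distrib]
  congr 1
  · simp only [Fintype.sum_prod_type, ite_mul, zero_mul, Finset.sum_ite_eq, Finset.mem_univ,
      if_true]
    rw [Finset.sum_comm]
  · simp only [Fintype.sum_prod_type]
    refine Finset.sum_congr rfl fun j _ => ?_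
    rw [Finset.sum_comm]
    refine Finset.sum_congr rfl fun l _ => ?_
    rw [Finset.sum_mul_sum, Finset.mul_sum]
    refine Finset.sum_congr rfl fun i _ => ?_
    rw [Finset.mul_sum]

lemma Kq_posDef {B : Fin (m + 1) → Matrix (Fin k) (Fin k) ℝ} (hB : ∀ x, (B x).PosDef) :
    (Kq B).PosDef := by
  refine Matrix.PosDef.of_dotProduct_mulVec_pos ?_ fun {z} hz => ?_
  · ext c d
    have h : ∀ x j l, B x j l = B x l j := fun x j l => by
      have := congr_fun₂ (hB x).1 l j
      simpa using this
    rw [Matrix.conjTranspose_apply, star_trivial, Kq_apply, Kq_apply, h (Fin.last m)]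
    congr 1
    by_cases hcd : c.2 = d.2
    · rw [if_pos hcd, if_pos hcd.symm, hcd, h]
    · rw [if_neg hcd, if_neg (Ne.symm hcd)]
  · rw [star_trivial, Kq_quad]
    have hnn : ∀ x (u : Fin k → ℝ), 0 ≤ u ⬝ᵥ B x *ᵥ u := fun x u => by
      have := (hB x).posSemidef.dotProduct_mulVec_nonneg u
      rwa [star_trivial] at this
    refine add_pos_of_pos_of_nonneg ?_ (hnn _ _)
    obtain ⟨⟨j, i⟩, hji⟩ := Function.ne_iff.1 hz
    refine Finset.sum_pos' (fun i _ => hnn _ _) ⟨i, Finset.mem_univ _, ?_⟩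
    have hne : (fun j => z (j, i)) ≠ 0 := fun h => hji (congr_fun h j)
    have := (hB i.castSucc).dotProduct_mulVec_pos hne
    rwa [star_trivial] at this

lemma Kq_det {A B : Fin (m + 1) → Matrix (Fin k) (Fin k) ℝ} (hAB : ∀ x, A x * B x = 1)
    (hB : ∀ x, (B x).PosDef) : (Kq B).det = (∏ x, (B x).det) * (∑ x, A x).det := by
  have hBA : ∀ x, B x * A x = 1 := fun x => mul_eq_one_comm.1 (hAB x)
  have hD : (blockDiagonal (fun i : Fin m => B i.castSucc)).det
      = ∏ i : Fin m, (B i.castSucc).det := Matrix.det_blockDiagonal _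
  have hDu : IsUnit (blockDiagonal (fun i : Fin m => B i.castSucc)).det := by
    rw [hD]
    exact (Finset.prod_ne_zero_iff.2 fun i _ => (hB i.castSucc).det_pos.ne').isUnit
  have hDinv : (blockDiagonal (fun i : Fin m => B i.castSucc))⁻¹
      = blockDiagonal (fun i : Fin m => A i.castSucc) := by
    refine Matrix.inv_eq_right_inv ?_
    rw [← Matrix.blockDiagonal_mul]
    simp only [hBA]
    exact Matrix.blockDiagonal_one
  have hU : (Uk m k)ᵀ * blockDiagonal (fun i : Fin m => A i.castSucc) * Uk m k
      = ∑ i : Fin m, A i.castSucc := by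
    ext j l
    simp only [Matrix.mul_apply, Uk, Matrix.transpose_apply, Matrix.of_apply, blockDiagonal_apply,
      Fintype.sum_prod_type, Matrix.sum_apply]
    simp
  rw [Kq, Matrix.det_add_mul _ _ hDu, hDinv, hD, Fin.prod_univ_castSucc, mul_assoc]
  congr 1
  rw [← Matrix.det_mul, Fin.sum_univ_castSucc, Matrix.mul_add, hBA, add_comm]
  congr 2
  rw [Matrix.mul_assoc, Matrix.mul_assoc, ← hU, Matrix.mul_assoc]

lemma Kq_abs (B : Fin (m + 1) → Matrix (Fin k) (Fin k) ℝ) :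
    ∑ c, ∑ d, |Kq B c d| ≤ (1 + m * m : ℝ) * ∑ x, ∑ j, ∑ l, |B x j l| := by
  have h0 : ∀ x, 0 ≤ ∑ j, ∑ l, |B x j l| := fun x => by positivity
  have h1 : ∑ c, ∑ d, |Kq B c d| ≤ ∑ c : Fin k × Fin m, ∑ d : Fin k × Fin m,
      ((if c.2 = d.2 then |B c.2.castSucc c.1 d.1| else 0) + |B (Fin.last m) c.1 d.1|) := by
    refine Finset.sum_le_sum fun c _ => Finset.sum_le_sum fun d _ => ?_
    rw [Kq_apply]
    refine (abs_add_le _ _).trans (add_le_add ?_ le_rfl)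
    split_ifs <;> simp
  refine h1.trans ?_
  have h2 : ∑ c : Fin k × Fin m, ∑ d : Fin k × Fin m,
      ((if c.2 = d.2 then |B c.2.castSucc c.1 d.1| else 0) + |B (Fin.last m) c.1 d.1|)
      = (∑ i : Fin m, ∑ j, ∑ l, |B i.castSucc j l|)
        + m * m * ∑ j, ∑ l, |B (Fin.last m) j l| := by
    simp only [Finset.sum_add_distrib]
    congr 1
    · simp only [Fintype.sum_prod_type, Finset.sum_ite_eq, Finset.mem_univ, if_true]
      rw [Finset.sum_comm]
    · simp only [Fintype.sum_prod_type, Finset.sum_const, Finset.card_univ, Fintype.card_fin,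
        nsmul_eq_mul, ← Finset.mul_sum]
      ring
  rw [h2, Fin.sum_univ_castSucc]
  have h3 : 0 ≤ ∑ i : Fin m, ∑ j, ∑ l, |B i.castSucc j l| := Finset.sum_nonneg fun i _ => h0 _
  have h4 := h0 (Fin.last m)
  have h5 : (0 : ℝ) ≤ m * m := by positivity
  nlinarith [mul_nonneg h5 h3]

/-- Completing the square: subtracting `A_x G⁻¹ ξ` with `G = ∑ A_x`, `ξ = ∑ ξ_x` centres the
family. -/
lemma Kq_resid {A B : Fin (m + 1) → Matrix (Fin k) (Fin k) ℝ} (hAB : ∀ x, A x * B x = 1)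
    (hA : ∀ x, (A x).IsHermitian) {G G' : Matrix (Fin k) (Fin k) ℝ} (hG : ∑ x, A x = G)
    (hGG : G * G' = 1) (e : Fin (m + 1) → Fin k → ℝ) (z : Fin k × Fin m → ℝ)
    (hz : ∀ i : Fin m, (fun j => z (j, i)) = e i.castSucc - A i.castSucc *ᵥ G' *ᵥ (∑ x, e x)) :
    z ⬝ᵥ Kq B *ᵥ z = ∑ x, e x ⬝ᵥ B x *ᵥ e x - (∑ x, e x) ⬝ᵥ G' *ᵥ (∑ x, e x) := by
  have hBA : ∀ x, B x * A x = 1 := fun x => mul_eq_one_comm.1 (hAB x)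
  set s := ∑ x, e x with hs
  set g := G' *ᵥ s with hg
  set ζ : Fin (m + 1) → Fin k → ℝ := fun x => e x - A x *ᵥ g with hζ
  have hA' : ∀ x (u v : Fin k → ℝ), (A x *ᵥ u) ⬝ᵥ v = u ⬝ᵥ A x *ᵥ v := by
    intro x u v
    have ht : (A x)ᵀ = A x := by
      have := hA x
      rwa [Matrix.IsHermitian, Matrix.conjTranspose_eq_transpose_of_trivial] at this
    rw [Matrix.dotProduct_mulVec, ← Matrix.mulVec_transpose, ht]
  have hAs : ∑ x, A x *ᵥ g = s := by
    rw [← Matrix.sum_mulVec, hG, hg, Matrix.mulVec_mulVec, hGG, Matrix.one_mulVec]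
  have hsum : ∑ x, ζ x = 0 := by
    simp only [hζ, Finset.sum_sub_distrib, hAs]; exact sub_self _
  have hlast : (fun j => ∑ i, z (j, i)) = - ζ (Fin.last m) := by
    rw [Fin.sum_univ_castSucc] at hsum
    rw [← eq_neg_iff_add_eq_zero] at hsum
    rw [← hsum]
    funext j
    rw [Finset.sum_apply]
    exact Finset.sum_congr rfl fun i _ => congr_fun (hz i) j
  have h1 : z ⬝ᵥ Kq B *ᵥ z = ∑ x, ζ x ⬝ᵥ B x *ᵥ ζ x := by
    rw [Kq_quad, hlast, Matrix.mulVec_neg, neg_dotProduct_neg, Fin.sum_univ_castSucc]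
    congr 1
    exact Finset.sum_congr rfl fun i _ => by rw [hz i]
  have h2 : ∀ x, ζ x ⬝ᵥ B x *ᵥ ζ x = e x ⬝ᵥ B x *ᵥ e x - 2 * (e x ⬝ᵥ g) + (A x *ᵥ g) ⬝ᵥ g := by
    intro x
    simp only [hζ, Matrix.mulVec_sub, Matrix.mulVec_mulVec, hBA, Matrix.one_mulVec, dotProduct_sub,
      sub_dotProduct, hA']
    rw [Matrix.mulVec_mulVec, hAB, Matrix.one_mulVec, dotProduct_comm g (e x)]
    ring
  rw [h1]
  simp only [h2, Finset.sum_add_distrib, Finset.sum_sub_distrib, ← Finset.mul_sum]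
  rw [← sum_dotProduct, ← sum_dotProduct, hAs, ← hs]
  ring

end block

/-! ### Codes for the joint counts given both marginal counts -/

section joint
variable {m k n : ℕ} {Q : Matrix (Fin (k + 1)) (Fin (m + 1)) ℝ}

/-- Letter counts of a word. -/
def Tc (x : Fin n → Fin (m + 1)) (α : Fin (m + 1)) : ℕ := cnt (fun a => a = α) x

/-- Letter frequencies with one added count per letter. -/
def Fb (x : Fin n → Fin (m + 1)) (α : Fin (m + 1)) : ℝ := (Tc x α + 1) / (n + m + 1)

/-- Residual of the output counts on the positions where the input letter is `α`. -/
def eta (Q : Matrix (Fin (k + 1)) (Fin (m + 1)) ℝ) (x : Fin n → Fin (m + 1))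
    (y : Fin n → Fin (k + 1)) (α : Fin (m + 1)) (j : Fin k) : ℝ :=
  ∑ s, if x s = α then hx Q j (x s, y s) else 0

/-- Joint counts of an input and an output word, last input letter and last output letter
dropped. -/
def Nv (x : Fin n → Fin (m + 1)) (y : Fin n → Fin (k + 1)) (c : Fin k × Fin m) : ℤ :=
  cnt (fun w : Fin (m + 1) × Fin (k + 1) => w = (c.2.castSucc, c.1.castSucc))
    (fun s => (x s, y s))

lemma Tc_sum (x : Fin n → Fin (m + 1)) : ∑ α, (Tc x α : ℝ) = n := by
  have := sum_letters x (fun _ => (1 : ℝ))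
  simp only [mul_one, Finset.sum_const, Finset.card_univ, Fintype.card_fin, nsmul_eq_mul] at this
  exact this.symm

lemma Fb_mem (x : Fin n → Fin (m + 1)) : Fb x ∈ simplex (m + 1) := by
  refine ⟨fun α => by unfold Fb; positivity, ?_⟩
  simp only [Fb, ← Finset.sum_div, Finset.sum_add_distrib, Tc_sum, Finset.sum_const,
    Finset.card_univ, Fintype.card_fin, nsmul_eq_mul, mul_one]
  push_cast
  rw [← add_assoc, div_self (by positivity)]

lemma Tc_eq_Fb (x : Fin n → Fin (m + 1)) :
    (fun α => (Tc x α : ℝ) + 1) = (n + m + 1 : ℝ) • Fb x := by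
  funext α
  have : (n + m + 1 : ℝ) ≠ 0 := by positivity
  simp only [Pi.smul_apply, Fb, smul_eq_mul]
  field_simp

lemma Gk_smul (c : ℝ) (p : Fin (m + 1) → ℝ) : Gk Q (c • p) = c • Gk Q p := by
  simp only [Gk, Pi.smul_apply, smul_eq_mul, Finset.smul_sum, smul_smul]

lemma Nv_eq (x : Fin n → Fin (m + 1)) (y : Fin n → Fin (k + 1)) (j : Fin k) (i : Fin m) :
    (Nv x y (j, i) : ℝ) = Tc x i.castSucc * Q j.castSucc i.castSucc + eta Q x y i.castSucc j := by
  unfold Nv Tc eta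
  push_cast
  rw [cnt_eq_sum, cnt_eq_sum, Finset.sum_mul, ← Finset.sum_add_distrib]
  refine Finset.sum_congr rfl fun s _ => ?_
  simp only [Prod.mk.injEq, hx]
  by_cases h1 : x s = i.castSucc
  · by_cases h2 : y s = j.castSucc <;> simp [h1, h2]
  · simp [h1]

lemma eta_sum (x : Fin n → Fin (m + 1)) (y : Fin n → Fin (k + 1)) (j : Fin k) :
    ∑ α, eta Q x y α j = ∑ s, hx Q j (x s, y s) := by
  unfold eta
  rw [Finset.sum_comm]
  exact Finset.sum_congr rfl fun s _ => by simp

lemma eta_sum' (x : Fin n → Fin (m + 1)) (y : Fin n → Fin (k + 1)) (j : Fin k) :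
    ∑ α, eta Q x y α j
      = cnt (fun c => c = j.castSucc) y - ∑ α, (Tc x α : ℝ) * Q j.castSucc α := by
  rw [eta_sum, cnt_eq_sum]
  have := sum_letters x (fun α => Q j.castSucc α)
  unfold Tc
  rw [← this, ← Finset.sum_sub_distrib]
  rfl

/-- For given input counts `t` and output word `y`, a sub-probability on joint counts whose code
lengths are those of a Gaussian conditioned on its marginals. -/
lemma code_joint (hQpos : ∀ y x, 0 < Q y x) (hQcol : ∀ x, ∑ y, Q y x = 1) :
    ∃ C : ℝ, 0 ≤ C ∧ ∀ (n : ℕ) (y : Fin n → Fin (k + 1)) (t : Fin (m + 1) → ℕ),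
      ∃ κ : (Fin k × Fin m → ℤ) → ℝ, (∀ v, 0 < κ v) ∧
        (∀ s : Finset (Fin k × Fin m → ℤ), ∑ v ∈ s, κ v ≤ 1) ∧
        ∀ x : Fin n → Fin (m + 1), Tc x = t → - Real.log (κ (Nv x y)) ≤
          (k * m : ℝ) / 2 * Real.log (2 * π)
          + ((∑ α, (k * Real.log (t α + 1) + ∑ c, Real.log (Q c α)))
            - Real.log (Gk Q (fun α => (t α : ℝ) + 1)).det) / 2
          + ((∑ α, ((t α : ℝ) + 1)⁻¹ * ∑ j, ∑ l, covi (fun c => Q c α) j l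
              * (eta Q x y α j * eta Q x y α l))
            - ∑ j, ∑ l, (Gk Q (fun α => (t α : ℝ) + 1))⁻¹ j l
              * ((∑ α, eta Q x y α j) * ∑ α, eta Q x y α l)) / 2
          + C * ∑ α, ((t α : ℝ) + 1)⁻¹ := by
  set M : ℝ := ∑ α, ∑ j, ∑ l, |covi (fun c => Q c α) j l| with hM
  refine ⟨(1 + m * m : ℝ) * M / 8, by positivity, fun n y t => ?_⟩
  have ht : ∀ α, (0 : ℝ) < (t α : ℝ) + 1 := fun α => by positivity
  set A : Fin (m + 1) → Matrix (Fin k) (Fin k) ℝ := fun α => ((t α : ℝ) + 1) • covm (fun c => Q c α)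
    with hA
  set B : Fin (m + 1) → Matrix (Fin k) (Fin k) ℝ :=
    fun α => ((t α : ℝ) + 1)⁻¹ • covi (fun c => Q c α) with hB
  have hAB : ∀ α, A α * B α = 1 := by
    intro α
    simp only [hA, hB, Matrix.smul_mul, Matrix.mul_smul, smul_smul,
      covm_mul_covi (fun c => hQpos c α) (hQcol α), inv_mul_cancel₀ (ht α).ne', one_smul]
  have hcovi : ∀ α, (covi (fun c => Q c α)).PosDef := fun α => by
    rw [← covm_inv (fun c => hQpos c α) (hQcol α)]
    exact (covm_posDef (fun c => hQpos c α) (hQcol α)).inv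
  have hBpd : ∀ α, (B α).PosDef := fun α => (hcovi α).smul (inv_pos.2 (ht α))
  have hAh : ∀ α, (A α).IsHermitian := fun α =>
    ((covm_posDef (fun c => hQpos c α) (hQcol α)).smul (ht α)).1
  set G := Gk Q (fun α => (t α : ℝ) + 1) with hG
  have hGpd : G.PosDef := Gk_posDef hQpos hQcol (fun α => (ht α).le) ⟨0, ht 0⟩
  have hGG : G * G⁻¹ = 1 := Matrix.mul_nonsing_inv _ hGpd.det_pos.ne'.isUnit
  set s : Fin k → ℝ := fun j => cnt (fun c => c = j.castSucc) y - ∑ α, (t α : ℝ) * Q j.castSucc α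
    with hs
  -- the centre is the mean of independent Gaussians `ζ_α` of covariance `A α`, conditioned on
  -- their sum being the observed residual `s`
  obtain ⟨κ, hκ0, hκ1, hκ⟩ := gaussCube (Kq_posDef hBpd)
    (fun c => (t c.2.castSucc : ℝ) * Q c.1.castSucc c.2.castSucc
      + (A c.2.castSucc *ᵥ G⁻¹ *ᵥ s) c.1)
  refine ⟨κ, hκ0, hκ1, fun x hx => (hκ (Nv x y)).trans ?_⟩
  have hsum : ∑ α, eta Q x y α = s := by
    funext j
    rw [Finset.sum_apply, eta_sum', hx]
  have e1 := Kq_resid hAB hAh (G := G) rfl hGG (fun α => eta Q x y α)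
    (fun c => (Nv x y c : ℝ) - ((t c.2.castSucc : ℝ) * Q c.1.castSucc c.2.castSucc
      + (A c.2.castSucc *ᵥ G⁻¹ *ᵥ s) c.1)) (by
    intro i
    funext j
    rw [hsum]
    simp only [Nv_eq (Q := Q), hx, Pi.sub_apply]
    ring)
  have hdetB : ∀ α, Real.log (B α).det
      = - (k * Real.log (t α + 1) + ∑ c, Real.log (Q c α)) := by
    intro α
    have h1 : (A α).det * (B α).det = 1 := by rw [← Matrix.det_mul, hAB, Matrix.det_one]
    have h2 : (A α).det = ((t α : ℝ) + 1) ^ k * ∏ c, Q c α := by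
      rw [hA, Matrix.det_smul, Fintype.card_fin, covm_det (fun c => hQpos c α) (hQcol α)]
    rw [eq_inv_of_mul_eq_one_right h1, Real.log_inv, h2, Real.log_mul (by have := ht α; positivity)
      (Finset.prod_ne_zero_iff.2 fun c _ => (hQpos c α).ne'), Real.log_pow,
      Real.log_prod (fun c _ => (hQpos c α).ne')]
  have e2 : Real.log (Kq B).det = - (∑ α, (k * Real.log (t α + 1) + ∑ c, Real.log (Q c α)))
      + Real.log G.det := by
    rw [Kq_det hAB hBpd, show ∑ x, A x = G from rfl, Real.log_mul
      (Finset.prod_ne_zero_iff.2 fun α _ => (hBpd α).det_pos.ne') hGpd.det_pos.ne',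
      Real.log_prod (fun α _ => (hBpd α).det_pos.ne'), ← Finset.sum_neg_distrib]
    simp only [hdetB]
  have e3 : ∑ c, ∑ d, |Kq B c d| ≤ (1 + m * m : ℝ) * (M * ∑ α, ((t α : ℝ) + 1)⁻¹) := by
    refine (Kq_abs B).trans (mul_le_mul_of_nonneg_left ?_ (by positivity))
    rw [Finset.mul_sum]
    refine Finset.sum_le_sum fun α _ => ?_
    simp only [hB, Matrix.smul_apply, smul_eq_mul, abs_mul, abs_of_pos (inv_pos.2 (ht α)),
      ← Finset.mul_sum]
    rw [mul_comm]
    refine mul_le_mul_of_nonneg_right ?_ (inv_pos.2 (ht α)).le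
    exact Finset.single_le_sum (f := fun α => ∑ j, ∑ l, |covi (fun c => Q c α) j l|)
      (fun α _ => by positivity) (Finset.mem_univ α)
  have e4 : ∑ α, eta Q x y α ⬝ᵥ B α *ᵥ eta Q x y α = ∑ α, ((t α : ℝ) + 1)⁻¹ * ∑ j, ∑ l,
      covi (fun c => Q c α) j l * (eta Q x y α j * eta Q x y α l) := by
    refine Finset.sum_congr rfl fun α _ => ?_
    rw [hB, Matrix.smul_mulVec, dotProduct_smul, quad_expand, smul_eq_mul]
  have e5 : (∑ α, eta Q x y α) ⬝ᵥ G⁻¹ *ᵥ (∑ α, eta Q x y α) = ∑ j, ∑ l, G⁻¹ j l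
      * ((∑ α, eta Q x y α j) * ∑ α, eta Q x y α l) := by
    rw [quad_expand]
    simp only [Finset.sum_apply]
  rw [e1, e2, e4, e5]
  simp only [Fintype.card_prod, Fintype.card_fin]
  push_cast
  have e6 : (1 + m * m : ℝ) * M / 8 * ∑ α, ((t α : ℝ) + 1)⁻¹
      = (1 + m * m : ℝ) * (M * ∑ α, ((t α : ℝ) + 1)⁻¹) / 8 := by ring
  rw [e6]
  linarith

lemma eta_cov (hQcol : ∀ x, ∑ y, Q y x = 1) (x : Fin n → Fin (m + 1)) (α : Fin (m + 1))
    (j l : Fin k) :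
    Ew (fun i c => Q c (x i)) (fun y => eta Q x y α j * eta Q x y α l)
      = Tc x α * covm (fun c => Q c α) j l := by
  unfold eta
  rw [Ew_cov (fun i => hQcol (x i)) (fun i c => if x i = α then hx Q j (x i, c) else 0)
    (fun i c => if x i = α then hx Q l (x i, c) else 0)]
  · rw [Tc, cnt_eq_sum, Finset.sum_mul]
    refine Finset.sum_congr rfl fun i _ => ?_
    by_cases h : x i = α
    · simp only [h, if_true, one_mul]
      exact hx_cond_cov hQcol j l α
    · simp [h]
  · intro i
    by_cases h : x i = α
    · simp only [h, if_true]; exact hx_cond_mean hQcol j α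
    · simp [h]
  · intro i
    by_cases h : x i = α
    · simp only [h, if_true]; exact hx_cond_mean hQcol l α
    · simp [h]

lemma eta_tot_cov (hQcol : ∀ x, ∑ y, Q y x = 1) (x : Fin n → Fin (m + 1)) (j l : Fin k) :
    Ew (fun i c => Q c (x i)) (fun y => (∑ α, eta Q x y α j) * ∑ α, eta Q x y α l)
      = Gk Q (fun α => (Tc x α : ℝ)) j l := by
  simp only [eta_sum]
  rw [Ew_cov (fun i => hQcol (x i)) (fun i c => hx Q j (x i, c)) (fun i c => hx Q l (x i, c))
    (fun i => hx_cond_mean hQcol j (x i)) (fun i => hx_cond_mean hQcol l (x i))]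
  simp only [hx_cond_cov hQcol]
  rw [sum_letters x (fun α => covm (fun c => Q c α) j l), Gk, Matrix.sum_apply]
  rfl

lemma sum_inv_mul {G G' : Matrix (Fin k) (Fin k) ℝ} (hG : G.IsHermitian) (hGG : G * G' = 1) :
    ∑ j, ∑ l, G' j l * G j l = k := by
  have h1 : G' * G = 1 := mul_eq_one_comm.1 hGG
  have h2 : ∀ j, ∑ l, G' j l * G j l = 1 := by
    intro j
    have := congr_fun₂ h1 j j
    rw [Matrix.mul_apply, Matrix.one_apply_eq] at this
    rw [← this]
    refine Finset.sum_congr rfl fun l _ => ?_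
    have h3 := congr_fun₂ hG l j
    rw [Matrix.conjTranspose_apply, star_trivial] at h3
    rw [h3]
  simp [h2]

/-- Expected quadratic part of the code length given the input word. -/
lemma quad_joint (hQpos : ∀ y x, 0 < Q y x) (hQcol : ∀ x, ∑ y, Q y x = 1) :
    ∃ C : ℝ, 0 ≤ C ∧ ∀ (n : ℕ), 1 ≤ n → ∀ (x : Fin n → Fin (m + 1)),
      Ew (fun i c => Q c (x i)) (fun y =>
        (∑ α, ((Tc x α : ℝ) + 1)⁻¹ * ∑ j, ∑ l, covi (fun c => Q c α) j l
              * (eta Q x y α j * eta Q x y α l))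
            - ∑ j, ∑ l, (Gk Q (fun α => (Tc x α : ℝ) + 1))⁻¹ j l
              * ((∑ α, eta Q x y α j) * ∑ α, eta Q x y α l)) ≤ k * m + C / n := by
  choose M hM0 hM using fun jl : Fin k × Fin k => exists_bound_simplex
    (continuousOn_GkInvEntry (m := m) hQpos hQcol jl.1 jl.2)
  refine ⟨∑ j, ∑ l, M (j, l) * |Gk Q (fun _ => 1) j l|, Finset.sum_nonneg fun j _ =>
    Finset.sum_nonneg fun l _ => mul_nonneg (hM0 _) (abs_nonneg _), fun n hn x => ?_⟩
  have hn0 : (0 : ℝ) < n := by exact_mod_cast hn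
  rw [Ew_sub]
  have h1 : Ew (fun i c => Q c (x i)) (fun y => ∑ α, ((Tc x α : ℝ) + 1)⁻¹ * ∑ j, ∑ l,
      covi (fun c => Q c α) j l * (eta Q x y α j * eta Q x y α l)) ≤ (m + 1) * k := by
    rw [Ew_sum]
    have : ∀ α ∈ Finset.univ, Ew (fun i c => Q c (x i)) (fun y => ((Tc x α : ℝ) + 1)⁻¹ * ∑ j, ∑ l,
        covi (fun c => Q c α) j l * (eta Q x y α j * eta Q x y α l)) ≤ k := by
      intro α _
      rw [Ew_const_mul]
      simp only [Ew_sum, Ew_const_mul, eta_cov hQcol]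
      have e : ∑ j, ∑ l, covi (fun c => Q c α) j l * (Tc x α * covm (fun c => Q c α) j l)
          = Tc x α * k := by
        rw [← sum_inv_mul (covm_isHermitian _)
          (covm_mul_covi (fun c => hQpos c α) (hQcol α)), Finset.mul_sum]
        refine Finset.sum_congr rfl fun j _ => ?_
        rw [Finset.mul_sum]
        exact Finset.sum_congr rfl fun l _ => by ring
      rw [e, inv_mul_le_iff₀ (by positivity)]
      have : (0 : ℝ) ≤ k := by positivity
      nlinarith
    refine (Finset.sum_le_sum this).trans ?_
    simp
  set G := Gk Q (fun α => (Tc x α : ℝ) + 1) with hG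
  have hGpd : G.PosDef := Gk_posDef hQpos hQcol (fun α => by positivity) ⟨0, by positivity⟩
  have hGG : G * G⁻¹ = 1 := Matrix.mul_nonsing_inv _ hGpd.det_pos.ne'.isUnit
  have h2 : Ew (fun i c => Q c (x i)) (fun y => ∑ j, ∑ l, G⁻¹ j l
      * ((∑ α, eta Q x y α j) * ∑ α, eta Q x y α l))
      = k - ∑ j, ∑ l, G⁻¹ j l * Gk Q (fun _ => 1) j l := by
    simp only [Ew_sum, Ew_const_mul, eta_tot_cov hQcol]
    rw [← sum_inv_mul hGpd.1 hGG, ← Finset.sum_sub_distrib]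
    refine Finset.sum_congr rfl fun j _ => ?_
    rw [← Finset.sum_sub_distrib]
    refine Finset.sum_congr rfl fun l _ => ?_
    rw [← mul_sub]
    congr 1
    rw [hG]
    simp only [Gk, Matrix.sum_apply, ← Finset.sum_sub_distrib, Matrix.smul_apply, smul_eq_mul]
    exact Finset.sum_congr rfl fun α _ => by ring
  have h3 : ∑ j, ∑ l, G⁻¹ j l * Gk Q (fun _ => 1) j l
      ≤ (∑ j, ∑ l, M (j, l) * |Gk Q (fun _ => 1) j l|) / n := by
    have hN : (0 : ℝ) < n + m + 1 := by positivity
    have hinv : G⁻¹ = (n + m + 1 : ℝ)⁻¹ • (Gk Q (Fb x))⁻¹ := by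
      rw [hG, Tc_eq_Fb, Gk_smul]
      have hFpd : (Gk Q (Fb x)).PosDef := Gk_posDef hQpos hQcol (Fb_mem x).1
        (exists_pos_of_simplex hQpos hQcol (Fb_mem x))
      refine Matrix.inv_eq_left_inv ?_
      rw [Matrix.smul_mul, Matrix.mul_smul, smul_smul, inv_mul_cancel₀ hN.ne', one_smul,
        Matrix.nonsing_inv_mul _ hFpd.det_pos.ne'.isUnit]
    rw [Finset.sum_div]
    refine Finset.sum_le_sum fun j _ => ?_
    rw [Finset.sum_div]
    refine Finset.sum_le_sum fun l _ => ?_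
    rw [hinv, Matrix.smul_apply, smul_eq_mul]
    refine (le_abs_self _).trans ?_
    rw [abs_mul, abs_mul, abs_of_pos (inv_pos.2 hN), mul_assoc, inv_mul_eq_div]
    have hb := mul_le_mul_of_nonneg_right (hM (j, l) _ (Fb_mem x))
      (abs_nonneg (Gk Q (fun _ => 1) j l))
    refine (div_le_div_of_nonneg_right hb hN.le).trans ?_
    refine div_le_div_of_nonneg_left (mul_nonneg (hM0 _) (abs_nonneg _)) hn0 ?_
    have : (0 : ℝ) ≤ m := by positivity
    linarith
  rw [h2]
  linarith

end joint

section jointlen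
variable {m k n : ℕ} {Q : Matrix (Fin (k + 1)) (Fin (m + 1)) ℝ} {p : Fin (m + 1) → ℝ}

lemma letter_prob (p : Fin (m + 1) → ℝ) (α : Fin (m + 1)) :
    ∑ c, p c * (if c = α then (1 : ℝ) else 0) = p α := by simp

lemma Tc_mean (hp : p ∈ simplex (m + 1)) (α : Fin (m + 1)) :
    Ew (fun _ : Fin n => p) (fun x => (Tc x α : ℝ) - n * p α) = 0 :=
  cnt_mean hp.2 (fun a => a = α) (letter_prob p α)

lemma Tc_var_le (hp : p ∈ simplex (m + 1)) (α : Fin (m + 1)) :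
    Ew (fun _ : Fin n => p) (fun x => ((Tc x α : ℝ) - n * p α) ^ 2) ≤ n := by
  have h := cnt_var (n := n) hp.2 (fun a => a = α) (letter_prob p α)
  refine h.le.trans ?_
  have h0 := hp.1 α
  have hn : (0 : ℝ) ≤ n := by positivity
  nlinarith [sq_nonneg (p α - 1 / 2), mul_nonneg hn (sq_nonneg (p α - 1 / 2))]

lemma inv_mean (hp : p ∈ simplex (m + 1)) (hn : 1 ≤ n) {α : Fin (m + 1)} (hα : 0 < p α) :
    Ew (fun _ : Fin n => p) (fun x => ((Tc x α : ℝ) + 1)⁻¹) ≤ (2 / p α + 4 / p α ^ 2) / n := by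
  have hn0 : (0 : ℝ) < n := by exact_mod_cast hn
  have h1 : Ew (fun _ : Fin n => p) (fun x => ((Tc x α : ℝ) + 1)⁻¹)
      ≤ Ew (fun _ : Fin n => p) (fun x => 2 / (n * p α)
        + 4 / (n * p α) ^ 2 * ((Tc x α : ℝ) - n * p α) ^ 2) := by
    refine Ew_mono (fun _ => hp.1) fun x => ?_
    have hT : (0 : ℝ) ≤ Tc x α := by positivity
    have hnp : 0 < n * p α := by positivity
    rcases le_total (n * p α / 2) (Tc x α) with h | h
    · have h2 : ((Tc x α : ℝ) + 1)⁻¹ ≤ 2 / (n * p α) := by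
        rw [inv_le_comm₀ (by positivity) (by positivity), inv_div]
        linarith
      have h3 : 0 ≤ 4 / (n * p α) ^ 2 * ((Tc x α : ℝ) - n * p α) ^ 2 := by positivity
      linarith
    · have h2 : ((Tc x α : ℝ) + 1)⁻¹ ≤ 1 := inv_le_one_of_one_le₀ (by linarith)
      have h3 : 1 ≤ 4 / (n * p α) ^ 2 * ((Tc x α : ℝ) - n * p α) ^ 2 := by
        rw [div_mul_eq_mul_div, one_le_div (by positivity)]
        nlinarith
      have h4 : 0 ≤ 2 / (n * p α) := by positivity
      linarith
  rw [Ew_add, Ew_const_mul, Ew_const (fun _ => hp.2)] at h1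
  have h2 := mul_le_mul_of_nonneg_left (Tc_var_le (n := n) hp α)
    (by positivity : 0 ≤ 4 / (n * p α) ^ 2)
  have h3 : 2 / (n * p α) + 4 / (n * p α) ^ 2 * n = (2 / p α + 4 / p α ^ 2) / n := by
    field_simp
  linarith

lemma inv_mean_one (hp : p ∈ simplex (m + 1)) (α : Fin (m + 1)) :
    Ew (fun _ : Fin n => p) (fun x => ((Tc x α : ℝ) + 1)⁻¹) ≤ 1 := by
  refine (Ew_mono (fun _ => hp.1) fun x => ?_).trans (Ew_const (fun _ => hp.2) 1).le
  have hT : (0 : ℝ) ≤ Tc x α := by positivity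
  exact inv_le_one_of_one_le₀ (by linarith)

lemma Fb_pos (x : Fin n → Fin (m + 1)) (α : Fin (m + 1)) : 0 < Fb x α := by
  unfold Fb; positivity

lemma logFb_mean (hp : p ∈ simplex (m + 1)) (hn : 1 ≤ n) {α : Fin (m + 1)} (hα : 0 < p α) :
    Ew (fun _ : Fin n => p) (fun x => Real.log (Fb x α)) ≤ Real.log (p α) + (p α)⁻¹ / n := by
  have hn0 : (0 : ℝ) < n := by exact_mod_cast hn
  have h1 : Ew (fun _ : Fin n => p) (fun x => Real.log (Fb x α))
      ≤ Ew (fun _ : Fin n => p) (fun x => (Real.log (p α) + (p α)⁻¹ / n)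
        + (p α)⁻¹ / (n + m + 1) * ((Tc x α : ℝ) - n * p α)) := by
    refine Ew_mono (fun _ => hp.1) fun x => ?_
    have h2 := Real.log_le_sub_one_of_pos (div_pos (Fb_pos x α) hα)
    rw [Real.log_div (Fb_pos x α).ne' hα.ne'] at h2
    have h3 : Fb x α / p α - 1 = (p α)⁻¹ / (n + m + 1) * ((Tc x α : ℝ) - n * p α)
        + (p α)⁻¹ * (1 - (m + 1) * p α) / (n + m + 1) := by
      unfold Fb
      field_simp
      ring
    have h4 : (p α)⁻¹ * (1 - (m + 1) * p α) / (n + m + 1) ≤ (p α)⁻¹ / n := by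
      have : (p α)⁻¹ * (1 - (m + 1) * p α) ≤ (p α)⁻¹ := by
        refine mul_le_of_le_one_right (by positivity) ?_
        have : 0 ≤ (m + 1) * p α := by positivity
        linarith
      refine (div_le_div_of_nonneg_right this (by positivity)).trans ?_
      refine div_le_div_of_nonneg_left (by positivity) hn0 ?_
      have : (0 : ℝ) ≤ m := by positivity
      linarith
    linarith
  rw [Ew_add, Ew_const_mul, Ew_const (fun _ => hp.2), Tc_mean hp, mul_zero, add_zero] at h1
  exact h1

lemma logFb_nonpos (x : Fin n → Fin (m + 1)) (α : Fin (m + 1)) : Real.log (Fb x α) ≤ 0 :=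
  Real.log_nonpos (Fb_pos x α).le (simplex_le_one (Fb_mem x) α)

lemma Fb_sq_mean (hp : p ∈ simplex (m + 1)) (hn : 1 ≤ n) (α : Fin (m + 1)) :
    Ew (fun _ : Fin n => p) (fun x => (Fb x α - p α) ^ 2) ≤ (2 + 2 * (m + 1) ^ 2) / n := by
  have hn0 : (0 : ℝ) < n := by exact_mod_cast hn
  have hn1 : (1 : ℝ) ≤ n := by exact_mod_cast hn
  have h1 : Ew (fun _ : Fin n => p) (fun x => (Fb x α - p α) ^ 2)
      ≤ Ew (fun _ : Fin n => p) (fun x => 2 / (n : ℝ) ^ 2 * ((Tc x α : ℝ) - n * p α) ^ 2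
        + 2 * (m + 1) ^ 2 / n) := by
    refine Ew_mono (fun _ => hp.1) fun x => ?_
    have hN : (0 : ℝ) < n + m + 1 := by positivity
    have e : Fb x α - p α = (((Tc x α : ℝ) - n * p α) + (1 - (m + 1) * p α)) / (n + m + 1) := by
      unfold Fb; field_simp; ring
    have h2 : (1 - (m + 1) * p α) ^ 2 ≤ ((m : ℝ) + 1) ^ 2 := by
      have h0 := hp.1 α
      have h1 := simplex_le_one hp α
      have hm : (0 : ℝ) ≤ m := by positivity
      have h2 : 0 ≤ (m : ℝ) * p α := mul_nonneg hm h0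
      have h3 : (m : ℝ) * p α ≤ m := mul_le_of_le_one_right hm h1
      exact sq_le_sq' (by nlinarith) (by nlinarith)
    have h3 : (Fb x α - p α) ^ 2 ≤ (2 * ((Tc x α : ℝ) - n * p α) ^ 2 + 2 * (m + 1) ^ 2)
        / (n : ℝ) ^ 2 := by
      rw [e, div_pow]
      have hm : (0 : ℝ) ≤ m := by positivity
      refine div_le_div₀ (by positivity) ?_ (by positivity) (by nlinarith)
      nlinarith [sq_nonneg (((Tc x α : ℝ) - n * p α) - (1 - (m + 1) * p α))]
    have h4 : 2 * ((m : ℝ) + 1) ^ 2 / (n : ℝ) ^ 2 ≤ 2 * (m + 1) ^ 2 / n :=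
      div_le_div_of_nonneg_left (by positivity) hn0 (by nlinarith)
    rw [add_div] at h3
    have h5 : 2 / (n : ℝ) ^ 2 * ((Tc x α : ℝ) - n * p α) ^ 2
        = 2 * ((Tc x α : ℝ) - n * p α) ^ 2 / (n : ℝ) ^ 2 := by ring
    linarith
  rw [Ew_add, Ew_const_mul, Ew_const (fun _ => hp.2)] at h1
  have h2 := mul_le_mul_of_nonneg_left (Tc_var_le (n := n) hp α)
    (by positivity : 0 ≤ 2 / (n : ℝ) ^ 2)
  have h3 : 2 / (n : ℝ) ^ 2 * n = 2 / n := by field_simp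
  rw [add_div]
  linarith

/-- Codes for the joint counts given both marginals whose expected length is asymptotically the
entropy of the conditional Gaussian. -/
lemma JC_main (hQpos : ∀ y x, 0 < Q y x) (hQcol : ∀ x, ∑ y, Q y x = 1) :
    ∃ κ : (n : ℕ) → (Fin n → Fin (k + 1)) → (Fin (m + 1) → ℕ) → (Fin k × Fin m → ℤ) → ℝ,
      (∀ n y t v, 0 < κ n y t v) ∧
      (∀ n y t, ∀ s : Finset (Fin k × Fin m → ℤ), ∑ v ∈ s, κ n y t v ≤ 1) ∧
      (∃ C, ∀ n : ℕ, 1 ≤ n → ∀ q ∈ stdCorner m,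
        E2 (n := n) Q (em q) (fun x y => - Real.log (κ n y (Tc x) (Nv x y)))
          - (k * m : ℝ) / 2 * Real.log n ≤ C) ∧
      (∀ q ∈ stdCorner m, (∀ x, 0 < em q x) → ∀ ε > 0, ∀ᶠ n : ℕ in atTop,
        E2 (n := n) Q (em q) (fun x y => - Real.log (κ n y (Tc x) (Nv x y)))
          - (k * m : ℝ) / 2 * Real.log n
          ≤ (k * m : ℝ) / 2 * Real.log (2 * π) + (k * m : ℝ) / 2
            + (k * (∑ α, Real.log (em q α)) + (∑ α, ∑ c, Real.log (Q c α))
              - Real.log (Gk Q (em q)).det) / 2 + ε) := by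
  obtain ⟨C₀, hC₀, hκ⟩ := code_joint (m := m) hQpos hQcol
  obtain ⟨C₁, hC₁, hquad⟩ := quad_joint (m := m) hQpos hQcol
  choose κ hκ0 hκ1 hκ2 using hκ
  -- expectation over the output for a fixed input word
  have inner : ∀ n : ℕ, 1 ≤ n → ∀ x : Fin n → Fin (m + 1),
      Ew (fun i c => Q c (x i)) (fun y => - Real.log (κ n y (Tc x) (Nv x y)))
      ≤ (k * m : ℝ) / 2 * Real.log (2 * π) + (k * m : ℝ) / 2 * Real.log n + (k * m : ℝ) / 2
        + (k * m * (m + 1) / 2 + C₁ / 2) / n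
        + (k * (∑ α, Real.log (Fb x α)) + (∑ α, ∑ c, Real.log (Q c α))
              - Real.log (Gk Q (Fb x)).det) / 2 + C₀ * ∑ α, ((Tc x α : ℝ) + 1)⁻¹ := by
    intro n hn x
    have hn0 : (0 : ℝ) < n := by exact_mod_cast hn
    have h1 := Ew_mono (ρ := fun i c => Q c (x i)) (fun i c => (hQpos c (x i)).le)
      (fun y => hκ2 n y (Tc x) x rfl)
    have hs : ∀ i : Fin n, ∑ c, Q c (x i) = 1 := fun i => hQcol (x i)
    rw [Ew_add, Ew_add, Ew_div_const, Ew_const hs, Ew_const hs] at h1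
    have h2 := hquad n hn x
    have hN : (0 : ℝ) < n + m + 1 := by positivity
    have hFpd : (Gk Q (Fb x)).PosDef := Gk_posDef hQpos hQcol (Fb_mem x).1
        (exists_pos_of_simplex hQpos hQcol (Fb_mem x))
    have h3 : Real.log (Gk Q (fun α => (Tc x α : ℝ) + 1)).det
        = k * Real.log (n + m + 1) + Real.log (Gk Q (Fb x)).det := by
      rw [Tc_eq_Fb, Gk_smul, Matrix.det_smul, Fintype.card_fin,
        Real.log_mul (by positivity) hFpd.det_pos.ne', Real.log_pow]
    have h4 : ∑ α, (k * Real.log ((Tc x α : ℝ) + 1) + ∑ c, Real.log (Q c α))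
        = k * (m + 1) * Real.log (n + m + 1) + k * (∑ α, Real.log (Fb x α))
          + ∑ α, ∑ c, Real.log (Q c α) := by
      rw [Finset.sum_add_distrib]
      congr 1
      have : ∀ α, (k : ℝ) * Real.log ((Tc x α : ℝ) + 1)
          = k * Real.log (n + m + 1) + k * Real.log (Fb x α) := by
        intro α
        rw [show (Tc x α : ℝ) + 1 = (n + m + 1) * Fb x α from congr_fun (Tc_eq_Fb x) α,
          Real.log_mul hN.ne' (Fb_pos x α).ne']
        ring
      simp only [this, Finset.sum_add_distrib, ← Finset.mul_sum, Finset.sum_const,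
        Finset.card_univ, Fintype.card_fin, nsmul_eq_mul]
      push_cast
      ring
    have h5 : Real.log (n + m + 1) ≤ Real.log n + (m + 1) / n := by
      have := Real.log_le_sub_one_of_pos (div_pos hN hn0)
      rw [Real.log_div hN.ne' hn0.ne'] at this
      have e : ((n : ℝ) + m + 1) / n - 1 = (m + 1) / n := by field_simp; ring
      linarith
    have h6 := mul_le_mul_of_nonneg_left h5 (by positivity : (0 : ℝ) ≤ (k * m : ℝ) / 2)
    rw [h3, h4] at h1
    have e : (k * m * (m + 1) / 2 + C₁ / 2) / (n : ℝ)
        = (k * m : ℝ) / 2 * ((m + 1) / n) + C₁ / n / 2 := by ring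
    rw [e]
    have e2 : (k * (m + 1) * Real.log (n + m + 1) + k * (∑ α, Real.log (Fb x α))
          + (∑ α, ∑ c, Real.log (Q c α)) - (k * Real.log (n + m + 1)
            + Real.log (Gk Q (Fb x)).det)) / 2 = (k * m : ℝ) / 2 * Real.log (n + m + 1)
          + (k * (∑ α, Real.log (Fb x α)) + (∑ α, ∑ c, Real.log (Q c α))
              - Real.log (Gk Q (Fb x)).det) / 2 := by ring
    rw [e2] at h1
    linarith
  -- expectation over the input word
  have outer : ∀ n : ℕ, 1 ≤ n → ∀ q ∈ stdCorner m,
      E2 (n := n) Q (em q) (fun x y => - Real.log (κ n y (Tc x) (Nv x y)))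
          - (k * m : ℝ) / 2 * Real.log n
      ≤ (k * m : ℝ) / 2 * Real.log (2 * π) + (k * m : ℝ) / 2
        + (k * m * (m + 1) / 2 + C₁ / 2) / n
        + (k * (∑ α, Ew (fun _ : Fin n => em q) (fun x => Real.log (Fb x α)))
            + (∑ α, ∑ c, Real.log (Q c α))
            - Ew (fun _ : Fin n => em q) (fun x => Real.log (Gk Q (Fb x)).det)) / 2
        + C₀ * ∑ α, Ew (fun _ : Fin n => em q) (fun x => ((Tc x α : ℝ) + 1)⁻¹) := by
    intro n hn q hq
    have hp := em_mem hq
    have h1 := Ew_mono (ρ := fun _ : Fin n => em q) (fun _ => hp.1) (fun x => inner n hn x)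
    have hs : ∀ i : Fin n, ∑ c, em q c = 1 := fun _ => hp.2
    rw [Ew_add, Ew_add, Ew_const hs, Ew_div_const, Ew_sub, Ew_add, Ew_const hs, Ew_const_mul,
      Ew_const_mul, Ew_sum, Ew_sum] at h1
    have : E2 (n := n) Q (em q) (fun x y => - Real.log (κ n y (Tc x) (Nv x y)))
      = Ew (fun _ : Fin n => em q) (fun x => Ew (fun i c => Q c (x i))
        (fun y => - Real.log (κ n y (Tc x) (Nv x y)))) := rfl
    rw [this]
    linarith
  obtain ⟨C₂, hC₂0, hC₂⟩ := exists_bound_simplex (continuousOn_logdetGk (m := m) hQpos hQcol)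
  refine ⟨κ, hκ0, hκ1, ?_, ?_⟩
  · refine ⟨(k * m : ℝ) / 2 * Real.log (2 * π) + (k * m : ℝ) / 2
        + (k * m * (m + 1) / 2 + C₁ / 2) + ((∑ α, ∑ c, Real.log (Q c α)) + C₂) / 2
        + C₀ * (m + 1), fun n hn q hq => (outer n hn q hq).trans ?_⟩
    have hp := em_mem hq
    have hs : ∀ i : Fin n, ∑ c, em q c = 1 := fun _ => hp.2
    have h1 : (k * m * (m + 1) / 2 + C₁ / 2) / (n : ℝ) ≤ k * m * (m + 1) / 2 + C₁ / 2 :=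
      div_le_self (by positivity) (by exact_mod_cast hn)
    have h2 : k * (∑ α, Ew (fun _ : Fin n => em q) (fun x => Real.log (Fb x α))) ≤ 0 := by
      refine mul_nonpos_of_nonneg_of_nonpos (by positivity) (Finset.sum_nonpos fun α _ => ?_)
      exact (Ew_mono (fun _ => hp.1) fun x => logFb_nonpos x α).trans (Ew_const hs 0).le
    have h3 : - C₂ ≤ Ew (fun _ : Fin n => em q) (fun x => Real.log (Gk Q (Fb x)).det) := by
      rw [← Ew_const hs (-C₂)]
      exact Ew_mono (fun _ => hp.1) fun x => (abs_le.1 (hC₂ _ (Fb_mem x))).1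
    have h4 : ∑ α, Ew (fun _ : Fin n => em q) (fun x => ((Tc x α : ℝ) + 1)⁻¹) ≤ m + 1 := by
      refine (Finset.sum_le_sum fun α _ => inv_mean_one hp α).trans ?_
      simp
    have h5 := mul_le_mul_of_nonneg_left h4 hC₀
    linarith
  · intro q hq hqpos ε hε
    have hp := em_mem hq
    obtain ⟨C₃, hC₃0, hC₃⟩ := cont_quad (isCompact_simplex (m + 1))
      (continuousOn_logdetGk hQpos hQcol) hp (half_pos hε)
    have key : ∃ D : ℝ, ∀ n : ℕ, 1 ≤ n →
        E2 (n := n) Q (em q) (fun x y => - Real.log (κ n y (Tc x) (Nv x y)))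
          - (k * m : ℝ) / 2 * Real.log n
        ≤ (k * m : ℝ) / 2 * Real.log (2 * π) + (k * m : ℝ) / 2
            + (k * (∑ α, Real.log (em q α)) + (∑ α, ∑ c, Real.log (Q c α))
              - Real.log (Gk Q (em q)).det) / 2 + ε / 4 + D / n := by
      refine ⟨(k * m * (m + 1) / 2 + C₁ / 2) + k * (∑ α, (em q α)⁻¹) / 2
        + C₃ * ((m + 1) * (2 + 2 * (m + 1) ^ 2)) / 2
        + C₀ * ∑ α, (2 / em q α + 4 / em q α ^ 2), fun n hn => (outer n hn q hq).trans ?_⟩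
      have hs : ∀ i : Fin n, ∑ c, em q c = 1 := fun _ => hp.2
      have h2 : ∑ α, Ew (fun _ : Fin n => em q) (fun x => Real.log (Fb x α))
          ≤ (∑ α, Real.log (em q α)) + (∑ α, (em q α)⁻¹) / n := by
        rw [Finset.sum_div, ← Finset.sum_add_distrib]
        exact Finset.sum_le_sum fun α _ => logFb_mean hp hn (hqpos α)
      have h3 : Real.log (Gk Q (em q)).det - ε / 2 - C₃ * ((m + 1) * (2 + 2 * (m + 1) ^ 2)) / n
          ≤ Ew (fun _ : Fin n => em q) (fun x => Real.log (Gk Q (Fb x)).det) := by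
        have h := Ew_mono (ρ := fun _ : Fin n => em q) (fun _ => hp.1)
          (g := fun x => (Real.log (Gk Q (em q)).det - ε / 2) - C₃ * ∑ α, (Fb x α - em q α) ^ 2)
          (h := fun x => Real.log (Gk Q (Fb x)).det)
          (fun x => by linarith [(abs_le.1 (hC₃ _ (Fb_mem x))).1])
        rw [Ew_sub, Ew_const hs, Ew_const_mul, Ew_sum] at h
        have h' : ∑ α, Ew (fun _ : Fin n => em q) (fun x => (Fb x α - em q α) ^ 2)
            ≤ (m + 1) * ((2 + 2 * (m + 1) ^ 2) / n) := by
          refine (Finset.sum_le_sum fun α _ => Fb_sq_mean hp hn α).trans ?_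
          simp
        have hCm := mul_le_mul_of_nonneg_left h' hC₃0
        have e : C₃ * ((m + 1) * (2 + 2 * (m + 1) ^ 2)) / (n : ℝ)
            = C₃ * ((m + 1) * ((2 + 2 * (m + 1) ^ 2) / n)) := by ring
        linarith
      have h4 : ∑ α, Ew (fun _ : Fin n => em q) (fun x => ((Tc x α : ℝ) + 1)⁻¹)
          ≤ (∑ α, (2 / em q α + 4 / em q α ^ 2)) / n := by
        rw [Finset.sum_div]
        exact Finset.sum_le_sum fun α _ => inv_mean hp hn (hqpos α)
      have h5 := mul_le_mul_of_nonneg_left h4 hC₀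
      have h6 := mul_le_mul_of_nonneg_left h2 (Nat.cast_nonneg k : (0 : ℝ) ≤ k)
      have e : ((k * m * (m + 1) / 2 + C₁ / 2) + k * (∑ α, (em q α)⁻¹) / 2
        + C₃ * ((m + 1) * (2 + 2 * (m + 1) ^ 2)) / 2
        + C₀ * ∑ α, (2 / em q α + 4 / em q α ^ 2)) / (n : ℝ)
        = (k * m * (m + 1) / 2 + C₁ / 2) / n + (k * ((∑ α, (em q α)⁻¹) / n)) / 2
        + (C₃ * ((m + 1) * (2 + 2 * (m + 1) ^ 2)) / n) / 2
        + C₀ * ((∑ α, (2 / em q α + 4 / em q α ^ 2)) / n) := by ring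
      rw [e]
      rw [mul_add] at h6
      linarith
    obtain ⟨D, hD⟩ := key
    filter_upwards [(tendsto_const_div_atTop_nhds_zero_nat D).eventually
      (gt_mem_nhds (by linarith : (0 : ℝ) < ε / 2)), eventually_ge_atTop 1] with n h1 hn
    linarith [hD n hn]

end jointlen

/-! ### Counting words with prescribed joint letter counts -/

/-- Number of sites carrying a given pair of input and output letters. -/
def Nf {A B : Type*} [DecidableEq A] [DecidableEq B] {n : ℕ} (x : Fin n → A) (y : Fin n → B)
    (w : A × B) : ℕ := cnt (fun w' => w' = w) (fun s => (x s, y s))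

lemma cnt_succ {α : Type*} {n : ℕ} (P : α → Prop) [DecidablePred P] (z : Fin (n + 1) → α) :
    cnt P z = (if P (z 0) then 1 else 0) + cnt P (fun i => z i.succ) := by
  simp only [cnt, Finset.card_filter, Fin.sum_univ_succ]

lemma sum_Nf_left {A B : Type*} [DecidableEq A] [DecidableEq B] [Fintype A] {n : ℕ}
    (x : Fin n → A) (y : Fin n → B) (c : B) :
    ∑ α, Nf x y (α, c) = cnt (fun c' => c' = c) y := by
  simp only [Nf, cnt, Finset.card_filter]
  rw [Finset.sum_comm]
  refine Finset.sum_congr rfl fun i _ => ?_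
  simp only [Prod.mk.injEq]
  by_cases h : y i = c <;> simp [h]

lemma sum_Nf_right {A B : Type*} [DecidableEq A] [DecidableEq B] [Fintype B] {n : ℕ}
    (x : Fin n → A) (y : Fin n → B) (α : A) :
    ∑ c, Nf x y (α, c) = cnt (fun a => a = α) x := by
  simp only [Nf, cnt, Finset.card_filter]
  rw [Finset.sum_comm]
  refine Finset.sum_congr rfl fun i _ => ?_
  simp only [Prod.mk.injEq]
  by_cases h : x i = α <;> simp [h]

/-- The number of input words having prescribed joint counts with a given output word is at most
(in fact equal to, when nonzero) a product of multinomial coefficients. -/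
lemma count_le {A B : Type*} [DecidableEq A] [DecidableEq B] [Fintype A] [Fintype B] :
    ∀ (n : ℕ) (y : Fin n → B) (N : A × B → ℕ),
      (univ.filter fun x : Fin n → A => ∀ w, Nf x y w = N w).card * ∏ w, (N w).factorial
        ≤ ∏ c, (cnt (fun c' => c' = c) y).factorial
  | 0, y, N => by
    by_cases h : ∀ w, 0 = N w
    · have hN : ∏ w, (N w).factorial = 1 := Finset.prod_eq_one fun w _ => by simp [← h w]
      have hS : 1 ≤ ∏ c, (cnt (fun c' => c' = c) y).factorial :=
        Finset.prod_pos fun c _ => Nat.factorial_pos _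
      rw [hN, mul_one]
      exact ((Finset.card_le_univ _).trans (by simp)).trans hS
    · have : (univ.filter fun x : Fin 0 → A => ∀ w, Nf x y w = N w) = ∅ := by
        rw [Finset.filter_eq_empty_iff]
        intro x _ hx
        exact h fun w => by rw [← hx w]; simp [Nf, cnt]
      rw [this, Finset.card_empty, zero_mul]; exact Nat.zero_le _
  | n + 1, y, N => by
    set c := y 0 with hc
    set y' : Fin n → B := fun i => y i.succ with hy'
    have hcard : (univ.filter fun x : Fin (n + 1) → A => ∀ w, Nf x y w = N w).card
        = ∑ α, (univ.filter fun x' : Fin n → A =>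
            ∀ w, (if (α, c) = w then 1 else 0) + Nf x' y' w = N w).card := by
      simp only [Finset.card_filter]
      rw [← (Fin.consEquiv fun _ : Fin (n + 1) => A).sum_comp, Fintype.sum_prod_type]
      refine Finset.sum_congr rfl fun α _ => Finset.sum_congr rfl fun x' _ => ?_
      simp only [Nf, cnt_succ]
      simp [Fin.consEquiv, hc, hy']
    have hstep : ∀ α, (univ.filter fun x' : Fin n → A =>
            ∀ w, (if (α, c) = w then 1 else 0) + Nf x' y' w = N w).card
          * ∏ w, (N w).factorial
        ≤ N (α, c) * ∏ c, (cnt (fun c' => c' = c) y').factorial := by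
      intro α
      by_cases h0 : N (α, c) = 0
      · have : (univ.filter fun x' : Fin n → A =>
            ∀ w, (if (α, c) = w then 1 else 0) + Nf x' y' w = N w) = ∅ := by
          rw [Finset.filter_eq_empty_iff]
          intro x _ hx
          have := hx (α, c)
          simp [h0] at this
        rw [this, Finset.card_empty, zero_mul]; exact Nat.zero_le _
      · have hsub : (univ.filter fun x' : Fin n → A =>
            ∀ w, (if (α, c) = w then 1 else 0) + Nf x' y' w = N w)
            ⊆ (univ.filter fun x' : Fin n → A =>
              ∀ w, Nf x' y' w = Function.update N (α, c) (N (α, c) - 1) w) := by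
          intro x hx
          simp only [Finset.mem_filter, Finset.mem_univ, true_and] at hx ⊢
          intro w
          have := hx w
          by_cases hw : (α, c) = w
          · subst hw; simp at this ⊢; omega
          · rw [Function.update_of_ne (Ne.symm hw)]; simpa [hw] using this
        have hprod : ∏ w, (N w).factorial = N (α, c)
            * ∏ w, (Function.update N (α, c) (N (α, c) - 1) w).factorial := by
          rw [← Finset.mul_prod_erase univ (fun w => (N w).factorial) (Finset.mem_univ (α, c)),
            ← Finset.mul_prod_erase univ
              (fun w => (Function.update N (α, c) (N (α, c) - 1) w).factorial)
              (Finset.mem_univ (α, c)), ← mul_assoc]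
          congr 1
          · simp [Nat.mul_factorial_pred h0]
          · refine Finset.prod_congr rfl fun w hw => ?_
            rw [Function.update_of_ne (Finset.ne_of_mem_erase hw)]
        rw [hprod]
        calc _ = N (α, c) * ((univ.filter fun x' : Fin n → A =>
              ∀ w, (if (α, c) = w then 1 else 0) + Nf x' y' w = N w).card
              * ∏ w, (Function.update N (α, c) (N (α, c) - 1) w).factorial) := by ring
          _ ≤ _ := Nat.mul_le_mul_left _ ((Nat.mul_le_mul_right _ (Finset.card_le_card hsub)).trans
            (count_le n y' _))
    rcases Finset.eq_empty_or_nonempty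
      (univ.filter fun x : Fin (n + 1) → A => ∀ w, Nf x y w = N w) with he | ⟨x, hx⟩
    · rw [he, Finset.card_empty, zero_mul]; exact Nat.zero_le _
    · simp only [Finset.mem_filter, Finset.mem_univ, true_and] at hx
      have hS : ∑ α, N (α, c) = cnt (fun c' => c' = c) y := by
        simp only [← hx]; exact sum_Nf_left x y c
      have hSc : cnt (fun c' => c' = c) y = cnt (fun c' => c' = c) y' + 1 := by
        rw [cnt_succ]; simp [hc, hy', add_comm]
      have hprod : ∏ c, (cnt (fun c' => c' = c) y).factorial
          = cnt (fun c' => c' = c) y * ∏ c, (cnt (fun c' => c' = c) y').factorial := by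
        rw [← Finset.mul_prod_erase univ (fun c => (cnt (fun c' => c' = c) y).factorial)
            (Finset.mem_univ c), ← Finset.mul_prod_erase univ
            (fun c => (cnt (fun c' => c' = c) y').factorial) (Finset.mem_univ c), ← mul_assoc]
        congr 1
        · simp only [hSc]; rw [Nat.factorial_succ]
        · refine Finset.prod_congr rfl fun w hw => ?_
          have hw' : ¬ y 0 = w := fun h => Finset.ne_of_mem_erase hw h.symm
          rw [cnt_succ (fun c' => c' = w) y, if_neg hw', zero_add]
      rw [hcard, Finset.sum_mul, hprod, ← hS, Finset.sum_mul]
      exact Finset.sum_le_sum fun α _ => hstep α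

section
variable {m k n : ℕ}

/-- The letter counts of both words and the truncated table of joint counts determine the full
table. -/
lemma Nf_determined {x x' : Fin n → Fin (m + 1)} {y : Fin n → Fin (k + 1)} (hT : Tc x = Tc x')
    (hN : Nv x y = Nv x' y) (w : Fin (m + 1) × Fin (k + 1)) : Nf x y w = Nf x' y w := by
  have h1 : ∀ (i : Fin m) (j : Fin k), Nf x y (i.castSucc, j.castSucc)
      = Nf x' y (i.castSucc, j.castSucc) := by
    intro i j
    have := congrFun hN (j, i)
    simp only [Nv] at this
    exact_mod_cast this
  have h2 : ∀ (α : Fin (m + 1)) (j : Fin k), Nf x y (α, j.castSucc) = Nf x' y (α, j.castSucc) := by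
    intro α j
    induction α using Fin.lastCases with
    | cast i => exact h1 i j
    | last =>
      have e := (sum_Nf_left x y j.castSucc).trans (sum_Nf_left x' y j.castSucc).symm
      rw [Fin.sum_univ_castSucc, Fin.sum_univ_castSucc] at e
      simp only [h1] at e
      omega
  obtain ⟨α, c⟩ := w
  induction c using Fin.lastCases with
  | cast j => exact h2 α j
  | last =>
    have e := (sum_Nf_right x y α).trans
      ((congrFun hT α).trans (sum_Nf_right x' y α).symm)
    rw [Fin.sum_univ_castSucc, Fin.sum_univ_castSucc] at e
    simp only [h2] at e
    omega

/-- A code for input words given their letter counts and the output word: encode the joint counts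
by `κ`, then use the uniform distribution on input words with these joint counts. -/
def Vc (κ : (Fin n → Fin (k + 1)) → (Fin (m + 1) → ℕ) → (Fin k × Fin m → ℤ) → ℝ)
    (x : Fin n → Fin (m + 1)) (y : Fin n → Fin (k + 1)) : ℝ :=
  κ y (Tc x) (Nv x y) * ((∏ w, ((Nf x y w).factorial : ℝ))
    / ∏ c, ((cnt (fun c' => c' = c) y).factorial : ℝ))

lemma Vc_pos {κ : (Fin n → Fin (k + 1)) → (Fin (m + 1) → ℕ) → (Fin k × Fin m → ℤ) → ℝ}
    (h0 : ∀ y t v, 0 < κ y t v) (x : Fin n → Fin (m + 1)) (y : Fin n → Fin (k + 1)) :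
    0 < Vc κ x y := by
  unfold Vc
  refine mul_pos (h0 _ _ _) (div_pos ?_ ?_) <;>
  exact Finset.prod_pos fun _ _ => by exact_mod_cast Nat.factorial_pos _

/-- The code `Vc` is a sub-probability on the input words with given letter counts. -/
lemma Vc_sum {κ : (Fin n → Fin (k + 1)) → (Fin (m + 1) → ℕ) → (Fin k × Fin m → ℤ) → ℝ}
    (h0 : ∀ y t v, 0 < κ y t v) (h1 : ∀ y t s, ∑ v ∈ s, κ y t v ≤ 1)
    (y : Fin n → Fin (k + 1)) (t : Fin (m + 1) → ℕ) :
    ∑ x ∈ univ.filter (fun x : Fin n → Fin (m + 1) => Tc x = t), Vc κ x y ≤ 1 := by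
  classical
  set A := univ.filter (fun x : Fin n → Fin (m + 1) => Tc x = t)
  refine le_trans ?_ (h1 y t (A.image fun x => Nv x y))
  rw [← Finset.sum_fiberwise_of_maps_to
    (fun x hx => Finset.mem_image_of_mem (fun x => Nv x y) hx)]
  refine Finset.sum_le_sum fun ν hν => ?_
  obtain ⟨x0, hx0, rfl⟩ := Finset.mem_image.1 hν
  have hx0' : Tc x0 = t := (Finset.mem_filter.1 hx0).2
  have hS : (0 : ℝ) < ∏ c, ((cnt (fun c' => c' = c) y).factorial : ℝ) :=
    Finset.prod_pos fun _ _ => by exact_mod_cast Nat.factorial_pos _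
  have hall : ∀ x ∈ A.filter (fun x => Nv x y = Nv x0 y), Vc κ x y
      = κ y t (Nv x0 y) * ((∏ w, ((Nf x0 y w).factorial : ℝ))
        / ∏ c, ((cnt (fun c' => c' = c) y).factorial : ℝ)) := by
    intro x hx
    obtain ⟨hx1, hx2⟩ := Finset.mem_filter.1 hx
    have hx3 : Tc x = t := (Finset.mem_filter.1 hx1).2
    have : ∀ w, Nf x y w = Nf x0 y w := Nf_determined (hx3.trans hx0'.symm) hx2
    simp only [Vc, hx3, hx2, this]
  rw [Finset.sum_congr rfl hall, Finset.sum_const, nsmul_eq_mul]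
  have hsub : A.filter (fun x => Nv x y = Nv x0 y)
      ⊆ univ.filter (fun x : Fin n → Fin (m + 1) => ∀ w, Nf x y w = Nf x0 y w) := by
    intro x hx
    obtain ⟨hx1, hx2⟩ := Finset.mem_filter.1 hx
    have hx3 : Tc x = t := (Finset.mem_filter.1 hx1).2
    exact Finset.mem_filter.2 ⟨Finset.mem_univ _, Nf_determined (hx3.trans hx0'.symm) hx2⟩
  have hc : ((A.filter (fun x => Nv x y = Nv x0 y)).card : ℝ)
      * ∏ w, ((Nf x0 y w).factorial : ℝ) ≤ ∏ c, ((cnt (fun c' => c' = c) y).factorial : ℝ) := by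
    exact_mod_cast (Nat.mul_le_mul_right _ (Finset.card_le_card hsub)).trans
      (count_le n y (Nf x0 y))
  have hc' : ((A.filter (fun x => Nv x y = Nv x0 y)).card : ℝ)
      * ((∏ w, ((Nf x0 y w).factorial : ℝ))
        / ∏ c, ((cnt (fun c' => c' = c) y).factorial : ℝ)) ≤ 1 := by
    rw [← mul_div_assoc]; exact (div_le_one hS).2 hc
  calc _ = κ y t (Nv x0 y) * (((A.filter (fun x => Nv x y = Nv x0 y)).card : ℝ)
      * ((∏ w, ((Nf x0 y w).factorial : ℝ))
        / ∏ c, ((cnt (fun c' => c' = c) y).factorial : ℝ))) := by ring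
    _ ≤ _ := mul_le_of_le_one_right (h0 _ _ _).le hc'

lemma freqVec_eq_iff {x x' : Fin n → Fin (m + 1)} : freqVec x = freqVec x' ↔ Tc x = Tc x' := by
  rcases Nat.eq_zero_or_pos n with rfl | hn
  · rw [Subsingleton.elim x x']; simp
  · have hn0 : (n : ℝ) ≠ 0 := by exact_mod_cast hn.ne'
    constructor
    · intro h; funext α
      have := congrFun h α
      simp only [freqVec] at this
      rw [div_left_inj' hn0] at this
      exact_mod_cast this
    · intro h; funext α
      have : cnt (fun a => a = α) x = cnt (fun a => a = α) x' := congrFun h α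
      unfold cnt at this
      simp only [freqVec, this]

lemma Tc_eq_of_Tv {x x' : Fin n → Fin (m + 1)} (h : Tv x = Tv x') : Tc x = Tc x' := by
  have h1 : ∀ i : Fin m, Tc x i.castSucc = Tc x' i.castSucc := fun i => by
    have := congrFun h i
    simp only [Tv] at this
    exact_mod_cast this
  funext α
  induction α using Fin.lastCases with
  | cast i => exact h1 i
  | last =>
    have e : ∑ α, Tc x α = ∑ α, Tc x' α := by
      exact_mod_cast (Tc_sum x).trans (Tc_sum x').symm
    rw [Fin.sum_univ_castSucc, Fin.sum_univ_castSucc] at e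
    simp only [h1] at e
    omega

end

/-! ### The prior measure and the joint weights -/

section mu
variable {m k n : ℕ} {μ : Measure (Fin (m + 1) → ℝ)} {f : (Fin m → ℝ) → ℝ}
  {Q : Matrix (Fin (k + 1)) (Fin (m + 1)) ℝ}

lemma dens_integrableOn (hf : IsContDensity (a := m + 1) μ f) {h : (Fin m → ℝ) → ℝ}
    (hh : ContinuousOn h (stdCorner m)) : IntegrableOn (fun q => h q * f q) (stdCorner m) :=
  (hh.mul hf.1).integrableOn_compact (isCompact_stdCorner m)

lemma dens_bound (hf : IsContDensity (a := m + 1) μ f) :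
    ∃ B : ℝ, 0 ≤ B ∧ ∀ q ∈ stdCorner m, f q ≤ B := by
  obtain ⟨B, hB⟩ := (isCompact_stdCorner m).exists_bound_of_continuousOn hf.1
  refine ⟨max B 0, le_max_right _ _, fun q hq => ?_⟩
  exact ((le_abs_self _).trans (hB q hq)).trans (le_max_left _ _)

lemma mu_ae (hf : IsContDensity (a := m + 1) μ f) [IsProbabilityMeasure μ] :
    ∀ᵐ p ∂μ, p ∈ simplex (m + 1) := by
  have hms : MeasurableSet (simplex (m + 1)) := (isCompact_simplex (m + 1)).isClosed.measurableSet
  have h := hf.2.2.2 ((simplex (m + 1))ᶜ.indicator fun _ => (1 : ℝ))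
    (measurable_const.indicator hms.compl) ⟨1, fun p => by
      by_cases hp : p ∈ (simplex (m + 1))ᶜ <;> simp [Set.indicator, hp]⟩
  have h0 : (∫ q in stdCorner m,
      ((simplex (m + 1))ᶜ.indicator (fun _ => (1 : ℝ))) (em q) * f q) = 0 := by
    rw [setIntegral_congr_fun (isClosed_stdCorner m).measurableSet (g := fun _ => (0 : ℝ))]
    · simp
    · intro q hq
      have := em_mem hq
      simp [Set.indicator, this]
  have h1 : (∫ p, (simplex (m + 1))ᶜ.indicator (fun _ => (1 : ℝ)) p ∂μ) = 0 := h.trans h0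
  rw [integral_indicator hms.compl] at h1
  simp [Measure.real, ENNReal.toReal_eq_zero_iff] at h1
  exact h1

/-- The density formula, for functions that are continuous on the simplex. -/
lemma mu_integral (hf : IsContDensity (a := m + 1) μ f) [IsProbabilityMeasure μ]
    {g : (Fin (m + 1) → ℝ) → ℝ} (hg : ContinuousOn g (simplex (m + 1))) :
    ∫ p, g p ∂μ = ∫ q in stdCorner m, g (em q) * f q := by
  classical
  have hms : MeasurableSet (simplex (m + 1)) := (isCompact_simplex (m + 1)).isClosed.measurableSet
  obtain ⟨B, hB⟩ := (isCompact_simplex (m + 1)).exists_bound_of_continuousOn hg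
  have hmeas : Measurable ((simplex (m + 1)).indicator g) := by
    rw [← Set.piecewise_eq_indicator]
    exact hg.measurable_piecewise continuousOn_const hms
  have h := hf.2.2.2 ((simplex (m + 1)).indicator g) hmeas ⟨max B 0, fun p => by
      by_cases hp : p ∈ simplex (m + 1)
      · rw [Set.indicator_of_mem hp]; exact (hB p hp).trans (le_max_left _ _)
      · rw [Set.indicator_of_notMem hp]; simp⟩
  have h1 : ∫ p, g p ∂μ = ∫ p, (simplex (m + 1)).indicator g p ∂μ := by
    refine integral_congr_ae ?_
    filter_upwards [mu_ae hf] with p hp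
    rw [Set.indicator_of_mem hp]
  rw [h1, h]
  refine setIntegral_congr_fun (isClosed_stdCorner m).measurableSet fun q hq => ?_
  have : em q ∈ simplex (m + 1) := em_mem (m := m) hq
  show (simplex (m + 1)).indicator g (em q) * f q = _
  rw [Set.indicator_of_mem this]

lemma wgt_eq (hf : IsContDensity (a := m + 1) μ f) [IsProbabilityMeasure μ]
    (x : Fin n → Fin (m + 1)) (y : Fin n → Fin (k + 1)) :
    wgt Q μ x y = ∫ q in stdCorner m, (∏ i, em q (x i) * Q (y i) (x i)) * f q :=
  mu_integral hf (Continuous.continuousOn (by fun_prop))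

/-- Averages with respect to the joint weights are mixtures of averages for fixed `p`. -/
lemma sum_wgt (hf : IsContDensity (a := m + 1) μ f) [IsProbabilityMeasure μ]
    (g : (Fin n → Fin (m + 1)) → (Fin n → Fin (k + 1)) → ℝ) :
    ∑ x, ∑ y, wgt Q μ x y * g x y = ∫ q in stdCorner m, E2 Q (em q) g * f q := by
  have hc : ∀ (x : Fin n → Fin (m + 1)) (y : Fin n → Fin (k + 1)), IntegrableOn
      (fun q => (∏ i, em q (x i) * Q (y i) (x i)) * g x y * f q) (stdCorner m) := fun x y =>
    dens_integrableOn hf (Continuous.continuousOn (by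
      have := continuous_em (m := m); fun_prop))
  simp only [E2_sum_eq, Finset.sum_mul]
  rw [integral_finsetSum _ fun x _ => integrable_finsetSum _ fun y _ => hc x y]
  refine Finset.sum_congr rfl fun x _ => ?_
  rw [integral_finsetSum _ fun y _ => hc x y]
  refine Finset.sum_congr rfl fun y _ => ?_
  rw [wgt_eq hf, ← integral_mul_const]
  congr 1; funext q; ring

/-- Mass of an input word under the prior. -/
def Mf (f : (Fin m → ℝ) → ℝ) (x : Fin n → Fin (m + 1)) : ℝ :=
  ∫ q in stdCorner m, (∏ i, em q (x i)) * f q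

lemma wgt_Mf (hf : IsContDensity (a := m + 1) μ f) [IsProbabilityMeasure μ]
    (x : Fin n → Fin (m + 1)) (y : Fin n → Fin (k + 1)) :
    wgt Q μ x y = Mf f x * ∏ i, Q (y i) (x i) := by
  rw [wgt_eq hf, Mf, ← integral_mul_const]
  congr 1; funext q; rw [Finset.prod_mul_distrib]; ring

lemma Mf_pos (hf : IsContDensity (a := m + 1) μ f) (x : Fin n → Fin (m + 1)) : 0 < Mf f x := by
  have hcont : ContinuousOn (fun q : Fin m → ℝ => ∏ i, em q (x i)) (stdCorner m) :=
    Continuous.continuousOn (by have := continuous_em (m := m); fun_prop)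
  have hi := dens_integrableOn hf hcont
  have hnn : 0 ≤ᵐ[volume.restrict (stdCorner m)] fun q => (∏ i, em q (x i)) * f q := by
    filter_upwards [em_pos_ae m] with q hq
    exact mul_nonneg (Finset.prod_nonneg fun i _ => (hq _).le) (hf.2.1 q)
  refine lt_of_le_of_ne (integral_nonneg_of_ae hnn) fun h => ?_
  have h0 := (integral_eq_zero_iff_of_nonneg_ae hnn hi).1 h.symm
  have h1 : (∫ q in stdCorner m, f q) = 0 := by
    rw [← integral_zero (Fin m → ℝ) ℝ (μ := volume.restrict (stdCorner m))]
    refine integral_congr_ae ?_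
    filter_upwards [em_pos_ae m, h0] with q hq hz
    have hp : 0 < ∏ i, em q (x i) := Finset.prod_pos fun i _ => hq _
    exact (mul_eq_zero.1 hz).resolve_left hp.ne'
  have h2 : (∫ q in stdCorner m, f q) = 1 := hf.2.2.1
  rw [h1] at h2; exact zero_ne_one h2

lemma wgt_pos (hQpos : ∀ y x, 0 < Q y x) (hf : IsContDensity (a := m + 1) μ f)
    [IsProbabilityMeasure μ] (x : Fin n → Fin (m + 1)) (y : Fin n → Fin (k + 1)) :
    0 < wgt Q μ x y := by
  rw [wgt_Mf hf]
  exact mul_pos (Mf_pos hf x) (Finset.prod_pos fun i _ => hQpos _ _)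

/-- Marginal mass of an output word. -/
def Py (Q : Matrix (Fin (k + 1)) (Fin (m + 1)) ℝ) (μ : Measure (Fin (m + 1) → ℝ))
    (y : Fin n → Fin (k + 1)) : ℝ := ∑ x, wgt Q μ x y

lemma Py_pos (hQpos : ∀ y x, 0 < Q y x) (hf : IsContDensity (a := m + 1) μ f)
    [IsProbabilityMeasure μ] (y : Fin n → Fin (k + 1)) : 0 < Py Q μ y :=
  Finset.sum_pos (fun x _ => wgt_pos hQpos hf x y) ⟨fun _ => 0, Finset.mem_univ _⟩

lemma sum_Pphi (y : Fin n → Fin (k + 1)) (g : (Fin (m + 1) → ℝ) → ℝ) [DecidableEq (Fin (m+1) → ℝ)] :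
    ∑ φ ∈ Finset.image (freqVec (a := m + 1) (n := n)) Finset.univ, Pphi Q μ φ y * g φ
      = ∑ x, wgt Q μ x y * g (freqVec x) := by
  classical
  rw [← Finset.sum_fiberwise_of_maps_to (g := freqVec (a := m + 1) (n := n))
    (t := Finset.image (freqVec (a := m + 1) (n := n)) Finset.univ)
    (fun x hx => Finset.mem_image_of_mem _ hx)]
  refine Finset.sum_congr rfl fun φ _ => ?_
  rw [Pphi, Finset.sum_mul]
  refine Finset.sum_congr (by congr) fun x hx => ?_
  rw [(Finset.mem_filter.1 hx).2]

lemma sum_Pphi' (y : Fin n → Fin (k + 1)) [DecidableEq (Fin (m+1) → ℝ)] :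
    ∑ φ ∈ Finset.image (freqVec (a := m + 1) (n := n)) Finset.univ, Pphi Q μ φ y = Py Q μ y := by
  have := sum_Pphi (Q := Q) (μ := μ) y (fun _ => 1)
  simpa [Py] using this

lemma Pphi_nonneg (hQpos : ∀ y x, 0 < Q y x) (hf : IsContDensity (a := m + 1) μ f)
    [IsProbabilityMeasure μ] (φ : Fin (m + 1) → ℝ) (y : Fin n → Fin (k + 1)) :
    0 ≤ Pphi Q μ φ y := by
  unfold Pphi
  exact Finset.sum_nonneg fun x _ => (wgt_pos hQpos hf x y).le

lemma Pphi_pos (hQpos : ∀ y x, 0 < Q y x) (hf : IsContDensity (a := m + 1) μ f)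
    [IsProbabilityMeasure μ] (x : Fin n → Fin (m + 1)) (y : Fin n → Fin (k + 1)) :
    0 < Pphi Q μ (freqVec x) y := by
  unfold Pphi
  exact Finset.sum_pos (fun x _ => wgt_pos hQpos hf x y) ⟨x, by simp⟩

lemma HFcond_eq (Q : Matrix (Fin (k + 1)) (Fin (m + 1)) ℝ) (μ : Measure (Fin (m + 1) → ℝ)) (n : ℕ) :
    HFcond Q μ n = ∑ y : Fin n → Fin (k + 1), -∑ x : Fin n → Fin (m + 1),
      wgt Q μ x y * Real.log (Pphi Q μ (freqVec x) y / Py Q μ y) := by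
  classical
  rw [HFcond, Finset.sum_neg_distrib]
  congr 1
  refine Finset.sum_congr rfl fun y _ => ?_
  rw [sum_Pphi', sum_Pphi y fun φ => Real.log (Pphi Q μ φ y / Py Q μ y)]

/-! ### Entropy inequalities -/

/-- Coding bound: the conditional entropy is at most the expected length of any code. -/
lemma HF_upper (hQpos : ∀ y x, 0 < Q y x) (hf : IsContDensity (a := m + 1) μ f)
    [IsProbabilityMeasure μ] {κ : (Fin n → Fin (k + 1)) → (Fin m → ℤ) → ℝ}
    (h0 : ∀ y v, 0 < κ y v) (h1 : ∀ y s, ∑ v ∈ s, κ y v ≤ 1) :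
    HFcond Q μ n ≤ ∫ q in stdCorner m, E2 Q (em q) (fun x y => -Real.log (κ y (Tv x))) * f q := by
  classical
  rw [← sum_wgt hf, Finset.sum_comm, HFcond_eq]
  refine Finset.sum_le_sum fun y _ => ?_
  set S := Finset.image (freqVec (a := m + 1) (n := n)) Finset.univ with hS
  -- recovers the integer counts from a frequency vector; also correct for `n = 0`
  let V : (Fin (m + 1) → ℝ) → (Fin m → ℤ) := fun φ i => round ((n : ℝ) * φ i.castSucc)
  have hV : ∀ x : Fin n → Fin (m + 1), V (freqVec x) = Tv x := by
    intro x; funext i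
    have : (n : ℝ) * freqVec x i.castSucc = ((Tv x i : ℤ) : ℝ) := by
      rcases Nat.eq_zero_or_pos n with rfl | hn
      · simp [Tv, cnt]
      · have hn0 : (n : ℝ) ≠ 0 := by exact_mod_cast hn.ne'
        simp only [freqVec, Tv, cnt]
        rw [mul_div_cancel₀ _ hn0]; simp
    show round ((n : ℝ) * freqVec x i.castSucc) = _
    rw [this, round_intCast]
  have hinj : Set.InjOn V S := by
    intro φ hφ φ' hφ' h
    simp only [hS, Finset.coe_image, Finset.coe_univ, Set.image_univ, Set.mem_range] at hφ hφ'
    obtain ⟨x, rfl⟩ := hφ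
    obtain ⟨x', rfl⟩ := hφ'
    rw [hV, hV] at h
    exact freqVec_eq_iff.2 (Tc_eq_of_Tv h)
  have hPy := Py_pos hQpos hf y
  have hg := gibbs S (fun φ => Pphi Q μ φ y) (fun φ => Py Q μ y * κ y (V φ))
    (fun φ _ => Pphi_nonneg hQpos hf φ y) (fun φ _ => mul_pos hPy (h0 _ _))
  have hle : ∑ φ ∈ S, Py Q μ y * κ y (V φ) ≤ Py Q μ y := by
    rw [← Finset.mul_sum, ← Finset.sum_image (f := fun v => κ y v) hinj]
    exact mul_le_of_le_one_right hPy.le (h1 y _)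
  rw [sum_Pphi', sum_Pphi y fun φ => Real.log (Pphi Q μ φ y / (Py Q μ y * κ y (V φ)))] at hg
  have hx : ∑ x, wgt Q μ x y * Real.log (Pphi Q μ (freqVec x) y / (Py Q μ y * κ y (V (freqVec x))))
      = ∑ x, wgt Q μ x y * Real.log (Pphi Q μ (freqVec x) y / Py Q μ y)
        + ∑ x, wgt Q μ x y * -Real.log (κ y (Tv x)) := by
    rw [← Finset.sum_add_distrib]
    refine Finset.sum_congr rfl fun x _ => ?_
    have hp := Pphi_pos hQpos hf x y
    rw [hV, ← div_div, Real.log_div (div_pos hp hPy).ne' (h0 _ _).ne']; ring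
  linarith

/-- Lower bound for the conditional entropy in terms of the joint entropy, the entropy of the
output word and a code for the input word given its letter frequencies. -/
lemma HF_lower (hQpos : ∀ y x, 0 < Q y x) (hf : IsContDensity (a := m + 1) μ f)
    [IsProbabilityMeasure μ] {V : (Fin n → Fin (m + 1)) → (Fin n → Fin (k + 1)) → ℝ}
    (h0 : ∀ x y, 0 < V x y)
    (h1 : ∀ y t, ∑ x ∈ univ.filter (fun x : Fin n → Fin (m + 1) => Tc x = t), V x y ≤ 1) :
    ∑ x, ∑ y, wgt Q μ x y * (Real.log (V x y) - Real.log (wgt Q μ x y))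
      + ∑ y : Fin n → Fin (k + 1), Py Q μ y * Real.log (Py Q μ y) ≤ HFcond Q μ n := by
  classical
  rw [Finset.sum_comm, HFcond_eq, ← Finset.sum_add_distrib]
  refine Finset.sum_le_sum fun y _ => ?_
  have hPy := Py_pos hQpos hf y
  -- Gibbs' inequality on each set of words with a common frequency vector
  have hkey : 0 ≤ ∑ x, wgt Q μ x y *
      Real.log (wgt Q μ x y / (Pphi Q μ (freqVec x) y * V x y)) := by
    rw [← Finset.sum_fiberwise_of_maps_to (g := freqVec (a := m + 1) (n := n))
      (t := Finset.image (freqVec (a := m + 1) (n := n)) Finset.univ)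
      (fun x hx => Finset.mem_image_of_mem _ hx)]
    refine Finset.sum_nonneg fun φ hφ => ?_
    obtain ⟨x0, _, rfl⟩ := Finset.mem_image.1 hφ
    have hg := gibbs (univ.filter fun x : Fin n → Fin (m + 1) => freqVec x = freqVec x0)
      (fun x => wgt Q μ x y) (fun x => Pphi Q μ (freqVec x0) y * V x y)
      (fun x _ => (wgt_pos hQpos hf x y).le)
      (fun x _ => mul_pos (Pphi_pos hQpos hf x0 y) (h0 x y))
    have hle : ∑ x ∈ univ.filter (fun x : Fin n → Fin (m + 1) => freqVec x = freqVec x0),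
        Pphi Q μ (freqVec x0) y * V x y ≤ Pphi Q μ (freqVec x0) y := by
      rw [← Finset.mul_sum]
      refine mul_le_of_le_one_right (Pphi_nonneg hQpos hf _ y) ?_
      simp only [freqVec_eq_iff]
      exact h1 y (Tc x0)
    have heq : ∑ x ∈ univ.filter (fun x : Fin n → Fin (m + 1) => freqVec x = freqVec x0),
        wgt Q μ x y = Pphi Q μ (freqVec x0) y := by
      rw [Pphi]
    rw [heq] at hg
    refine (by linarith : (0 : ℝ) ≤ _).trans (hg.trans (le_of_eq ?_))
    refine Finset.sum_congr rfl fun x hx => ?_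
    simp only [(Finset.mem_filter.1 hx).2]
  have hx : ∑ x, wgt Q μ x y * Real.log (wgt Q μ x y / (Pphi Q μ (freqVec x) y * V x y))
      = -∑ x, wgt Q μ x y * Real.log (Pphi Q μ (freqVec x) y / Py Q μ y)
        - ∑ x, wgt Q μ x y * (Real.log (V x y) - Real.log (wgt Q μ x y))
        - Py Q μ y * Real.log (Py Q μ y) := by
    rw [show Py Q μ y * Real.log (Py Q μ y) = ∑ x, wgt Q μ x y * Real.log (Py Q μ y) from by
      rw [← Finset.sum_mul]; rfl, ← Finset.sum_neg_distrib, ← Finset.sum_sub_distrib,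
      ← Finset.sum_sub_distrib]
    refine Finset.sum_congr rfl fun x _ => ?_
    have hp := Pphi_pos hQpos hf x y
    rw [Real.log_div (wgt_pos hQpos hf x y).ne' (mul_pos hp (h0 x y)).ne',
      Real.log_mul hp.ne' (h0 x y).ne', Real.log_div hp.ne' hPy.ne']; ring
  linarith

end mu

section low
variable {m k n : ℕ} {μ : Measure (Fin (m + 1) → ℝ)} {f : (Fin m → ℝ) → ℝ}
  {Q : Matrix (Fin (k + 1)) (Fin (m + 1)) ℝ}

lemma prod_letters (x : Fin n → Fin (m + 1)) (p : Fin (m + 1) → ℝ) :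
    ∏ i, p (x i) = ∏ α, p α ^ Tc x α := by
  rw [← Finset.prod_fiberwise_of_maps_to (g := x) (t := univ) (fun _ _ => Finset.mem_univ _)]
  refine Finset.prod_congr rfl fun α _ => ?_
  rw [Finset.prod_congr rfl (g := fun _ => p α) (fun i hi => by rw [(Finset.mem_filter.1 hi).2]),
    Finset.prod_const]
  rfl

lemma m1_eq (x : Fin n → Fin (m + 1)) : ∫ q in stdCorner m, ∏ i, em q (x i)
    = (∏ α, ((Tc x α).factorial : ℝ)) / ((n + m).factorial : ℝ) := by
  simp only [prod_letters]
  rw [dirichlet_nat]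
  have : ∑ α, Tc x α = n := by exact_mod_cast Tc_sum x
  rw [this]

lemma log_m1 (x : Fin n → Fin (m + 1)) : Real.log (∫ q in stdCorner m, ∏ i, em q (x i))
    = ∑ α, Real.log ((Tc x α).factorial : ℝ) - Real.log ((n + m).factorial : ℝ) := by
  have h : ∀ j : ℕ, (0 : ℝ) < (j.factorial : ℝ) := fun j => by exact_mod_cast Nat.factorial_pos j
  rw [m1_eq, Real.log_div (Finset.prod_pos fun α _ => h _).ne' (h _).ne',
    Real.log_prod (fun α _ => (h _).ne')]

lemma continuousOn_flogf (hf : IsContDensity (a := m + 1) μ f) :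
    ContinuousOn (fun q => f q * Real.log (f q)) (stdCorner m) :=
  Real.continuous_mul_log.comp_continuousOn hf.1

lemma Mf_sum (hf : IsContDensity (a := m + 1) μ f) (g : (Fin n → Fin (m + 1)) → ℝ) :
    ∑ x, Mf f x * g x = ∫ q in stdCorner m, Ew (fun _ => em q) g * f q := by
  simp only [Ew, Finset.sum_mul]
  have hem := continuous_em (m := m)
  rw [integral_finsetSum _ fun x _ => dens_integrableOn hf (Continuous.continuousOn (by fun_prop))]
  refine Finset.sum_congr rfl fun x _ => ?_
  rw [Mf, ← integral_mul_const]
  congr 1; funext q; ring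

/-- The redundancy of the uniform prior against the prior with density `f` is at most the
relative entropy of `f`. -/
lemma Mf_entropy (hf : IsContDensity (a := m + 1) μ f) :
    ∑ x : Fin n → Fin (m + 1), Mf f x * Real.log (Mf f x)
      ≤ ∑ x : Fin n → Fin (m + 1), Mf f x * (∑ α, Real.log ((Tc x α).factorial : ℝ)
          - Real.log ((n + m).factorial : ℝ))
        + ∫ q in stdCorner m, f q * Real.log (f q) := by
  have hem := continuous_em (m := m)
  have hL : ∀ x : Fin n → Fin (m + 1), Continuous fun q : Fin m → ℝ => ∏ i, em q (x i) :=
    fun x => by fun_prop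
  have hc := isCompact_stdCorner m
  have hms := (isClosed_stdCorner m).measurableSet
  have hI : ∀ x : Fin n → Fin (m + 1), IntegrableOn
      (fun q => (∏ i, em q (x i)) * (f q * Real.log (f q))) (stdCorner m) := fun x =>
    ((hL x).continuousOn.mul (continuousOn_flogf hf)).integrableOn_compact hc
  have hstep : ∀ x : Fin n → Fin (m + 1), Mf f x * Real.log (Mf f x)
      ≤ Mf f x * (∑ α, Real.log ((Tc x α).factorial : ℝ) - Real.log ((n + m).factorial : ℝ))
        + ∫ q in stdCorner m, (∏ i, em q (x i)) * (f q * Real.log (f q)) := by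
    intro x
    have hm1 : 0 < ∫ q in stdCorner m, ∏ i, em q (x i) := by
      rw [m1_eq]
      exact div_pos (Finset.prod_pos fun α _ => by exact_mod_cast Nat.factorial_pos _)
        (by exact_mod_cast Nat.factorial_pos _)
    rw [← log_m1 x]
    set m1 := ∫ q in stdCorner m, ∏ i, em q (x i) with hm1d
    have hM := Mf_pos hf x
    set c := Mf f x / m1 with hcd
    have hc0 : 0 < c := div_pos hM hm1
    have hpt : ∀ q ∈ stdCorner m, (∏ i, em q (x i)) * f q * (Real.log c + 1)
        - (∏ i, em q (x i)) * c ≤ (∏ i, em q (x i)) * (f q * Real.log (f q)) := by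
      intro q hq
      have hl : 0 ≤ ∏ i, em q (x i) := Finset.prod_nonneg fun i _ => (em_mem hq).1 _
      have := gibbs ({0} : Finset ℕ) (fun _ => f q) (fun _ => c) (fun _ _ => hf.2.1 q)
        (fun _ _ => hc0)
      simp only [Finset.sum_singleton] at this
      have h2 : f q * Real.log (f q / c) = f q * Real.log (f q) - f q * Real.log c := by
        rcases (hf.2.1 q).eq_or_lt with h | h
        · rw [← h]; simp
        · rw [Real.log_div h.ne' hc0.ne']; ring
      have := mul_le_mul_of_nonneg_left (h2 ▸ this) hl
      nlinarith
    have hi1 : IntegrableOn (fun q => (∏ i, em q (x i)) * f q * (Real.log c + 1)) (stdCorner m) :=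
      (dens_integrableOn hf (hL x).continuousOn).mul_const _
    have hi2 : IntegrableOn (fun q => (∏ i, em q (x i)) * c) (stdCorner m) :=
      ((hL x).continuousOn.integrableOn_compact hc).mul_const _
    have h := setIntegral_mono_on (hi1.sub hi2) (hI x) hms hpt
    have h3 : ∫ q in stdCorner m, ((∏ i, em q (x i)) * f q * (Real.log c + 1)
        - (∏ i, em q (x i)) * c) = Mf f x * Real.log c := by
      rw [integral_sub hi1 hi2, integral_mul_const, integral_mul_const, ← hm1d]
      show Mf f x * (Real.log c + 1) - m1 * c = _
      rw [hcd, mul_div_cancel₀ _ hm1.ne']; ring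
    have h4 : Real.log c = Real.log (Mf f x) - Real.log m1 := Real.log_div hM.ne' hm1.ne'
    have h5 : Mf f x * Real.log c ≤ ∫ q in stdCorner m, (∏ i, em q (x i)) * (f q * Real.log (f q)) :=
      h3 ▸ h
    rw [h4] at h5
    linarith
  refine (Finset.sum_le_sum fun x _ => hstep x).trans (le_of_eq ?_)
  rw [Finset.sum_add_distrib, ← integral_finsetSum _ fun x _ => hI x]
  congr 1
  refine setIntegral_congr_fun hms fun q hq => ?_
  exact Ew_const (fun _ : Fin n => (em_mem hq).2) (f q * Real.log (f q))

lemma Py_total (hQcol : ∀ x, ∑ y, Q y x = 1) (hf : IsContDensity (a := m + 1) μ f)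
    [IsProbabilityMeasure μ] : ∑ y : Fin n → Fin (k + 1), Py Q μ y = 1 := by
  have h := sum_wgt (n := n) (Q := Q) hf (fun _ _ => 1)
  simp only [mul_one] at h
  rw [Finset.sum_comm] at h
  show ∑ y : Fin n → Fin (k + 1), ∑ x, wgt Q μ x y = 1
  rw [h]
  refine Eq.trans ?_ (hf.2.2.1 : ∫ q in stdCorner m, f q = 1)
  refine setIntegral_congr_fun (isClosed_stdCorner m).measurableSet fun q hq => ?_
  simp only [E2_const hQcol (em_mem hq), one_mul]

/-- Mass of an output word under Lebesgue measure on `Δ`, the unnormalised uniform prior. -/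
def P1 (Q : Matrix (Fin (k + 1)) (Fin (m + 1)) ℝ) (y : Fin n → Fin (k + 1)) : ℝ :=
  ∫ q in stdCorner m, lik Q y (em q)

lemma P1_pos (hQpos : ∀ y x, 0 < Q y x) (hQcol : ∀ x, ∑ y, Q y x = 1)
    (y : Fin n → Fin (k + 1)) : 0 < P1 Q y := by
  have hms := (isClosed_stdCorner m).measurableSet
  have hcont : Continuous fun q : Fin m → ℝ => lik Q y (em q) :=
    continuous_lik y
  have hi : IntegrableOn (fun q : Fin m → ℝ => lik Q y (em q)) (stdCorner m) :=
    hcont.continuousOn.integrableOn_compact (isCompact_stdCorner m)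
  have hnn : 0 ≤ᵐ[volume.restrict (stdCorner m)] fun q => lik Q y (em q) := by
    filter_upwards [ae_restrict_mem hms] with q hq
    exact (lik_pos hQpos hQcol y hq).le
  refine lt_of_le_of_ne (integral_nonneg_of_ae hnn) fun h => ?_
  have h0 := (integral_eq_zero_iff_of_nonneg_ae hnn hi).1 h.symm
  have h1 : ∀ᵐ q ∂(volume.restrict (stdCorner m)), False := by
    filter_upwards [ae_restrict_mem hms, h0] with q hq hz
    exact (lik_pos hQpos hQcol y hq).ne' hz
  have h2 : volume (stdCorner m) = 0 := by
    simpa using h1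
  have h3 := volume_stdCorner m
  rw [h2] at h3
  simp at h3
  exact (Nat.factorial_pos m).ne (by exact_mod_cast h3)

lemma Py_entropy (hQpos : ∀ y x, 0 < Q y x) (hQcol : ∀ x, ∑ y, Q y x = 1)
    (hf : IsContDensity (a := m + 1) μ f)
    [IsProbabilityMeasure μ] (h : (Fin n → Fin (k + 1)) → ℝ) (hh : ∀ y, 0 < h y) :
    ∑ y, Py Q μ y * (Real.log (P1 Q y) + Real.log (h y)) + 1
        - ∫ q in stdCorner m, Ew (fun _ => Q *ᵥ em q) h
      ≤ ∑ y : Fin n → Fin (k + 1), Py Q μ y * Real.log (Py Q μ y) := by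
  have hg := gibbs univ (fun y : Fin n → Fin (k + 1) => Py Q μ y) (fun y => P1 Q y * h y)
    (fun y _ => (Py_pos hQpos hf y).le) (fun y _ => mul_pos (P1_pos hQpos hQcol y) (hh y))
  rw [Py_total hQcol hf] at hg
  have hZ : ∑ y, P1 Q y * h y = ∫ q in stdCorner m, Ew (fun _ => Q *ᵥ em q) h := by
    simp only [Ew]
    rw [integral_finsetSum _ fun y _ => ?_]
    · refine Finset.sum_congr rfl fun y _ => ?_
      rw [P1, ← integral_mul_const]; rfl
    · have hcont : Continuous fun q : Fin m → ℝ => lik Q y (em q) * h y :=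
        (continuous_lik y).mul continuous_const
      exact hcont.continuousOn.integrableOn_compact (isCompact_stdCorner m)
  rw [hZ] at hg
  have hx : ∑ y, Py Q μ y * Real.log (Py Q μ y / (P1 Q y * h y))
      = ∑ y : Fin n → Fin (k + 1), Py Q μ y * Real.log (Py Q μ y)
        - ∑ y, Py Q μ y * (Real.log (P1 Q y) + Real.log (h y)) := by
    rw [← Finset.sum_sub_distrib]
    refine Finset.sum_congr rfl fun y _ => ?_
    rw [Real.log_div (Py_pos hQpos hf y).ne' (mul_pos (P1_pos hQpos hQcol y) (hh y)).ne',
      Real.log_mul (P1_pos hQpos hQcol y).ne' (hh y).ne']; ring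
  linarith

/-- The integrand of the lower bound: total codelength of the joint words, minus the codelengths
of the input word given its letter counts and of the output word. -/
def gl (Q : Matrix (Fin (k + 1)) (Fin (m + 1)) ℝ)
    (κ : (Fin n → Fin (k + 1)) → (Fin (m + 1) → ℕ) → (Fin k × Fin m → ℤ) → ℝ)
    (h : (Fin n → Fin (k + 1)) → ℝ) (x : Fin n → Fin (m + 1)) (y : Fin n → Fin (k + 1)) : ℝ :=
  (Real.log ((n + m).factorial : ℝ) - ∑ α, Real.log ((Tc x α).factorial : ℝ))
    - ∑ i, Real.log (Q (y i) (x i)) + Real.log (Vc κ x y)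
    + (Real.log (P1 Q y) + Real.log (h y))

/-- Explicit lower bound for the conditional entropy: `HF_lower` with the code `Vc`, the entropy of
the input word compared with the uniform prior, and the output word coded by the uniform-prior
marginal weighted by `h`. The last two terms are the defect `1 - ∑ y, P1 y * h y` in Gibbs'
inequality for these weights. -/
lemma HF_lower2 (hQpos : ∀ y x, 0 < Q y x) (hQcol : ∀ x, ∑ y, Q y x = 1)
    (hf : IsContDensity (a := m + 1) μ f) [IsProbabilityMeasure μ]
    {κ : (Fin n → Fin (k + 1)) → (Fin (m + 1) → ℕ) → (Fin k × Fin m → ℤ) → ℝ}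
    (h0 : ∀ y t v, 0 < κ y t v) (h1 : ∀ y t s, ∑ v ∈ s, κ y t v ≤ 1)
    (h : (Fin n → Fin (k + 1)) → ℝ) (hh : ∀ y, 0 < h y) :
    (∫ q in stdCorner m, E2 Q (em q) (gl Q κ h) * f q)
      - (∫ q in stdCorner m, f q * Real.log (f q)) + 1
      - ∫ q in stdCorner m, Ew (fun _ => Q *ᵥ em q) h ≤ HFcond Q μ n := by
  have hA := HF_lower hQpos hf (Vc_pos h0) (Vc_sum h0 h1)
  have hB := Mf_entropy (n := n) hf
  have hC := Py_entropy hQpos hQcol hf h hh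
  have hy : ∀ g : (Fin n → Fin (k + 1)) → ℝ,
      ∑ x, ∑ y, wgt Q μ x y * g y = ∑ y, Py Q μ y * g y := by
    intro g; rw [Finset.sum_comm]
    refine Finset.sum_congr rfl fun y _ => ?_
    rw [← Finset.sum_mul]; rfl
  have hx : ∀ g : (Fin n → Fin (m + 1)) → ℝ,
      ∑ x, ∑ y : Fin n → Fin (k + 1), wgt Q μ x y * g x = ∑ x, Mf f x * g x := by
    intro g
    rw [sum_wgt hf (fun x _ => g x), Mf_sum hf]
    simp only [E2_x hQcol]
  have hw : ∑ x, ∑ y, wgt Q μ x y * (Real.log (Vc κ x y) - Real.log (wgt Q μ x y))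
      = ∑ x, ∑ y, wgt Q μ x y * (Real.log (Vc κ x y) - ∑ i, Real.log (Q (y i) (x i)))
        - ∑ x : Fin n → Fin (m + 1), Mf f x * Real.log (Mf f x) := by
    rw [← hx, ← Finset.sum_sub_distrib]
    refine Finset.sum_congr rfl fun x _ => ?_
    rw [← Finset.sum_sub_distrib]
    refine Finset.sum_congr rfl fun y _ => ?_
    rw [wgt_Mf hf x y, Real.log_mul (Mf_pos hf x).ne'
      (Finset.prod_pos fun i _ => hQpos _ _).ne', Real.log_prod (fun i _ => (hQpos _ _).ne')]
    ring
  rw [← sum_wgt hf]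
  have hgl : ∑ x, ∑ y, wgt Q μ x y * gl Q κ h x y
      = ∑ x, ∑ y, wgt Q μ x y * (Real.log (Vc κ x y) - ∑ i, Real.log (Q (y i) (x i)))
        - ∑ x : Fin n → Fin (m + 1), Mf f x * (∑ α, Real.log ((Tc x α).factorial : ℝ) - Real.log ((n + m).factorial : ℝ))
        + ∑ y, Py Q μ y * (Real.log (P1 Q y) + Real.log (h y)) := by
    rw [← hx, ← hy, ← Finset.sum_sub_distrib, ← Finset.sum_add_distrib]
    refine Finset.sum_congr rfl fun x _ => ?_
    rw [← Finset.sum_sub_distrib, ← Finset.sum_add_distrib]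
    refine Finset.sum_congr rfl fun y _ => ?_
    unfold gl; ring
  linarith

end low

/-! ### Passing to the limit under the integral sign -/

/-- One-sided dominated convergence: a pointwise asymptotic lower bound passes to the integrals
when the functions are bounded below by an integrable function. -/
lemma fatou_lower {X : Type*} [MeasurableSpace X] {ν : Measure X} {u : ℕ → X → ℝ} {U B f : X → ℝ}
    (hf0 : ∀ᵐ q ∂ν, 0 ≤ f q) (hfm : AEStronglyMeasurable f ν)
    (hum : ∀ n, AEStronglyMeasurable (u n) ν)
    (hUm : AEStronglyMeasurable U ν) (hu : ∀ n, Integrable (fun q => u n q * f q) ν)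
    (hU : Integrable (fun q => U q * f q) ν)
    (hB : Integrable (fun q => B q * f q) ν) (hlow : ∀ n, 1 ≤ n → ∀ᵐ q ∂ν, -B q ≤ u n q)
    (hlim : ∀ᵐ q ∂ν, ∀ ε > 0, ∀ᶠ n in atTop, U q - ε ≤ u n q) {ε : ℝ} (hε : 0 < ε) :
    ∀ᶠ n in atTop, (∫ q, U q * f q ∂ν) - ε ≤ ∫ q, u n q * f q ∂ν := by
  have hbound : Integrable (fun q => |U q * f q| + |B q * f q|) ν := hU.abs.add hB.abs
  have hle : ∀ n, 1 ≤ n → ∀ᵐ q ∂ν, ‖min (u n q) (U q) * f q‖ ≤ |U q * f q| + |B q * f q| := by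
    intro n hn
    filter_upwards [hf0, hlow n hn] with q h0 h1
    rw [Real.norm_eq_abs, abs_mul, abs_mul, abs_mul, ← add_mul]
    refine mul_le_mul_of_nonneg_right ?_ (abs_nonneg _)
    rw [abs_le]
    constructor
    · refine le_min ?_ ?_
      · have := le_abs_self (B q); have := abs_nonneg (U q); linarith
      · have := neg_abs_le (U q); have := abs_nonneg (B q); linarith
    · have := min_le_right (u n q) (U q)
      have := le_abs_self (U q); have := abs_nonneg (B q); linarith
  have hT : Tendsto (fun n => ∫ q, min (u n q) (U q) * f q ∂ν) atTop
      (nhds (∫ q, U q * f q ∂ν)) := by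
    refine tendsto_integral_filter_of_dominated_convergence
      (fun q => |U q * f q| + |B q * f q|) ?_ ?_ hbound ?_
    · exact Eventually.of_forall fun n => ((hum n).inf hUm).mul hfm
    · filter_upwards [eventually_ge_atTop 1] with n hn using hle n hn
    · filter_upwards [hlim] with q hq
      refine Tendsto.mul_const _ ?_
      rw [Metric.tendsto_atTop']
      intro ε hε
      obtain ⟨N, hN⟩ := eventually_atTop.1 (hq (ε / 2) (by linarith))
      refine ⟨N, fun n hn => ?_⟩
      rw [Real.dist_eq, abs_lt]
      have h1 := min_le_right (u n q) (U q)
      have h2 : U q - ε / 2 ≤ min (u n q) (U q) := le_min (hN n hn.le) (by linarith)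
      constructor <;> linarith
  filter_upwards [hT.eventually (lt_mem_nhds (sub_lt_self _ hε)), eventually_ge_atTop 1]
    with n hn h1
  refine hn.le.trans (integral_mono_ae ?_ (hu n) ?_)
  · exact hbound.mono' (((hum n).inf hUm).mul hfm) (hle n h1)
  · filter_upwards [hf0] with q h0
    exact mul_le_mul_of_nonneg_right (min_le_left _ _) h0

/-! ### Expected logarithms of the factorials of the letter counts -/

lemma sbin_eq {n : ℕ} (hn : 1 ≤ n) {r : ℝ} (hr : 0 < r) :
    sbin n r = n * Real.log n * r + n * (r * Real.log r) - n * r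
      + (Real.log (2 * π * n) + Real.log r) / 2 + (1 - r) / 2 := by
  have hn0 : (0 : ℝ) < n := by exact_mod_cast hn
  rw [sbin, Real.log_mul hn0.ne' hr.ne', ← mul_assoc (2 * π),
    Real.log_mul (by positivity) hr.ne']
  ring

lemma sum_sbin {ι : Type*} [Fintype ι] {n : ℕ} (hn : 1 ≤ n) {r : ι → ℝ} (hr : ∀ i, 0 < r i)
    (hs : ∑ i, r i = 1) :
    ∑ i, sbin n (r i) = n * Real.log n + n * ∑ i, r i * Real.log (r i) - n
      + (Fintype.card ι * Real.log (2 * π * n) + ∑ i, Real.log (r i)) / 2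
      + (Fintype.card ι - 1) / 2 := by
  rw [Finset.sum_congr rfl fun i _ => sbin_eq hn (hr i)]
  simp only [Finset.sum_add_distrib, Finset.sum_sub_distrib, ← Finset.mul_sum, ← Finset.sum_div, hs,
    Finset.sum_const, Finset.card_univ, nsmul_eq_mul, mul_one]

section Bn
variable {m k : ℕ} {Q : Matrix (Fin (k + 1)) (Fin (m + 1)) ℝ}

/-- The part of the lower bound that involves factorials of letter counts. -/
def Bn (Q : Matrix (Fin (k + 1)) (Fin (m + 1)) ℝ) (q : Fin m → ℝ) (n : ℕ) : ℝ :=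
  Real.log ((n + m).factorial : ℝ)
    - ∑ α, Ew (fun _ : Fin n => em q) (fun x => Real.log ((Tc x α).factorial : ℝ))
    + ∑ w, Ew (fun _ : Fin n => pw Q (em q))
        (fun z => Real.log ((cnt (fun w' => w' = w) z).factorial : ℝ))
    - ∑ c, Ew (fun _ : Fin n => Q *ᵥ em q)
        (fun y => Real.log ((cnt (fun c' => c' = c) y).factorial : ℝ))
    - n * ∑ w : Fin (m + 1) × Fin (k + 1), pw Q (em q) w * Real.log (Q w.2 w.1)
    + n * ∑ c, (Q *ᵥ em q) c * Real.log ((Q *ᵥ em q) c)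

/-- Deviation of an expected log-factorial from its Stirling approximation. -/
def dev {α : Type} [Fintype α] [DecidableEq α] (ρ : α → ℝ) (n : ℕ) (a : α) : ℝ :=
  Ew (fun _ : Fin n => ρ) (fun z => Real.log ((cnt (fun w => w = a) z).factorial : ℝ))
    - sbin n (ρ a)

lemma dev_unif : ∃ C : ℝ, 0 ≤ C ∧ ∀ {α : Type} [Fintype α] [DecidableEq α] {ρ : α → ℝ}
    (hρ : ∀ c, 0 < ρ c) (hs : ∑ c, ρ c = 1) (n : ℕ) (hn : 1 ≤ n) (a : α),
    |dev ρ n a| ≤ C + |Real.log (ρ a)| := by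
  obtain ⟨C, hC, h⟩ := cnt_logfact_unif
  refine ⟨C, hC, fun {α} _ _ {ρ} hρ hs n hn a => ?_⟩
  exact h (fun c => (hρ c).le) hs (fun w => w = a) (by simp) (hρ a)
    (hs ▸ Finset.single_le_sum (fun c _ => (hρ c).le) (Finset.mem_univ a)) hn

lemma dev_tendsto {α : Type} [Fintype α] [DecidableEq α] {ρ : α → ℝ}
    (hρ : ∀ c, 0 < ρ c) (hs : ∑ c, ρ c = 1) (a : α) :
    Tendsto (fun n => dev ρ n a) atTop (nhds 0) :=
  cnt_logfact_tendsto (fun c => (hρ c).le) hs (fun w => w = a) (by simp) (hρ a)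
    (hs ▸ Finset.single_le_sum (fun c _ => (hρ c).le) (Finset.mem_univ a))

/-- Deviation of `log (n + m)!` from its Stirling approximation. -/
def dev0 (m n : ℕ) : ℝ :=
  Real.log ((n + m).factorial : ℝ) - m * Real.log n - sbin n 1

lemma dev0_tendsto (m : ℕ) : Tendsto (dev0 m) atTop (nhds 0) := by
  have h1 : Tendsto (fun n : ℕ => Real.log (n.factorial : ℝ) - sbin n 1) atTop (nhds 0) := by
    have := dev_tendsto (α := Unit) (ρ := fun _ => 1) (fun _ => one_pos) (by simp) ()
    refine this.congr fun n => ?_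
    simp [dev, cnt, Ew]
  have h2 : Tendsto (fun n : ℕ => Real.log ((n + m).factorial : ℝ)
      - Real.log (n.factorial : ℝ) - m * Real.log n) atTop (nhds 0) := by
    induction m with
    | zero => simp
    | succ m ih =>
      have h3 : Tendsto (fun n : ℕ => Real.log ((n : ℝ) + (m + 1)) - Real.log n) atTop (nhds 0) := by
        have h4 : Tendsto (fun n : ℕ => Real.log (1 + ((m : ℝ) + 1) / n)) atTop (nhds (Real.log (1 + 0))) := by
          refine Tendsto.log (tendsto_const_nhds.add ?_) (by norm_num)
          exact tendsto_const_nhds.div_atTop tendsto_natCast_atTop_atTop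
        rw [add_zero, Real.log_one] at h4
        refine h4.congr' ?_
        filter_upwards [eventually_ge_atTop 1] with n hn
        have hn0 : (0 : ℝ) < n := by exact_mod_cast hn
        rw [← Real.log_div (by positivity) hn0.ne']
        congr 1; field_simp
      have := ih.add h3
      rw [add_zero] at this
      refine this.congr fun n => ?_
      rw [show n + (m + 1) = (n + m) + 1 from rfl, Nat.factorial_succ, Nat.cast_mul,
        Real.log_mul (by positivity) (by positivity)]
      push_cast
      rw [show (n : ℝ) + m + 1 = n + (m + 1) by ring]
      ring
  have := h1.add h2
  rw [add_zero] at this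
  exact this.congr fun n => by unfold dev0; ring

/-- Limit of the normalised factorial part. -/
def Bl (Q : Matrix (Fin (k + 1)) (Fin (m + 1)) ℝ) (q : Fin m → ℝ) : ℝ :=
  (m * k * Real.log (2 * π) + (∑ w, Real.log (pw Q (em q) w) - ∑ c, Real.log ((Q *ᵥ em q) c)
    - ∑ α, Real.log (em q α)) + m * k) / 2

lemma Bn_eq (hQpos : ∀ y x, 0 < Q y x) (hQcol : ∀ x, ∑ y, Q y x = 1) {q : Fin m → ℝ}
    (hq : q ∈ stdCorner m) (hqpos : ∀ x, 0 < em q x) {n : ℕ} (hn : 1 ≤ n) :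
    Bn Q q n - (m * k / 2 + m) * Real.log n = Bl Q q + dev0 m n - ∑ α, dev (em q) n α
      + ∑ w, dev (pw Q (em q)) n w - ∑ c, dev (Q *ᵥ em q) n c := by
  have hn0 : (0 : ℝ) < n := by exact_mod_cast hn
  have hp := em_mem hq
  have hw : ∀ w, 0 < pw Q (em q) w := fun w => mul_pos (hqpos _) (hQpos _ _)
  have hc := Qp_pos hQpos hQcol hp
  have hcs : ∑ c, (Q *ᵥ em q) c = 1 := (Qp_sum hQpos hQcol _).trans hp.2
  have e1 := sum_sbin hn hqpos hp.2
  have e2 := sum_sbin hn hw (pw_sum hQcol hp)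
  have e3 := sum_sbin hn hc hcs
  have e0 := sbin_eq hn (one_pos : (0 : ℝ) < 1)
  have e4 : ∑ w, pw Q (em q) w * Real.log (pw Q (em q) w)
      = ∑ α, em q α * Real.log (em q α) + ∑ w : Fin (m + 1) × Fin (k + 1),
        pw Q (em q) w * Real.log (Q w.2 w.1) := by
    have : ∑ α, em q α * Real.log (em q α) = ∑ w : Fin (m + 1) × Fin (k + 1),
        pw Q (em q) w * Real.log (em q w.1) := by
      rw [Fintype.sum_prod_type]
      refine Finset.sum_congr rfl fun α _ => ?_
      simp only [pw]
      rw [← Finset.sum_mul, ← Finset.mul_sum, hQcol, mul_one]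
    rw [this, ← Finset.sum_add_distrib]
    refine Finset.sum_congr rfl fun w _ => ?_
    rw [← mul_add, ← Real.log_mul (hqpos _).ne' (hQpos _ _).ne']; rfl
  have e5 : Real.log (2 * π * n) = Real.log (2 * π) + Real.log n :=
    Real.log_mul (by positivity) hn0.ne'
  simp only [dev, Finset.sum_sub_distrib]
  rw [e1, e2, e3, e4, dev0, e0, Bn, Bl, e5]
  simp only [Fintype.card_prod, Fintype.card_fin, Real.log_one]
  push_cast
  simp only [Tc]
  ring

/-- Sum of the absolute logarithms of all one-letter probabilities. -/
def Bd (Q : Matrix (Fin (k + 1)) (Fin (m + 1)) ℝ) (q : Fin m → ℝ) : ℝ :=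
  ∑ w, |Real.log (pw Q (em q) w)| + ∑ c, |Real.log ((Q *ᵥ em q) c)| + ∑ α, |Real.log (em q α)|

/-- Domination of the normalised factorial contribution from below, with a bound that is
integrable because logarithms of the coordinates are. -/
lemma Bn_unif (hQpos : ∀ y x, 0 < Q y x) (hQcol : ∀ x, ∑ y, Q y x = 1) :
    ∃ C : ℝ, ∀ n : ℕ, 1 ≤ n → ∀ q ∈ stdCorner m, (∀ x, 0 < em q x) →
      -(C + 2 * Bd Q q) ≤ Bn Q q n - (m * k / 2 + m) * Real.log n := by
  obtain ⟨C, hC, h⟩ := dev_unif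
  obtain ⟨C0, hC0⟩ := (Metric.isBounded_range_of_tendsto _ (dev0_tendsto m)).exists_norm_le
  refine ⟨C0 + (m + 1) * C + (m + 1) * (k + 1) * C + (k + 1) * C + |(m * k * Real.log (2 * π)) / 2|,
    fun n hn q hq hqpos => ?_⟩
  rw [Bn_eq hQpos hQcol hq hqpos hn]
  have hp := em_mem hq
  have hw : ∀ w, 0 < pw Q (em q) w := fun w => mul_pos (hqpos _) (hQpos _ _)
  have hc := Qp_pos hQpos hQcol hp
  have hcs : ∑ c, (Q *ᵥ em q) c = 1 := (Qp_sum hQpos hQcol _).trans hp.2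
  have d0 : -C0 ≤ dev0 m n := by
    have := hC0 _ (Set.mem_range_self n)
    rw [Real.norm_eq_abs, abs_le] at this; exact this.1
  have d1 : ∑ α, dev (em q) n α ≤ (m + 1) * C + ∑ α, |Real.log (em q α)| := by
    refine (Finset.sum_le_sum fun α _ => (le_abs_self _).trans (h hqpos hp.2 n hn α)).trans ?_
    simp [Finset.sum_add_distrib]
  have d2 : -((m + 1) * (k + 1) * C + ∑ w, |Real.log (pw Q (em q) w)|)
      ≤ ∑ w, dev (pw Q (em q)) n w := by
    rw [neg_le, ← Finset.sum_neg_distrib]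
    refine (Finset.sum_le_sum fun w _ => (neg_le_abs _).trans
      (h hw (pw_sum hQcol hp) n hn w)).trans ?_
    simp [Finset.sum_add_distrib]
  have d3 : ∑ c, dev (Q *ᵥ em q) n c ≤ (k + 1) * C + ∑ c, |Real.log ((Q *ᵥ em q) c)| := by
    refine (Finset.sum_le_sum fun α _ => (le_abs_self _).trans (h hc hcs n hn α)).trans ?_
    simp [Finset.sum_add_distrib]
  have s1 : ∑ α, Real.log (em q α) ≤ ∑ α, |Real.log (em q α)| :=
    Finset.sum_le_sum fun _ _ => le_abs_self _
  have s2 : -∑ w, |Real.log (pw Q (em q) w)| ≤ ∑ w, Real.log (pw Q (em q) w) := by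
    rw [← Finset.sum_neg_distrib]; exact Finset.sum_le_sum fun _ _ => neg_abs_le _
  have s3 : ∑ c, Real.log ((Q *ᵥ em q) c) ≤ ∑ c, |Real.log ((Q *ᵥ em q) c)| :=
    Finset.sum_le_sum fun _ _ => le_abs_self _
  have n1 : 0 ≤ ∑ α, |Real.log (em q α)| := Finset.sum_nonneg fun _ _ => abs_nonneg _
  have n2 : 0 ≤ ∑ w, |Real.log (pw Q (em q) w)| := Finset.sum_nonneg fun _ _ => abs_nonneg _
  have n3 : 0 ≤ ∑ c, |Real.log ((Q *ᵥ em q) c)| := Finset.sum_nonneg fun _ _ => abs_nonneg _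
  have hmk : (0 : ℝ) ≤ m * k := by positivity
  have hl := neg_abs_le ((m * k * Real.log (2 * π)) / 2)
  unfold Bl Bd
  linarith

/-- Pointwise limit of the factorial contribution, from the expected log-factorials of binomial
counts. -/
lemma Bn_tendsto (hQpos : ∀ y x, 0 < Q y x) (hQcol : ∀ x, ∑ y, Q y x = 1) {q : Fin m → ℝ}
    (hq : q ∈ stdCorner m) (hqpos : ∀ x, 0 < em q x) :
    Tendsto (fun n : ℕ => Bn Q q n - (m * k / 2 + m) * Real.log n) atTop (nhds (Bl Q q)) := by
  have hp := em_mem hq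
  have hw : ∀ w, 0 < pw Q (em q) w := fun w => mul_pos (hqpos _) (hQpos _ _)
  have hc := Qp_pos hQpos hQcol hp
  have hcs : ∑ c, (Q *ᵥ em q) c = 1 := (Qp_sum hQpos hQcol _).trans hp.2
  have t1 : Tendsto (fun n => ∑ α, dev (em q) n α) atTop (nhds (∑ α : Fin (m + 1), 0)) :=
    tendsto_finsetSum _ fun α _ => dev_tendsto hqpos hp.2 α
  have t2 : Tendsto (fun n => ∑ w, dev (pw Q (em q)) n w) atTop
      (nhds (∑ w : Fin (m + 1) × Fin (k + 1), 0)) :=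
    tendsto_finsetSum _ fun α _ => dev_tendsto hw (pw_sum hQcol hp) α
  have t3 : Tendsto (fun n => ∑ c, dev (Q *ᵥ em q) n c) atTop (nhds (∑ c : Fin (k + 1), 0)) :=
    tendsto_finsetSum _ fun α _ => dev_tendsto hc hcs α
  simp only [Finset.sum_const_zero] at t1 t2 t3
  have := (((tendsto_const_nhds (x := Bl Q q)).add (dev0_tendsto m)).sub t1).add t2 |>.sub t3
  simp only [add_zero, sub_zero] at this
  refine this.congr' ?_
  filter_upwards [eventually_ge_atTop 1] with n hn
  rw [Bn_eq hQpos hQcol hq hqpos hn]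

lemma Bd_integrable (hQpos : ∀ y x, 0 < Q y x) (hQcol : ∀ x, ∑ y, Q y x = 1) :
    IntegrableOn (Bd Q) (stdCorner m) := by
  have hl : ∀ x, IntegrableOn (fun q => Real.log (em q x)) (stdCorner m) :=
    fun x => log_integrable x
  have h1 : ∀ c, IntegrableOn (fun q : Fin m → ℝ => Real.log ((Q *ᵥ em q) c)) (stdCorner m) := by
    intro c
    refine ContinuousOn.integrableOn_compact (isCompact_stdCorner m) ?_
    refine ContinuousOn.log ?_ fun q hq => (Qp_pos hQpos hQcol (em_mem hq) c).ne'
    refine Continuous.continuousOn ?_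
    simp only [mulVec, dotProduct]
    have := continuous_em (m := m)
    fun_prop
  have h2 : ∀ w, IntegrableOn (fun q : Fin m → ℝ => Real.log (pw Q (em q) w)) (stdCorner m) := by
    intro w
    have h3 : IntegrableOn (fun q : Fin m → ℝ => Real.log (em q w.1) + Real.log (Q w.2 w.1))
      (stdCorner m) := (hl w.1).add (continuousOn_const.integrableOn_compact (isCompact_stdCorner m))
    refine h3.congr ?_
    filter_upwards [em_pos_ae m] with q hq
    rw [pw, Real.log_mul (hq _).ne' (hQpos _ _).ne']
  unfold Bd
  exact ((integrable_finsetSum _ fun w _ => (h2 w).abs).add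
    (integrable_finsetSum _ fun c _ => (h1 c).abs)).add
    (integrable_finsetSum _ fun α _ => (hl α).abs)

end Bn

/-! ### The limit of the conditional entropy -/

section final
variable {m k : ℕ} {Q : Matrix (Fin (k + 1)) (Fin (m + 1)) ℝ}

/-- The pointwise limit whose `μ`-average is `deltaMu`. -/
def u0 (Q : Matrix (Fin (k + 1)) (Fin (m + 1)) ℝ) (p : Fin (m + 1) → ℝ) : ℝ :=
  m / 2 * Real.log (2 * π) + m / 2
    + (Real.log (Gk Q p).det - ∑ y, Real.log ((Q *ᵥ p) y)) / 2 - Real.log (Dmat Q p).det / 2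

/-- Both forms of the limit agree, by the Schur-complement identity `det_GK`. -/
lemma u0_eq (hQpos : ∀ y x, 0 < Q y x) (hQcol : ∀ x, ∑ y, Q y x = 1)
    (hrank : Q.rank = m + 1) {p : Fin (m + 1) → ℝ} (hp : p ∈ simplex (m + 1)) :
    u0 Q p = m / 2 * Real.log (2 * π) + m / 2 - Real.log (Kp Q p).det / 2 := by
  have h := congrArg Real.log (det_GK hQpos hQcol hrank hp)
  have hG := (Gk_posDef hQpos hQcol hp.1 (exists_pos_of_simplex hQpos hQcol hp)).det_pos
  have hK := (Kp_posDef hQpos hQcol hrank hp).det_pos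
  have hD := (Jp_posDef hQpos hQcol hrank hp).det_pos
  rw [det_J_eq_D hQpos hQcol hp] at hD
  have hc := Qp_pos hQpos hQcol hp
  rw [Real.log_mul hG.ne' hK.ne', Real.log_mul (Finset.prod_pos fun y _ => hc y).ne' hD.ne',
    Real.log_prod fun y _ => (hc y).ne'] at h
  unfold u0
  linarith

lemma continuousOn_u0 (hQpos : ∀ y x, 0 < Q y x) (hQcol : ∀ x, ∑ y, Q y x = 1)
    (hrank : Q.rank = m + 1) : ContinuousOn (u0 Q) (simplex (m + 1)) := by
  refine ContinuousOn.congr (f := fun p => m / 2 * Real.log (2 * π) + m / 2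
    - Real.log (Kp Q p).det / 2) ?_ fun p hp => u0_eq hQpos hQcol hrank hp
  exact continuousOn_const.sub ((continuousOn_logdetKp hQpos hQcol hrank).div_const _)

variable {μ : Measure (Fin (m + 1) → ℝ)} {f : (Fin m → ℝ) → ℝ}

lemma integral_u0 (hQpos : ∀ y x, 0 < Q y x) (hQcol : ∀ x, ∑ y, Q y x = 1)
    (hrank : Q.rank = m + 1) (hf : IsContDensity (a := m + 1) μ f) [IsProbabilityMeasure μ]
    (hint : Integrable (fun p => Real.log (Dmat Q p).det) μ)
    (hint2 : Integrable
      (fun p => Real.log (Gmat Q p).det - ∑ y, Real.log (Q.mulVec p y)) μ) :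
    ∫ q in stdCorner m, u0 Q (em q) * f q = deltaMu Q μ := by
  rw [← mu_integral hf (continuousOn_u0 hQpos hQcol hrank)]
  have h2 : Integrable (fun p => (Real.log (Gk Q p).det
      - ∑ y, Real.log ((Q *ᵥ p) y)) / 2) μ := hint2.div_const 2
  have h1 := hint.div_const 2
  have h3 : Integrable (fun p => m / 2 * Real.log (2 * π) + m / 2 + (Real.log (Gk Q p).det
      - ∑ y, Real.log ((Q *ᵥ p) y)) / 2) μ := (integrable_const _).add h2
  unfold u0
  rw [integral_sub h3 h1, integral_add (integrable_const _) h2,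
    integral_const, integral_div, integral_div]
  unfold deltaMu gammaMu
  have hl : Real.log (2 * π * Real.exp 1) = Real.log (2 * π) + 1 := by
    rw [Real.log_mul (by positivity) (by positivity), Real.log_exp]
  rw [hl]
  simp only [probReal_univ, one_smul]
  have hGd : ∀ p, (Gmat Q p).det = (Gk Q p).det := fun p => rfl
  simp only [hGd]
  push_cast
  ring

lemma int_shift (hf : IsContDensity (a := m + 1) μ f) {g : (Fin m → ℝ) → ℝ}
    (hg : ContinuousOn g (stdCorner m)) (c : ℝ) :
    ∫ q in stdCorner m, (g q - c) * f q = (∫ q in stdCorner m, g q * f q) - c := by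
  have h1 : (∫ q in stdCorner m, f q) = 1 := hf.2.2.1
  have hi : IntegrableOn f (stdCorner m) :=
    ContinuousOn.integrableOn_compact (isCompact_stdCorner m) hf.1
  simp only [sub_mul]
  rw [integral_sub (dens_integrableOn hf hg) (hi.const_mul c), integral_const_mul, h1, mul_one]

lemma continuousOn_E2em {n : ℕ} (g : (Fin n → Fin (m + 1)) → (Fin n → Fin (k + 1)) → ℝ) :
    ContinuousOn (fun q => E2 Q (em q) g) (stdCorner m) :=
  ((continuous_E2 Q g).comp continuous_em).continuousOn

/-- Asymptotic upper bound, from `HF_upper` with the Gaussian code of `UB_main`. -/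
lemma upper_limit (hQpos : ∀ y x, 0 < Q y x) (hQcol : ∀ x, ∑ y, Q y x = 1)
    (hrank : Q.rank = m + 1) (hf : IsContDensity (a := m + 1) μ f) [IsProbabilityMeasure μ]
    {ε : ℝ} (hε : 0 < ε) :
    ∀ᶠ n : ℕ in atTop, HFcond Q μ n - m / 2 * Real.log n
      ≤ (∫ q in stdCorner m, u0 Q (em q) * f q) + ε := by
  obtain ⟨κ, h0, h1, ⟨C, hC⟩, hlim⟩ := UB_main hQpos hQcol hrank
  have hms := (isClosed_stdCorner m).measurableSet
  have hu0 := continuousOn_comp_em (continuousOn_u0 hQpos hQcol hrank)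
  have hcu : ∀ n : ℕ, ContinuousOn (fun q => -(E2 (n := n) Q (em q)
      (fun x y => -Real.log (κ n y (Tv x))) - m / 2 * Real.log n)) (stdCorner m) :=
    fun n => ((continuousOn_E2em _).sub continuousOn_const).neg
  have key := fatou_lower (ν := volume.restrict (stdCorner m)) (f := f)
    (u := fun n q => -(E2 (n := n) Q (em q) (fun x y => -Real.log (κ n y (Tv x)))
      - m / 2 * Real.log n)) (U := fun q => -u0 Q (em q)) (B := fun _ => C)
    (Eventually.of_forall hf.2.1) (hf.1.aestronglyMeasurable hms)
    (fun n => (hcu n).aestronglyMeasurable hms) (hu0.neg.aestronglyMeasurable hms)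
    (fun n => dens_integrableOn hf (hcu n)) (dens_integrableOn hf hu0.neg)
    (dens_integrableOn hf continuousOn_const) ?_ ?_ hε
  · filter_upwards [key, eventually_ge_atTop 1] with n hn hn1
    have h2 := HF_upper hQpos hf (h0 n) (h1 n hn1)
    simp only [neg_mul, integral_neg] at hn
    rw [int_shift hf (continuousOn_E2em _)] at hn
    linarith
  · intro n hn
    filter_upwards [ae_restrict_mem hms] with q hq
    exact neg_le_neg (hC n hn q hq)
  · filter_upwards [ae_restrict_mem hms, em_pos_ae m] with q hq hqpos ε hε
    filter_upwards [hlim q hq hqpos ε hε] with n hn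
    rw [u0_eq hQpos hQcol hrank (em_mem hq)]
    linarith

lemma log_Vc {n : ℕ} {κ : (Fin n → Fin (k + 1)) → (Fin (m + 1) → ℕ) → (Fin k × Fin m → ℤ) → ℝ}
    (h0 : ∀ y t v, 0 < κ y t v) (x : Fin n → Fin (m + 1)) (y : Fin n → Fin (k + 1)) :
    Real.log (Vc κ x y) = ∑ w, Real.log ((Nf x y w).factorial : ℝ)
      - ∑ c, Real.log ((cnt (fun c' => c' = c) y).factorial : ℝ)
      - -Real.log (κ y (Tc x) (Nv x y)) := by
  have hfac : ∀ N : ℕ, (N.factorial : ℝ) ≠ 0 := fun N => by exact_mod_cast N.factorial_ne_zero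
  have hp1 : (∏ w, ((Nf x y w).factorial : ℝ)) ≠ 0 := Finset.prod_ne_zero_iff.2 fun w _ => hfac _
  have hp2 : (∏ c, ((cnt (fun c' => c' = c) y).factorial : ℝ)) ≠ 0 :=
    Finset.prod_ne_zero_iff.2 fun w _ => hfac _
  rw [Vc, Real.log_mul (h0 _ _ _).ne' (div_ne_zero hp1 hp2), Real.log_div hp1 hp2,
    Real.log_prod fun w _ => hfac _, Real.log_prod fun w _ => hfac _]
  ring

/-- The integrand of the lower bound, split into factorials of letter counts, the codelength of
the joint counts, the Laplace integral and the density term. -/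
lemma E2_gl (hQpos : ∀ y x, 0 < Q y x) (hQcol : ∀ x, ∑ y, Q y x = 1) {q : Fin m → ℝ}
    (hq : q ∈ stdCorner m) {n : ℕ}
    {κ : (Fin n → Fin (k + 1)) → (Fin (m + 1) → ℕ) → (Fin k × Fin m → ℤ) → ℝ}
    (h0 : ∀ y t v, 0 < κ y t v) (h : (Fin n → Fin (k + 1)) → ℝ) :
    E2 Q (em q) (gl Q κ h) = Bn Q q n
      - E2 Q (em q) (fun x y => -Real.log (κ y (Tc x) (Nv x y)))
      + Ew (fun _ : Fin n => Q *ᵥ em q) (LI Q q) - m / 2 * Real.log n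
      + Ew (fun _ : Fin n => Q *ᵥ em q) (fun y => Real.log (h y)) := by
  have hp := em_mem hq
  have hcs : ∑ c, (Q *ᵥ em q) c = 1 := (Qp_sum hQpos hQcol _).trans hp.2
  have hc := Qp_pos hQpos hQcol hp
  have hP : ∀ y : Fin n → Fin (k + 1), Real.log (P1 Q y)
      = LI Q q y + ∑ i, Real.log ((Q *ᵥ em q) (y i)) - m / 2 * Real.log n := by
    intro y
    have : Real.log (lik Q y (em q)) = ∑ i, Real.log ((Q *ᵥ em q) (y i)) :=
      Real.log_prod fun i _ => (hc _).ne'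
    rw [LI, P1, this]; ring
  have hg : gl Q κ h = fun x y => (Real.log ((n + m).factorial : ℝ)
      - ∑ α, Real.log ((Tc x α).factorial : ℝ)) - ∑ i, Real.log (Q (y i) (x i))
      + (∑ w, Real.log ((Nf x y w).factorial : ℝ)
      - ∑ c, Real.log ((cnt (fun c' => c' = c) y).factorial : ℝ)
      - -Real.log (κ y (Tc x) (Nv x y)))
      + ((LI Q q y + ∑ i, Real.log ((Q *ᵥ em q) (y i)) - m / 2 * Real.log n)
        + Real.log (h y)) := by
    funext x y
    rw [gl, log_Vc h0, hP]
  have e1 : E2 Q (em q) (fun (x : Fin n → Fin (m + 1)) (y : Fin n → Fin (k + 1)) =>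
      ∑ i, Real.log (Q (y i) (x i)))
      = n * ∑ w : Fin (m + 1) × Fin (k + 1), pw Q (em q) w * Real.log (Q w.2 w.1) := by
    rw [E2_pair, Ew_linear (fun _ => pw_sum hQcol hp) (fun _ w => Real.log (Q w.2 w.1))]
    simp
  have e2 : Ew (fun _ : Fin n => Q *ᵥ em q) (fun y => ∑ i, Real.log ((Q *ᵥ em q) (y i)))
      = n * ∑ c, (Q *ᵥ em q) c * Real.log ((Q *ᵥ em q) c) := by
    rw [Ew_linear (fun _ => hcs) (fun _ c => Real.log ((Q *ᵥ em q) c))]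
    simp
  have e3 : E2 Q (em q) (fun (x : Fin n → Fin (m + 1)) (y : Fin n → Fin (k + 1)) =>
      ∑ w, Real.log ((Nf x y w).factorial : ℝ))
      = ∑ w, Ew (fun _ : Fin n => pw Q (em q))
        (fun z => Real.log ((cnt (fun w' => w' = w) z).factorial : ℝ)) := by
    rw [E2_pair, Ew_sum]; rfl
  rw [hg, E2_add, E2_add, E2_sub, E2_sub, E2_sub, E2_sub, E2_add, E2_sub, E2_add,
    e1, e3, E2_const hQcol hp, E2_const hQcol hp,
    E2_x hQcol _ (fun x => ∑ α, Real.log ((Tc x α).factorial : ℝ)), E2_y, E2_y, E2_y, E2_y,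
    e2, Ew_sum, Ew_sum, Bn]
  ring

lemma sum_log_pw (hQpos : ∀ y x, 0 < Q y x) {p : Fin (m + 1) → ℝ} (hp : ∀ x, 0 < p x) :
    ∑ w, Real.log (pw Q p w)
      = (k + 1) * ∑ α, Real.log (p α) + ∑ α, ∑ c, Real.log (Q c α) := by
  rw [Fintype.sum_prod_type, Finset.mul_sum, ← Finset.sum_add_distrib]
  refine Finset.sum_congr rfl fun α _ => ?_
  simp only [pw]
  rw [Finset.sum_congr rfl fun c _ => Real.log_mul (hp α).ne' (hQpos c α).ne',
    Finset.sum_add_distrib]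
  simp

/-- The weights `P1 y * (f (q̂ y) + t)` used to code the output word have total mass tending to
`1 + t / m!`, by consistency of the estimator. -/
lemma density_mean (hQpos : ∀ y x, 0 < Q y x) (hQcol : ∀ x, ∑ y, Q y x = 1)
    (hf : IsContDensity (a := m + 1) μ f) {L : Matrix (Fin (m + 1)) (Fin (k + 1)) ℝ}
    (hL : L * Q = 1) {t : ℝ} (ht : 0 < t) :
    Tendsto (fun n : ℕ => ∫ q in stdCorner m,
      Ew (fun _ : Fin n => Q *ᵥ em q) (fun y => f (qhat L y) + t)) atTop
      (nhds (1 + t / m.factorial)) := by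
  have hms := (isClosed_stdCorner m).measurableSet
  have hi : IntegrableOn f (stdCorner m) :=
    ContinuousOn.integrableOn_compact (isCompact_stdCorner m) hf.1
  have hconst : ∀ r : ℝ, IntegrableOn (fun _ : Fin m → ℝ => r) (stdCorner m) := fun r =>
    ContinuousOn.integrableOn_compact (isCompact_stdCorner m) continuousOn_const
  have hval : 1 + t / m.factorial = ∫ q in stdCorner m, (f q + t) := by
    have h1 : (∫ q in stdCorner m, f q) = 1 := hf.2.2.1
    rw [integral_add hi (hconst t), h1, setIntegral_const, Measure.real, volume_stdCorner,
      smul_eq_mul]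
    ring
  rw [hval]
  obtain ⟨B, hB0, hB⟩ := dens_bound hf
  refine tendsto_integral_filter_of_dominated_convergence (fun _ => B + t) ?_ ?_
    (hconst _) ?_
  · refine Eventually.of_forall fun n => ?_
    refine ContinuousOn.aestronglyMeasurable (Continuous.continuousOn ?_) hms
    simp only [Ew, mulVec, dotProduct]
    have := continuous_em (m := m)
    fun_prop
  · refine Eventually.of_forall fun n => ?_
    filter_upwards [ae_restrict_mem hms] with q hq
    have hp := em_mem hq
    have hc0 : ∀ (i : Fin n) c, 0 ≤ (Q *ᵥ em q) c := fun i c => (Qp_pos hQpos hQcol hp c).le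
    have hcs : ∑ c, (Q *ᵥ em q) c = 1 := (Qp_sum hQpos hQcol _).trans hp.2
    rw [Real.norm_eq_abs, abs_le]
    have l1 := Ew_mono hc0 (fun y => show (0 : ℝ) ≤ f (qhat L y) + t from
      add_nonneg (hf.2.1 _) ht.le)
    have l2 := Ew_mono hc0 (fun y => show f (qhat L y) + t ≤ B + t from
      add_le_add_left (hB _ (qhat_mem L y)) _)
    rw [Ew_const fun _ => hcs] at l1 l2
    exact ⟨by linarith, l2⟩
  · filter_upwards [ae_restrict_mem hms, em_pos_ae m] with q hq hqpos
    exact est_tendsto hQpos hQcol hL (φ := fun q => f q + t) (hf.1.add continuousOn_const) hq hqpos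

/-- Asymptotic lower bound, from `HF_lower2` with the joint-count code of `JC_main` and the weight
`h = f ∘ q̂ + t` on output words. -/
lemma lower_limit (hQpos : ∀ y x, 0 < Q y x) (hQcol : ∀ x, ∑ y, Q y x = 1)
    (hrank : Q.rank = m + 1) (hf : IsContDensity (a := m + 1) μ f) [IsProbabilityMeasure μ]
    {ε : ℝ} (hε : 0 < ε) :
    ∀ᶠ n : ℕ in atTop, (∫ q in stdCorner m, u0 Q (em q) * f q) - ε
      ≤ HFcond Q μ n - m / 2 * Real.log n := by
  obtain ⟨κ, h0, h1, ⟨C₁, hC₁⟩, hlim⟩ := JC_main (m := m) hQpos hQcol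
  obtain ⟨C₂, hC₂⟩ := laplace_unif (m := m) hQpos hQcol
  obtain ⟨C₃, hC₃⟩ := Bn_unif (m := m) hQpos hQcol
  obtain ⟨L, hL⟩ := exists_leftInv hrank
  -- the smoothing constant added to the density to keep its logarithm finite
  set t := ε / 3 with htd
  have ht : 0 < t := by positivity
  have hms := (isClosed_stdCorner m).measurableSet
  have hu0 := continuousOn_comp_em (continuousOn_u0 hQpos hQcol hrank)
  have hft : ContinuousOn (fun q => Real.log (f q + t)) (stdCorner m) :=
    ContinuousOn.log (hf.1.add continuousOn_const) fun q _ => (add_pos_of_nonneg_of_pos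
      (hf.2.1 q) ht).ne'
  have hU := hu0.add hft
  have hcu : ∀ n : ℕ, ContinuousOn (fun q => E2 (n := n) Q (em q)
      (gl Q (κ n) (fun y => f (qhat L y) + t)) - m / 2 * Real.log n) (stdCorner m) :=
    fun n => (continuousOn_E2em _).sub continuousOn_const
  have hBi : IntegrableOn (fun q => (C₁ + C₂ + C₃ - Real.log t + 2 * Bd Q q) * f q)
      (stdCorner m) := by
    have hb : IntegrableOn (fun q => C₁ + C₂ + C₃ - Real.log t + 2 * Bd Q q) (stdCorner m) :=
      (ContinuousOn.integrableOn_compact (isCompact_stdCorner m) continuousOn_const).add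
        ((Bd_integrable hQpos hQcol).const_mul 2)
    exact hb.mul_continuousOn hf.1 (isCompact_stdCorner m)
  have hdec : ∀ (n : ℕ), ∀ q ∈ stdCorner m, E2 (n := n) Q (em q)
      (gl Q (κ n) (fun y => f (qhat L y) + t)) - m / 2 * Real.log n
      = (Bn Q q n - (m * k / 2 + m) * Real.log n)
        - (E2 (n := n) Q (em q) (fun x y => -Real.log (κ n y (Tc x) (Nv x y)))
          - (k * m : ℝ) / 2 * Real.log n)
        + Ew (fun _ : Fin n => Q *ᵥ em q) (LI Q q)
        + Ew (fun _ : Fin n => Q *ᵥ em q) (fun y => Real.log (f (qhat L y) + t)) := by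
    intro n q hq
    rw [E2_gl hQpos hQcol hq (h0 n)]; ring
  have key := fatou_lower (ν := volume.restrict (stdCorner m)) (f := f)
    (u := fun n q => E2 (n := n) Q (em q)
      (gl Q (κ n) (fun y => f (qhat L y) + t)) - m / 2 * Real.log n)
    (U := fun q => u0 Q (em q) + Real.log (f q + t))
    (B := fun q => C₁ + C₂ + C₃ - Real.log t + 2 * Bd Q q)
    (Eventually.of_forall hf.2.1) (hf.1.aestronglyMeasurable hms)
    (fun n => (hcu n).aestronglyMeasurable hms) (hU.aestronglyMeasurable hms)
    (fun n => dens_integrableOn hf (hcu n)) (dens_integrableOn hf hU) hBi ?_ ?_ ht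
  · have hZ := (density_mean hQpos hQcol hf hL ht).eventually (gt_mem_nhds
      (show 1 + t / m.factorial < 1 + t / m.factorial + t by linarith))
    filter_upwards [key, hZ] with n hn hz
    have h2 := HF_lower2 hQpos hQcol hf (h0 n) (h1 n) (fun y => f (qhat L y) + t)
      (fun y => add_pos_of_nonneg_of_pos (hf.2.1 _) ht)
    rw [int_shift hf (continuousOn_E2em _)] at hn
    -- the smoothing only increases the density term
    have h3 : (∫ q in stdCorner m, u0 Q (em q) * f q) + (∫ q in stdCorner m, f q * Real.log (f q))
        ≤ ∫ q in stdCorner m, (u0 Q (em q) + Real.log (f q + t)) * f q := by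
      have i2 : IntegrableOn (fun q => f q * Real.log (f q)) (stdCorner m) :=
        ContinuousOn.integrableOn_compact (isCompact_stdCorner m) (continuousOn_flogf hf)
      rw [← integral_add (dens_integrableOn hf hu0) i2]
      refine integral_mono ((dens_integrableOn hf hu0).add i2) (dens_integrableOn hf hU) fun q => ?_
      show u0 Q (em q) * f q + f q * Real.log (f q) ≤ (u0 Q (em q) + Real.log (f q + t)) * f q
      rcases (show 0 ≤ f q from hf.2.1 q).eq_or_lt with hz | hz
      · simp [← hz]
      · have := mul_le_mul_of_nonneg_left (Real.log_le_log hz (by linarith : f q ≤ f q + t)) hz.le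
        linarith
    have h4 : t / m.factorial ≤ t :=
      div_le_self ht.le (by exact_mod_cast m.factorial_pos)
    have h5 : ε = 3 * t := by rw [htd]; ring
    linarith
  · intro n hn
    filter_upwards [ae_restrict_mem hms, em_pos_ae m] with q hq hqpos
    have hp := em_mem hq
    have hc0 : ∀ (i : Fin n) c, 0 ≤ (Q *ᵥ em q) c := fun i c => (Qp_pos hQpos hQcol hp c).le
    have hcs : ∑ c, (Q *ᵥ em q) c = 1 := (Qp_sum hQpos hQcol _).trans hp.2
    have l1 := Ew_mono hc0 (fun y => Real.log_le_log ht
      (show t ≤ f (qhat L y) + t from le_add_of_nonneg_left (hf.2.1 _)))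
    rw [Ew_const fun _ => hcs] at l1
    rw [hdec n q hq]
    have := hC₁ n hn q hq
    have := hC₂ n hn q hq
    have := hC₃ n hn q hq hqpos
    linarith
  · filter_upwards [ae_restrict_mem hms, em_pos_ae m] with q hq hqpos η hη
    have hη4 : 0 < η / 4 := by linarith
    have t1 := (Bn_tendsto hQpos hQcol hq hqpos).eventually
      (lt_mem_nhds (show Bl Q q - η / 4 < Bl Q q by linarith))
    have t4 := (est_tendsto hQpos hQcol hL hft hq hqpos).eventually
      (lt_mem_nhds (show Real.log (f q + t) - η / 4 < Real.log (f q + t) by linarith))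
    filter_upwards [t1, t4, hlim q hq hqpos _ hη4,
      laplace_lim hQpos hQcol hrank hq hqpos hη4] with n a1 a4 a2 a3
    rw [hdec n q hq]
    rw [det_J_eq_D hQpos hQcol (em_mem hq)] at a3
    rw [Bl, sum_log_pw hQpos hqpos] at a1
    rw [u0]
    linarith

end final

end FreqEnt

/-- asymptotics of the conditional Shannon entropy `H_n(F|Y⃗)`. -/
theorem HFcond_asymptotics {a b : ℕ} (ha : 2 ≤ a) (hb : 2 ≤ b)
    (Q : Matrix (Fin b) (Fin a) ℝ)
    (hQpos : ∀ y x, 0 < Q y x) (hQcol : ∀ x, ∑ y, Q y x = 1)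
    (μ : Measure (Fin a → ℝ)) [IsProbabilityMeasure μ]
    (hrank : Q.rank = a)
    (f : (Fin (a - 1) → ℝ) → ℝ) (hf : IsContDensity μ f)
    (hint : Integrable (fun p => Real.log (Dmat Q p).det) μ)
    (hint2 : Integrable
      (fun p => Real.log (Gmat Q p).det - ∑ y, Real.log (Q.mulVec p y)) μ) :
    Filter.Tendsto (fun n : ℕ => HFcond Q μ n - (((a : ℝ) - 1) / 2) * Real.log n)
      Filter.atTop (nhds (deltaMu Q μ)) := by
  obtain ⟨m, rfl⟩ : ∃ m, a = m + 1 := ⟨a - 1, by omega⟩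
  obtain ⟨k, rfl⟩ : ∃ k, b = k + 1 := ⟨b - 1, by omega⟩
  have hd := FreqEnt.integral_u0 hQpos hQcol hrank hf hint hint2
  have hm : (((m + 1 : ℕ) : ℝ) - 1) / 2 = m / 2 := by push_cast; ring
  rw [hm, ← hd, Metric.tendsto_nhds]
  intro ε hε
  have hε2 : 0 < ε / 2 := by linarith
  filter_upwards [FreqEnt.upper_limit hQpos hQcol hrank hf hε2,
    FreqEnt.lower_limit hQpos hQcol hrank hf hε2] with n h1 h2
  rw [Real.dist_eq, abs_lt]
  constructor <;> linarith


end
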